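/- If κ is an inaccessible cardinal, then there is a notion of forcing 𝕊 of size κ which is strategically <κ-closed, such that (1) forcing with 𝕊 adds a homogeneous κ-Souslin tree T, and (2) the two-step iteration 𝕊 * Ṫ, which adds the tree and then forces with it, is forcing equivalent to the Cohen forcing Add(κ,1) adding a single Cohen subset of κ. -/

import Mathlib

/-!
**Reduction to transitive classes.** Mostowski's collapse turns a universe into a transitive class
`A` of sets which is a model of `ZFC`, and an embedding of universes into an inclusion of classes.
The forcing theorem is proved for such classes: truth in the class `Ext A G` of all values of names
under a generic filter `G` is forced by conditions in `G`, so `Ext A G` is again a model of `ZFC`,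
and it is the least one including `A` and containing `G`. By `genExt_iff`, `V` is a generic
extension of `U` exactly if its collapse is `Ext` of the collapse of `U`.

**The forcing `𝕊`.** A condition is a bounded subset `s` of `κ` with a maximum `mx s`; it stands for
the binary sequence of length `mx s` with characteristic set `s ∩ mx s`. Put `r ≤ s` if `r = s`, or
`r` is longer than `s` and the two agree below `mx s` up to finitely many points. Since `κ` is
inaccessible, `𝕊` has size `κ` (`Inacc.enum`). The second player survives limits by making her
moves end-extensions of her own earlier ones: she takes the union of the moves at a limit (`strat`).

**The tree.** The generic filter `G` is itself the tree `T`, ordered by end-extension: its nodes are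
sequences, and any two of its nodes agree up to finitely many points on their common domain. Moving
finitely many points by symmetric difference is an automorphism of `T`, and these automorphisms are
transitive on levels (`Inacc.homog`). For a dense set of nodes closed under end-extension, a
condition can be end-extended so that all its finite modifications lie in the set: in each of `ω`
steps, the fewer than `κ` modifications by subsets of the length reached so far are treated one by
one (`Inacc.seal`). So from some level of `T` on, all nodes lie in the set (`Inacc.sealG`). Applied
to the nodes that end-extend a member of an antichain or have no end-extension in it, this bounds
antichains (`Inacc.antichain`); applied to the nodes with no end-extension in a chain, it bounds
chains (`Inacc.chain`).

**The iteration.** Let `Q` have the same conditions as `𝕊`, ordered by end-extension. A `Q`-generic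
filter `G` generates the `𝕊`-generic filter `upS A κ G` (`Inacc.genS`) and is a generic branch
through the tree so added (`Inacc.genT`); conversely a generic branch through an `𝕊`-generic tree is
`Q`-generic over the ground model and determines the tree (`Inacc.genQ`, `Inacc.upS_eq`). So
`𝕊 * Ṫ` and `Q` have the same extensions (`Inacc.ext_iter`). Finally `Q` embeds densely in
`Add(κ, 1)` (`Inacc.cohen`), and dense embeddings preserve generic extensions in both directions
(`DE.push`, `DE.pull`).
-/


set_option linter.unusedVariables false

/-!
Common framework: first-order models of ZFC as abstract "universes" `(M, ∈)`,
internal (relational) renderings of the standard set-theoretic notions, and a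
semantic treatment of (set- and class-) forcing extensions of countable models.
-/

open FirstOrder FirstOrder.Language

universe u

/-- The language of set theory: a single binary relation symbol
(we reuse Mathlib's one-binary-relation language `Language.order`,
reading its relation symbol as membership). -/
abbrev memLang : FirstOrder.Language := FirstOrder.Language.order

/-- The `memLang`-structure determined by a binary "membership" relation `E`. -/
def memStr {M : Type u} (E : M → M → Prop) : memLang.Structure M where
  funMap := fun {_} f _ => f.elim
  RelMap := fun {n} r x =>
    match n, r with
    | 2, _ => E (x 0) (x 1)

/-- Realization of a first-order formula of the language of set theory in `(M, E)`. -/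
def RealizeIn {M : Type u} (E : M → M → Prop) {n : ℕ}
    (φ : memLang.BoundedFormula Empty n) (xs : Fin n → M) : Prop :=
  letI := memStr E
  φ.Realize (fun e => e.elim) xs

/-- Elementary embeddings between two membership structures. -/
def MemElemEmbed {M : Type u} {N : Type u} (E₁ : M → M → Prop) (E₂ : N → N → Prop) :=
  @FirstOrder.Language.ElementaryEmbedding memLang M N (memStr E₁) (memStr E₂)

/-- Application of an elementary embedding between membership structures. -/
def MemElemEmbed.app {M : Type u} {N : Type u} {E₁ : M → M → Prop} {E₂ : N → N → Prop}
    (j : MemElemEmbed E₁ E₂) (x : M) : N :=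
  @FirstOrder.Language.ElementaryEmbedding.toFun memLang M N (memStr E₁) (memStr E₂) j x

namespace ZF

variable {M : Type u} (E : M → M → Prop)

def IsEmptySet (a : M) : Prop := ∀ x, ¬ E x a

def IsPairOf (p a b : M) : Prop := ∀ x, E x p ↔ (x = a ∨ x = b)

/-- `p` is the Kuratowski ordered pair `⟨a, b⟩`. -/
def IsOPairOf (p a b : M) : Prop :=
  ∃ s t, IsPairOf E s a a ∧ IsPairOf E t a b ∧ IsPairOf E p s t

def Sub (a b : M) : Prop := ∀ x, E x a → E x b

def IsTransitiveSet (a : M) : Prop := ∀ x, E x a → Sub E x a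

/-- In a well-founded extensional world, the ordinals are exactly the hereditarily
transitive sets. -/
def IsOrdinal (a : M) : Prop := IsTransitiveSet E a ∧ ∀ x, E x a → IsTransitiveSet E x

def IsSuccOf (s a : M) : Prop := ∀ x, E x s ↔ (E x a ∨ x = a)

def IsLimitOrdinal (a : M) : Prop :=
  IsOrdinal E a ∧ ¬ IsEmptySet E a ∧ ∀ x, E x a → ∃ s, E s a ∧ IsSuccOf E s x

def IsOmega (w : M) : Prop :=
  IsOrdinal E w ∧ (∃ z, E z w ∧ IsEmptySet E z) ∧
    (∀ y, E y w → ∃ s, E s w ∧ IsSuccOf E s y) ∧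
    (∀ y, E y w → (IsEmptySet E y ∨ ∃ z, IsSuccOf E y z ∧ E z w ∨ IsSuccOf E y z))

/-- `⟨x, y⟩ ∈ r` : the relation (set of ordered pairs) `r` relates `x` to `y`;
for a function `f` this says `f(x) = y`. -/
def PairMem (r x y : M) : Prop := ∃ p, E p r ∧ IsOPairOf E p x y

/-- `f` is a function with domain `a` and values in `b` (coded as a set of
Kuratowski pairs). -/
def IsFuncFromTo (f a b : M) : Prop :=
  (∀ p, E p f → ∃ x y, E x a ∧ E y b ∧ IsOPairOf E p x y) ∧
  (∀ x, E x a → ∃ y, PairMem E f x y) ∧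
  (∀ x y y', PairMem E f x y → PairMem E f x y' → y = y')

def IsInjFromTo (f a b : M) : Prop :=
  IsFuncFromTo E f a b ∧ ∀ x x' y, PairMem E f x y → PairMem E f x' y → x = x'

def IsSurjFromTo (f a b : M) : Prop :=
  IsFuncFromTo E f a b ∧ ∀ y, E y b → ∃ x, E x a ∧ PairMem E f x y

def IsBijFromTo (f a b : M) : Prop := IsInjFromTo E f a b ∧ IsSurjFromTo E f a b

def CardLE (a b : M) : Prop := ∃ f, IsInjFromTo E f a b

def SameCard (a b : M) : Prop := ∃ f, IsBijFromTo E f a b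

/-- `a` has cardinality less than the cardinal `κ`. -/
def CardLT (a κ : M) : Prop := ∃ γ, E γ κ ∧ CardLE E a γ

def IsCardinal (κ : M) : Prop := IsOrdinal E κ ∧ ∀ β, E β κ → ¬ CardLE E κ β

/-- `lam` is the cardinal successor `κ⁺` of `κ`. -/
def IsCardSuccOf (lam κ : M) : Prop :=
  IsCardinal E lam ∧ E κ lam ∧ ∀ μ, IsCardinal E μ → E κ μ → (μ = lam ∨ E lam μ)

def IsPowersetOf (p a : M) : Prop := ∀ x, E x p ↔ Sub E x a

def IsCofinalIn (f β κ : M) : Prop :=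
  ∀ γ, E γ κ → ∃ x y, E x β ∧ PairMem E f x y ∧ (γ = y ∨ E γ y)

def IsRegular (κ : M) : Prop :=
  IsCardinal E κ ∧ ∀ β f, E β κ → IsFuncFromTo E f β κ → ¬ IsCofinalIn E f β κ

def IsStrongLimit (κ : M) : Prop :=
  IsCardinal E κ ∧ ∀ β p, E β κ → IsPowersetOf E p β → CardLT E p κ

def IsUncountable (κ : M) : Prop := ∃ w, IsOmega E w ∧ E w κ

/-- Inaccessible: an uncountable regular strong limit cardinal. -/
def IsInaccessible (κ : M) : Prop := IsRegular E κ ∧ IsStrongLimit E κ ∧ IsUncountable E κ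

/-- Weakly inaccessible: an uncountable regular limit cardinal. -/
def IsWeaklyInaccessibleCard (κ : M) : Prop :=
  IsRegular E κ ∧ IsUncountable E κ ∧ ∀ β, E β κ → ∃ μ, E β μ ∧ E μ κ ∧ IsCardinal E μ

/-- `δ` is the cofinality of `α`. -/
def IsCofinalityOf (δ α : M) : Prop :=
  IsOrdinal E α ∧ IsOrdinal E δ ∧ (∃ f, IsFuncFromTo E f δ α ∧ IsCofinalIn E f δ α) ∧
    ∀ δ', E δ' δ → ¬ ∃ f, IsFuncFromTo E f δ' α ∧ IsCofinalIn E f δ' α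

/-! partial orders, sequences and games -/

/-- `le` is (the code of) a partial order relation on the set `P`;
`PairMem E le p q` reads "`p ≤ q`", i.e. `p` is a stronger condition than `q`. -/
def IsPartialOrderOn (le P : M) : Prop :=
  (∀ p, E p le → ∃ x y, E x P ∧ E y P ∧ IsOPairOf E p x y) ∧
  (∀ x, E x P → PairMem E le x x) ∧
  (∀ x y z, PairMem E le x y → PairMem E le y z → PairMem E le x z) ∧
  (∀ x y, PairMem E le x y → PairMem E le y x → x = y)

/-- `s` is a `≤`-decreasing sequence of elements of `P` of length `β`. -/
def IsDecreasingSeq (le s β P : M) : Prop :=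
  IsFuncFromTo E s β P ∧
    ∀ γ δ x y, E γ δ → E δ β → PairMem E s γ x → PairMem E s δ y → PairMem E le y x

/-- `(P, ≤)` is `<κ`-closed: every internal decreasing sequence of length `< κ`
has a lower bound. -/
def IsLtClosed (P le κ : M) : Prop :=
  ∀ β s, E β κ → IsDecreasingSeq E le s β P →
    ∃ r, E r P ∧ ∀ γ x, E γ β → PairMem E s γ x → PairMem E le r x

/-- An ordinal is even iff its elements can be partitioned into pairs `{γ, γ+1}`. -/
def IsEvenOrdinal (β : M) : Prop :=
  IsOrdinal E β ∧ ∃ Q,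
    (∀ q, E q Q → ∃ γ s, E γ β ∧ E s β ∧ IsSuccOf E s γ ∧ IsPairOf E q γ s) ∧
    (∀ γ, E γ β → ∃ q, E q Q ∧ E γ q) ∧
    (∀ q q', E q Q → E q' Q → (∃ x, E x q ∧ E x q') → q = q')

/-- `s'` is the restriction of the (sequence) `s` to `δ`. -/
def SeqRestriction (s' s δ : M) : Prop :=
  ∀ p, E p s' ↔ (E p s ∧ ∃ γ y, E γ δ ∧ IsOPairOf E p γ y)

/-- `(P, ≤)` is strategically `<κ`-closed: for each game length `γ < κ`, the second
player (playing at even stages, in particular at limits) has a strategy `σ` which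
always provides a next condition below everything played so far. -/
def IsStrategicallyLtClosed (P le κ : M) : Prop :=
  ∀ γlen, E γlen κ → ∃ σ : M,
    ∀ β s, E β γlen → IsDecreasingSeq E le s β P →
      (∀ δ, E δ β → IsEvenOrdinal E δ →
        ∀ r y, SeqRestriction E r s δ → PairMem E s δ y → PairMem E σ r y) →
      IsEvenOrdinal E β →
      ∃ y, PairMem E σ s y ∧ E y P ∧ ∀ δ x, E δ β → PairMem E s δ x → PairMem E le y x

/-! trees -/

/-- `lt` codes a strict tree order on the set `T`: irreflexive, transitive, and the
predecessors of any node are linearly ordered. -/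
def IsTreeOrderOn (lt T : M) : Prop :=
  (∀ p, E p lt → ∃ x y, E x T ∧ E y T ∧ IsOPairOf E p x y) ∧
  (∀ x, ¬ PairMem E lt x x) ∧
  (∀ x y z, PairMem E lt x y → PairMem E lt y z → PairMem E lt x z) ∧
  (∀ x y z, E z T → PairMem E lt x z → PairMem E lt y z →
    (PairMem E lt x y ∨ x = y ∨ PairMem E lt y x))

/-- The node `x` has height `β` in the tree order `lt`: its set of predecessors is
order-isomorphic (internally) to the ordinal `β`. -/
def IsHeightOf (lt x β : M) : Prop :=
  IsOrdinal E β ∧ ∃ f,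
    (∀ p, E p f → ∃ γ y, E γ β ∧ PairMem E lt y x ∧ IsOPairOf E p γ y) ∧
    (∀ γ, E γ β → ∃ y, PairMem E f γ y) ∧
    (∀ γ y y', PairMem E f γ y → PairMem E f γ y' → y = y') ∧
    (∀ y, PairMem E lt y x → ∃ γ, E γ β ∧ PairMem E f γ y) ∧
    (∀ γ δ y z, E γ δ → PairMem E f γ y → PairMem E f δ z → PairMem E lt y z)

def IsLevelOf (lt T L β : M) : Prop := ∀ x, E x L ↔ (E x T ∧ IsHeightOf E lt x β)

/-- `(T, lt)` is a `κ`-tree: a tree of height `κ` all of whose levels have size `< κ`. -/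
def IsKappaTree (T lt κ : M) : Prop :=
  IsTreeOrderOn E lt T ∧
  (∀ x, E x T → ∃ β, E β κ ∧ IsHeightOf E lt x β) ∧
  (∀ β, E β κ → ∃ x, E x T ∧ IsHeightOf E lt x β) ∧
  (∀ β L, E β κ → IsLevelOf E lt T L β → CardLT E L κ)

def IsChainIn (lt C T : M) : Prop :=
  Sub E C T ∧ ∀ x y, E x C → E y C → (x = y ∨ PairMem E lt x y ∨ PairMem E lt y x)

def IsAntichainIn (lt A T : M) : Prop :=
  Sub E A T ∧ ∀ x y, E x A → E y A → x ≠ y → ¬ PairMem E lt x y ∧ ¬ PairMem E lt y x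

def HasCofinalBranch (T lt κ : M) : Prop :=
  ∃ b, IsChainIn E lt b T ∧ ∀ β, E β κ → ∃ x, E x b ∧ IsHeightOf E lt x β

def HasTreeProperty (κ : M) : Prop :=
  ∀ T lt, IsKappaTree E T lt κ → HasCofinalBranch E T lt κ

/-- Weakly compact: inaccessible with the tree property. -/
def IsWeaklyCompact (κ : M) : Prop := IsInaccessible E κ ∧ HasTreeProperty E κ

def IsLeastWeaklyCompact (κ : M) : Prop :=
  IsWeaklyCompact E κ ∧ ∀ μ, E μ κ → ¬ IsWeaklyCompact E μ

/-- `(T, lt)` is a `κ`-Souslin tree: a tree of height `κ` all of whose levels,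
chains and antichains have size `< κ`. -/
def IsSouslinTree (T lt κ : M) : Prop :=
  IsTreeOrderOn E lt T ∧
  (∀ x, E x T → ∃ β, E β κ ∧ IsHeightOf E lt x β) ∧
  (∀ β, E β κ → ∃ x, E x T ∧ IsHeightOf E lt x β) ∧
  (∀ β L, E β κ → IsLevelOf E lt T L β → CardLT E L κ) ∧
  (∀ C, IsChainIn E lt C T → CardLT E C κ) ∧
  (∀ A, IsAntichainIn E lt A T → CardLT E A κ)

/-- The automorphism group of `(T, lt)` acts transitively on each level. -/
def IsHomogeneousTree (T lt : M) : Prop :=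
  ∀ x y β, E x T → E y T → IsHeightOf E lt x β → IsHeightOf E lt y β →
    ∃ π, IsBijFromTo E π T T ∧
      (∀ u v u' v', PairMem E π u u' → PairMem E π v v' →
        (PairMem E lt u v ↔ PairMem E lt u' v')) ∧
      PairMem E π x y

/-! filters and measurability -/

def IsFilterOn (F κ : M) : Prop :=
  (∀ X, E X F → Sub E X κ) ∧ (∃ X, E X F) ∧ (∀ X, E X F → ∃ x, E x X) ∧
  (∀ X Y, E X F → Sub E X Y → Sub E Y κ → E Y F)

/-- `F` is a `κ`-complete filter on `κ`: it is closed under internal intersections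
of families of size `< κ`. -/
def IsKappaCompleteFilterOn (F κ : M) : Prop :=
  IsFilterOn E F κ ∧
  ∀ β g, E β κ → IsFuncFromTo E g β F →
    ∀ Z, (∀ x, E x Z ↔ (E x κ ∧ ∀ γ Y, E γ β → PairMem E g γ Y → E x Y)) → E Z F

def IsPrincipalOn (F κ : M) : Prop := ∃ a, ∀ X, E X F ↔ (Sub E X κ ∧ Sub E a X)

/-- The filter `F` measures the set `A ⊆ κ`. -/
def MeasuresIn (F A κ : M) : Prop :=
  E A F ∨ ∃ A', (∀ x, E x A' ↔ (E x κ ∧ ¬ E x A)) ∧ E A' F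

/-- Measurable: there is a `κ`-complete nonprincipal ultrafilter on `κ`. -/
def IsMeasurable (κ : M) : Prop :=
  IsInaccessible E κ ∧ ∃ F, IsKappaCompleteFilterOn E F κ ∧ ¬ IsPrincipalOn E F κ ∧
    ∀ A, Sub E A κ → MeasuresIn E F A κ

/-- Weakly measurable: an inaccessible `κ` such that every family of at most `κ⁺`
many subsets of `κ` is measured by some `κ`-complete nonprincipal filter. -/
def IsWeaklyMeasurable (κ : M) : Prop :=
  IsInaccessible E κ ∧ ∀ lam 𝒜, IsCardSuccOf E lam κ → (∀ A, E A 𝒜 → Sub E A κ) →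
    CardLE E 𝒜 lam →
    ∃ F, IsKappaCompleteFilterOn E F κ ∧ ¬ IsPrincipalOn E F κ ∧
      ∀ A, E A 𝒜 → MeasuresIn E F A κ

/-! Cohen forcing `Add(κ,1)` -/

def IsTwo (t : M) : Prop := ∃ z o, IsEmptySet E z ∧ IsSuccOf E o z ∧ IsSuccOf E t o

/-- A condition of `Add(κ,1)`: a binary partial function on κ of size `< κ`. -/
def IsCohenCondition (c κ : M) : Prop :=
  (∃ t, IsTwo E t ∧ ∀ p, E p c → ∃ x y, E x κ ∧ E y t ∧ IsOPairOf E p x y) ∧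
  (∀ x y y', PairMem E c x y → PairMem E c x y' → y = y') ∧
  CardLT E c κ

/-- `(C, leC)` is the Cohen forcing `Add(κ,1)`, ordered by (reverse) extension. -/
def IsCohenPoset (C leC κ : M) : Prop :=
  (∀ c, E c C ↔ IsCohenCondition E c κ) ∧
  (∀ p, E p leC ↔ ∃ c d, E c C ∧ E d C ∧ Sub E d c ∧ IsOPairOf E p c d)

def IsDenseIn (D P le : M) : Prop :=
  Sub E D P ∧ ∀ p, E p P → ∃ q, E q D ∧ PairMem E le q p

end ZF

/-! ZFC satisfaction (first-order, schemes ranging over all formulas with parameters) -/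

/-- The separation scheme for `(M, E)`. -/
def SepScheme {M : Type u} (E : M → M → Prop) : Prop :=
  ∀ (n : ℕ) (φ : memLang.BoundedFormula Empty (n + 1)) (params : Fin n → M) (a : M),
    ∃ b, ∀ x, E x b ↔ (E x a ∧ RealizeIn E φ (Fin.snoc params x))

/-- The collection scheme for `(M, E)`. -/
def CollectionScheme {M : Type u} (E : M → M → Prop) : Prop :=
  ∀ (n : ℕ) (φ : memLang.BoundedFormula Empty (n + 2)) (params : Fin n → M) (a : M),
    (∀ x, E x a → ∃ y, RealizeIn E φ (Fin.snoc (Fin.snoc params x) y)) →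
    ∃ b, ∀ x, E x a → ∃ y, E y b ∧ RealizeIn E φ (Fin.snoc (Fin.snoc params x) y)

/-- `(M, E)` is a (well-founded) model of `ZFC⁻`: Zermelo–Fraenkel set theory with
choice and collection, but without the power set axiom. -/
structure SatisfiesZFCminus {M : Type u} (E : M → M → Prop) : Prop where
  ext : ∀ x y, (∀ z, E z x ↔ E z y) → x = y
  found : WellFounded E
  pairing : ∀ a b, ∃ p, ZF.IsPairOf E p a b
  union : ∀ a, ∃ u, ∀ x, E x u ↔ ∃ y, E y a ∧ E x y
  infinity : ∃ w, ZF.IsOmega E w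
  sep : SepScheme E
  coll : CollectionScheme E
  choice : ∀ a, (∀ x, E x a → ∃ y, E y x) →
    ∃ f, (∀ x y y', ZF.PairMem E f x y → ZF.PairMem E f x y' → y = y') ∧
      ∀ x, E x a → ∃ y, ZF.PairMem E f x y ∧ E y x

/-- `(M, E)` is a (well-founded) model of `ZFC`. -/
structure SatisfiesZFC {M : Type u} (E : M → M → Prop) extends SatisfiesZFCminus E : Prop where
  power : ∀ a, ∃ p, ZF.IsPowersetOf E p a

/-- A universe of set theory: a (well-founded) first-order model of ZFC. -/
structure ZFCUniverse : Type (u + 1) where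
  M : Type u
  mem : M → M → Prop
  zfc : SatisfiesZFC mem

namespace ZFCUniverse

variable (U : ZFCUniverse.{u})

/-- The external (von Neumann) rank of an element of a universe. -/
noncomputable def rk (x : U.M) : Ordinal.{u} :=
  (U.zfc.found.apply x).rank

/-- The extension of an internal set, as a type. -/
def Elem (m : U.M) : Type u := {x : U.M // U.mem x m}

/-- Membership restricted to an internal set. -/
def memOn (m : U.M) : U.Elem m → U.Elem m → Prop := fun x y => U.mem x.val y.val

/-- Elementary embeddings between (the membership structures of) two internal sets. -/
abbrev SetEmb (m n : U.M) := MemElemEmbed (U.memOn m) (U.memOn n)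

/-- The internal set `m` is a model of ZFC. -/
def SetModelsZFC (m : U.M) : Prop := SatisfiesZFC (U.memOn m)

/-- The internal set `m` is a model of ZFC⁻. -/
def SetModelsZFCminus (m : U.M) : Prop := SatisfiesZFCminus (U.memOn m)

/-- `m` is closed under `<κ`-sequences: `m^{<κ} ⊆ m`. -/
def SeqClosedIn (m κ : U.M) : Prop :=
  ∀ β f, U.mem β κ → ZF.IsFuncFromTo U.mem f β m → U.mem f m

/-- `κ` is unfoldable: for every ordinal `θ` and every transitive set `m` of size `κ`
with `κ ∈ m` there is a transitive set `n` and an elementary embedding `j : m → n`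
with critical point `κ` and `j(κ) > θ`. -/
def Unfoldable (κ : U.M) : Prop :=
  ∀ θ, ZF.IsOrdinal U.mem θ →
  ∀ m (hκ : U.mem κ m), ZF.IsTransitiveSet U.mem m → ZF.SameCard U.mem m κ →
    ∃ n, ZF.IsTransitiveSet U.mem n ∧
      ∃ j : U.SetEmb m n,
        (∀ x (hx : U.mem x m), U.mem x κ → (MemElemEmbed.app j ⟨x, hx⟩).val = x) ∧
        U.mem θ ((MemElemEmbed.app j ⟨κ, hκ⟩).val)

/-- `κ` is strongly unfoldable: unfoldability embeddings can moreover be found with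
`V_θ ⊆ n`. -/
def StronglyUnfoldable (κ : U.M) : Prop :=
  ∀ θ, ZF.IsOrdinal U.mem θ →
  ∀ m (hκ : U.mem κ m), ZF.IsTransitiveSet U.mem m → ZF.SameCard U.mem m κ →
    ∃ n, ZF.IsTransitiveSet U.mem n ∧
      (∀ x, U.rk x < U.rk θ → U.mem x n) ∧
      ∃ j : U.SetEmb m n,
        (∀ x (hx : U.mem x m), U.mem x κ → (MemElemEmbed.app j ⟨x, hx⟩).val = x) ∧
        U.mem θ ((MemElemEmbed.app j ⟨κ, hκ⟩).val)

/-- `κ` is nearly `θ`-supercompact: for every `A ⊆ θ` there are a transitive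
`ZFC`-model `m` with `m^{<κ} ⊆ m` and `A, κ, θ ∈ m`, a transitive set `n`, and an
elementary embedding `j : m → n` with critical point `κ`, `θ < j(κ)` and `j '' θ ∈ n`. -/
def NearlySupercompact (κ θ : U.M) : Prop :=
  ∀ A, ZF.Sub U.mem A θ →
    ∃ m, ZF.IsTransitiveSet U.mem m ∧ U.SetModelsZFC m ∧ U.SeqClosedIn m κ ∧ U.mem A m ∧
      ∃ (hκ : U.mem κ m) (hθm : U.mem θ m) (n : U.M), ZF.IsTransitiveSet U.mem n ∧
        ∃ j : U.SetEmb m n,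
          (∀ x (hx : U.mem x m), U.mem x κ → (MemElemEmbed.app j ⟨x, hx⟩).val = x) ∧
          U.mem θ ((MemElemEmbed.app j ⟨κ, hκ⟩).val) ∧
          ∃ jθ, U.mem jθ n ∧
            ∀ y, U.mem y jθ ↔ ∃ α, ∃ hα : U.mem α m, U.mem α θ ∧ y = (MemElemEmbed.app j ⟨α, hα⟩).val

/-- `κ` is `λ`-nearly `θ`-supercompact: for every `A ⊆ λ` there are a transitive
`ZFC⁻`-model `m` with `m^{<κ} ⊆ m` and `A, κ, θ ∈ m`, a transitive set `n`, and an
elementary embedding `j : m → n` with critical point `κ`, `θ < j(κ)` and `j '' θ ∈ n`. -/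
def LambdaNearlySupercompact (κ θ lam : U.M) : Prop :=
  ∀ A, ZF.Sub U.mem A lam →
    ∃ m, ZF.IsTransitiveSet U.mem m ∧ U.SetModelsZFCminus m ∧ U.SeqClosedIn m κ ∧ U.mem A m ∧
      ∃ (hκ : U.mem κ m) (hθm : U.mem θ m) (n : U.M), ZF.IsTransitiveSet U.mem n ∧
        ∃ j : U.SetEmb m n,
          (∀ x (hx : U.mem x m), U.mem x κ → (MemElemEmbed.app j ⟨x, hx⟩).val = x) ∧
          U.mem θ ((MemElemEmbed.app j ⟨κ, hκ⟩).val) ∧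
          ∃ jθ, U.mem jθ n ∧
            ∀ y, U.mem y jθ ↔ ∃ α, ∃ hα : U.mem α m, U.mem α θ ∧ y = (MemElemEmbed.app j ⟨α, hα⟩).val

/-- `κ` is `θ`-supercompact: there is an elementary embedding `j : V → M` of the
universe into a transitive class `M` with critical point `κ`, `j(κ) > θ` and
`M^θ ⊆ M`. -/
def ThetaSupercompact (κ θ : U.M) : Prop :=
  ∃ cl : U.M → Prop,
    (∀ x y, cl y → U.mem x y → cl x) ∧
    (∀ f, (∀ p, U.mem p f → ∃ x y, U.mem x θ ∧ cl y ∧ ZF.IsOPairOf U.mem p x y) →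
      (∀ x, U.mem x θ → ∃ y, ZF.PairMem U.mem f x y) →
      (∀ x y y', ZF.PairMem U.mem f x y → ZF.PairMem U.mem f x y' → y = y') → cl f) ∧
    ∃ j : MemElemEmbed U.mem (fun x y : {z : U.M // cl z} => U.mem x.val y.val),
      (∀ x, U.mem x κ → (MemElemEmbed.app j x).val = x) ∧
      U.mem θ ((MemElemEmbed.app j κ).val)

/-- `κ` is supercompact: `θ`-supercompact for every ordinal `θ`. -/
def Supercompact (κ : U.M) : Prop :=
  ∀ θ, ZF.IsOrdinal U.mem θ → U.ThetaSupercompact κ θ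

/-- The GCH holds in `U`. -/
def GCHholds : Prop :=
  ∀ lam p mu, ZF.IsCardinal U.mem lam →
    (∃ w, ZF.IsOmega U.mem w ∧ (U.mem w lam ∨ w = lam)) →
    ZF.IsPowersetOf U.mem p lam → ZF.IsCardSuccOf U.mem mu lam →
    ZF.SameCard U.mem p mu

end ZFCUniverse

/-! forcing extensions, semantically -/

/-- An `∈`-embedding of one universe into another, with transitive range:
the ground model sits inside the extension as a transitive sub-universe. -/
structure MemEmbed (U V : ZFCUniverse.{u}) where
  f : U.M → V.M
  mem_iff : ∀ x y, V.mem (f x) (f y) ↔ U.mem x y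
  trans_range : ∀ x y, V.mem y (f x) → ∃ z, U.mem z x ∧ y = f z

def MemEmbed.comp {U V W : ZFCUniverse.{u}} (g : MemEmbed V W) (e : MemEmbed U V) :
    MemEmbed U W where
  f := fun x => g.f (e.f x)
  mem_iff := by intro x y; rw [g.mem_iff, e.mem_iff]
  trans_range := by
    intro x y hy
    obtain ⟨z, hz, rfl⟩ := g.trans_range (e.f x) y hy
    obtain ⟨w, hw, rfl⟩ := e.trans_range x z hz
    exact ⟨w, hw, rfl⟩

/-- `V = U[G]` is a (set-)forcing extension of `U` by the poset `(P, le) ∈ U` with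
generic filter `G`: `G` is an `U`-generic filter on `P`, `V` has the same ordinals
as `U`, and `V` is the least such universe generated by `U` together with `G`. -/
structure IsSetGenericExt (U V : ZFCUniverse.{u}) (e : MemEmbed U V)
    (P le : U.M) (G : V.M) : Prop where
  poset : ZF.IsPartialOrderOn U.mem le P
  sub : ∀ x, V.mem x G → ∃ p, U.mem p P ∧ x = e.f p
  upward : ∀ p q, U.mem p P → U.mem q P → ZF.PairMem U.mem le p q →
    V.mem (e.f p) G → V.mem (e.f q) G
  directed : ∀ p q, U.mem p P → U.mem q P → V.mem (e.f p) G → V.mem (e.f q) G →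
    ∃ r, U.mem r P ∧ V.mem (e.f r) G ∧ ZF.PairMem U.mem le r p ∧ ZF.PairMem U.mem le r q
  generic : ∀ D, ZF.IsDenseIn U.mem D P le → ∃ q, U.mem q D ∧ V.mem (e.f q) G
  ords : ∀ x, ZF.IsOrdinal V.mem x → ∃ y, x = e.f y
  minimal : ∀ (W : ZFCUniverse.{u}) (g : MemEmbed U W) (H : W.M),
    (∀ x, W.mem x H ↔ ∃ p, V.mem (e.f p) G ∧ x = g.f p) →
    (∀ x, ZF.IsOrdinal W.mem x → ∃ y, x = g.f y) →
    ∃ h : MemEmbed V W, ∀ x, h.f (e.f x) = g.f x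

/-- A class of a universe, given by a first-order formula with parameters. -/
def DefinableClass (U : ZFCUniverse.{u}) (W : Set U.M) : Prop :=
  ∃ (n : ℕ) (φ : memLang.BoundedFormula Empty (n + 1)) (params : Fin n → U.M),
    ∀ x, x ∈ W ↔ RealizeIn U.mem φ (Fin.snoc params x)

/-- A binary class relation of a universe, given by a first-order formula with
parameters. -/
def DefinableClass₂ (U : ZFCUniverse.{u}) (R : U.M → U.M → Prop) : Prop :=
  ∃ (n : ℕ) (φ : memLang.BoundedFormula Empty (n + 2)) (params : Fin n → U.M),
    ∀ x y, R x y ↔ RealizeIn U.mem φ (Fin.snoc (Fin.snoc params x) y)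

/-- `V = U[G]` is a class-forcing extension of `U` by the definable class partial
order `(P, le)` of `U`, with generic class filter `G` meeting all definable dense
subclasses; `G` is amenable to `V`, the ordinals are the same, and `V` is least such. -/
structure IsClassGenericExt (U V : ZFCUniverse.{u}) (e : MemEmbed U V)
    (P : U.M → Prop) (le : U.M → U.M → Prop) (G : U.M → Prop) : Prop where
  defP : DefinableClass U {x | P x}
  defle : DefinableClass₂ U le
  le_dom : ∀ p q, le p q → P p ∧ P q
  refl : ∀ p, P p → le p p
  trans : ∀ p q r, le p q → le q r → le p r
  sub : ∀ p, G p → P p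
  upward : ∀ p q, le p q → G p → G q
  directed : ∀ p q, G p → G q → ∃ r, G r ∧ le r p ∧ le r q
  generic : ∀ D : Set U.M, DefinableClass U D → (∀ p, p ∈ D → P p) →
    (∀ p, P p → ∃ q, q ∈ D ∧ le q p) → ∃ q, q ∈ D ∧ G q
  amenable : ∀ a : V.M, ∃ b : V.M, ∀ x, V.mem x b ↔ (V.mem x a ∧ ∃ p, G p ∧ x = e.f p)
  ords : ∀ x, ZF.IsOrdinal V.mem x → ∃ y, x = e.f y
  minimal : ∀ (W : ZFCUniverse.{u}) (g : MemEmbed U W),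
    (∀ a : W.M, ∃ b : W.M, ∀ x, W.mem x b ↔ (W.mem x a ∧ ∃ p, G p ∧ x = g.f p)) →
    (∀ x, ZF.IsOrdinal W.mem x → ∃ y, x = g.f y) →
    ∃ h : MemEmbed V W, ∀ x, h.f (e.f x) = g.f x

/-- Two posets of `U` are forcing equivalent if they give rise to the same forcing
extensions. -/
def ForcingEquivPosets (U : ZFCUniverse.{u}) (P leP Q leQ : U.M) : Prop :=
  ∀ (V : ZFCUniverse.{u}) (e : MemEmbed U V),
    (∃ G, IsSetGenericExt U V e P leP G) ↔ (∃ G, IsSetGenericExt U V e Q leQ G)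

/-! The concrete forcing `𝕊` to add a homogeneous `κ`-Souslin tree: conditions are
pairs `(t, f)` where `t ⊆ 2^{<κ}` is a homogeneous normal `(α+1)`-tree and `f` is an
enumeration of the automorphism group of `t`, and the associated poset `ℝ`. -/

namespace ZF

variable {M : Type u} (E : M → M → Prop)

/-- `s` is a binary sequence of length (the ordinal) `β`. -/
def IsBinSeqOfLength (s β : M) : Prop :=
  IsOrdinal E β ∧ ∃ t, IsTwo E t ∧ IsFuncFromTo E s β t

/-- An internal automorphism of the tree `t` of binary sequences (ordered by
end-extension, i.e. by `⊆`). -/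
def IsSeqTreeAuto (t π : M) : Prop :=
  IsBijFromTo E π t t ∧
    ∀ u v u' v', PairMem E π u u' → PairMem E π v v' → (Sub E u v ↔ Sub E u' v')

/-- `t` is a normal tree of binary sequences of height `α + 1`: all of its elements
are binary sequences of length at most `α`, it is nonempty and closed under
restrictions, it has nodes on level `α`, and every node extends to a node on any
higher level `≤ α`. -/
def IsNormalSeqTree (t α : M) : Prop :=
  IsOrdinal E α ∧
  (∃ s, E s t) ∧
  (∀ s, E s t → ∃ β, IsBinSeqOfLength E s β ∧ (E β α ∨ β = α)) ∧
  (∀ s β δ s', E s t → IsBinSeqOfLength E s β → E δ β → SeqRestriction E s' s δ → E s' t) ∧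
  (∃ s, E s t ∧ IsBinSeqOfLength E s α) ∧
  (∀ s β δ, E s t → IsBinSeqOfLength E s β → (E δ α ∨ δ = α) → E β δ →
    ∃ s', E s' t ∧ IsBinSeqOfLength E s' δ ∧ Sub E s s')

/-- The tree `t` is homogeneous: its automorphism group acts transitively on levels. -/
def IsHomogeneousSeqTree (t : M) : Prop :=
  ∀ x y β, E x t → E y t → IsBinSeqOfLength E x β → IsBinSeqOfLength E y β →
    ∃ π, IsSeqTreeAuto E t π ∧ PairMem E π x y

/-- `fE` is an enumeration (indexed by `κ`) of the automorphism group of `t`. -/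
def EnumeratesAutos (fE t κ : M) : Prop :=
  (∀ p, E p fE → ∃ ξ π, E ξ κ ∧ IsSeqTreeAuto E t π ∧ IsOPairOf E p ξ π) ∧
  (∀ ξ, E ξ κ → ∃ π, PairMem E fE ξ π) ∧
  (∀ ξ π π', PairMem E fE ξ π → PairMem E fE ξ π' → π = π') ∧
  (∀ π, IsSeqTreeAuto E t π → ∃ ξ, E ξ κ ∧ PairMem E fE ξ π)

/-- A condition of the forcing `𝕊`: a pair `(t, f)` where `t` is a homogeneous normal
`(α+1)`-tree of binary sequences, for some `α < κ`, and `f` enumerates `Aut(t)`. -/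
def IsSCondition (c κ : M) : Prop :=
  ∃ t fE α, IsOPairOf E c t fE ∧ E α κ ∧ IsNormalSeqTree E t α ∧
    IsHomogeneousSeqTree E t ∧ EnumeratesAutos E fE t κ

/-- `π'` is the restriction of the automorphism `π` to the subtree `t'`. -/
def RestrictsAutoTo (π' π t' : M) : Prop :=
  ∀ p, E p π' ↔ (E p π ∧ ∃ u v, E u t' ∧ IsOPairOf E p u v)

/-- The order of `𝕊`: `(t,f) ≤ (t',f')` iff `t` end-extends `t'` and, for each index
`ξ`, the automorphism `f'(ξ)` of `t'` extends to the automorphism `f(ξ)` of `t`. -/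
def SConditionLe (c c' κ : M) : Prop :=
  ∃ t fE α t' fE' α', IsOPairOf E c t fE ∧ IsOPairOf E c' t' fE' ∧
    IsNormalSeqTree E t α ∧ IsNormalSeqTree E t' α' ∧
    (∀ s, E s t' ↔ (E s t ∧ ∃ β, IsBinSeqOfLength E s β ∧ (E β α' ∨ β = α'))) ∧
    (∀ ξ π π', E ξ κ → PairMem E fE ξ π → PairMem E fE' ξ π' → RestrictsAutoTo E π' π t')

/-- `(S, leS)` is the forcing `𝕊` to add a homogeneous `κ`-Souslin tree. -/
def IsSPoset (S leS κ : M) : Prop :=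
  (∀ c, E c S ↔ IsSCondition E c κ) ∧
  (∀ p, E p leS ↔ ∃ c c', E c S ∧ E c' S ∧ SConditionLe E c c' κ ∧ IsOPairOf E p c c')

/-- A condition of the poset `ℝ`: a triple `((t,f), p)` with `(t,f) ∈ 𝕊` and `p` a
node on the top level of `t`. -/
def IsRCondition (r κ : M) : Prop :=
  ∃ c t fE α p, IsOPairOf E r c p ∧ IsOPairOf E c t fE ∧ E α κ ∧
    IsNormalSeqTree E t α ∧ IsHomogeneousSeqTree E t ∧ EnumeratesAutos E fE t κ ∧
    E p t ∧ IsBinSeqOfLength E p α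

/-- The (obvious) order on `ℝ`. -/
def RConditionLe (r r' κ : M) : Prop :=
  ∃ c p c' p', IsOPairOf E r c p ∧ IsOPairOf E r' c' p' ∧
    SConditionLe E c c' κ ∧ Sub E p' p

/-- `(R, leR)` is the poset `ℝ` associated to `𝕊`. -/
def IsRPoset (R leR κ : M) : Prop :=
  (∀ x, E x R ↔ IsRCondition E x κ) ∧
  (∀ q, E q leR ↔ ∃ r r', E r R ∧ E r' R ∧ RConditionLe E r r' κ ∧ IsOPairOf E q r r')

end ZF

open FirstOrder FirstOrder.Language
set_option linter.unusedVariables false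
set_option linter.unusedSectionVars false

/-! ### Definable predicates and functions over a transitive class of sets -/

namespace TM

/-- Membership on the subtype of a class of sets. -/
def EA (A : Set ZFSet.{u}) : A → A → Prop := fun x y => x.1 ∈ y.1

/-- Environment extension: `x` becomes variable `0`. -/
def cons {α : Type*} (x : α) (v : ℕ → α) : ℕ → α
  | 0 => x
  | n + 1 => v n

@[simp] theorem cons_zero {α : Type*} (x : α) (v : ℕ → α) : cons x v 0 = x := rfl
@[simp] theorem cons_succ {α : Type*} (x : α) (v : ℕ → α) (n : ℕ) :
    cons x v (n + 1) = v n := rfl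

/-- `R` is, for `A`-valued environments, equivalent to the truth in `(A, ∈)` of a first-order
formula with parameters from `A`. -/
class Dfn (A : Set ZFSet.{u}) (R : (ℕ → ZFSet.{u}) → Prop) : Prop where
  ex : ∃ φ : memLang.Formula (A ⊕ ℕ), ∀ v : ℕ → A,
    R (fun i => (v i).1) ↔ @Formula.Realize memLang A (memStr (EA A)) _ φ (Sum.elim id v)

/-- `t` maps `A`-valued environments into `A` and its graph is definable over `A`. -/
class DFun (A : Set ZFSet.{u}) (t : (ℕ → ZFSet.{u}) → ZFSet.{u}) : Prop where
  mem : ∀ v, (∀ i, v i ∈ A) → t v ∈ A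
  grph : Dfn A (fun w => w 0 = t (fun i => w (i + 1)))

section basic
variable {A : Set ZFSet.{u}}

theorem Dfn.congr {R S : (ℕ → ZFSet.{u}) → Prop} (h : Dfn A R)
    (hRS : ∀ v, (∀ i, v i ∈ A) → (S v ↔ R v)) : Dfn A S := by
  obtain ⟨φ, hφ⟩ := h
  exact ⟨φ, fun v => (hRS _ fun i => (v i).2).trans (hφ v)⟩

theorem Dfn.ren {R : (ℕ → ZFSet.{u}) → Prop} (h : Dfn A R) (σ : ℕ → ℕ) :
    Dfn A (fun v => R (fun i => v (σ i))) := by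
  obtain ⟨φ, hφ⟩ := h
  let _ := memStr (EA A)
  refine ⟨φ.relabel (Sum.map id σ), fun v => ?_⟩
  rw [Formula.realize_relabel]
  refine (hφ (fun i => v (σ i))).trans ?_
  simp only [Sum.elim_comp_map]; rfl

theorem Dfn.not {R : (ℕ → ZFSet.{u}) → Prop} (h : Dfn A R) : Dfn A (fun v => ¬ R v) := by
  obtain ⟨φ, hφ⟩ := h
  let _ := memStr (EA A)
  exact ⟨φ.not, fun v => (not_congr (hφ v)).trans Formula.realize_not.symm⟩

theorem Dfn.and {R S : (ℕ → ZFSet.{u}) → Prop} (h : Dfn A R) (h' : Dfn A S) :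
    Dfn A (fun v => R v ∧ S v) := by
  obtain ⟨φ, hφ⟩ := h
  obtain ⟨ψ, hψ⟩ := h'
  let _ := memStr (EA A)
  exact ⟨φ ⊓ ψ, fun v => (and_congr (hφ v) (hψ v)).trans Formula.realize_inf.symm⟩

theorem Dfn.or {R S : (ℕ → ZFSet.{u}) → Prop} (h : Dfn A R) (h' : Dfn A S) :
    Dfn A (fun v => R v ∨ S v) :=
  ((h.not.and h'.not).not).congr fun v _ => by tauto

theorem Dfn.imp {R S : (ℕ → ZFSet.{u}) → Prop} (h : Dfn A R) (h' : Dfn A S) :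
    Dfn A (fun v => R v → S v) :=
  ((h.and h'.not).not).congr fun v _ => by tauto

theorem Dfn.iff {R S : (ℕ → ZFSet.{u}) → Prop} (h : Dfn A R) (h' : Dfn A S) :
    Dfn A (fun v => R v ↔ S v) :=
  ((h.imp h').and (h'.imp h)).congr fun v _ => by tauto

theorem Dfn.mem_var (i j : ℕ) : Dfn A (fun v => v i ∈ v j) := by
  let _ := memStr (EA A)
  refine ⟨(Relations.boundedFormula₂ (L := memLang) leSymb (Term.var (Sum.inl (Sum.inr i)))
    (Term.var (Sum.inl (Sum.inr j))) : memLang.BoundedFormula _ 0), fun v => ?_⟩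
  rw [Formula.Realize, BoundedFormula.realize_rel₂]
  rfl

theorem Dfn.eq_var (i j : ℕ) : Dfn A (fun v => v i = v j) := by
  let _ := memStr (EA A)
  refine ⟨Term.equal (Term.var (Sum.inr i)) (Term.var (Sum.inr j)), fun v => ?_⟩
  rw [Formula.realize_equal]
  simp [Subtype.ext_iff]

theorem Dfn.eq_param (i : ℕ) {c : ZFSet.{u}} (hc : c ∈ A) : Dfn A (fun v => v i = c) := by
  let _ := memStr (EA A)
  refine ⟨Term.equal (Term.var (Sum.inr i)) (Term.var (Sum.inl ⟨c, hc⟩)), fun v => ?_⟩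
  rw [Formula.realize_equal]
  simp [Subtype.ext_iff]

theorem Dfn.allA {R : (ℕ → ZFSet.{u}) → ZFSet.{u} → Prop}
    (h : Dfn A (fun w => R (fun i => w (i + 1)) (w 0))) :
    Dfn A (fun v => ∀ x, x ∈ A → R v x) := by
  obtain ⟨φ, hφ⟩ := h
  let _ := memStr (EA A)
  let g : A ⊕ ℕ → (A ⊕ ℕ) ⊕ Unit := Sum.elim (fun a => Sum.inl (Sum.inl a))
    (fun n => Nat.casesOn n (Sum.inr ()) (fun m => Sum.inl (Sum.inr m)))
  refine ⟨(φ.relabel g).iAlls Unit, fun v => ?_⟩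
  rw [Formula.realize_iAlls]
  have key : ∀ x : Unit → A, (fun a => Sum.elim (Sum.elim id v) x a) ∘ g =
      Sum.elim id (cons (x ()) v) := by
    intro x; funext a
    rcases a with a | n
    · rfl
    · cases n <;> rfl
  constructor
  · intro H x
    rw [Formula.realize_relabel]
    erw [key]
    rw [← hφ]
    exact H _ (x ()).2
  · intro H x hx
    have := H (fun _ => ⟨x, hx⟩)
    rw [Formula.realize_relabel] at this
    erw [key] at this
    rw [← hφ] at this
    exact this

theorem Dfn.exA {R : (ℕ → ZFSet.{u}) → ZFSet.{u} → Prop}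
    (h : Dfn A (fun w => R (fun i => w (i + 1)) (w 0))) :
    Dfn A (fun v => ∃ x, x ∈ A ∧ R v x) :=
  ((Dfn.allA (R := fun v x => ¬ R v x) h.not).not).congr fun v _ => by push Not; rfl

theorem DFun.var (i : ℕ) : DFun A (fun v => v i) :=
  ⟨fun v hv => hv i, Dfn.eq_var 0 (i+1)⟩

theorem DFun.const {c : ZFSet.{u}} (hc : c ∈ A) : DFun A (fun _ => c) :=
  ⟨fun _ _ => hc, Dfn.eq_param 0 hc⟩

theorem DFun.ren {t : (ℕ → ZFSet.{u}) → ZFSet.{u}} (h : DFun A t) (σ : ℕ → ℕ) :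
    DFun A (fun v => t (fun i => v (σ i))) := by
  refine ⟨fun v hv => h.mem _ fun i => hv _, ?_⟩
  have := h.grph.ren (fun n => Nat.casesOn n 0 (fun m => σ m + 1))
  exact this

/-- Substitution of a definable function for variable `0`. -/
theorem Dfn.subst {R : (ℕ → ZFSet.{u}) → Prop} (h : Dfn A R)
    {t : (ℕ → ZFSet.{u}) → ZFSet.{u}} (ht : DFun A t) : Dfn A (fun v => R (cons (t v) v)) := by
  have h1 : Dfn A (fun v => ∃ x, x ∈ A ∧ (x = t v ∧ R (cons x v))) := by
    refine Dfn.exA (R := fun v x => x = t v ∧ R (cons x v)) (ht.grph.and ?_)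
    refine h.congr fun v _ => ?_
    have : cons (v 0) (fun i => v (i + 1)) = v := by funext n; cases n <;> rfl
    rw [this]
  refine h1.congr fun v hv => ?_
  constructor
  · intro h; exact ⟨_, ht.mem v hv, rfl, h⟩
  · rintro ⟨x, _, rfl, h⟩; exact h

theorem Dfn.comp₁ {P : ZFSet.{u} → Prop} (h : Dfn A (fun v => P (v 0)))
    {t : (ℕ → ZFSet.{u}) → ZFSet.{u}} (ht : DFun A t) : Dfn A (fun v => P (t v)) :=
  h.subst ht

theorem Dfn.comp₂ {P : ZFSet.{u} → ZFSet.{u} → Prop} (h : Dfn A (fun v => P (v 0) (v 1)))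
    {t s : (ℕ → ZFSet.{u}) → ZFSet.{u}} (ht : DFun A t) (hs : DFun A s) :
    Dfn A (fun v => P (t v) (s v)) := by
  have h1 : Dfn A (fun v => P (v 0) (s fun i => v (i+1))) :=
    (h.ren (fun n => Nat.casesOn n 1 (fun _ => 0))).subst (hs.ren (fun i => i+1))
  exact h1.subst ht

theorem Dfn.comp₃ {P : ZFSet.{u} → ZFSet.{u} → ZFSet.{u} → Prop}
    (h : Dfn A (fun v => P (v 0) (v 1) (v 2)))
    {t s r : (ℕ → ZFSet.{u}) → ZFSet.{u}} (ht : DFun A t) (hs : DFun A s) (hr : DFun A r) :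
    Dfn A (fun v => P (t v) (s v) (r v)) := by
  have h0 : Dfn A (fun v => P (v 1) (v 2) (v 0)) :=
    h.ren (fun n => Nat.casesOn n 1 (fun m => Nat.casesOn m 2 (fun _ => 0)))
  have h1 : Dfn A (fun v => P (v 0) (v 1) (r fun i => v (i+2))) :=
    h0.subst (hr.ren (fun i => i+2))
  have h2 : Dfn A (fun v => P (v 1) (v 0) (r fun i => v (i+2))) :=
    h1.ren (fun n => Nat.casesOn n 1 (fun m => Nat.casesOn m 0 (fun k => k + 2)))
  have h3 : Dfn A (fun v => P (v 0) (s fun i => v (i+1)) (r fun i => v (i+1))) :=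
    h2.subst (hs.ren (fun i => i+1))
  exact h3.subst ht

theorem DFun.mem_dfn {t s : (ℕ → ZFSet.{u}) → ZFSet.{u}} (ht : DFun A t) (hs : DFun A s) :
    Dfn A (fun v => t v ∈ s v) := Dfn.comp₂ (P := fun x y => x ∈ y) (Dfn.mem_var 0 1) ht hs

theorem DFun.eq_dfn {t s : (ℕ → ZFSet.{u}) → ZFSet.{u}} (ht : DFun A t) (hs : DFun A s) :
    Dfn A (fun v => t v = s v) := Dfn.comp₂ (P := fun x y => x = y) (Dfn.eq_var 0 1) ht hs

theorem Dfn.true : Dfn A (fun _ => True) := (Dfn.eq_var 0 0).congr (by simp)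
theorem Dfn.false : Dfn A (fun _ => False) := Dfn.true.not.congr (by simp)

theorem Dfn.prop (p : Prop) : Dfn A (fun _ => p) := by
  by_cases h : p
  · exact Dfn.true.congr (by simp [h])
  · exact Dfn.false.congr (by simp [h])

end basic
end TM

/-! ### Transitive models -/

namespace TM

/-- A definable relation is given by a formula with finitely many parameters, in the shape in
which formulas occur in the separation and collection schemes. -/
theorem Dfn.scheme {A : Set ZFSet.{u}} {R : (ℕ → ZFSet.{u}) → Prop} (h : Dfn A R) :
    ∃ (n : ℕ) (φ : memLang.BoundedFormula Empty (n + 2)), ∀ v : ℕ → A,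
      ∃ params : Fin n → A, ∀ x y : A,
        R (fun i => (cons y (cons x v) i).1) ↔
          RealizeIn (EA A) φ (Fin.snoc (Fin.snoc params x) y) := by
  classical
  obtain ⟨φ, hφ⟩ := h
  let _ := memStr (EA A)
  let F := φ.freeVarFinset
  let n := F.card
  let e : F ≃ Fin n := F.equivFin
  let g : F → Empty ⊕ Fin (n + 2) := fun a =>
    if a.1 = Sum.inr 0 then Sum.inr (Fin.last (n+1))
    else if a.1 = Sum.inr 1 then Sum.inr (Fin.last n).castSucc
    else Sum.inr (e a).castSucc.castSucc
  let φ' : memLang.Formula F := BoundedFormula.restrictFreeVar φ id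
  refine ⟨n, BoundedFormula.relabel (n := n+2) (k := 0) g φ', fun v => ?_⟩
  refine ⟨fun i => match (e.symm i).1 with
    | Sum.inl a => a
    | Sum.inr 0 => v 0
    | Sum.inr 1 => v 0
    | Sum.inr (k+2) => v k, fun x y => ?_⟩
  rw [hφ, RealizeIn]
  erw [BoundedFormula.realize_relabel]
  have := BoundedFormula.realize_restrictFreeVar (φ := φ) (f := id)
    (v' := Sum.elim id (cons y (cons x v))) (xs := (default : Fin 0 → A))
    (v := fun a : F => Sum.elim id (cons y (cons x v)) a.1) (fun a => rfl)
  rw [Formula.Realize, ← this]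
  have hv : ∀ (p : Fin n → A), p = (fun i => match (e.symm i).1 with
    | Sum.inl a => a
    | Sum.inr 0 => v 0
    | Sum.inr 1 => v 0
    | Sum.inr (k+2) => v k) → (fun a : F => Sum.elim id (cons y (cons x v)) a.1) =
     (Sum.elim (fun e : Empty => e.elim) ((Fin.snoc (α := fun _ => (A : Type _)) (Fin.snoc (α := fun _ => (A : Type _)) p x) y) ∘ Fin.castAdd 0) ∘ g) := by
    rintro p rfl
    funext a
    simp only [Function.comp, g]
    split_ifs with h1 h2
    · rw [h1]; simp
    · rw [h2]; simp only [Sum.elim_inr]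
      rw [Function.comp_apply, show Fin.castAdd 0 (Fin.last n).castSucc = (Fin.last n).castSucc from rfl]
      erw [Fin.snoc_castSucc, Fin.snoc_last]; rfl
    · simp only [Sum.elim_inr]
      rw [Function.comp_apply, show Fin.castAdd 0 (e a).castSucc.castSucc = (e a).castSucc.castSucc from rfl]
      erw [Fin.snoc_castSucc, Fin.snoc_castSucc]
      simp only [Equiv.symm_apply_apply]
      rcases ha : a.1 with b | k
      · rfl
      · rw [ha] at h1 h2
        rcases k with _ | _ | k
        · exact absurd rfl h1
        · exact absurd rfl h2
        · rfl
  rw [hv _ rfl]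
  exact iff_of_eq (congrArg _ (Subsingleton.elim _ _))

/-- `w` is the ordinal `ω`. -/
def Om (w : ZFSet.{u}) : Prop :=
  w.IsOrdinal ∧ ∅ ∈ w ∧ (∀ y ∈ w, insert y y ∈ w) ∧ ∀ y ∈ w, y = ∅ ∨ ∃ z, y = insert z z

/-- A transitive class of sets that is a model of `ZF`. -/
class ZFM (A : Set ZFSet.{u}) : Prop where
  trans' : ∀ x y, x ∈ A → y ∈ x → y ∈ A
  pair' : ∀ a b, a ∈ A → b ∈ A → {a, b} ∈ A
  union' : ∀ a, a ∈ A → ZFSet.sUnion a ∈ A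
  infinity' : ∃ w, w ∈ A ∧ Om w
  power' : ∀ a, a ∈ A → ∃ p, p ∈ A ∧ ∀ x, x ∈ A → (x ∈ p ↔ x ⊆ a)
  sep' : SepScheme (EA A)
  coll' : CollectionScheme (EA A)

section
variable {A : Set ZFSet.{u}} [hA : ZFM A]

theorem trA {x y : ZFSet.{u}} (hx : x ∈ A) (h : y ∈ x) : y ∈ A := ZFM.trans' x y hx h

theorem sep_env {R : (ℕ → ZFSet.{u}) → Prop} (h : Dfn A R) {a : ZFSet.{u}} (ha : a ∈ A)
    (v : ℕ → A) : ZFSet.sep (fun x => R (cons x (fun i => (v i).1))) a ∈ A := by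
  have h' : Dfn A (fun w => R (fun i => w (i+1))) := h.ren (fun i => i + 1)
  obtain ⟨n, φ, H⟩ := h'.scheme
  obtain ⟨p, hp⟩ := H v
  obtain ⟨b, hb⟩ := hA.sep' n φ.all p ⟨a, ha⟩
  convert b.2 using 1
  ext x
  rw [ZFSet.mem_sep]
  have hxx : ∀ x : A, RealizeIn (EA A) φ.all (Fin.snoc p x) ↔
     R (cons x.1 (fun i => (v i).1)) := by
    intro x
    simp only [RealizeIn, BoundedFormula.realize_all]
    have h2 : ∀ y : A, RealizeIn (EA A) φ (Fin.snoc (Fin.snoc p x) y) ↔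
       R (cons x.1 (fun i => (v i).1)) := by
      intro y; rw [← hp x y]
      apply iff_of_eq; congr 1; funext i; rcases i with _ | i <;> rfl
    exact ⟨fun h => (h2 x).1 (h x), fun h y => (h2 y).2 h⟩
  constructor
  · rintro ⟨h1, h2⟩
    exact (hb ⟨x, trA ha h1⟩).2 ⟨h1, (hxx _).2 h2⟩
  · intro h1
    have := (hb ⟨x, trA b.2 h1⟩).1 h1
    exact ⟨this.1, (hxx ⟨x, trA b.2 h1⟩).1 this.2⟩

theorem sepA {R : ZFSet.{u} → Prop} [h : Dfn A (fun v => R (v 0))] {a : ZFSet.{u}} (ha : a ∈ A) :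
    ZFSet.sep R a ∈ A :=
  sep_env h ha (fun _ => ⟨a, ha⟩)

theorem coll_env {R : (ℕ → ZFSet.{u}) → Prop} (h : Dfn A R) {a : ZFSet.{u}} (ha : a ∈ A)
    (v : ℕ → A) (H : ∀ x, x ∈ a → ∃ y, y ∈ A ∧ R (cons y (cons x (fun i => (v i).1)))) :
    ∃ b, b ∈ A ∧ ∀ x, x ∈ a → ∃ y, y ∈ b ∧ R (cons y (cons x (fun i => (v i).1))) := by
  obtain ⟨n, φ, H'⟩ := h.scheme
  obtain ⟨p, hp⟩ := H' v
  have e : ∀ x y : A, R (cons y.1 (cons x.1 (fun i => (v i).1))) ↔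
          RealizeIn (EA A) φ (Fin.snoc (Fin.snoc p x) y) := by
    intro x y; rw [← hp x y]
    apply iff_of_eq; congr 1; funext i; rcases i with _ | _ | i <;> rfl
  obtain ⟨b, hb⟩ := hA.coll' n φ p ⟨a, ha⟩ (by
    intro x hx
    obtain ⟨y, hy, h⟩ := H x.1 hx
    exact ⟨⟨y, hy⟩, (e x ⟨y, hy⟩).1 h⟩)
  refine ⟨b.1, b.2, fun x hx => ?_⟩
  obtain ⟨y, hy, h⟩ := hb ⟨x, trA ha hx⟩ hx
  exact ⟨y.1, hy, (e ⟨x, trA ha hx⟩ y).2 h⟩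

theorem collA {R : ZFSet.{u} → ZFSet.{u} → Prop} [h : Dfn A (fun v => R (v 0) (v 1))]
    {a : ZFSet.{u}} (ha : a ∈ A) (H : ∀ x, x ∈ a → ∃ y, y ∈ A ∧ R x y) :
    ∃ b, b ∈ A ∧ ∀ x, x ∈ a → ∃ y, y ∈ b ∧ R x y :=
  coll_env (R := fun w => R (w 1) (w 0))
    (h.ren (fun n => Nat.casesOn n 1 (fun _ => 0))) ha (fun _ => ⟨a, ha⟩) H

end
end TM

/-! ### Instances for definability -/

namespace TM

section inst
variable {A : Set ZFSet.{u}}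

instance {R : (ℕ → ZFSet.{u}) → Prop} [h : Dfn A R] : Dfn A (fun v => ¬ R v) := h.not
instance {R S : (ℕ → ZFSet.{u}) → Prop} [h : Dfn A R] [h' : Dfn A S] :
    Dfn A (fun v => R v ∧ S v) := h.and h'
instance {R S : (ℕ → ZFSet.{u}) → Prop} [h : Dfn A R] [h' : Dfn A S] :
    Dfn A (fun v => R v ∨ S v) := h.or h'
instance {R S : (ℕ → ZFSet.{u}) → Prop} [h : Dfn A R] [h' : Dfn A S] :
    Dfn A (fun v => R v → S v) := h.imp h'
instance {R S : (ℕ → ZFSet.{u}) → Prop} [h : Dfn A R] [h' : Dfn A S] :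
    Dfn A (fun v => R v ↔ S v) := h.iff h'
instance (priority := low) {p : Prop} : Dfn A (fun _ => p) := Dfn.prop p
instance {t s : (ℕ → ZFSet.{u}) → ZFSet.{u}} [ht : DFun A t] [hs : DFun A s] :
    Dfn A (fun v => t v ∈ s v) := ht.mem_dfn hs
instance {t s : (ℕ → ZFSet.{u}) → ZFSet.{u}} [ht : DFun A t] [hs : DFun A s] :
    Dfn A (fun v => t v = s v) := ht.eq_dfn hs
instance {t s : (ℕ → ZFSet.{u}) → ZFSet.{u}} [ht : DFun A t] [hs : DFun A s] :
    Dfn A (fun v => t v ≠ s v) := (ht.eq_dfn hs).not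
instance {t s : (ℕ → ZFSet.{u}) → ZFSet.{u}} [ht : DFun A t] [hs : DFun A s] :
    Dfn A (fun v => t v ∉ s v) := (ht.mem_dfn hs).not
instance {R : (ℕ → ZFSet.{u}) → ZFSet.{u} → Prop}
    [h : Dfn A (fun w => R (fun i => w (i + 1)) (w 0))] :
    Dfn A (fun v => ∀ x, x ∈ A → R v x) := Dfn.allA h
instance {R : (ℕ → ZFSet.{u}) → ZFSet.{u} → Prop}
    [h : Dfn A (fun w => R (fun i => w (i + 1)) (w 0))] :
    Dfn A (fun v => ∃ x, x ∈ A ∧ R v x) := Dfn.exA h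
instance DFun.var' (i : ℕ) : DFun A (fun v => v i) := DFun.var i
instance (priority := low) {c : ZFSet.{u}} [h : Fact (c ∈ A)] : DFun A (fun _ => c) :=
  DFun.const h.out

variable [hA : ZFM A]

instance {t : (ℕ → ZFSet.{u}) → ZFSet.{u}} [ht : DFun A t]
    {R : (ℕ → ZFSet.{u}) → ZFSet.{u} → Prop}
    [h : Dfn A (fun w => R (fun i => w (i + 1)) (w 0))] :
    Dfn A (fun v => ∀ x, x ∈ t v → R v x) := by
  have ht' : DFun A (fun w => t (fun i => w (i+1))) := ht.ren _
  have : Dfn A (fun v => ∀ x, x ∈ A → (x ∈ t v → R v x)) := inferInstance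
  exact this.congr fun v hv => ⟨fun H x _ => H x, fun H x hx => H x (trA (ht.mem v hv) hx) hx⟩

instance {t : (ℕ → ZFSet.{u}) → ZFSet.{u}} [ht : DFun A t]
    {R : (ℕ → ZFSet.{u}) → ZFSet.{u} → Prop}
    [h : Dfn A (fun w => R (fun i => w (i + 1)) (w 0))] :
    Dfn A (fun v => ∃ x, x ∈ t v ∧ R v x) := by
  have ht' : DFun A (fun w => t (fun i => w (i+1))) := ht.ren _
  have : Dfn A (fun v => ∃ x, x ∈ A ∧ (x ∈ t v ∧ R v x)) := inferInstance
  exact this.congr fun v hv => ⟨fun ⟨x, hx, H⟩ => ⟨x, trA (ht.mem v hv) hx, hx, H⟩,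
    fun ⟨x, _, H⟩ => ⟨x, H⟩⟩

instance {t s : (ℕ → ZFSet.{u}) → ZFSet.{u}} [ht : DFun A t] [hs : DFun A s] :
    Dfn A (fun v => t v ⊆ s v) := by
  have hs' : DFun A (fun w => s (fun i => w (i+1))) := hs.ren _
  have : Dfn A (fun v => ∀ x, x ∈ t v → x ∈ s v) := inferInstance
  exact this

/-- A function whose values are given by a definable membership condition is definable. -/
theorem DFun.of_ext {t : (ℕ → ZFSet.{u}) → ZFSet.{u}} {R : (ℕ → ZFSet.{u}) → ZFSet.{u} → Prop}
    (hm : ∀ v, (∀ i, v i ∈ A) → t v ∈ A)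
    (h : Dfn A (fun w => R (fun i => w (i + 1)) (w 0)))
    (he : ∀ v, (∀ i, v i ∈ A) → ∀ x, x ∈ A → (x ∈ t v ↔ R v x)) : DFun A t := by
  refine ⟨hm, ?_⟩
  have h' : Dfn A (fun w => R (fun i => w (i + 2)) (w 0)) :=
    h.ren (fun n => Nat.casesOn n 0 (fun m => m + 2))
  have : Dfn A (fun w => ∀ x, x ∈ A → (x ∈ w 0 ↔ R (fun i => w (i + 1)) x)) := inferInstance
  refine this.congr fun v hv => ?_
  constructor
  · intro h x hx; rw [h]; exact he _ (fun i => hv _) x hx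
  · intro H; ext x
    constructor
    · intro hx
      have hxA := trA (hv 0) hx
      exact (he _ (fun i => hv _) x hxA).2 ((H x hxA).1 hx)
    · intro hx
      have hxA := trA (hm _ (fun i => hv (i+1))) hx
      exact (H x hxA).2 ((he _ (fun i => hv _) x hxA).1 hx)

theorem DFun.comp₁ {f : ZFSet.{u} → ZFSet.{u}} (h : DFun A (fun v => f (v 0)))
    {t : (ℕ → ZFSet.{u}) → ZFSet.{u}} (ht : DFun A t) : DFun A (fun v => f (t v)) := by
  refine ⟨fun v hv => h.mem (fun _ => t v) (fun _ => ht.mem v hv), ?_⟩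
  exact Dfn.comp₂ (P := fun y x => y = f x) (h.grph.ren id) (DFun.var 0) (ht.ren _)

theorem DFun.comp₂ {f : ZFSet.{u} → ZFSet.{u} → ZFSet.{u}} (h : DFun A (fun v => f (v 0) (v 1)))
    {t s : (ℕ → ZFSet.{u}) → ZFSet.{u}} (ht : DFun A t) (hs : DFun A s) :
    DFun A (fun v => f (t v) (s v)) := by
  refine ⟨fun v hv => h.mem (fun n => Nat.casesOn n (t v) (fun _ => s v)) (fun n => ?_), ?_⟩
  · cases n
    · exact ht.mem v hv
    · exact hs.mem v hv
  · exact Dfn.comp₃ (P := fun y x z => y = f x z) h.grph (DFun.var 0) (ht.ren _) (hs.ren _)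

/-- Values of a definable function of one variable. -/
theorem DFun.val₁ {f : ZFSet.{u} → ZFSet.{u}} (h : DFun A (fun v => f (v 0))) {x : ZFSet.{u}}
    (hx : x ∈ A) : f x ∈ A := h.mem (fun _ => x) (fun _ => hx)

theorem DFun.val₂ {f : ZFSet.{u} → ZFSet.{u} → ZFSet.{u}} (h : DFun A (fun v => f (v 0) (v 1)))
    {x y : ZFSet.{u}} (hx : x ∈ A) (hy : y ∈ A) : f x y ∈ A :=
  h.mem (fun n => Nat.casesOn n x (fun _ => y)) (fun n => by cases n <;> assumption)

instance (priority := low) DFun.shift {t : (ℕ → ZFSet.{u}) → ZFSet.{u}} [ht : DFun A t] :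
    DFun A (fun w => t (fun i => w (i+1))) := ht.ren _

theorem pairA {a b : ZFSet.{u}} (ha : a ∈ A) (hb : b ∈ A) : ({a, b} : ZFSet) ∈ A :=
  ZFM.pair' a b ha hb
theorem singA {a : ZFSet.{u}} (ha : a ∈ A) : ({a} : ZFSet) ∈ A := by
  have := pairA ha ha; rwa [ZFSet.pair_eq_singleton] at this
theorem opairA {a b : ZFSet.{u}} (ha : a ∈ A) (hb : b ∈ A) : ZFSet.pair a b ∈ A :=
  pairA (singA ha) (pairA ha hb)
theorem sUnionA {a : ZFSet.{u}} (ha : a ∈ A) : ZFSet.sUnion a ∈ A := ZFM.union' a ha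
theorem unionA {a b : ZFSet.{u}} (ha : a ∈ A) (hb : b ∈ A) : a ∪ b ∈ A := sUnionA (pairA ha hb)
theorem insertA {a b : ZFSet.{u}} (ha : a ∈ A) (hb : b ∈ A) : insert a b ∈ A := by
  rw [ZFSet.insert_eq]; exact unionA (singA ha) hb
theorem of_pairA {a b : ZFSet.{u}} (h : ZFSet.pair a b ∈ A) : a ∈ A ∧ b ∈ A := by
  have h1 : ({a, b} : ZFSet) ∈ A := trA h (by simp [ZFSet.pair])
  exact ⟨trA h1 (by simp), trA h1 (by simp)⟩
theorem emptyA : (∅ : ZFSet.{u}) ∈ A := by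
  obtain ⟨w, hw, h⟩ := hA.infinity'
  exact trA hw h.2.1

instance : DFun A (fun _ => (∅ : ZFSet.{u})) := DFun.const emptyA

section
variable {t s : (ℕ → ZFSet.{u}) → ZFSet.{u}} [ht : DFun A t] [hs : DFun A s]

instance : DFun A (fun v => ({t v} : ZFSet.{u})) :=
  DFun.of_ext (R := fun v x => x = t v) (fun v hv => singA (ht.mem v hv)) inferInstance (by simp)
instance : DFun A (fun v => (insert (t v) (s v) : ZFSet.{u})) :=
  DFun.of_ext (R := fun v x => x = t v ∨ x ∈ s v)
    (fun v hv => insertA (ht.mem v hv) (hs.mem v hv)) inferInstance (by simp)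
instance : DFun A (fun v => t v ∪ s v) :=
  DFun.of_ext (R := fun v x => x ∈ t v ∨ x ∈ s v)
    (fun v hv => unionA (ht.mem v hv) (hs.mem v hv)) inferInstance (by simp)
instance : DFun A (fun v => ZFSet.pair (t v) (s v)) := by
  unfold ZFSet.pair; infer_instance
instance : DFun A (fun v => ZFSet.sUnion (t v)) :=
  DFun.of_ext (R := fun v x => ∃ y, y ∈ t v ∧ x ∈ y)
    (fun v hv => sUnionA (ht.mem v hv)) inferInstance (by simp)
instance DFun.sep {R : (ℕ → ZFSet.{u}) → ZFSet.{u} → Prop}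
    [h : Dfn A (fun w => R (fun i => w (i + 1)) (w 0))] :
    DFun A (fun v => ZFSet.sep (R v) (t v)) := by
  refine DFun.of_ext (R := fun v x => x ∈ t v ∧ R v x)
    (fun v hv => ?_) inferInstance (by simp)
  exact sep_env h (ht.mem v hv) (fun i => ⟨v i, hv i⟩)
instance : DFun A (fun v => t v ∩ s v) :=
  inferInstanceAs (DFun A (fun v => ZFSet.sep (fun z => z ∈ s v) (t v)))
instance : DFun A (fun v => t v \ s v) :=
  inferInstanceAs (DFun A (fun v => ZFSet.sep (fun z => z ∉ s v) (t v)))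
instance : Dfn A (fun v => (t v).IsOrdinal) :=
  (inferInstance : Dfn A (fun v => (∀ x, x ∈ t v → x ⊆ t v) ∧
    ∀ x, x ∈ t v → ∀ y, y ∈ x → y ⊆ x)).congr fun v _ => by
      rw [ZFSet.isOrdinal_iff_forall_mem_isTransitive]; rfl

end

/-- The image of a set under an arbitrary function. -/
noncomputable def img (F : ZFSet.{u} → ZFSet.{u}) (a : ZFSet.{u}) : ZFSet.{u} :=
  ZFSet.range (fun x : a => F x.1)

@[simp] theorem mem_img {F : ZFSet.{u} → ZFSet.{u}} {a y : ZFSet.{u}} :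
    y ∈ img F a ↔ ∃ x ∈ a, y = F x := by
  simp [img, eq_comm]

instance DFun.img {t : (ℕ → ZFSet.{u}) → ZFSet.{u}} [ht : DFun A t]
    {F : (ℕ → ZFSet.{u}) → ZFSet.{u} → ZFSet.{u}}
    [h : DFun A (fun w => F (fun i => w (i + 1)) (w 0))] :
    DFun A (fun v => img (F v) (t v)) := by
  have h' : DFun A (fun w => F (fun i => w (i + 2)) (w 0)) :=
    h.ren (fun n => Nat.casesOn n 0 (fun m => m + 2))
  have h'' : DFun A (fun w => F (fun i => w (i + 2)) (w 1)) :=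
    h.ren (fun n => Nat.casesOn n 1 (fun m => m + 2))
  refine DFun.of_ext (R := fun v x => ∃ y, y ∈ t v ∧ x = F v y) (fun v hv => ?_) inferInstance
    (by simp)
  have hFA : ∀ x, x ∈ A → F v x ∈ A := fun x hx =>
    h.mem (cons x v) (by intro i; cases i; exacts [hx, hv _])
  have hd : Dfn A (fun w => w 0 = F (fun i => w (i+2)) (w 1)) := inferInstance
  obtain ⟨b, hb, H⟩ := coll_env hd (ht.mem v hv)
    (fun i => ⟨v i, hv i⟩) (fun x hx => ⟨F v x, hFA x (trA (ht.mem v hv) hx), rfl⟩)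
  have : TM.img (F v) (t v) = ZFSet.sep (fun y => ∃ x, x ∈ t v ∧ y = F v x) b := by
    ext y
    simp only [mem_img, ZFSet.mem_sep]
    constructor
    · rintro ⟨x, hx, rfl⟩
      obtain ⟨y, hy, e⟩ := H x hx
      exact ⟨by rw [show F v x = y from e.symm]; exact hy, x, hx, rfl⟩
    · exact fun h => h.2
  rw [this]
  have hd2 : Dfn A (fun w => ∃ x, x ∈ t (fun i => w (i+1)) ∧ w 0 = F (fun i => w (i+1)) x) :=
    inferInstance
  exact sep_env hd2 hb (fun i => ⟨v i, hv i⟩)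

end inst

section more
variable {A : Set ZFSet.{u}} [ZFM A]
variable {t s : (ℕ → ZFSet.{u}) → ZFSet.{u}} [ht : DFun A t] [hs : DFun A s]

instance : DFun A (fun v => ZFSet.prod (t v) (s v)) := by
  have h : DFun A (fun v => ZFSet.sUnion
    (img (fun x => img (fun y => ZFSet.pair x y) (s v)) (t v))) := inferInstance
  convert h using 2 with v
  ext z
  simp only [ZFSet.mem_prod, ZFSet.mem_sUnion, mem_img]
  constructor
  · rintro ⟨a, ha, b, hb, rfl⟩; exact ⟨_, ⟨a, ha, rfl⟩, mem_img.2 ⟨b, hb, rfl⟩⟩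
  · rintro ⟨_, ⟨a, ha, rfl⟩, h⟩
    obtain ⟨b, hb, rfl⟩ := mem_img.1 h; exact ⟨a, ha, b, hb, rfl⟩

theorem prodA {a b : ZFSet.{u}} (ha : a ∈ A) (hb : b ∈ A) : ZFSet.prod a b ∈ A :=
  DFun.val₂ (f := ZFSet.prod) inferInstance ha hb

/-- The power set of `a` relative to the class `A`. -/
noncomputable def pw (A : Set ZFSet.{u}) (a : ZFSet.{u}) : ZFSet.{u} :=
  ZFSet.sep (fun x => x ∈ A) (ZFSet.powerset a)

@[simp] theorem mem_pw {a x : ZFSet.{u}} : x ∈ pw A a ↔ x ⊆ a ∧ x ∈ A := by simp [pw]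

theorem pwA {a : ZFSet.{u}} (ha : a ∈ A) : pw A a ∈ A := by
  obtain ⟨p, hp, h⟩ := ZFM.power' a ha
  have : pw A a = p := by
    ext x; rw [mem_pw]
    exact ⟨fun hx => (h x hx.2).2 hx.1, fun hx => ⟨(h x (trA hp hx)).1 hx, trA hp hx⟩⟩
  rwa [this]

instance : DFun A (fun v => pw A (t v)) :=
  DFun.of_ext (R := fun v x => x ⊆ t v) (fun v hv => pwA (ht.mem v hv)) inferInstance
    (by intro v hv x hx; simp [hx])

/-- The set of first coordinates of the pairs in `r`. -/
noncomputable def dom (r : ZFSet.{u}) : ZFSet.{u} :=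
  ZFSet.sep (fun x => ∃ y ∈ ZFSet.sUnion (ZFSet.sUnion r), ZFSet.pair x y ∈ r)
    (ZFSet.sUnion (ZFSet.sUnion r))

theorem pair_fld {r x y : ZFSet.{u}} (h : ZFSet.pair x y ∈ r) :
    x ∈ ZFSet.sUnion (ZFSet.sUnion r) ∧ y ∈ ZFSet.sUnion (ZFSet.sUnion r) := by
  have h1 : ({x, y} : ZFSet) ∈ ZFSet.sUnion r := ZFSet.mem_sUnion.2 ⟨_, h, by simp [ZFSet.pair]⟩
  exact ⟨ZFSet.mem_sUnion.2 ⟨_, h1, by simp⟩, ZFSet.mem_sUnion.2 ⟨_, h1, by simp⟩⟩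

@[simp] theorem mem_dom {r x : ZFSet.{u}} : x ∈ dom r ↔ ∃ y, ZFSet.pair x y ∈ r := by
  simp only [dom, ZFSet.mem_sep]
  exact ⟨fun ⟨_, y, _, h⟩ => ⟨y, h⟩, fun ⟨y, h⟩ => ⟨(pair_fld h).1, y, (pair_fld h).2, h⟩⟩

instance : DFun A (fun v => dom (t v)) :=
  DFun.comp₁ (f := dom) (by unfold dom; infer_instance) ht

/-- The set of second coordinates of the pairs in `r`. -/
noncomputable def ran (r : ZFSet.{u}) : ZFSet.{u} :=
  ZFSet.sep (fun y => ∃ x ∈ ZFSet.sUnion (ZFSet.sUnion r), ZFSet.pair x y ∈ r)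
    (ZFSet.sUnion (ZFSet.sUnion r))

@[simp] theorem mem_ran {r y : ZFSet.{u}} : y ∈ ran r ↔ ∃ x, ZFSet.pair x y ∈ r := by
  simp only [ran, ZFSet.mem_sep]
  exact ⟨fun ⟨_, y, _, h⟩ => ⟨y, h⟩, fun ⟨y, h⟩ => ⟨(pair_fld h).2, y, (pair_fld h).1, h⟩⟩

instance : DFun A (fun v => ran (t v)) :=
  DFun.comp₁ (f := ran) (by unfold ran; infer_instance) ht

theorem domA {a : ZFSet.{u}} (ha : a ∈ A) : dom a ∈ A := DFun.val₁ (f := dom) inferInstance ha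
theorem ranA {a : ZFSet.{u}} (ha : a ∈ A) : ran a ∈ A := DFun.val₁ (f := ran) inferInstance ha

theorem rank_lt_of_dom {r x : ZFSet.{u}} (h : x ∈ dom r) : x.rank < r.rank := by
  obtain ⟨y, h⟩ := mem_dom.1 h
  have h0 := ZFSet.rank_lt_of_mem h
  have h1 : x ∈ ({x} : ZFSet) := by simp
  have h2 : ({x} : ZFSet) ∈ ZFSet.pair x y := by simp [ZFSet.pair]
  exact (ZFSet.rank_lt_of_mem h1).trans ((ZFSet.rank_lt_of_mem h2).trans h0)

/-- The restriction of the function `H` to the set `a`, as a set of pairs. -/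
noncomputable def gr (H : ZFSet.{u} → ZFSet.{u}) (a : ZFSet.{u}) : ZFSet.{u} :=
  img (fun x => ZFSet.pair x (H x)) a

@[simp] theorem pair_mem_gr {H : ZFSet.{u} → ZFSet.{u}} {a x y : ZFSet.{u}} :
    ZFSet.pair x y ∈ gr H a ↔ x ∈ a ∧ y = H x := by
  simp only [gr, mem_img, ZFSet.pair_inj]
  exact ⟨by rintro ⟨x', h, rfl, rfl⟩; exact ⟨h, rfl⟩, fun h => ⟨x, h.1, rfl, h.2⟩⟩

theorem mem_gr {H : ZFSet.{u} → ZFSet.{u}} {a z : ZFSet.{u}} :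
    z ∈ gr H a ↔ ∃ x ∈ a, z = ZFSet.pair x (H x) := by simp [gr]

instance DFun.gr' {F : (ℕ → ZFSet.{u}) → ZFSet.{u} → ZFSet.{u}}
    [h : DFun A (fun w => F (fun i => w (i + 1)) (w 0))] :
    DFun A (fun v => TM.gr (F v) (t v)) := by
  unfold TM.gr; infer_instance

/-- `f` is a function with domain `d`. -/
def FnOn (f d : ZFSet.{u}) : Prop :=
  (∀ z ∈ f, ∃ x ∈ d, ∃ y ∈ ran f, z = ZFSet.pair x y) ∧
  ∀ x ∈ d, ∃ y ∈ ran f, ZFSet.pair x y ∈ f ∧ ∀ y' ∈ ran f, ZFSet.pair x y' ∈ f → y' = y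

instance : Dfn A (fun v => FnOn (t v) (s v)) :=
  Dfn.comp₂ (P := FnOn) (by unfold FnOn; infer_instance) ht hs

/-- A set of pairs witnessing instances of the recursion `H x = F x (H ↾ D x)`. -/
def Sound (D : ZFSet.{u} → ZFSet.{u}) (F : ZFSet.{u} → ZFSet.{u} → ZFSet.{u}) (A : Set ZFSet.{u})
    (r : ZFSet.{u}) : Prop :=
  ∀ z ∈ r, ∃ x ∈ dom r, ∃ y ∈ ran r, z = ZFSet.pair x y ∧
    ∃ f ∈ A, f ⊆ r ∧ FnOn f (D x) ∧ y = F x f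

theorem Sound.eq {D : ZFSet.{u} → ZFSet.{u}} {F : ZFSet.{u} → ZFSet.{u} → ZFSet.{u}}
    {H : ZFSet.{u} → ZFSet.{u}} (hD : ∀ x, ∀ y ∈ D x, y.rank < x.rank)
    (hH : ∀ x ∈ A, H x = F x (gr H (D x))) {r : ZFSet.{u}} (hr : Sound D F A r) (hrA : r ∈ A) :
    ∀ (o : Ordinal.{u}) (x y : ZFSet.{u}), x.rank = o → ZFSet.pair x y ∈ r → y = H x := by
  intro o
  induction o using WellFoundedLT.induction with
  | _ o ih =>
    intro x y hx h
    obtain ⟨x', _, y', _, e, f, _, hf, hfn, hy⟩ := hr _ h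
    obtain ⟨rfl, rfl⟩ := ZFSet.pair_inj.1 e
    rw [hH _ (of_pairA (trA hrA h)).1, hy]
    congr 1
    have key : ∀ x1 ∈ D x, ∀ y1, ZFSet.pair x1 y1 ∈ f → y1 = H x1 := fun x1 hx1 y1 h1 =>
      ih _ (hx ▸ hD _ _ hx1) x1 y1 rfl (hf h1)
    ext z
    rw [mem_gr]
    constructor
    · intro hz
      obtain ⟨x1, hx1, y1, _, rfl⟩ := hfn.1 z hz
      exact ⟨x1, hx1, by rw [key x1 hx1 y1 hz]⟩
    · rintro ⟨x1, hx1, rfl⟩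
      obtain ⟨y1, _, h1, _⟩ := hfn.2 x1 hx1
      rw [← key x1 hx1 y1 h1]; exact h1

/-- Definability of functions defined by recursion along a rank-decreasing relation. -/
theorem DFun.recursion {D : ZFSet.{u} → ZFSet.{u}} {F : ZFSet.{u} → ZFSet.{u} → ZFSet.{u}}
    {H : ZFSet.{u} → ZFSet.{u}} (hD : ∀ x, ∀ y ∈ D x, y.rank < x.rank)
    (hH : ∀ x ∈ A, H x = F x (gr H (D x)))
    (dD : DFun A (fun v => D (v 0))) (dF : DFun A (fun v => F (v 0) (v 1))) :
    DFun A (fun v => H (v 0)) := by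
  have iD : ∀ t [DFun A t], DFun A (fun v => D (t v)) := fun t ht => dD.comp₁ ht
  have iF : ∀ t s [DFun A t] [DFun A s], DFun A (fun v => F (t v) (s v)) :=
    fun t s ht hs => dF.comp₂ ht hs
  have iS0 : Dfn A (fun v => Sound D F A (v 0)) := by
    unfold Sound; infer_instance
  have iS : ∀ t [DFun A t], Dfn A (fun v => Sound D F A (t v)) := fun t ht => iS0.comp₁ ht
  have ex : ∀ (o : Ordinal.{u}) (x : ZFSet.{u}), x ∈ A → x.rank = o →
      ∃ r ∈ A, Sound D F A r ∧ ZFSet.pair x (H x) ∈ r := by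
    intro o
    induction o using WellFoundedLT.induction with
    | _ o ih =>
      intro x hxA hx
      have hDx : D x ∈ A := DFun.val₁ dD hxA
      obtain ⟨b, hb, hb'⟩ := collA (R := fun x' r => Sound D F A r ∧ x' ∈ dom r) hDx (by
        intro x' hx'
        obtain ⟨r, hr, h1, h2⟩ := ih _ (hx ▸ hD _ _ hx') x' (trA hDx hx') rfl
        exact ⟨r, hr, h1, mem_dom.2 ⟨_, h2⟩⟩)
      have hb2 : ZFSet.sUnion (ZFSet.sep (fun r => Sound D F A r) b) ∈ A := sUnionA (sepA hb)
      set r' := ZFSet.sUnion (ZFSet.sep (fun r => Sound D F A r) b) with hr'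
      have hs : Sound D F A r' := by
        intro z hz
        obtain ⟨r, hr, hzr⟩ := ZFSet.mem_sUnion.1 hz
        have hsub : r ⊆ r' := fun w hw => ZFSet.mem_sUnion.2 ⟨r, hr, hw⟩
        obtain ⟨x, hx, y, hy, e, f, hf, h1, h2⟩ := (ZFSet.mem_sep.1 hr).2 z hzr
        exact ⟨x, mem_dom.2 ⟨y, hsub (e ▸ hzr)⟩, y, mem_ran.2 ⟨x, hsub (e ▸ hzr)⟩, e, f, hf,
          fun w hw => hsub (h1 hw), h2⟩
      have hval : ∀ x1 ∈ D x, ZFSet.pair x1 (H x1) ∈ r' := by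
        intro x1 hx1
        obtain ⟨r, hr, h1, h2⟩ := hb' x1 hx1
        obtain ⟨y, h2⟩ := mem_dom.1 h2
        have := h1.eq hD hH (trA hb hr) _ x1 y rfl h2
        subst this
        exact ZFSet.mem_sUnion.2 ⟨r, ZFSet.mem_sep.2 ⟨hr, h1⟩, h2⟩
      have hf : gr H (D x) = ZFSet.sep (fun z => ∃ x1 ∈ dom r', ∃ y ∈ ran r',
          z = ZFSet.pair x1 y ∧ x1 ∈ D x) r' := by
        ext z
        rw [mem_gr, ZFSet.mem_sep]
        constructor
        · rintro ⟨x1, hx1, rfl⟩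
          exact ⟨hval _ hx1, x1, mem_dom.2 ⟨_, hval _ hx1⟩, _, mem_ran.2 ⟨_, hval _ hx1⟩, rfl, hx1⟩
        · rintro ⟨hz, x1, _, y, _, rfl, hx1⟩
          exact ⟨x1, hx1, by rw [hs.eq hD hH hb2 _ x1 y rfl hz]⟩
      have hfA : gr H (D x) ∈ A := by
        have : Fact (r' ∈ A) := ⟨hb2⟩
        have : Fact (x ∈ A) := ⟨hxA⟩
        rw [hf]; exact sepA hb2
      have hHx : H x ∈ A := by rw [hH x hxA]; exact DFun.val₂ dF hxA hfA
      refine ⟨insert (ZFSet.pair x (H x)) r', insertA (opairA hxA hHx) hb2, ?_, by simp⟩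
      intro z hz
      have hsub : r' ⊆ insert (ZFSet.pair x (H x)) r' := fun w hw =>
        ZFSet.mem_insert_of_mem _ hw
      rcases ZFSet.mem_insert_iff.1 hz with rfl | hz
      · refine ⟨x, mem_dom.2 ⟨_, ZFSet.mem_insert _ _⟩, H x, mem_ran.2 ⟨_, ZFSet.mem_insert _ _⟩,
          rfl, gr H (D x), hfA, ?_, ?_, hH x hxA⟩
        · intro w hw
          obtain ⟨x1, hx1, rfl⟩ := mem_gr.1 hw
          exact hsub (hval _ hx1)
        · refine ⟨fun w hw => ?_, fun x1 hx1 => ?_⟩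
          · obtain ⟨x1, hx1, rfl⟩ := mem_gr.1 hw
            exact ⟨x1, hx1, _, mem_ran.2 ⟨_, hw⟩, rfl⟩
          · have : ZFSet.pair x1 (H x1) ∈ gr H (D x) := by simp [hx1]
            refine ⟨H x1, mem_ran.2 ⟨_, this⟩, this, fun y _ h => ?_⟩
            exact (pair_mem_gr.1 h).2
      · obtain ⟨x, hx, y, hy, e, f, hf, h1, h2⟩ := hs z hz
        exact ⟨x, mem_dom.2 ⟨y, hsub (e ▸ hz)⟩, y, mem_ran.2 ⟨x, hsub (e ▸ hz)⟩, e, f, hf,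
          fun w hw => hsub (h1 hw), h2⟩
  refine ⟨fun v hv => ?_, ?_⟩
  · obtain ⟨r, hr, _, h⟩ := ex _ (v 0) (hv 0) rfl
    exact (of_pairA (trA hr h)).2
  · have : Dfn A (fun w => ∃ r ∈ A, Sound D F A r ∧ ZFSet.pair (w 1) (w 0) ∈ r) := inferInstance
    refine this.congr fun w hw => ?_
    constructor
    · intro e
      obtain ⟨r, hr, h1, h2⟩ := ex _ (w 1) (hw 1) rfl
      rw [e]
      exact ⟨r, hr, h1, h2⟩
    · rintro ⟨r, hr, h1, h2⟩
      exact h1.eq hD hH hr _ _ _ rfl h2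

end more
end TM

/-! ### Quantification over pairs, application, recursion and well-orderings in a model -/

namespace TM

section quant
variable {A : Set ZFSet.{u}} [ZFM A]
variable {t s : (ℕ → ZFSet.{u}) → ZFSet.{u}} [ht : DFun A t] [hs : DFun A s]

instance {R : (ℕ → ZFSet.{u}) → ZFSet.{u} → ZFSet.{u} → Prop}
    [h : Dfn A (fun w => R (fun i => w (i + 2)) (w 1) (w 0))] :
    Dfn A (fun v => ∀ a b, ZFSet.pair a b ∈ t v → R v a b) := by
  have ht' : DFun A (fun w => t (fun i => w (i+2))) := ht.ren _
  have : Dfn A (fun v => ∀ a, a ∈ A → ∀ b, b ∈ A → (ZFSet.pair a b ∈ t v → R v a b)) :=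
    inferInstance
  refine this.congr fun v hv => ⟨fun H x _ y _ => H x y, fun H x y hx => ?_⟩
  have := of_pairA (trA (ht.mem v hv) hx)
  exact H x this.1 y this.2 hx

instance {R : (ℕ → ZFSet.{u}) → ZFSet.{u} → ZFSet.{u} → Prop}
    [h : Dfn A (fun w => R (fun i => w (i + 2)) (w 1) (w 0))] :
    Dfn A (fun v => ∃ a b, ZFSet.pair a b ∈ t v ∧ R v a b) := by
  have ht' : DFun A (fun w => t (fun i => w (i+2))) := ht.ren _
  have : Dfn A (fun v => ∃ a, a ∈ A ∧ ∃ b, b ∈ A ∧ (ZFSet.pair a b ∈ t v ∧ R v a b)) :=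
    inferInstance
  refine this.congr fun v hv => ⟨fun ⟨x, y, hx, h⟩ => ?_, fun ⟨x, _, y, _, h⟩ => ⟨x, y, h⟩⟩
  have := of_pairA (trA (ht.mem v hv) hx)
  exact ⟨x, this.1, y, this.2, hx, h⟩

instance {R : (ℕ → ZFSet.{u}) → ZFSet.{u} → Prop}
    [h : Dfn A (fun w => R (fun i => w (i + 1)) (w 0))] :
    Dfn A (fun v => ∀ a, ZFSet.pair a (s v) ∈ t v → R v a) := by
  have : Dfn A (fun v => ∀ a, a ∈ A → (ZFSet.pair a (s v) ∈ t v → R v a)) :=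
    inferInstance
  refine this.congr fun v hv => ⟨fun H x _ => H x, fun H x hx => ?_⟩
  exact H x (of_pairA (trA (ht.mem v hv) hx)).1 hx

instance {R : (ℕ → ZFSet.{u}) → ZFSet.{u} → Prop}
    [h : Dfn A (fun w => R (fun i => w (i + 1)) (w 0))] :
    Dfn A (fun v => ∃ a, ZFSet.pair a (s v) ∈ t v ∧ R v a) := by
  have : Dfn A (fun v => ∃ a, a ∈ A ∧ (ZFSet.pair a (s v) ∈ t v ∧ R v a)) :=
    inferInstance
  refine this.congr fun v hv => ⟨fun ⟨x, hx, h⟩ => ?_, fun ⟨x, _, h⟩ => ⟨x, h⟩⟩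
  exact ⟨x, (of_pairA (trA (ht.mem v hv) hx)).1, hx, h⟩

instance {R : (ℕ → ZFSet.{u}) → ZFSet.{u} → Prop}
    [h : Dfn A (fun w => R (fun i => w (i + 1)) (w 0))] :
    Dfn A (fun v => ∀ a, ZFSet.pair (s v) a ∈ t v → R v a) := by
  have : Dfn A (fun v => ∀ a, a ∈ A → (ZFSet.pair (s v) a ∈ t v → R v a)) :=
    inferInstance
  refine this.congr fun v hv => ⟨fun H x _ => H x, fun H x hx => ?_⟩
  exact H x (of_pairA (trA (ht.mem v hv) hx)).2 hx

instance {R : (ℕ → ZFSet.{u}) → ZFSet.{u} → Prop}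
    [h : Dfn A (fun w => R (fun i => w (i + 1)) (w 0))] :
    Dfn A (fun v => ∃ a, ZFSet.pair (s v) a ∈ t v ∧ R v a) := by
  have : Dfn A (fun v => ∃ a, a ∈ A ∧ (ZFSet.pair (s v) a ∈ t v ∧ R v a)) :=
    inferInstance
  refine this.congr fun v hv => ⟨fun ⟨x, hx, h⟩ => ?_, fun ⟨x, _, h⟩ => ⟨x, h⟩⟩
  exact ⟨x, (of_pairA (trA (ht.mem v hv) hx)).2, hx, h⟩

instance : Dfn A (fun v => ∃ a, ZFSet.pair (s v) a ∈ t v) := by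
  have : Dfn A (fun v => ∃ a, ZFSet.pair (s v) a ∈ t v ∧ True) := inferInstance
  exact this.congr (by simp)

instance : Dfn A (fun v => ∃ a, ZFSet.pair a (s v) ∈ t v) := by
  have : Dfn A (fun v => ∃ a, ZFSet.pair a (s v) ∈ t v ∧ True) := inferInstance
  exact this.congr (by simp)

instance : Dfn A (fun v => ∃ a, a ∈ t v) := by
  have : Dfn A (fun v => ∃ a, a ∈ t v ∧ True) := inferInstance
  exact this.congr (by simp)

/-- The value of the function (set of pairs) `f` at `x`. -/
noncomputable def ap (f x : ZFSet.{u}) : ZFSet.{u} :=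
  ZFSet.sUnion (ZFSet.sep (fun y => ZFSet.pair x y ∈ f) (ran f))

theorem ap_eq {f x y : ZFSet.{u}} (h : ZFSet.pair x y ∈ f)
    (hu : ∀ y', ZFSet.pair x y' ∈ f → y' = y) : ap f x = y := by
  have : ZFSet.sep (fun y => ZFSet.pair x y ∈ f) (ran f) = {y} := by
    ext z; simp only [ZFSet.mem_sep, mem_ran, ZFSet.mem_singleton]
    exact ⟨fun h => hu _ h.2, fun e => e ▸ ⟨⟨x, h⟩, h⟩⟩
  rw [ap, this]; simp

instance : DFun A (fun v => ap (t v) (s v)) :=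
  DFun.comp₂ (f := ap) (by unfold ap; infer_instance) ht hs

end quant

/-- The function defined by the recursion `H x = C {H y : y ∈ x}`. -/
noncomputable def recH (C : ZFSet.{u} → ZFSet.{u}) (x : ZFSet.{u}) : ZFSet.{u} :=
  C (ZFSet.range (fun y : x => recH C y.1))
termination_by x.rank
decreasing_by exact ZFSet.rank_lt_of_mem y.2

theorem recH_eq (C : ZFSet.{u} → ZFSet.{u}) (x : ZFSet.{u}) :
    recH C x = C (img (recH C) x) := by
  rw [recH, img]

section
variable {A : Set ZFSet.{u}} [ZFM A]

theorem ran_gr {H : ZFSet.{u} → ZFSet.{u}} {a : ZFSet.{u}} : ran (gr H a) = img H a := by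
  ext y; simp

theorem dom_gr {H : ZFSet.{u} → ZFSet.{u}} {a : ZFSet.{u}} : dom (gr H a) = a := by
  ext y; simp

theorem recH_dfun {C : ZFSet.{u} → ZFSet.{u}} (hC : DFun A (fun v => C (v 0))) :
    DFun A (fun v => recH C (v 0)) := by
  have iC : ∀ t [DFun A t], DFun A (fun v => C (t v)) := fun t ht => hC.comp₁ ht
  refine DFun.recursion (D := fun x => x) (F := fun x f => C (ran f))
    (fun x y h => ZFSet.rank_lt_of_mem h) (fun x _ => ?_) inferInstance inferInstance
  rw [ran_gr, recH_eq]

/-- The von Neumann ordinal of the rank of `x`. -/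
noncomputable def rkf (x : ZFSet.{u}) : ZFSet.{u} := x.rank.toZFSet

theorem rkf_eq (x : ZFSet.{u}) : rkf x = recH (fun s => ZFSet.sUnion (img (fun y => insert y y) s)) x := by
  induction x using ZFSet.inductionOn with
  | _ x ih =>
    rw [recH_eq]
    ext z
    simp only [rkf, ZFSet.mem_sUnion, mem_img, Ordinal.mem_toZFSet_iff]
    constructor
    · rintro ⟨a, ha, rfl⟩
      obtain ⟨y, hy, h⟩ := ZFSet.lt_rank_iff.1 ha
      refine ⟨_, ⟨_, ⟨y, hy, rfl⟩, rfl⟩, ?_⟩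
      rw [← ih y hy, ZFSet.mem_insert_iff, rkf]
      rcases h.eq_or_lt with h | h
      · left; rw [h]
      · right; exact Ordinal.mem_toZFSet_iff.2 ⟨a, h, rfl⟩
    · rintro ⟨_, ⟨_, ⟨y, hy, rfl⟩, rfl⟩, h⟩
      rw [← ih y hy, ZFSet.mem_insert_iff, rkf] at h
      have := ZFSet.rank_lt_of_mem hy
      rcases h with rfl | h
      · exact ⟨_, this, rfl⟩
      · obtain ⟨a, ha, rfl⟩ := Ordinal.mem_toZFSet_iff.1 h
        exact ⟨a, ha.trans this, rfl⟩

theorem rkfA {x : ZFSet.{u}} (hx : x ∈ A) : rkf x ∈ A := by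
  rw [rkf_eq]
  exact DFun.val₁ (f := recH (fun s => ZFSet.sUnion (img (fun y => insert y y) s)))
    (recH_dfun inferInstance) hx

end
end TM

/-! ### Choice and well-orderings inside a model -/

namespace TM

/-- A transitive class of sets that is a model of `ZFC`. -/
class ZFCM (A : Set ZFSet.{u}) : Prop extends ZFM A where
  choice' : ∀ a, a ∈ A → (∀ x ∈ a, ∃ y, y ∈ x) →
    ∃ f, f ∈ A ∧ (∀ x y y', ZFSet.pair x y ∈ f → ZFSet.pair x y' ∈ f → y = y') ∧
      ∀ x ∈ a, ∃ y, ZFSet.pair x y ∈ f ∧ y ∈ x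

section
variable {A : Set ZFSet.{u}} [ZFM A]

/-- The class of ordinals of a model is not a set of the model. -/
theorem no_ord_set {b : ZFSet.{u}} (hb : b ∈ A) (h : ∀ α ∈ A, α.IsOrdinal → α ∈ b) : False := by
  have : ZFSet.sep (fun x => x.IsOrdinal) b ∈ A := sepA hb
  set o := ZFSet.sep (fun x => x.IsOrdinal) b with ho
  have ho' : o.IsOrdinal := by
    rw [ZFSet.isOrdinal_iff_forall_mem_isOrdinal]
    refine ⟨fun x hx y hy => ?_, fun x hx => (ZFSet.mem_sep.1 hx).2⟩
    have h1 := ZFSet.mem_sep.1 hx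
    have h2 := h1.2.mem hy
    exact ZFSet.mem_sep.2 ⟨h y (trA (trA hb h1.1) hy) h2, h2⟩
  exact ZFSet.mem_irrefl o (ZFSet.mem_sep.2 ⟨h o this ho', ho'⟩)

/-- A definable function on the ordinals of the model which is injective cannot take all its
values in a set of the model. -/
theorem no_inj {H : ZFSet.{u} → ZFSet.{u}} (dH : DFun A (fun v => H (v 0))) {a : ZFSet.{u}}
    (ha : a ∈ A) (h : ∀ α ∈ A, α.IsOrdinal → H α ∈ a)
    (hi : ∀ α ∈ A, ∀ β ∈ α, α.IsOrdinal → H β ≠ H α) : False := by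
  have iH : ∀ t [DFun A t], DFun A (fun v => H (t v)) := fun t ht => dH.comp₁ ht
  obtain ⟨b, hb, hb'⟩ := collA (A := A) (R := fun x α => (α.IsOrdinal ∧ H α = x) ∨
    ∀ β ∈ A, β.IsOrdinal → H β ≠ x) ha (by
      intro x hx
      by_cases hc : ∃ β ∈ A, β.IsOrdinal ∧ H β = x
      · obtain ⟨β, hβ, h⟩ := hc; exact ⟨β, hβ, Or.inl h⟩
      · exact ⟨∅, emptyA, Or.inr fun β hβ h1 h2 => hc ⟨β, hβ, h1, h2⟩⟩)
  refine no_ord_set hb fun α hα ho => ?_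
  obtain ⟨β, hβ, h1⟩ := hb' (H α) (h α hα ho)
  rcases h1 with ⟨h1, h2⟩ | h1
  · rcases h1.mem_trichotomous ho with h3 | h3 | h3
    · exact absurd h2 (hi α hα β h3 ho)
    · exact h3 ▸ hβ
    · exact absurd h2.symm (hi β (trA hb hβ) α h3 h1)
  · exact absurd rfl (h1 α hα ho)

/-- The least element of the non-empty set of ordinals. -/
theorem exists_least {p : ZFSet.{u} → Prop} (h : ∃ α, α.IsOrdinal ∧ p α) :
    ∃ α : ZFSet.{u}, α.IsOrdinal ∧ p α ∧ ∀ β ∈ α, ¬ p β := by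
  obtain ⟨α, h1, h2⟩ := h
  induction α using ZFSet.inductionOn with
  | _ α ih =>
    by_cases hc : ∃ β ∈ α, p β
    · obtain ⟨β, hβ, h⟩ := hc; exact ih β hβ (h1.mem hβ) h
    · exact ⟨α, h1, h2, fun β hβ h => hc ⟨β, hβ, h⟩⟩

end

section
variable {A : Set ZFSet.{u}} [hA : ZFCM A]

/-- A choice function for the non-empty subsets of a set. -/
theorem choiceA {a : ZFSet.{u}} (ha : a ∈ A) : ∃ f ∈ A, ∀ x ∈ A, x ⊆ a → x ≠ ∅ → ap f x ∈ x := by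
  have h1 : ZFSet.sep (fun x => x ≠ ∅) (pw A a) ∈ A := sepA (pwA ha)
  obtain ⟨f, hf, h2, h3⟩ := hA.choice' _ h1 (fun x hx => by
    exact (ZFSet.eq_empty_or_nonempty x).resolve_left (ZFSet.mem_sep.1 hx).2)
  refine ⟨f, hf, fun x hx hxa hne => ?_⟩
  obtain ⟨y, hy, hyx⟩ := h3 x (ZFSet.mem_sep.2 ⟨mem_pw.2 ⟨hxa, hx⟩, hne⟩)
  rw [ap_eq hy (fun y' h' => h2 _ _ _ h' hy)]; exact hyx

/-- Every set of the model is, in the model, the image of an ordinal. -/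
theorem exists_enum {a : ZFSet.{u}} (ha : a ∈ A) :
    ∃ α ∈ A, α.IsOrdinal ∧ ∃ H : ZFSet.{u} → ZFSet.{u}, DFun A (fun v => H (v 0)) ∧
      ∀ x ∈ a, ∃ β ∈ α, x = H β := by
  obtain ⟨f, hf, hc⟩ := choiceA ha
  have : Fact (f ∈ A) := ⟨hf⟩
  have : Fact (a ∈ A) := ⟨ha⟩
  let C : ZFSet.{u} → ZFSet.{u} := fun s => ap f (a \ s)
  have dC : DFun A (fun v => C (v 0)) := inferInstance
  have dH := recH_dfun dC
  have iH : ∀ t [DFun A t], DFun A (fun v => recH C (t v)) := fun t ht => dH.comp₁ ht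
  by_contra hno
  have key : ∀ α ∈ A, α.IsOrdinal → recH C α ∈ a \ img (recH C) α := by
    intro α hα ho
    rw [recH_eq]
    have himg : img (recH C) α ∈ A := DFun.val₁ (f := img (recH C)) inferInstance hα
    have hd : a \ img (recH C) α ∈ A :=
      DFun.val₂ (f := fun x y => x \ y) inferInstance ha himg
    refine hc _ hd (fun x hx => (ZFSet.mem_sdiff.1 hx).1) fun he => hno ⟨α, hα, ho, recH C, dH, ?_⟩
    intro x hx
    by_contra h
    have : x ∈ a \ img (recH C) α := ZFSet.mem_sdiff.2 ⟨hx, fun h' => h (by simpa using h')⟩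
    rw [he] at this; exact ZFSet.notMem_empty _ this
  refine no_inj dH ha (fun α hα ho => (ZFSet.mem_sdiff.1 (key α hα ho)).1) fun α hα β hβ ho e => ?_
  exact (ZFSet.mem_sdiff.1 (key α hα ho)).2 (mem_img.2 ⟨β, hβ, e.symm⟩)

end
end TM

/-! ### Names and the forcing relation -/

namespace TM

/-- `G` is a filter on the preorder `(P, le)` of the model `A` that is generic over `A`. -/
structure Gen (A : Set ZFSet.{u}) (P le G : ZFSet.{u}) : Prop where
  hP : P ∈ A
  hle : le ∈ A
  le_sub : ∀ p q, ZFSet.pair p q ∈ le → p ∈ P ∧ q ∈ P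
  refl : ∀ p ∈ P, ZFSet.pair p p ∈ le
  trans : ∀ p q r, ZFSet.pair p q ∈ le → ZFSet.pair q r ∈ le → ZFSet.pair p r ∈ le
  sub : ∀ p ∈ G, p ∈ P
  up : ∀ p q, ZFSet.pair p q ∈ le → p ∈ G → q ∈ G
  dir : ∀ p ∈ G, ∀ q ∈ G, ∃ r ∈ G, ZFSet.pair r p ∈ le ∧ ZFSet.pair r q ∈ le
  gen : ∀ D ∈ A, (∀ p ∈ D, p ∈ P) → (∀ p ∈ P, ∃ q ∈ D, ZFSet.pair q p ∈ le) → ∃ q ∈ D, q ∈ G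

/-- The value of the name `x` under the filter `G`. -/
noncomputable def val (G x : ZFSet.{u}) : ZFSet.{u} :=
  ZFSet.range (fun y : ZFSet.sep (fun y => ∃ p ∈ G, ZFSet.pair y p ∈ x) (dom x) => val G y.1)
termination_by x.rank
decreasing_by exact rank_lt_of_dom (ZFSet.mem_sep.1 y.2).1

theorem mem_val {G x z : ZFSet.{u}} :
    z ∈ val G x ↔ ∃ y, ∃ p ∈ G, ZFSet.pair y p ∈ x ∧ z = val G y := by
  rw [val]
  simp only [ZFSet.mem_range, Subtype.exists, ZFSet.mem_sep, mem_dom]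
  constructor
  · rintro ⟨y, ⟨_, p, hp, h⟩, e⟩; exact ⟨y, p, hp, h, e.symm⟩
  · rintro ⟨y, p, hp, h, e⟩; exact ⟨y, ⟨⟨p, h⟩, p, hp, h⟩, e.symm⟩

theorem val_rank_le (G : ZFSet.{u}) : ∀ x : ZFSet.{u}, (val G x).rank ≤ x.rank := by
  intro x
  induction h : x.rank using WellFoundedLT.induction generalizing x with
  | _ o ih =>
    rw [ZFSet.rank_le_iff]
    intro z hz
    obtain ⟨y, p, _, hy, rfl⟩ := mem_val.1 hz
    have := rank_lt_of_dom (mem_dom.2 ⟨p, hy⟩)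
    exact (ih _ (h ▸ this) y rfl).trans_lt (h ▸ this)

/-- One half of the forcing clause for equality of names, relative to a relation `Q` between
conditions and names. -/
def Step (le : ZFSet.{u}) (Q : ZFSet.{u} → ZFSet.{u} → ZFSet.{u} → Prop) (p x y : ZFSet.{u}) : Prop :=
  ∀ a s, ZFSet.pair a s ∈ x → ∀ q, ZFSet.pair q p ∈ le → ZFSet.pair q s ∈ le →
    ∃ q', ZFSet.pair q' q ∈ le ∧ ∃ b t, ZFSet.pair b t ∈ y ∧ ZFSet.pair q' t ∈ le ∧ Q q' a b

/-- `r` is a set of triples `(p, x, y)` closed under the forcing clauses for `p ⊩ x = y`. -/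
def Bis (le r : ZFSet.{u}) : Prop :=
  ∀ p z, ZFSet.pair p z ∈ r → ∀ x y, ZFSet.pair x y ∈ ({z} : ZFSet) →
    Step le (fun q a b => ZFSet.pair q (ZFSet.pair a b) ∈ r) p x y ∧
    Step le (fun q a b => ZFSet.pair q (ZFSet.pair b a) ∈ r) p y x

/-- The forcing relation `p ⊩ x = y`, as the greatest relation closed under its clauses. -/
def FEq (A : Set ZFSet.{u}) (le p x y : ZFSet.{u}) : Prop :=
  ∃ r ∈ A, Bis le r ∧ ZFSet.pair p (ZFSet.pair x y) ∈ r

theorem Step.mono {le p x y : ZFSet.{u}} {Q Q' : ZFSet.{u} → ZFSet.{u} → ZFSet.{u} → Prop}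
    (h : Step le Q p x y) (hQ : ∀ q a b, a ∈ dom x → b ∈ dom y → Q q a b → Q' q a b) :
    Step le Q' p x y := by
  intro a s has q hq hqs
  obtain ⟨q', h1, b, t, h2, h3, h4⟩ := h a s has q hq hqs
  exact ⟨q', h1, b, t, h2, h3, hQ _ _ _ (mem_dom.2 ⟨_, has⟩) (mem_dom.2 ⟨_, h2⟩) h4⟩

theorem Bis.step {le r p x y : ZFSet.{u}} (h : Bis le r) (hr : ZFSet.pair p (ZFSet.pair x y) ∈ r) :
    Step le (fun q a b => ZFSet.pair q (ZFSet.pair a b) ∈ r) p x y ∧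
    Step le (fun q a b => ZFSet.pair q (ZFSet.pair b a) ∈ r) p y x :=
  h _ _ hr x y (by simp)

section
variable {A : Set ZFSet.{u}} [hA : ZFM A] {le : ZFSet.{u}} [hle : Fact (le ∈ A)]

instance {t : (ℕ → ZFSet.{u}) → ZFSet.{u}} [ht : DFun A t] : Dfn A (fun v => Bis le (t v)) :=
  Dfn.comp₁ (P := Bis le) (by unfold Bis Step; infer_instance) ht

instance {t s r : (ℕ → ZFSet.{u}) → ZFSet.{u}} [ht : DFun A t] [hs : DFun A s] [hr : DFun A r] :
    Dfn A (fun v => FEq A le (t v) (s v) (r v)) :=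
  Dfn.comp₃ (P := FEq A le) (by unfold FEq; infer_instance) ht hs hr

theorem FEq.step {p x y : ZFSet.{u}} (h : FEq A le p x y) :
    Step le (FEq A le) p x y ∧ Step le (fun q a b => FEq A le q b a) p y x := by
  obtain ⟨r, hr, h1, h2⟩ := h
  have := h1.step h2
  exact ⟨this.1.mono fun q a b _ _ h => ⟨r, hr, h1, h⟩, this.2.mono fun q a b _ _ h => ⟨r, hr, h1, h⟩⟩

/-- Forced equality satisfies the recursive clause from right to left: a condition forces `x` and
`y` to be equal once it forces each of them to be included in the other. -/
theorem FEq.intro {P p x y : ZFSet.{u}} (hP : P ∈ A)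
    (le_sub : ∀ p q, ZFSet.pair p q ∈ le → p ∈ P ∧ q ∈ P) (hp : p ∈ P) (hx : x ∈ A) (hy : y ∈ A)
    (h1 : Step le (FEq A le) p x y) (h2 : Step le (fun q a b => FEq A le q b a) p y x) :
    FEq A le p x y := by
  have hd : ZFSet.prod P (ZFSet.prod (dom x) (dom y)) ∈ A := prodA hP (prodA (domA hx) (domA hy))
  obtain ⟨b, hb, hb'⟩ := collA (A := A)
    (R := fun z r => Bis le r ∧ (z ∈ r ∨ ∀ r' ∈ A, Bis le r' → z ∉ r')) hd (by
      intro z hz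
      by_cases hc : ∃ r ∈ A, Bis le r ∧ z ∈ r
      · obtain ⟨r, hr, h, h'⟩ := hc; exact ⟨r, hr, h, Or.inl h'⟩
      · exact ⟨∅, emptyA, fun _ _ h => absurd h (ZFSet.notMem_empty _),
          Or.inr fun r' hr' h h' => hc ⟨r', hr', h, h'⟩⟩)
  set R := ZFSet.sUnion (ZFSet.sep (fun r => Bis le r) b) with hR
  have hRA : R ∈ A := sUnionA (sepA hb)
  have hmem : ∀ q a c, a ∈ dom x → c ∈ dom y → q ∈ P → FEq A le q a c →
      ZFSet.pair q (ZFSet.pair a c) ∈ R := by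
    rintro q a c ha hc hq ⟨r, hr, h3, h4⟩
    obtain ⟨r', hr', h5, h6⟩ := hb' (ZFSet.pair q (ZFSet.pair a c)) (by simp [-mem_dom, ha, hc, hq])
    rcases h6 with h6 | h6
    · exact ZFSet.mem_sUnion.2 ⟨r', ZFSet.mem_sep.2 ⟨hr', h5⟩, h6⟩
    · exact absurd h4 (h6 r hr h3)
  have hpA : p ∈ A := trA hP hp
  refine ⟨insert (ZFSet.pair p (ZFSet.pair x y)) R, insertA (opairA hpA (opairA hx hy)) hRA, ?_,
    ZFSet.mem_insert _ _⟩
  have hsub : ∀ {w}, w ∈ R → w ∈ insert (ZFSet.pair p (ZFSet.pair x y)) R := fun hw =>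
        ZFSet.mem_insert_of_mem _ hw
  rintro p' z hz x' y' e
  rw [ZFSet.mem_singleton] at e; subst e
  rcases ZFSet.mem_insert_iff.1 hz with hz | hz
  · simp only [ZFSet.pair_inj] at hz
    obtain ⟨rfl, rfl, rfl⟩ := hz
    constructor
    · intro a s has q hq hqs
      obtain ⟨q', h3, c, t, h4, h5, h6⟩ := h1 a s has q hq hqs
      exact ⟨q', h3, c, t, h4, h5, hsub (hmem _ _ _ (mem_dom.2 ⟨_, has⟩) (mem_dom.2 ⟨_, h4⟩)
        (le_sub _ _ h3).1 h6)⟩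
    · intro a s has q hq hqs
      obtain ⟨q', h3, c, t, h4, h5, h6⟩ := h2 a s has q hq hqs
      exact ⟨q', h3, c, t, h4, h5, hsub (hmem _ _ _ (mem_dom.2 ⟨_, h4⟩) (mem_dom.2 ⟨_, has⟩)
        (le_sub _ _ h3).1 h6)⟩
  · obtain ⟨r, hr, h3⟩ := ZFSet.mem_sUnion.1 hz
    have h4 := ((ZFSet.mem_sep.1 hr).2).step h3
    exact ⟨h4.1.mono fun q a b _ _ h => hsub (ZFSet.mem_sUnion.2 ⟨r, hr, h⟩),
      h4.2.mono fun q a b _ _ h => hsub (ZFSet.mem_sUnion.2 ⟨r, hr, h⟩)⟩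

end

namespace Gen
variable {A : Set ZFSet.{u}} [hA : ZFM A] {P le G : ZFSet.{u}} (hG : Gen A P le G)
include hG

theorem feq_mono {p q x y : ZFSet.{u}} (h : FEq A le p x y) (hq : ZFSet.pair q p ∈ le) (hx : x ∈ A)
    (hy : y ∈ A) : FEq A le q x y := by
  have : Fact (le ∈ A) := ⟨hG.hle⟩
  refine FEq.intro hG.hP hG.le_sub (hG.le_sub _ _ hq).1 hx hy ?_ ?_
  · intro a s has q' hq' hs; exact h.step.1 a s has q' (hG.trans _ _ _ hq' hq) hs
  · intro a s has q' hq' hs; exact h.step.2 a s has q' (hG.trans _ _ _ hq' hq) hs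

/-- A generic filter decides every definable property of conditions. -/
theorem dec {R : ZFSet.{u} → Prop} (hR : Dfn A (fun v => R (v 0))) :
    ∃ r ∈ G, R r ∨ ∀ s, ZFSet.pair s r ∈ le → ¬ R s := by
  have : Fact (le ∈ A) := ⟨hG.hle⟩
  have iR : ∀ t [DFun A t], Dfn A (fun v => R (t v)) := fun t ht => hR.comp₁ ht
  obtain ⟨q, hq, h⟩ := hG.gen (ZFSet.sep (fun r => R r ∨ ∀ s, ZFSet.pair s r ∈ le → ¬ R s) P)
    (sepA hG.hP) (fun p hp => (ZFSet.mem_sep.1 hp).1) (by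
      intro p hp
      by_cases hc : ∃ s, ZFSet.pair s p ∈ le ∧ R s
      · obtain ⟨s, hs, h⟩ := hc
        exact ⟨s, ZFSet.mem_sep.2 ⟨(hG.le_sub _ _ hs).1, Or.inl h⟩, hs⟩
      · exact ⟨p, ZFSet.mem_sep.2 ⟨hp, Or.inr fun s hs h => hc ⟨s, hs, h⟩⟩, hG.refl p hp⟩)
  exact ⟨q, h, (ZFSet.mem_sep.1 hq).2⟩

/-- A generic filter meets every definable class that is dense below one of its members. -/
theorem meet {R : ZFSet.{u} → Prop} (hR : Dfn A (fun v => R (v 0))) {p : ZFSet.{u}} (hp : p ∈ G)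
    (h : ∀ q, ZFSet.pair q p ∈ le → ∃ r, ZFSet.pair r q ∈ le ∧ R r) : ∃ r ∈ G, R r := by
  obtain ⟨r, hr, h1 | h1⟩ := hG.dec hR
  · exact ⟨r, hr, h1⟩
  · obtain ⟨q, hq, h2, h3⟩ := hG.dir p hp r hr
    obtain ⟨s, hs, h4⟩ := h q h2
    exact absurd h4 (h1 s (hG.trans _ _ _ hs h3))

theorem nonempty : ∃ p, p ∈ G := by
  obtain ⟨r, hr, _⟩ := hG.dec (R := fun _ => True) inferInstance
  exact ⟨r, hr⟩

/-- An equality forced by a condition in the generic filter is true. -/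
theorem feq_sound : ∀ (o : Ordinal.{u}) {p x y : ZFSet.{u}}, x.rank ≤ o → p ∈ G → x ∈ A → y ∈ A →
    FEq A le p x y → val G x = val G y := by
  have : Fact (le ∈ A) := ⟨hG.hle⟩
  intro o
  induction o using WellFoundedLT.induction with
  | _ o ih =>
    intro p x y hx hp hxA hyA h
    have : Fact (x ∈ A) := ⟨hxA⟩
    have : Fact (y ∈ A) := ⟨hyA⟩
    ext z
    simp only [mem_val]
    constructor
    · rintro ⟨a, s, hs, has, rfl⟩
      have haA := (of_pairA (trA hxA has)).1
      have : Fact (a ∈ A) := ⟨haA⟩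
      obtain ⟨q, hq, hqp, hqs⟩ := hG.dir p hp s hs
      obtain ⟨r, hr, b, t, h1, h2, h3⟩ := hG.meet (R := fun r => ∃ b t, ZFSet.pair b t ∈ y ∧
        ZFSet.pair r t ∈ le ∧ FEq A le r a b) inferInstance hq (by
          intro q' hq'
          exact h.step.1 a s has q' (hG.trans _ _ _ hq' hqp) (hG.trans _ _ _ hq' hqs))
      refine ⟨b, t, hG.up _ _ h2 hr, h1, ?_⟩
      exact ih _ ((rank_lt_of_dom (mem_dom.2 ⟨_, has⟩)).trans_le hx) le_rfl hr haA
        (of_pairA (trA hyA h1)).1 h3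
    · rintro ⟨a, s, hs, has, rfl⟩
      have haA := (of_pairA (trA hyA has)).1
      have : Fact (a ∈ A) := ⟨haA⟩
      obtain ⟨q, hq, hqp, hqs⟩ := hG.dir p hp s hs
      obtain ⟨r, hr, b, t, h1, h2, h3⟩ := hG.meet (R := fun r => ∃ b t, ZFSet.pair b t ∈ x ∧
        ZFSet.pair r t ∈ le ∧ FEq A le r b a) inferInstance hq (by
          intro q' hq'
          exact h.step.2 a s has q' (hG.trans _ _ _ hq' hqp) (hG.trans _ _ _ hq' hqs))
      refine ⟨b, t, hG.up _ _ h2 hr, h1, ?_⟩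
      exact (ih _ ((rank_lt_of_dom (mem_dom.2 ⟨_, h1⟩)).trans_le hx) le_rfl hr
        (of_pairA (trA hxA h1)).1 haA h3).symm

/-- A true equality of values of names is forced by a condition in the generic filter. -/
theorem feq_complete : ∀ (o : Ordinal.{u}) {x y : ZFSet.{u}}, x.rank ≤ o → x ∈ A → y ∈ A →
    val G x = val G y → ∃ p ∈ G, FEq A le p x y := by
  have : Fact (le ∈ A) := ⟨hG.hle⟩
  intro o
  induction o using WellFoundedLT.induction with
  | _ o ih =>
    intro x y hx hxA hyA h
    have : Fact (x ∈ A) := ⟨hxA⟩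
    have : Fact (y ∈ A) := ⟨hyA⟩
    obtain ⟨p, hp, h1 | h1⟩ := hG.dec (R := fun p => FEq A le p x y) inferInstance
    · exact ⟨p, hp, h1⟩
    exfalso
    obtain ⟨r, hr, h2⟩ := hG.meet (R := fun r =>
      (∃ a s, ZFSet.pair a s ∈ x ∧ ZFSet.pair r s ∈ le ∧ ∀ q, ZFSet.pair q r ∈ le →
        ∀ b t, ZFSet.pair b t ∈ y → ZFSet.pair q t ∈ le → ¬ FEq A le q a b) ∨
      (∃ a s, ZFSet.pair a s ∈ y ∧ ZFSet.pair r s ∈ le ∧ ∀ q, ZFSet.pair q r ∈ le →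
        ∀ b t, ZFSet.pair b t ∈ x → ZFSet.pair q t ∈ le → ¬ FEq A le q b a)) inferInstance hp (by
          intro q hq
          by_contra hc
          push Not at hc
          refine h1 q hq (FEq.intro hG.hP hG.le_sub (hG.le_sub _ _ hq).1 hxA hyA ?_ ?_)
          · intro a s has q' hq' hs
            obtain ⟨r, hr, b, t, hbt, h3, h4⟩ := (hc q' hq').1 a s has hs
            exact ⟨r, hr, b, t, hbt, h3, h4⟩
          · intro a s has q' hq' hs
            obtain ⟨r, hr, b, t, hbt, h3, h4⟩ := (hc q' hq').2 a s has hs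
            exact ⟨r, hr, b, t, hbt, h3, h4⟩)
    rcases h2 with ⟨a, s, has, hrs, h2⟩ | ⟨a, s, has, hrs, h2⟩
    · have : val G a ∈ val G x := mem_val.2 ⟨a, s, hG.up _ _ hrs hr, has, rfl⟩
      rw [h] at this
      obtain ⟨b, t, ht, hbt, e⟩ := mem_val.1 this
      have haA := (of_pairA (trA hxA has)).1
      have hbA := (of_pairA (trA hyA hbt)).1
      obtain ⟨q, hq, hf⟩ := ih _ ((rank_lt_of_dom (mem_dom.2 ⟨_, has⟩)).trans_le hx) le_rfl haA hbA e
      obtain ⟨q1, hq1, h3, h4⟩ := hG.dir q hq r hr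
      obtain ⟨q2, hq2, h5, h6⟩ := hG.dir q1 hq1 t ht
      exact h2 q2 (hG.trans _ _ _ h5 h4) b t hbt h6
        (hG.feq_mono hf (hG.trans _ _ _ h5 h3) haA hbA)
    · have : val G a ∈ val G y := mem_val.2 ⟨a, s, hG.up _ _ hrs hr, has, rfl⟩
      rw [← h] at this
      obtain ⟨b, t, ht, hbt, e⟩ := mem_val.1 this
      have haA := (of_pairA (trA hyA has)).1
      have hbA := (of_pairA (trA hxA hbt)).1
      obtain ⟨q, hq, hf⟩ := ih _ ((rank_lt_of_dom (mem_dom.2 ⟨_, hbt⟩)).trans_le hx) le_rfl hbA haA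
        e.symm
      obtain ⟨q1, hq1, h3, h4⟩ := hG.dir q hq r hr
      obtain ⟨q2, hq2, h5, h6⟩ := hG.dir q1 hq1 t ht
      exact h2 q2 (hG.trans _ _ _ h5 h4) b t hbt h6
        (hG.feq_mono hf (hG.trans _ _ _ h5 h3) hbA haA)

theorem val_eq_iff {x y : ZFSet.{u}} (hx : x ∈ A) (hy : y ∈ A) :
    val G x = val G y ↔ ∃ p ∈ G, FEq A le p x y :=
  ⟨hG.feq_complete _ le_rfl hx hy, fun ⟨_, hp, h⟩ => hG.feq_sound _ le_rfl hp hx hy h⟩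

end Gen

/-- The forcing relation `p ⊩ x ∈ y`. -/
def FMem (A : Set ZFSet.{u}) (le p x y : ZFSet.{u}) : Prop :=
  ∃ b t, ZFSet.pair b t ∈ y ∧ ZFSet.pair p t ∈ le ∧ FEq A le p x b

instance {A : Set ZFSet.{u}} [hA : ZFM A] {le : ZFSet.{u}} [hle : Fact (le ∈ A)]
    {t s r : (ℕ → ZFSet.{u}) → ZFSet.{u}} [ht : DFun A t] [hs : DFun A s] [hr : DFun A r] :
    Dfn A (fun v => FMem A le (t v) (s v) (r v)) :=
  Dfn.comp₃ (P := FMem A le) (by unfold FMem; infer_instance) ht hs hr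

namespace Gen
variable {A : Set ZFSet.{u}} [hA : ZFM A] {P le G : ZFSet.{u}} (hG : Gen A P le G)
include hG

theorem fmem_mono {p q x y : ZFSet.{u}} (h : FMem A le p x y) (hq : ZFSet.pair q p ∈ le) (hx : x ∈ A)
    (hy : y ∈ A) : FMem A le q x y := by
  obtain ⟨b, t, h1, h2, h3⟩ := h
  exact ⟨b, t, h1, hG.trans _ _ _ hq h2, hG.feq_mono h3 hq hx (of_pairA (trA hy h1)).1⟩

theorem val_mem_iff {x y : ZFSet.{u}} (hx : x ∈ A) (hy : y ∈ A) :
    val G x ∈ val G y ↔ ∃ p ∈ G, FMem A le p x y := by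
  rw [mem_val]
  constructor
  · rintro ⟨b, t, ht, hbt, e⟩
    have hbA := (of_pairA (trA hy hbt)).1
    obtain ⟨p, hp, h⟩ := (hG.val_eq_iff hx hbA).1 e
    obtain ⟨q, hq, h1, h2⟩ := hG.dir p hp t ht
    exact ⟨q, hq, b, t, hbt, h2, hG.feq_mono h h1 hx hbA⟩
  · rintro ⟨p, hp, b, t, hbt, h1, h2⟩
    exact ⟨b, t, hG.up _ _ h1 hp, hbt, (hG.val_eq_iff hx (of_pairA (trA hy hbt)).1).2 ⟨p, hp, h2⟩⟩

end Gen
end TM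

/-! ### The forcing theorem -/

namespace TM

/-- The value of a term of the (function-free) language of set theory. -/
def tv {n : ℕ} (xs : Fin n → ZFSet.{u}) (t : memLang.Term (Empty ⊕ Fin n)) : ZFSet.{u} :=
  @Term.realize memLang ZFSet.{u} (memStr (fun x y => x ∈ y)) _ (Sum.elim (fun e => e.elim) xs) t

theorem tv_var {n : ℕ} (t : memLang.Term (Empty ⊕ Fin n)) :
    ∃ i, t = Term.var (Sum.inr i) := by
  rcases t with v | ⟨f, _⟩
  · rcases v with e | i
    · exact e.elim
    · exact ⟨i, rfl⟩
  · exact f.elim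

theorem tv_inr {n : ℕ} (xs : Fin n → ZFSet.{u}) (i : Fin n) :
    tv xs (Term.var (Sum.inr i)) = xs i := rfl

/-- The forcing relation `p ⊩ φ(xs)`, by recursion on `φ`. -/
def Fr (A : Set ZFSet.{u}) (le : ZFSet.{u}) : {n : ℕ} → memLang.BoundedFormula Empty n →
    ZFSet.{u} → (Fin n → ZFSet.{u}) → Prop
  | _, .falsum, _, _ => False
  | _, .equal t₁ t₂, p, xs => FEq A le p (tv xs t₁) (tv xs t₂)
  | _, .rel (l := l) R ts, p, xs =>
    match l, R, ts with
    | 2, _, ts => FMem A le p (tv xs (ts 0)) (tv xs (ts 1))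
  | _, .imp φ ψ, p, xs => ∀ q, ZFSet.pair q p ∈ le → Fr A le φ q xs →
      ∃ r, ZFSet.pair r q ∈ le ∧ Fr A le ψ r xs
  | _, .all φ, p, xs => ∀ x, x ∈ A → ∀ q, ZFSet.pair q p ∈ le →
      ∃ r, ZFSet.pair r q ∈ le ∧ Fr A le φ r (Fin.snoc xs x)

theorem snoc_app {n : ℕ} {α : Type*} (ts : Fin n → α → ZFSet.{u}) (s : α → ZFSet.{u}) (v : α) :
    (Fin.snoc (fun i => ts i v) (s v) : Fin (n + 1) → ZFSet.{u}) =
      fun i => (Fin.snoc ts s : Fin (n + 1) → α → ZFSet.{u}) i v := by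
  funext i
  refine Fin.lastCases ?_ (fun i => ?_) i <;> simp

section
variable {A : Set ZFSet.{u}} [hA : ZFM A] {le : ZFSet.{u}} [hle : Fact (le ∈ A)]

theorem Fr.dfn {n : ℕ} (φ : memLang.BoundedFormula Empty n) :
    ∀ {t : (ℕ → ZFSet.{u}) → ZFSet.{u}} {ts : Fin n → (ℕ → ZFSet.{u}) → ZFSet.{u}} (ht : DFun A t)
      (hts : ∀ i, DFun A (ts i)), Dfn A (fun v => Fr A le φ (t v) (fun i => ts i v)) := by
  induction φ with
  | falsum => intro t ts _ _; exact Dfn.false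
  | equal t₁ t₂ =>
    intro t ts ht hts
    obtain ⟨i, rfl⟩ := tv_var t₁
    obtain ⟨j, rfl⟩ := tv_var t₂
    have := hts i; have := hts j
    exact (inferInstance : Dfn A (fun v => FEq A le (t v) (ts i v) (ts j v)))
  | @rel n l R us =>
    intro t ts ht hts
    cases R
    obtain ⟨i, hi⟩ := tv_var (us 0)
    obtain ⟨j, hj⟩ := tv_var (us 1)
    have := hts i; have := hts j
    refine (inferInstance : Dfn A (fun v => FMem A le (t v) (ts i v) (ts j v))).congr fun v _ => ?_
    simp only [Fr, hi, hj, tv_inr]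
  | imp φ ψ ih1 ih2 =>
    intro t ts ht hts
    have h1 : Dfn A (fun v : ℕ → ZFSet.{u} => Fr A le φ (v 0) (fun i => ts i (fun k => v (k+1)))) :=
      ih1 inferInstance (fun i => (hts i).ren _)
    have h2 : Dfn A (fun v : ℕ → ZFSet.{u} => Fr A le ψ (v 0) (fun i => ts i (fun k => v (k+2)))) :=
      ih2 inferInstance (fun i => (hts i).ren _)
    simp only [Fr]
    infer_instance
  | all φ ih =>
    intro t ts ht hts
    have h1 : Dfn A (fun v : ℕ → ZFSet.{u} => Fr A le φ (v 0)
        (fun i => (Fin.snoc (fun i w => ts i (fun k => w (k+3))) (fun w => w 2) :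
          Fin _ → (ℕ → ZFSet.{u}) → ZFSet.{u}) i v)) :=
      ih inferInstance (fun i => by
        refine Fin.lastCases ?_ (fun i => ?_) i
        · simp only [Fin.snoc_last]; infer_instance
        · simp only [Fin.snoc_castSucc]; exact (hts i).ren _)
    simp only [← snoc_app] at h1
    simp only [Fr]
    infer_instance

theorem Fr.dfn' {n : ℕ} (φ : memLang.BoundedFormula Empty n) {xs : Fin n → ZFSet.{u}}
    (h : ∀ i, xs i ∈ A) : Dfn A (fun v => Fr A le φ (v 0) xs) :=
  Fr.dfn φ (ts := fun i _ => xs i) inferInstance (fun i => DFun.const (h i))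

end

theorem snocA {A : Set ZFSet.{u}} {n : ℕ} {xs : Fin n → ZFSet.{u}} (h : ∀ i, xs i ∈ A)
    {x : ZFSet.{u}} (hx : x ∈ A) (i : Fin (n+1)) :
    (Fin.snoc xs x : Fin (n+1) → ZFSet.{u}) i ∈ A := by
  refine Fin.lastCases ?_ (fun i => ?_) i
  · simpa using hx
  · simpa using h i

/-- The generic extension: the class of values of names. -/
def Ext (A : Set ZFSet.{u}) (G : ZFSet.{u}) : Set ZFSet.{u} := {y | ∃ x, x ∈ A ∧ val G x = y}

theorem val_mem_Ext {A : Set ZFSet.{u}} {G x : ZFSet.{u}} (hx : x ∈ A) : val G x ∈ Ext A G :=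
  ⟨x, hx, rfl⟩

/-- The tuple of values of a tuple of names. -/
noncomputable def vals {A : Set ZFSet.{u}} (G : ZFSet.{u}) {n : ℕ} (xs : Fin n → A) :
    Fin n → Ext A G := fun i => ⟨val G (xs i).1, val_mem_Ext (xs i).2⟩

theorem vals_snoc {A : Set ZFSet.{u}} (G : ZFSet.{u}) {n : ℕ} (xs : Fin n → A) (x : A) :
    (Fin.snoc (vals G xs) ⟨val G x.1, val_mem_Ext x.2⟩ : Fin (n+1) → Ext A G) =
      vals G (Fin.snoc xs x : Fin (n+1) → A) := by
  funext i
  refine Fin.lastCases ?_ (fun i => ?_) i <;> simp [vals]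

theorem vals_surj {A : Set ZFSet.{u}} (G : ZFSet.{u}) {n : ℕ} (ys : Fin n → Ext A G) :
    ∃ xs : Fin n → A, ys = vals G xs := by
  choose f hf hf' using fun i => (ys i).2
  exact ⟨fun i => ⟨f i, hf i⟩, funext fun i => Subtype.ext (hf' i).symm⟩

/-- The underlying tuple of sets. -/
def und {A : Set ZFSet.{u}} {n : ℕ} (xs : Fin n → A) : Fin n → ZFSet.{u} := fun i => (xs i).1

theorem und_snoc {A : Set ZFSet.{u}} {n : ℕ} (xs : Fin n → A) (x : A) :
    und (Fin.snoc xs x : Fin (n+1) → A) = Fin.snoc (und xs) x.1 := by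
  funext i
  refine Fin.lastCases ?_ (fun i => ?_) i <;> simp [und]

namespace Gen
variable {A : Set ZFSet.{u}} [hA : ZFM A] {P le G : ZFSet.{u}} (hG : Gen A P le G)
include hG

theorem fr_mono {n : ℕ} (φ : memLang.BoundedFormula Empty n) : ∀ {p q : ZFSet.{u}}
    {xs : Fin n → ZFSet.{u}} (hx : ∀ i, xs i ∈ A) (h : Fr A le φ p xs) (hq : ZFSet.pair q p ∈ le),
    Fr A le φ q xs := by
  cases φ with
  | falsum => intro p q xs hx h; exact h.elim
  | equal t₁ t₂ =>
    intro p q xs hx h hq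
    obtain ⟨i, rfl⟩ := tv_var t₁
    obtain ⟨j, rfl⟩ := tv_var t₂
    exact hG.feq_mono h hq (hx i) (hx j)
  | rel R us =>
    intro p q xs hx h hq
    cases R
    obtain ⟨i, hi⟩ := tv_var (us 0)
    obtain ⟨j, hj⟩ := tv_var (us 1)
    simp only [Fr, hi, hj, tv_inr] at h ⊢
    exact hG.fmem_mono h hq (hx i) (hx j)
  | imp φ ψ =>
    intro p q xs hx h hq r hr
    exact h r (hG.trans _ _ _ hr hq)
  | all φ =>
    intro p q xs hx h hq x hxA r hr
    exact h x hxA r (hG.trans _ _ _ hr hq)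

/-- The truth lemma: what holds in the extension is exactly what is forced by the filter. -/
theorem truth {n : ℕ} (φ : memLang.BoundedFormula Empty n) : ∀ (xs : Fin n → A),
    RealizeIn (EA (Ext A G)) φ (vals G xs) ↔ ∃ p ∈ G, Fr A le φ p (und xs) := by
  have : Fact (le ∈ A) := ⟨hG.hle⟩
  induction φ with
  | falsum => intro xs; simp [RealizeIn, Fr, BoundedFormula.Realize]
  | equal t₁ t₂ =>
    intro xs
    obtain ⟨i, rfl⟩ := tv_var t₁
    obtain ⟨j, rfl⟩ := tv_var t₂
    simp only [Fr, tv_inr]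
    refine Iff.trans ?_ (hG.val_eq_iff (xs i).2 (xs j).2)
    simp [RealizeIn, BoundedFormula.Realize, vals, und]
  | @rel n l R us =>
    intro xs
    cases R
    obtain ⟨i, hi⟩ := tv_var (us 0)
    obtain ⟨j, hj⟩ := tv_var (us 1)
    simp only [Fr, hi, hj, tv_inr]
    refine Iff.trans ?_ (hG.val_mem_iff (xs i).2 (xs j).2)
    let _ := memStr (EA (Ext A G))
    show (((us 0).realize (Sum.elim (fun e : Empty => e.elim) (vals G xs)) : Ext A G).1 ∈
      ((us 1).realize (Sum.elim (fun e : Empty => e.elim) (vals G xs)) : Ext A G).1) ↔ _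
    rw [hi, hj]; rfl
  | imp φ ψ ih1 ih2 =>
    intro xs
    have e : RealizeIn (EA (Ext A G)) (φ.imp ψ) (vals G xs) ↔
      (RealizeIn (EA (Ext A G)) φ (vals G xs) → RealizeIn (EA (Ext A G)) ψ (vals G xs)) := Iff.rfl
    have hxs : ∀ i, und xs i ∈ A := fun i => (xs i).2
    rw [e, ih1, ih2]
    have d1 := Fr.dfn' (le := le) φ hxs
    have d2 := Fr.dfn' (le := le) ψ hxs
    have i1 : ∀ t [DFun A t], Dfn A (fun v => Fr A le φ (t v) (und xs)) := fun t ht =>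
      Dfn.comp₁ (P := fun p => Fr A le φ p (und xs)) d1 ht
    have i2 : ∀ t [DFun A t], Dfn A (fun v => Fr A le ψ (t v) (und xs)) := fun t ht =>
      Dfn.comp₁ (P := fun p => Fr A le ψ p (und xs)) d2 ht
    constructor
    · intro h
      obtain ⟨r, hr, h1 | h1⟩ := hG.dec (R := fun p => Fr A le (φ.imp ψ) p (und xs))
        (Fr.dfn' (le := le) (φ.imp ψ) hxs)
      · exact ⟨r, hr, h1⟩
      · exfalso
        obtain ⟨q, hq, h2, h3⟩ := hG.meet (R := fun q => Fr A le φ q (und xs) ∧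
          ∀ r, ZFSet.pair r q ∈ le → ¬ Fr A le ψ r (und xs)) inferInstance hr (by
            intro s hs
            have := h1 s hs
            simp only [Fr] at this
            push Not at this
            obtain ⟨q, h2, h3, h4⟩ := this
            exact ⟨q, h2, h3, h4⟩)
        obtain ⟨p', hp', h4⟩ := h ⟨q, hq, h2⟩
        obtain ⟨r', hr', h5, h6⟩ := hG.dir q hq p' hp'
        exact h3 r' h5 (hG.fr_mono ψ hxs h4 h6)
    · rintro ⟨p, hp, h⟩ ⟨p', hp', h'⟩
      obtain ⟨q, hq, h1, h2⟩ := hG.dir p hp p' hp'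
      refine hG.meet (R := fun p => Fr A le ψ p (und xs)) d2 hq ?_
      intro s hs
      exact h s (hG.trans _ _ _ hs h1) (hG.fr_mono φ hxs h' (hG.trans _ _ _ hs h2))
  | @all n φ ih =>
    intro xs
    have hxs : ∀ i, und xs i ∈ A := fun i => (xs i).2
    have e : RealizeIn (EA (Ext A G)) φ.all (vals G xs) ↔
      ∀ x : A, ∃ p ∈ G, Fr A le φ p (Fin.snoc (und xs) x.1) := by
      have : RealizeIn (EA (Ext A G)) φ.all (vals G xs) ↔
        ∀ y : Ext A G, RealizeIn (EA (Ext A G)) φ (Fin.snoc (vals G xs) y) := Iff.rfl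
      rw [this]
      constructor
      · intro h x
        have := h ⟨val G x.1, val_mem_Ext x.2⟩
        rwa [vals_snoc, ih, und_snoc] at this
      · rintro h ⟨y, x, hx, rfl⟩
        have := h ⟨x, hx⟩
        rw [vals_snoc G xs ⟨x, hx⟩, ih, und_snoc]
        exact this
    rw [e]
    have i1 : ∀ t s [DFun A t] [DFun A s],
        Dfn A (fun v => Fr A le φ (t v) (Fin.snoc (und xs) (s v))) := fun t s ht hs => by
      have := Fr.dfn (le := le) φ (t := t) (ts := (Fin.snoc (fun i _ => und xs i) s : Fin (n+1) →
        (ℕ → ZFSet.{u}) → ZFSet.{u})) ht (fun i => by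
          refine Fin.lastCases ?_ (fun i => ?_) i
          · simpa using hs
          · simpa using DFun.const (hxs i))
      simpa only [← snoc_app] using this
    constructor
    · intro h
      obtain ⟨r, hr, h1 | h1⟩ := hG.dec (R := fun p => Fr A le φ.all p (und xs))
        (Fr.dfn' (le := le) φ.all hxs)
      · exact ⟨r, hr, h1⟩
      · exfalso
        obtain ⟨q, hq, x, hx, h2⟩ := hG.meet (R := fun q => ∃ x, x ∈ A ∧
          ∀ r, ZFSet.pair r q ∈ le → ¬ Fr A le φ r (Fin.snoc (und xs) x)) inferInstance hr (by
            intro s hs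
            have := h1 s hs
            simp only [Fr] at this
            push Not at this
            obtain ⟨x, hx, q, h2, h3⟩ := this
            exact ⟨q, h2, x, hx, h3⟩)
        obtain ⟨p', hp', h4⟩ := h ⟨x, hx⟩
        obtain ⟨r', hr', h5, h6⟩ := hG.dir q hq p' hp'
        exact h2 r' h5 (hG.fr_mono φ (snocA hxs hx) h4 h6)
    · rintro ⟨p, hp, h⟩ ⟨x, hx⟩
      have : Fact (x ∈ A) := ⟨hx⟩
      exact hG.meet (R := fun q => Fr A le φ q (Fin.snoc (und xs) x)) inferInstance hp (h x hx)

end Gen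
end TM

/-! ### The generic extension is a model of `ZFC` -/

namespace TM

/-- The canonical name `{(ck y, p) : y ∈ x, p ∈ P}` of the ground model set `x`. -/
noncomputable def ck (P : ZFSet.{u}) : ZFSet.{u} → ZFSet.{u} := recH (fun s => ZFSet.prod s P)

theorem mem_ck {P x y p : ZFSet.{u}} :
    ZFSet.pair y p ∈ ck P x ↔ (∃ z ∈ x, y = ck P z) ∧ p ∈ P := by
  rw [ck, recH_eq, ZFSet.pair_mem_prod, mem_img]

theorem ck_dfun {A : Set ZFSet.{u}} [hA : ZFM A] {P : ZFSet.{u}} (hP : P ∈ A) :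
    DFun A (fun v => ck P (v 0)) := by
  have : Fact (P ∈ A) := ⟨hP⟩
  exact recH_dfun inferInstance

theorem val_dfun {W : Set ZFSet.{u}} [hW : ZFM W] {G : ZFSet.{u}} (h : G ∈ W) :
    DFun W (fun v => val G (v 0)) := by
  have : Fact (G ∈ W) := ⟨h⟩
  refine DFun.recursion (D := dom) (F := fun x f => ZFSet.sep (fun z =>
    ∃ y p, ZFSet.pair y p ∈ x ∧ (p ∈ G ∧ ZFSet.pair y z ∈ f)) (ran f))
    (fun x y h => rank_lt_of_dom h) (fun x _ => ?_) inferInstance inferInstance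
  ext z
  simp only [mem_val, ZFSet.mem_sep, mem_ran, pair_mem_gr]
  constructor
  · rintro ⟨y, p, hp, hy, rfl⟩
    exact ⟨⟨y, mem_dom.2 ⟨p, hy⟩, rfl⟩, y, p, hy, hp, mem_dom.2 ⟨p, hy⟩, rfl⟩
  · rintro ⟨_, y, p, hy, hp, _, rfl⟩
    exact ⟨y, p, hp, hy, rfl⟩

theorem Ext_sub {A W : Set ZFSet.{u}} [hW : ZFM W] {G : ZFSet.{u}} (h : G ∈ W) (hA : A ⊆ W) :
    Ext A G ⊆ W := by
  rintro y ⟨x, hx, rfl⟩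
  exact DFun.val₁ (f := val G) (val_dfun h) (hA hx)

theorem Fr.dfn₁ {A : Set ZFSet.{u}} [hA : ZFM A] {le : ZFSet.{u}} [hle : Fact (le ∈ A)] {n : ℕ}
    (φ : memLang.BoundedFormula Empty (n+1)) {xs : Fin n → ZFSet.{u}} (h : ∀ i, xs i ∈ A)
    {t s : (ℕ → ZFSet.{u}) → ZFSet.{u}} (ht : DFun A t) (hs : DFun A s) :
    Dfn A (fun v => Fr A le φ (t v) (Fin.snoc xs (s v))) := by
  have := Fr.dfn (le := le) φ (t := t) (ts := (Fin.snoc (fun i _ => xs i) s : Fin (n+1) →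
    (ℕ → ZFSet.{u}) → ZFSet.{u})) ht (fun i => by
      refine Fin.lastCases ?_ (fun i => ?_) i
      · simpa using hs
      · simpa using DFun.const (h i))
  simpa only [← snoc_app] using this

theorem Fr.dfn₂ {A : Set ZFSet.{u}} [hA : ZFM A] {le : ZFSet.{u}} [hle : Fact (le ∈ A)] {n : ℕ}
    (φ : memLang.BoundedFormula Empty (n+2)) {xs : Fin n → ZFSet.{u}} (h : ∀ i, xs i ∈ A)
    {t s r : (ℕ → ZFSet.{u}) → ZFSet.{u}} (ht : DFun A t) (hs : DFun A s) (hr : DFun A r) :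
    Dfn A (fun v => Fr A le φ (t v) (Fin.snoc (Fin.snoc xs (s v) : Fin (n+1) → ZFSet.{u}) (r v))) := by
  have := Fr.dfn (le := le) φ (t := t) (ts := (Fin.snoc (Fin.snoc (fun i _ => xs i) s : Fin (n+1) →
    (ℕ → ZFSet.{u}) → ZFSet.{u}) r : Fin (n+2) →
    (ℕ → ZFSet.{u}) → ZFSet.{u})) ht (fun i => by
      refine Fin.lastCases ?_ (fun i => ?_) i
      · simpa using hr
      · refine Fin.lastCases ?_ (fun i => ?_) i
        · simpa using hs
        · simpa using DFun.const (h i))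
  simpa only [← snoc_app] using this

namespace Gen
variable {A : Set ZFSet.{u}} [hA : ZFM A] {P le G : ZFSet.{u}} (hG : Gen A P le G)
include hG

theorem val_ck : ∀ x, val G (ck P x) = x := by
  intro x
  induction x using ZFSet.inductionOn with
  | _ x ih =>
    obtain ⟨p, hp⟩ := hG.nonempty
    ext z
    rw [mem_val]
    constructor
    · rintro ⟨y, q, hq, h, rfl⟩
      obtain ⟨⟨w, hw, rfl⟩, _⟩ := mem_ck.1 h
      rwa [ih w hw]
    · intro hz
      exact ⟨ck P z, p, hp, mem_ck.2 ⟨⟨z, hz, rfl⟩, hG.sub p hp⟩, (ih z hz).symm⟩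

theorem ckA {x : ZFSet.{u}} (hx : x ∈ A) : ck P x ∈ A := DFun.val₁ (f := ck P) (ck_dfun hG.hP) hx

theorem sub_ext : A ⊆ Ext A G := fun x hx => ⟨ck P x, hG.ckA hx, hG.val_ck x⟩

theorem G_ext : G ∈ Ext A G := by
  have iC : ∀ t [DFun A t], DFun A (fun v => ck P (t v)) := fun t ht =>
    DFun.comp₁ (f := ck P) (ck_dfun hG.hP) ht
  have : Fact (P ∈ A) := ⟨hG.hP⟩
  refine ⟨img (fun p => ZFSet.pair (ck P p) p) P,
    DFun.val₁ (f := fun P' => img (fun p => ZFSet.pair (ck P p) p) P') inferInstance hG.hP, ?_⟩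
  ext z
  rw [mem_val]
  simp only [mem_img, ZFSet.pair_inj]
  constructor
  · rintro ⟨y, p, hp, ⟨q, hq, rfl, rfl⟩, rfl⟩
    rwa [hG.val_ck]
  · intro hz
    exact ⟨_, z, hz, ⟨z, hG.sub z hz, rfl, rfl⟩, (hG.val_ck z).symm⟩

theorem val_prod {b z : ZFSet.{u}} : z ∈ val G (ZFSet.prod b P) ↔ ∃ y ∈ b, z = val G y := by
  rw [mem_val]
  simp only [ZFSet.pair_mem_prod]
  constructor
  · rintro ⟨y, p, hp, ⟨h, _⟩, e⟩; exact ⟨y, h, e⟩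
  · rintro ⟨y, h, e⟩
    obtain ⟨p, hp⟩ := hG.nonempty
    exact ⟨y, p, hp, ⟨h, hG.sub p hp⟩, e⟩

theorem mem_ext_of_mem {x y : ZFSet.{u}} (hx : x ∈ Ext A G) (hy : y ∈ x) : y ∈ Ext A G := by
  obtain ⟨a, ha, rfl⟩ := hx
  obtain ⟨b, p, _, h, rfl⟩ := mem_val.1 hy
  exact ⟨b, (of_pairA (trA ha h)).1, rfl⟩

/-- Refining the name `a` by a definable class of (name, condition) pairs. -/
theorem refine_name {a : ZFSet.{u}} (ha : a ∈ A) {R : ZFSet.{u} → ZFSet.{u} → Prop}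
    (hR : Dfn A (fun v => R (v 0) (v 1)))
    (mono : ∀ c p q, c ∈ A → R c p → ZFSet.pair q p ∈ le → R c q) :
    ∃ b ∈ A, b ⊆ ZFSet.prod (dom a) P ∧
      (∀ c q, ZFSet.pair c q ∈ b → ∃ s, ZFSet.pair c s ∈ a ∧ ZFSet.pair q s ∈ le) ∧
      ∀ z, z ∈ val G b ↔ ∃ c s, s ∈ G ∧ ZFSet.pair c s ∈ a ∧ z = val G c ∧ ∃ p ∈ G, R c p := by
  have : Fact (le ∈ A) := ⟨hG.hle⟩
  have : Fact (a ∈ A) := ⟨ha⟩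
  have iR : ∀ t s [DFun A t] [DFun A s], Dfn A (fun v => R (t v) (s v)) := fun t s ht hs =>
    hR.comp₂ ht hs
  have key : ∀ c q, ZFSet.pair c q ∈ ZFSet.sep (fun z => ∀ c q, ZFSet.pair c q ∈ ({z} : ZFSet) →
      ∃ s, ZFSet.pair c s ∈ a ∧ (ZFSet.pair q s ∈ le ∧ R c q)) (ZFSet.prod (dom a) P) ↔
      ∃ s, ZFSet.pair c s ∈ a ∧ ZFSet.pair q s ∈ le ∧ R c q := by
    intro c q
    rw [ZFSet.mem_sep, ZFSet.pair_mem_prod]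
    constructor
    · rintro ⟨_, h⟩; exact h c q (by simp)
    · rintro ⟨s, h1, h2, h3⟩
      refine ⟨⟨mem_dom.2 ⟨s, h1⟩, (hG.le_sub _ _ h2).1⟩, ?_⟩
      intro c' q' h
      rw [ZFSet.mem_singleton, ZFSet.pair_inj] at h
      obtain ⟨rfl, rfl⟩ := h
      exact ⟨s, h1, h2, h3⟩
  refine ⟨_, sepA (R := fun z => ∀ c q, ZFSet.pair c q ∈ ({z} : ZFSet) →
      ∃ s, ZFSet.pair c s ∈ a ∧ (ZFSet.pair q s ∈ le ∧ R c q)) (prodA (domA ha) hG.hP),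
      fun z hz => (ZFSet.mem_sep.1 hz).1, ?_, ?_⟩
  · intro c q h
    obtain ⟨s, h1, h2, _⟩ := (key c q).1 h
    exact ⟨s, h1, h2⟩
  · intro z
    rw [mem_val]
    constructor
    · rintro ⟨c, q, hq, h, rfl⟩
      obtain ⟨s, h1, h2, h3⟩ := (key c q).1 h
      exact ⟨c, s, hG.up _ _ h2 hq, h1, rfl, q, hq, h3⟩
    · rintro ⟨c, s, hs, h1, rfl, p, hp, h2⟩
      obtain ⟨q, hq, h3, h4⟩ := hG.dir s hs p hp
      exact ⟨c, q, hq, (key c q).2 ⟨s, h1, h3, mono c p q (of_pairA (trA ha h1)).1 h2 h4⟩, rfl⟩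

theorem ext_union {a : ZFSet.{u}} (ha : a ∈ A) : ZFSet.sUnion (val G a) ∈ Ext A G := by
  have : Fact (le ∈ A) := ⟨hG.hle⟩
  have : Fact (a ∈ A) := ⟨ha⟩
  obtain ⟨b, hb, _, _, h⟩ := hG.refine_name
    (a := ZFSet.prod (dom (ZFSet.sUnion (dom a))) P)
    (prodA (domA (sUnionA (domA ha))) hG.hP)
    (R := fun c q => ∃ b s, ZFSet.pair b s ∈ a ∧ (ZFSet.pair q s ∈ le ∧
      ∃ t, ZFSet.pair c t ∈ b ∧ ZFSet.pair q t ∈ le)) inferInstance (by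
      rintro c p q _ ⟨b, s, h1, h2, t, h3, h4⟩ hq
      exact ⟨b, s, h1, hG.trans _ _ _ hq h2, t, h3, hG.trans _ _ _ hq h4⟩)
  refine ⟨b, hb, ?_⟩
  ext z
  rw [h]
  simp only [ZFSet.mem_sUnion]
  constructor
  · rintro ⟨c, s, hs, h1, rfl, p, hp, b, s', h2, h3, t, h4, h5⟩
    exact ⟨val G b, mem_val.2 ⟨b, s', hG.up _ _ h3 hp, h2, rfl⟩,
      mem_val.2 ⟨c, t, hG.up _ _ h5 hp, h4, rfl⟩⟩
  · rintro ⟨y, hy, hz⟩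
    obtain ⟨b, s, hs, h1, rfl⟩ := mem_val.1 hy
    obtain ⟨c, t, ht, h2, rfl⟩ := mem_val.1 hz
    obtain ⟨q, hq, h3, h4⟩ := hG.dir s hs t ht
    refine ⟨c, q, hq, ?_, rfl, q, hq, b, s, h1, h3, t, h2, h4⟩
    rw [ZFSet.pair_mem_prod]
    exact ⟨mem_dom.2 ⟨t, ZFSet.mem_sUnion.2 ⟨b, mem_dom.2 ⟨s, h1⟩, h2⟩⟩, hG.sub q hq⟩

theorem ext_power {a : ZFSet.{u}} (ha : a ∈ A) :
    ∃ p, p ∈ Ext A G ∧ ∀ x, x ∈ Ext A G → (x ∈ p ↔ x ⊆ val G a) := by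
  have : Fact (le ∈ A) := ⟨hG.hle⟩
  have : Fact (a ∈ A) := ⟨ha⟩
  have h1 : ZFSet.sep (fun z => ∀ c q, ZFSet.pair c q ∈ z → ∃ s, ZFSet.pair c s ∈ a ∧
      ZFSet.pair q s ∈ le) (pw A (ZFSet.prod (dom a) P)) ∈ A :=
    sepA (pwA (prodA (domA ha) hG.hP))
  refine ⟨_, val_mem_Ext (prodA h1 hG.hP), ?_⟩
  rintro x ⟨x', hx', rfl⟩
  have : Fact (x' ∈ A) := ⟨hx'⟩
  rw [hG.val_prod]
  constructor
  · rintro ⟨z, hz, e⟩ w hw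
    rw [e] at hw
    obtain ⟨c, q, hq, h, rfl⟩ := mem_val.1 hw
    obtain ⟨s, h2, h3⟩ := (ZFSet.mem_sep.1 hz).2 c q h
    exact mem_val.2 ⟨c, s, hG.up _ _ h3 hq, h2, rfl⟩
  · intro hsub
    obtain ⟨b, hb, hb1, hb2, hb3⟩ := hG.refine_name ha (R := fun c q => FMem A le q c x')
      inferInstance (fun c p q hc h hq => hG.fmem_mono h hq hc hx')
    refine ⟨b, ZFSet.mem_sep.2 ⟨mem_pw.2 ⟨hb1, hb⟩, hb2⟩, ?_⟩
    ext z
    rw [hb3]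
    constructor
    · intro hz
      obtain ⟨c, s, hs, h, rfl⟩ := mem_val.1 (hsub hz)
      exact ⟨c, s, hs, h, rfl, (hG.val_mem_iff (of_pairA (trA ha h)).1 hx').1 hz⟩
    · rintro ⟨c, s, hs, h, rfl, h2⟩
      exact (hG.val_mem_iff (of_pairA (trA ha h)).1 hx').2 h2

theorem ext_sep : SepScheme (EA (Ext A G)) := by
  have : Fact (le ∈ A) := ⟨hG.hle⟩
  rintro n φ params ⟨_, a, ha, rfl⟩
  obtain ⟨xs, rfl⟩ := vals_surj G params
  have hxs : ∀ i, und xs i ∈ A := fun i => (xs i).2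
  obtain ⟨b, hb, _, _, hb3⟩ := hG.refine_name ha
    (R := fun c q => Fr A le φ q (Fin.snoc (und xs) c)) (Fr.dfn₁ φ hxs inferInstance inferInstance)
    (fun c p q hc h hq => hG.fr_mono φ (snocA hxs hc) h hq)
  refine ⟨⟨val G b, val_mem_Ext hb⟩, ?_⟩
  have key : ∀ c (hc : c ∈ A), RealizeIn (EA (Ext A G)) φ
      (Fin.snoc (vals G xs) ⟨val G c, val_mem_Ext hc⟩) ↔
      ∃ p ∈ G, Fr A le φ p (Fin.snoc (und xs) c) := by
    intro c hc
    rw [vals_snoc G xs ⟨c, hc⟩, hG.truth, und_snoc]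
  rintro ⟨z, hz⟩
  show z ∈ val G b ↔ z ∈ val G a ∧ _
  rw [hb3, mem_val]
  constructor
  · rintro ⟨c, s, hs, h, rfl, h2⟩
    exact ⟨⟨c, s, hs, h, rfl⟩, (key c (of_pairA (trA ha h)).1).2 h2⟩
  · rintro ⟨⟨c, s, hs, h, rfl⟩, h2⟩
    exact ⟨c, s, hs, h, rfl, (key c (of_pairA (trA ha h)).1).1 h2⟩

theorem ext_coll : CollectionScheme (EA (Ext A G)) := by
  have : Fact (le ∈ A) := ⟨hG.hle⟩
  rintro n φ params ⟨_, a, ha, rfl⟩ H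
  obtain ⟨xs, rfl⟩ := vals_surj G params
  have hxs : ∀ i, und xs i ∈ A := fun i => (xs i).2
  have key : ∀ c (hc : c ∈ A) y (hy : y ∈ A), RealizeIn (EA (Ext A G)) φ
      (Fin.snoc (Fin.snoc (vals G xs) ⟨val G c, val_mem_Ext hc⟩ : Fin (n+1) → Ext A G)
        ⟨val G y, val_mem_Ext hy⟩) ↔
      ∃ p ∈ G, Fr A le φ p (Fin.snoc (Fin.snoc (und xs) c : Fin (n+1) → ZFSet.{u}) y) := by
    intro c hc y hy
    rw [vals_snoc G xs ⟨c, hc⟩, vals_snoc G _ ⟨y, hy⟩, hG.truth, und_snoc, und_snoc]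
  have iF : ∀ t s r [DFun A t] [DFun A s] [DFun A r], Dfn A (fun v => Fr A le φ (t v)
      (Fin.snoc (Fin.snoc (und xs) (s v) : Fin (n+1) → ZFSet.{u}) (r v))) :=
    fun t s r ht hs hr => Fr.dfn₂ φ hxs ht hs hr
  obtain ⟨b, hb, hb'⟩ := collA (A := A) (R := fun z y => ∀ c q, ZFSet.pair c q ∈ ({z} : ZFSet) →
      (Fr A le φ q (Fin.snoc (Fin.snoc (und xs) c : Fin (n+1) → ZFSet.{u}) y) ∨
      ∀ y', y' ∈ A → ¬ Fr A le φ q (Fin.snoc (Fin.snoc (und xs) c : Fin (n+1) → ZFSet.{u}) y')))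
      (prodA (domA ha) hG.hP) (by
        intro z hz
        obtain ⟨c, hc, q, hq, rfl⟩ := ZFSet.mem_prod.1 hz
        simp only [ZFSet.mem_singleton, ZFSet.pair_inj]
        by_cases h : ∃ y, y ∈ A ∧
          Fr A le φ q (Fin.snoc (Fin.snoc (und xs) c : Fin (n+1) → ZFSet.{u}) y)
        · obtain ⟨y, hy, h⟩ := h
          refine ⟨y, hy, ?_⟩
          rintro _ _ ⟨rfl, rfl⟩; exact Or.inl h
        · refine ⟨∅, emptyA, ?_⟩
          rintro _ _ ⟨rfl, rfl⟩; exact Or.inr fun y' hy' h' => h ⟨y', hy', h'⟩)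
  refine ⟨⟨val G (ZFSet.prod b P), val_mem_Ext (prodA hb hG.hP)⟩, ?_⟩
  rintro ⟨x, hx'⟩ hx
  obtain ⟨⟨_, y, hy, rfl⟩, hxy⟩ := H ⟨x, hx'⟩ hx
  obtain ⟨c, s, hs, h, rfl⟩ := mem_val.1 hx
  have hc := (of_pairA (trA ha h)).1
  obtain ⟨q, hq, h1⟩ := (key c hc y hy).1 hxy
  obtain ⟨y2, hy2, h2⟩ := hb' (ZFSet.pair c q)
    (ZFSet.pair_mem_prod.2 ⟨mem_dom.2 ⟨s, h⟩, hG.sub q hq⟩)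
  rcases h2 c q (by simp) with h2 | h2
  · have hyA := trA hb hy2
    exact ⟨⟨val G y2, val_mem_Ext hyA⟩, hG.val_prod.2 ⟨y2, hy2, rfl⟩, (key c hc y2 hyA).2 ⟨q, hq, h2⟩⟩
  · exact absurd h1 (h2 y hy)

/-- The generic extension is a transitive model of `ZF`. -/
theorem ext_zfm : ZFM (Ext A G) where
  trans' := fun x y hx hy => hG.mem_ext_of_mem hx hy
  pair' := by
    rintro _ _ ⟨a, ha, rfl⟩ ⟨b, hb, rfl⟩
    refine ⟨ZFSet.prod {a, b} P, prodA (pairA ha hb) hG.hP, ?_⟩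
    ext z
    rw [hG.val_prod]; simp
  union' := by
    rintro _ ⟨a, ha, rfl⟩
    exact hG.ext_union ha
  infinity' := by
    obtain ⟨w, hw, h⟩ := hA.infinity'
    exact ⟨w, hG.sub_ext hw, h⟩
  power' := by
    rintro _ ⟨a, ha, rfl⟩
    exact hG.ext_power ha
  sep' := hG.ext_sep
  coll' := hG.ext_coll

theorem ext_ord {x : ZFSet.{u}} (hx : x ∈ Ext A G) (ho : x.IsOrdinal) : x ∈ A := by
  obtain ⟨a, ha, rfl⟩ := hx
  have h := rkfA ha
  rcases (val_rank_le G a).lt_or_eq with h1 | h1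
  · refine trA h ?_
    rw [rkf, Ordinal.mem_toZFSet_iff]
    exact ⟨_, h1, ho.toZFSet_rank_eq⟩
  · rw [← ho.toZFSet_rank_eq, h1]; exact h

/-- Membership in a set of the extension, restricted to a ground model set `X`, is
controlled by a ground model relation between conditions and elements of `X`. -/
theorem nice {b X : ZFSet.{u}} (hb : b ∈ Ext A G) (hX : X ∈ A) :
    ∃ F ∈ A, ∀ x ∈ X, (x ∈ b ↔ ∃ p ∈ G, ZFSet.pair p x ∈ F) := by
  obtain ⟨b, hb, rfl⟩ := hb
  have : Fact (le ∈ A) := ⟨hG.hle⟩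
  have : Fact (b ∈ A) := ⟨hb⟩
  have iC : ∀ t [DFun A t], DFun A (fun v => ck P (t v)) := fun t ht =>
    DFun.comp₁ (f := ck P) (ck_dfun hG.hP) ht
  refine ⟨ZFSet.sep (fun z => ∀ p x, ZFSet.pair p x ∈ ({z} : ZFSet) → FMem A le p (ck P x) b)
    (ZFSet.prod P X), sepA (prodA hG.hP hX), ?_⟩
  intro x hx
  have := hG.val_mem_iff (hG.ckA (trA hX hx)) hb
  rw [hG.val_ck] at this
  rw [this]
  constructor
  · rintro ⟨p, hp, h⟩
    refine ⟨p, hp, ZFSet.mem_sep.2 ⟨ZFSet.pair_mem_prod.2 ⟨hG.sub p hp, hx⟩, ?_⟩⟩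
    intro p' x' e
    rw [ZFSet.mem_singleton, ZFSet.pair_inj] at e
    obtain ⟨rfl, rfl⟩ := e
    exact h
  · rintro ⟨p, hp, h⟩
    exact ⟨p, hp, (ZFSet.mem_sep.1 h).2 p x (by simp)⟩

end Gen

/-- The generic extension of a model of `ZFC` is a model of `ZFC`. -/
theorem Gen.ext_zfcm {A : Set ZFSet.{u}} [hA : ZFCM A] {P le G : ZFSet.{u}} (hG : Gen A P le G) :
    ZFCM (Ext A G) := by
  have hB : ZFM (Ext A G) := hG.ext_zfm
  refine { hB with choice' := ?_ }
  rintro _ ⟨a, ha, rfl⟩ hne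
  obtain ⟨α, hα, ho, H, dH, hH⟩ := exists_enum (A := A) (a := dom (ZFSet.sUnion (dom a)))
    (domA (sUnionA (domA ha)))
  have he : gr H α ∈ A := by
    have iH : ∀ t [DFun A t], DFun A (fun v => H (t v)) := fun t ht => dH.comp₁ ht
    exact DFun.val₁ (f := fun α => gr H α) inferInstance hα
  have he' := hG.sub_ext he
  have hap : ∀ β ∈ α, ap (gr H α) β = H β := fun β hβ => ap_eq (by simp [hβ]) (by simp +contextual)
  set e := gr H α with hee
  have : Fact (e ∈ Ext A G) := ⟨he'⟩
  have : Fact (α ∈ Ext A G) := ⟨hG.sub_ext hα⟩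
  have haB := val_mem_Ext (G := G) ha
  have iV : ∀ t [DFun (Ext A G) t], DFun (Ext A G) (fun v => val G (t v)) := fun t ht =>
    DFun.comp₁ (f := val G) (val_dfun hG.G_ext) ht
  let F : ZFSet.{u} → ZFSet.{u} := fun x => val G (ap e (ZFSet.sUnion (ZFSet.sep (fun β =>
    val G (ap e β) ∈ x ∧ ∀ γ ∈ β, val G (ap e γ) ∉ x) α)))
  have dF : DFun (Ext A G) (fun v => F (v 0)) := by
    simp only [F]; infer_instance
  have iF : ∀ t [DFun (Ext A G) t], DFun (Ext A G) (fun v => F (t v)) := fun t ht =>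
    DFun.comp₁ (f := F) dF ht
  refine ⟨gr F (val G a), DFun.val₁ (f := fun a => gr F a) inferInstance haB, ?_, ?_⟩
  · intro x y y' h1 h2
    rw [pair_mem_gr] at h1 h2
    rw [h1.2, h2.2]
  · intro x hx
    refine ⟨F x, pair_mem_gr.2 ⟨hx, rfl⟩, ?_⟩
    obtain ⟨y, hy⟩ := hne x hx
    obtain ⟨b, s, hs, h1, rfl⟩ := mem_val.1 hx
    obtain ⟨c, t, ht, h2, rfl⟩ := mem_val.1 hy
    obtain ⟨β0, hβ0, e0⟩ := hH c (mem_dom.2 ⟨t, ZFSet.mem_sUnion.2 ⟨b, mem_dom.2 ⟨s, h1⟩, h2⟩⟩)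
    obtain ⟨β, hβo, ⟨hβ, hβm⟩, hβl⟩ := exists_least (p := fun β => β ∈ α ∧ val G (ap e β) ∈ val G b)
      ⟨β0, ho.mem hβ0, hβ0, by rw [hap β0 hβ0, ← e0]; exact hy⟩
    have : ZFSet.sep (fun β => val G (ap e β) ∈ val G b ∧ ∀ γ ∈ β, val G (ap e γ) ∉ val G b) α
        = {β} := by
      ext γ
      rw [ZFSet.mem_sep, ZFSet.mem_singleton]
      constructor
      · rintro ⟨h3, h4, h5⟩
        rcases (ho.mem h3).mem_trichotomous hβo with h | h | h
        · exact absurd ⟨h3, h4⟩ (hβl γ h)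
        · exact h
        · exact absurd hβm (h5 β h)
      · rintro rfl
        exact ⟨hβ, hβm, fun γ' hγ' h' => hβl γ' hγ' ⟨ho.isTransitive _ hβ hγ', h'⟩⟩
    simp only [F, this, ZFSet.sUnion_singleton]
    exact hβm

end TM

/-! ### Universes as transitive classes of sets -/

namespace TM

theorem realizeIn_iso {M : Type*} {N : Type*} {E : M → M → Prop} {E' : N → N → Prop}
    (f : M → N) (hf : Function.Surjective f) (hi : Function.Injective f)
    (h : ∀ x y, E' (f x) (f y) ↔ E x y) {n : ℕ} (φ : memLang.BoundedFormula Empty n) :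
    ∀ xs : Fin n → M, RealizeIn E' φ (f ∘ xs) ↔ RealizeIn E φ xs := by
  let _ := memStr E
  let _ := memStr E'
  have ht : ∀ {n : ℕ} (t : memLang.Term (Empty ⊕ Fin n)) (xs : Fin n → M),
      t.realize (Sum.elim (fun e : Empty => (e.elim : N)) (f ∘ xs)) =
        f (t.realize (Sum.elim (fun e : Empty => (e.elim : M)) xs)) := by
    intro n t xs
    cases t with
    | var i => rcases i with i | i
               · exact i.elim
               · rfl
    | func g _ => exact g.elim
  induction φ with
  | falsum => intro xs; rfl
  | equal t s =>
    intro xs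
    show t.realize _ = s.realize _ ↔ t.realize _ = s.realize _
    rw [ht, ht, hi.eq_iff]
  | rel R ts =>
    intro xs
    cases R
    show E' ((ts 0).realize _) ((ts 1).realize _) ↔ E ((ts 0).realize _) ((ts 1).realize _)
    rw [ht, ht, h]
  | imp φ ψ h1 h2 =>
    intro xs
    exact imp_congr (h1 xs) (h2 xs)
  | all φ ih =>
    intro xs
    show (∀ a, _) ↔ ∀ a, _
    rw [hf.forall]
    refine forall_congr' fun a => ?_
    have := ih (Fin.snoc xs a)
    rw [Fin.comp_snoc] at this
    exact this

/-- `c` is an isomorphism of the structure `(M, E)` with the transitive class `A` of sets. -/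
structure Col {M : Type*} (E : M → M → Prop) (c : M → ZFSet.{u}) (A : Set ZFSet.{u}) : Prop where
  inj : Function.Injective c
  mem : ∀ {x y}, c x ∈ c y ↔ E x y
  inA : ∀ x, c x ∈ A
  lift : ∀ {z}, z ∈ A → ∃ x, c x = z
  tr : ∀ {x z}, z ∈ c x → ∃ y, c y = z

section
variable {M : Type*} {E : M → M → Prop} {c : M → ZFSet.{u}} {A : Set ZFSet.{u}} (h : Col E c A)
include h

theorem Col.ext_iff {x : M} {z : ZFSet.{u}} (hz : ∀ y ∈ z, ∃ x, c x = y) :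
    c x = z ↔ ∀ y, E y x ↔ c y ∈ z := by
  constructor
  · rintro rfl y; exact h.mem.symm
  · intro H
    ext y
    constructor
    · intro hy
      obtain ⟨y, rfl⟩ := h.tr hy
      exact (H y).1 (h.mem.1 hy)
    · intro hy
      obtain ⟨y, rfl⟩ := hz y hy
      exact h.mem.2 ((H y).2 hy)

theorem Col.ball {a : M} {P : ZFSet.{u} → Prop} : (∀ x, E x a → P (c x)) ↔ ∀ z ∈ c a, P z := by
  constructor
  · intro H z hz
    obtain ⟨y, rfl⟩ := h.tr hz
    exact H y (h.mem.1 hz)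
  · intro H x hx
    exact H _ (h.mem.2 hx)

theorem Col.bex {a : M} {P : ZFSet.{u} → Prop} : (∃ x, E x a ∧ P (c x)) ↔ ∃ z ∈ c a, P z := by
  constructor
  · rintro ⟨x, hx, H⟩; exact ⟨_, h.mem.2 hx, H⟩
  · rintro ⟨z, hz, H⟩
    obtain ⟨y, rfl⟩ := h.tr hz
    exact ⟨y, h.mem.1 hz, H⟩

theorem Col.empty {a : M} : ZF.IsEmptySet E a ↔ c a = ∅ := by
  rw [h.ext_iff (by simp)]; simp [ZF.IsEmptySet]

theorem Col.pairOf {p a b : M} : ZF.IsPairOf E p a b ↔ c p = {c a, c b} := by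
  rw [h.ext_iff (by rintro y hy; rcases ZFSet.mem_pair.1 hy with rfl | rfl <;> exact ⟨_, rfl⟩)]
  simp [ZF.IsPairOf, h.inj.eq_iff]

theorem Col.opair {p a b : M} : ZF.IsOPairOf E p a b ↔ c p = ZFSet.pair (c a) (c b) := by
  simp only [ZF.IsOPairOf, h.pairOf]
  have e : ∀ x y : ZFSet.{u}, ZFSet.pair x y = {{x, x}, {x, y}} := fun x y => by
    rw [ZFSet.pair, ZFSet.pair_eq_singleton]
  constructor
  · rintro ⟨s, t, hs, ht, hp⟩
    rw [e, hp, hs, ht]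
  · intro hp
    obtain ⟨s, hs⟩ := h.tr (x := p) (z := {c a, c a}) (by rw [hp, e]; simp)
    obtain ⟨t, ht⟩ := h.tr (x := p) (z := {c a, c b}) (by rw [hp, e]; simp)
    exact ⟨s, t, hs, ht, by rw [hp, e, hs, ht]⟩

theorem Col.sub {a b : M} : ZF.Sub E a b ↔ c a ⊆ c b := by
  rw [ZF.Sub, ZFSet.subset_def]
  rw [← h.ball (P := fun z => z ∈ c b)]
  simp only [h.mem]

theorem Col.trs {a : M} : ZF.IsTransitiveSet E a ↔ (c a).IsTransitive := by
  rw [ZF.IsTransitiveSet, ZFSet.IsTransitive, ← h.ball (P := fun z => z ⊆ c a)]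
  simp only [h.sub]

theorem Col.ord {a : M} : ZF.IsOrdinal E a ↔ (c a).IsOrdinal := by
  rw [ZF.IsOrdinal, ZFSet.isOrdinal_iff_forall_mem_isTransitive,
    ← h.ball (P := fun z => z.IsTransitive)]
  simp only [h.trs]

theorem Col.succ {s a : M} : ZF.IsSuccOf E s a ↔ c s = insert (c a) (c a) := by
  rw [h.ext_iff (by
    rintro y hy; rcases ZFSet.mem_insert_iff.1 hy with rfl | hy
    · exact ⟨_, rfl⟩
    · exact h.tr hy)]
  simp [ZF.IsSuccOf, h.inj.eq_iff, h.mem, or_comm]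

theorem Col.omega {w : M} : ZF.IsOmega E w ↔ Om (c w) := by
  rw [ZF.IsOmega, Om, h.ord]
  refine and_congr_right fun _ => and_congr ?_ (and_congr ?_ ?_)
  · simp only [h.empty]
    rw [h.bex (P := fun z => z = ∅)]; simp
  · rw [← h.ball (P := fun z => insert z z ∈ c w)]
    refine forall_congr' fun y => forall_congr' fun _ => ?_
    simp only [h.succ]
    rw [h.bex (P := fun z => z = insert (c y) (c y))]; simp
  · rw [← h.ball (P := fun y => y = ∅ ∨ ∃ z, y = insert z z)]
    refine forall_congr' fun y => forall_congr' fun _ => ?_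
    simp only [h.succ, h.empty]
    refine or_congr_right ⟨?_, ?_⟩
    · rintro ⟨z, hz | hz⟩
      exacts [⟨_, hz.1⟩, ⟨_, hz⟩]
    · rintro ⟨z, hz⟩
      obtain ⟨z, rfl⟩ := h.tr (x := y) (z := z) (by rw [hz]; simp)
      exact ⟨z, Or.inr hz⟩

theorem Col.pm {r x y : M} : ZF.PairMem E r x y ↔ ZFSet.pair (c x) (c y) ∈ c r := by
  simp only [ZF.PairMem, h.opair]
  rw [h.bex (P := fun z => z = ZFSet.pair (c x) (c y))]; simp

theorem Col.power {p a : M} : ZF.IsPowersetOf E p a ↔ ∀ x ∈ A, (x ∈ c p ↔ x ⊆ c a) := by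
  simp only [ZF.IsPowersetOf, h.sub]
  constructor
  · intro H z hz
    obtain ⟨x, rfl⟩ := h.lift hz
    rw [h.mem, H]
  · intro H x
    rw [← h.mem, H _ (h.inA x)]

theorem Col.realize {n : ℕ} (φ : memLang.BoundedFormula Empty n) (xs : Fin n → M) :
    RealizeIn (EA A) φ (fun i => ⟨c (xs i), h.inA _⟩) ↔ RealizeIn E φ xs := by
  refine realizeIn_iso (E := E) (E' := EA A) (fun x => ⟨c x, h.inA x⟩) ?_ ?_ ?_ φ xs
  · rintro ⟨z, hz⟩
    obtain ⟨x, rfl⟩ := h.lift hz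
    exact ⟨x, rfl⟩
  · intro x y hxy
    exact h.inj (Subtype.ext_iff.1 hxy)
  · intro x y
    exact h.mem

theorem Col.lifts {n : ℕ} (xs : Fin n → A) :
    ∃ ys : Fin n → M, xs = fun i => ⟨c (ys i), h.inA _⟩ := by
  choose f hf using fun i => h.lift (xs i).2
  exact ⟨f, funext fun i => Subtype.ext (hf i).symm⟩

theorem Col.snoc {n : ℕ} (xs : Fin n → M) (x : M) :
    (Fin.snoc (α := fun _ => (A : Type _)) (fun i => ⟨c (xs i), h.inA _⟩) ⟨c x, h.inA x⟩ :
      Fin (n+1) → A) =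
      fun i => ⟨c ((Fin.snoc (α := fun _ => M) xs x : Fin (n+1) → M) i), h.inA _⟩ :=
  (Fin.comp_snoc (fun x => (⟨c x, h.inA x⟩ : A)) xs x).symm

theorem Col.sepS : SepScheme (EA A) ↔ SepScheme E := by
  constructor
  · intro H n φ ps a
    obtain ⟨⟨b, hb⟩, H⟩ := H n φ (fun i => ⟨c (ps i), h.inA _⟩) ⟨c a, h.inA a⟩
    obtain ⟨b, rfl⟩ := h.lift hb
    refine ⟨b, fun x => ?_⟩
    have := H ⟨c x, h.inA x⟩
    rw [h.snoc, h.realize] at this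
    simpa only [EA, h.mem] using this
  · rintro H n φ ps ⟨a, ha⟩
    obtain ⟨ps, rfl⟩ := h.lifts ps
    obtain ⟨a, rfl⟩ := h.lift ha
    obtain ⟨b, H⟩ := H n φ ps a
    refine ⟨⟨c b, h.inA b⟩, fun x => ?_⟩
    obtain ⟨x, hx⟩ := x
    obtain ⟨x, rfl⟩ := h.lift hx
    rw [h.snoc, h.realize]
    simpa only [EA, h.mem] using H x

theorem Col.collS : CollectionScheme (EA A) ↔ CollectionScheme E := by
  constructor
  · intro H n φ ps a hy
    obtain ⟨⟨b, hb⟩, H⟩ := H n φ (fun i => ⟨c (ps i), h.inA _⟩) ⟨c a, h.inA a⟩ (by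
      rintro ⟨x, hx⟩ hxa
      obtain ⟨x, rfl⟩ := h.lift hx
      obtain ⟨y, hy⟩ := hy x (h.mem.1 hxa)
      refine ⟨⟨c y, h.inA y⟩, ?_⟩
      rwa [h.snoc, h.snoc, h.realize])
    obtain ⟨b, rfl⟩ := h.lift hb
    refine ⟨b, fun x hx => ?_⟩
    obtain ⟨⟨y, hy⟩, hyb, H⟩ := H ⟨c x, h.inA x⟩ (h.mem.2 hx)
    obtain ⟨y, rfl⟩ := h.lift hy
    rw [h.snoc, h.snoc, h.realize] at H
    exact ⟨y, h.mem.1 hyb, H⟩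
  · rintro H n φ ps ⟨a, ha⟩ hy
    obtain ⟨ps, rfl⟩ := h.lifts ps
    obtain ⟨a, rfl⟩ := h.lift ha
    obtain ⟨b, H⟩ := H n φ ps a (by
      intro x hx
      obtain ⟨⟨y, hy'⟩, hy⟩ := hy ⟨c x, h.inA x⟩ (h.mem.2 hx)
      obtain ⟨y, rfl⟩ := h.lift hy'
      rw [h.snoc, h.snoc, h.realize] at hy
      exact ⟨y, hy⟩)
    refine ⟨⟨c b, h.inA b⟩, ?_⟩
    rintro ⟨x, hx⟩ hxa
    obtain ⟨x, rfl⟩ := h.lift hx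
    obtain ⟨y, hy, H⟩ := H x (h.mem.1 hxa)
    refine ⟨⟨c y, h.inA y⟩, h.mem.2 hy, ?_⟩
    rwa [h.snoc, h.snoc, h.realize]

theorem Col.zfcm (H : SatisfiesZFC E) : ZFCM A where
  trans' x y hx hy := by
    obtain ⟨x, rfl⟩ := h.lift hx
    obtain ⟨y, rfl⟩ := h.tr hy
    exact h.inA y
  pair' a b ha hb := by
    obtain ⟨a, rfl⟩ := h.lift ha
    obtain ⟨b, rfl⟩ := h.lift hb
    obtain ⟨p, hp⟩ := H.pairing a b
    rw [← h.pairOf.1 hp]; exact h.inA p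
  union' a ha := by
    obtain ⟨a, rfl⟩ := h.lift ha
    obtain ⟨w, hw⟩ := H.union a
    have : c w = ZFSet.sUnion (c a) := by
      rw [h.ext_iff]
      · intro y
        rw [hw, ZFSet.mem_sUnion, ← h.bex (P := fun z => c y ∈ z)]
        simp only [h.mem]
      · intro y hy
        obtain ⟨z, hz, hy⟩ := ZFSet.mem_sUnion.1 hy
        obtain ⟨z, rfl⟩ := h.tr hz
        exact h.tr hy
    rw [← this]; exact h.inA w
  infinity' := by
    obtain ⟨w, hw⟩ := H.infinity
    exact ⟨c w, h.inA w, h.omega.1 hw⟩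
  power' a ha := by
    obtain ⟨a, rfl⟩ := h.lift ha
    obtain ⟨p, hp⟩ := H.power a
    exact ⟨c p, h.inA p, h.power.1 hp⟩
  sep' := h.sepS.2 H.sep
  coll' := h.collS.2 H.coll
  choice' a ha hne := by
    obtain ⟨a, rfl⟩ := h.lift ha
    obtain ⟨f, hf, hf'⟩ := H.choice a (by
      intro x hx
      obtain ⟨y, hy⟩ := hne (c x) (h.mem.2 hx)
      obtain ⟨y, rfl⟩ := h.tr hy
      exact ⟨y, h.mem.1 hy⟩)
    simp only [h.pm] at hf hf'
    refine ⟨c f, h.inA f, ?_, ?_⟩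
    · intro x y y' h1 h2
      have hxy : ∀ x y, ZFSet.pair x y ∈ c f → (∃ x', c x' = x) ∧ ∃ y', c y' = y := by
        intro x y hp
        obtain ⟨p, hp'⟩ := h.tr hp
        have h1 : ({x, y} : ZFSet) ∈ c p := by rw [hp', ZFSet.pair]; simp
        obtain ⟨q, hq⟩ := h.tr h1
        exact ⟨h.tr (x := q) (by rw [hq]; simp), h.tr (x := q) (by rw [hq]; simp)⟩
      obtain ⟨⟨x, rfl⟩, y, rfl⟩ := hxy _ _ h1
      obtain ⟨_, y', rfl⟩ := hxy _ _ h2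
      rw [hf x y y' h1 h2]
    · rw [← h.ball (P := fun x => ∃ y, ZFSet.pair x y ∈ c f ∧ y ∈ x)]
      intro x hx
      obtain ⟨y, h1, h2⟩ := hf' x hx
      exact ⟨c y, h1, h.mem.2 h2⟩

theorem Col.zfc (H : ZFCM A) : SatisfiesZFC E where
  ext x y hxy := by
    apply h.inj
    rw [h.ext_iff (fun y hy => h.tr hy)]
    intro z; rw [hxy, h.mem]
  found := by
    have := InvImage.wf c ZFSet.mem_wf
    convert this using 1
    funext x y
    exact propext h.mem.symm
  pairing a b := by
    obtain ⟨p, hp⟩ := h.lift (pairA (h.inA a) (h.inA b))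
    exact ⟨p, h.pairOf.2 hp⟩
  union a := by
    obtain ⟨w, hw⟩ := h.lift (sUnionA (h.inA a))
    refine ⟨w, fun x => ?_⟩
    rw [← h.mem, hw, ZFSet.mem_sUnion, ← h.bex (P := fun z => c x ∈ z)]
    simp only [h.mem]
  infinity := by
    obtain ⟨w, hw, ho⟩ := ZFM.infinity' (A := A)
    obtain ⟨w, rfl⟩ := h.lift hw
    exact ⟨w, h.omega.2 ho⟩
  sep := h.sepS.1 H.sep'
  coll := h.collS.1 H.coll'
  choice a hne := by
    obtain ⟨f, hf, h1, h2⟩ := ZFCM.choice' (A := A) (c a) (h.inA a) (by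
      rw [← h.ball (P := fun x => ∃ y, y ∈ x)]
      intro x hx
      obtain ⟨y, hy⟩ := hne x hx
      exact ⟨c y, h.mem.2 hy⟩)
    obtain ⟨f, rfl⟩ := h.lift hf
    simp only [h.pm]
    refine ⟨f, fun x y y' hx hy => h.inj (h1 _ _ _ hx hy), fun x hx => ?_⟩
    obtain ⟨y, hy, hyx⟩ := h2 (c x) (h.mem.2 hx)
    obtain ⟨y, rfl⟩ := h.tr hyx
    exact ⟨y, hy, h.mem.1 hyx⟩
  power a := by
    obtain ⟨p, hp, H⟩ := ZFM.power' (A := A) (c a) (h.inA a)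
    obtain ⟨p, rfl⟩ := h.lift hp
    exact ⟨p, h.power.2 H⟩

end

/-- The Mostowski collapse of a universe. -/
noncomputable def col (U : ZFCUniverse.{u}) : U.M → ZFSet.{u} :=
  U.zfc.found.fix fun x ih => ZFSet.range (fun y : {y // U.mem y x} => ih y.1 y.2)

theorem mem_col (U : ZFCUniverse.{u}) {x : U.M} {z : ZFSet.{u}} :
    z ∈ col U x ↔ ∃ y, U.mem y x ∧ col U y = z := by
  rw [col, WellFounded.fix_eq, ZFSet.mem_range]
  simp

/-- The transitive class of sets isomorphic to a universe. -/
noncomputable def Cls (U : ZFCUniverse.{u}) : Set ZFSet.{u} := Set.range (col U)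

theorem col_inj (U : ZFCUniverse.{u}) : Function.Injective (col U) := by
  intro x
  induction x using U.zfc.found.induction with
  | _ x ih =>
    intro y hxy
    apply U.zfc.ext
    intro z
    constructor
    · intro hz
      have : col U z ∈ col U y := by rw [← hxy]; exact (mem_col U).2 ⟨z, hz, rfl⟩
      obtain ⟨w, hw, e⟩ := (mem_col U).1 this
      rwa [ih z hz e.symm]
    · intro hz
      have : col U z ∈ col U x := by rw [hxy]; exact (mem_col U).2 ⟨z, hz, rfl⟩
      obtain ⟨w, hw, e⟩ := (mem_col U).1 this
      rwa [← ih w hw e]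

theorem colC (U : ZFCUniverse.{u}) : Col U.mem (col U) (Cls U) where
  inj := col_inj U
  mem := by
    intro x y
    rw [mem_col]
    constructor
    · rintro ⟨z, hz, e⟩
      rwa [← col_inj U e]
    · intro h
      exact ⟨x, h, rfl⟩
  inA x := ⟨x, rfl⟩
  lift h := h
  tr h := by
    obtain ⟨y, _, e⟩ := (mem_col U).1 h
    exact ⟨y, e⟩

instance (U : ZFCUniverse.{u}) : ZFCM (Cls U) := (colC U).zfcm U.zfc

instance (U : ZFCUniverse.{u}) : Small.{u} (Cls U) := by
  unfold Cls; infer_instance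

/-- A small transitive model of `ZFC`, regarded as a universe. -/
noncomputable def mkU (A : Set ZFSet.{u}) [hs : Small.{u} A] [hA : ZFCM A] : ZFCUniverse.{u} where
  M := Shrink.{u} A
  mem x y := ((equivShrink A).symm x).1 ∈ ((equivShrink A).symm y).1
  zfc := Col.zfc (A := A) (c := fun x => ((equivShrink A).symm x).1)
    { inj := fun x y h => (equivShrink A).symm.injective (Subtype.ext h)
      mem := Iff.rfl
      inA := fun x => ((equivShrink A).symm x).2
      lift := fun {z} hz => ⟨equivShrink A ⟨z, hz⟩, by simp⟩
      tr := fun {x z} hz => ⟨equivShrink A ⟨z, trA ((equivShrink A).symm x).2 hz⟩, by simp⟩ } hA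

theorem Cls_mkU (A : Set ZFSet.{u}) [hs : Small.{u} A] [hA : ZFCM A] : Cls (mkU A) = A := by
  have key : ∀ x : (mkU A).M, col (mkU A) x = ((equivShrink A).symm x).1 := by
    intro x
    induction x using (mkU A).zfc.found.induction with
    | _ x ih =>
      ext z
      rw [mem_col]
      constructor
      · rintro ⟨y, hy, rfl⟩
        rw [ih y hy]; exact hy
      · intro hz
        have hzA : z ∈ A := trA ((equivShrink A).symm x).2 hz
        have e : ((equivShrink A).symm (equivShrink A ⟨z, hzA⟩)).1 = z := by simp
        have hm : (mkU A).mem (equivShrink A ⟨z, hzA⟩) x := by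
          show ((equivShrink A).symm (equivShrink A ⟨z, hzA⟩)).1 ∈ _
          rw [e]; exact hz
        exact ⟨equivShrink A ⟨z, hzA⟩, hm, by rw [ih _ hm, e]⟩
  ext z
  constructor
  · rintro ⟨x, rfl⟩
    rw [key]; exact ((equivShrink A).symm x).2
  · intro hz
    exact ⟨equivShrink A ⟨z, hz⟩, (key (equivShrink A ⟨z, hz⟩)).trans (by simp)⟩

theorem col_emb {U V : ZFCUniverse.{u}} (e : MemEmbed U V) (x : U.M) : col V (e.f x) = col U x := by
  induction x using U.zfc.found.induction with
  | _ x ih =>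
    ext z
    rw [mem_col, mem_col]
    constructor
    · rintro ⟨y, hy, rfl⟩
      obtain ⟨w, hw, rfl⟩ := e.trans_range x y hy
      exact ⟨w, hw, (ih w hw).symm⟩
    · rintro ⟨y, hy, rfl⟩
      exact ⟨e.f y, (e.mem_iff _ _).2 hy, ih y hy⟩

theorem Cls_sub {U V : ZFCUniverse.{u}} (e : MemEmbed U V) : Cls U ⊆ Cls V := by
  rintro _ ⟨x, rfl⟩
  exact ⟨e.f x, col_emb e x⟩

theorem exists_emb {U V : ZFCUniverse.{u}} (h : Cls U ⊆ Cls V) : Nonempty (MemEmbed U V) := by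
  choose f hf using fun x => h ((colC U).inA x)
  refine ⟨⟨f, fun x y => ?_, fun x y hy => ?_⟩⟩
  · rw [← (colC V).mem, hf, hf, (colC U).mem]
  · rw [← (colC V).mem, hf, mem_col] at hy
    obtain ⟨z, hz, e⟩ := hy
    exact ⟨z, hz, (colC V).inj (by rw [hf, e])⟩

/-- `V` is a generic extension of `U` if and only if its class of sets consists of the values of
the names in `U`. -/
theorem genExt_iff {U V : ZFCUniverse.{u}} (e : MemEmbed U V) (P le : U.M) (G : V.M) :
    IsSetGenericExt U V e P le G ↔ ZF.IsPartialOrderOn U.mem le P ∧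
      Gen (Cls U) (col U P) (col U le) (col V G) ∧ Cls V = Ext (Cls U) (col V G) := by
  have cU := colC U
  have cV := colC V
  have fld : ZF.IsPartialOrderOn U.mem le P → ∀ p q, ZFSet.pair p q ∈ col U le →
      ∃ x y, U.mem x P ∧ U.mem y P ∧ col U x = p ∧ col U y = q := by
    intro hp p q hpq
    obtain ⟨r, hr⟩ := cU.tr hpq
    obtain ⟨x, y, hx, hy, hxy⟩ := hp.1 r (cU.mem.1 (by rw [hr]; exact hpq))
    rw [cU.opair, hr, ZFSet.pair_inj] at hxy
    exact ⟨x, y, hx, hy, hxy.1.symm, hxy.2.symm⟩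
  have hsm : Small.{u} (Ext (Cls U) (col V G)) := by
    have : Ext (Cls U) (col V G) = (val (col V G)) '' (Cls U) := by ext; simp [Ext]
    rw [this]; infer_instance
  constructor
  · intro h
    have hG : Gen (Cls U) (col U P) (col U le) (col V G) :=
      { hP := cU.inA P
        hle := cU.inA le
        le_sub := fun p q hpq => by
          obtain ⟨x, y, hx, hy, rfl, rfl⟩ := fld h.poset p q hpq
          exact ⟨cU.mem.2 hx, cU.mem.2 hy⟩
        refl := by
          rw [← cU.ball (P := fun p => ZFSet.pair p p ∈ col U le)]
          intro p hp; rw [← cU.pm]; exact h.poset.2.1 p hp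
        trans := fun p q r hpq hqr => by
          obtain ⟨x, y, hx, hy, rfl, rfl⟩ := fld h.poset p q hpq
          obtain ⟨y', z, hy', hz, e, rfl⟩ := fld h.poset _ r hqr
          rw [← cU.pm] at *
          exact h.poset.2.2.1 x y z hpq hqr
        sub := by
          intro z hz
          obtain ⟨x, rfl⟩ := cV.tr hz
          obtain ⟨p, hp, rfl⟩ := h.sub x (cV.mem.1 hz)
          rw [col_emb]; exact cU.mem.2 hp
        up := fun p q hpq hp => by
          obtain ⟨x, y, hx, hy, rfl, rfl⟩ := fld h.poset p q hpq
          rw [← cU.pm] at hpq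
          rw [← col_emb e, cV.mem] at hp ⊢
          exact h.upward x y hx hy hpq hp
        dir := by
          rintro p hp q hq
          obtain ⟨p', rfl⟩ := cV.tr hp
          obtain ⟨q', rfl⟩ := cV.tr hq
          rw [cV.mem] at hp hq
          obtain ⟨p, hpP, rfl⟩ := h.sub p' hp
          obtain ⟨q, hqP, rfl⟩ := h.sub q' hq
          obtain ⟨r, hr, hrG, h1, h2⟩ := h.directed p q hpP hqP hp hq
          refine ⟨col V (e.f r), cV.mem.2 hrG, ?_, ?_⟩
          · rw [col_emb, col_emb, ← cU.pm]; exact h1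
          · rw [col_emb, col_emb, ← cU.pm]; exact h2
        gen := by
          intro D hD hs hd
          obtain ⟨D, rfl⟩ := cU.lift hD
          obtain ⟨q, hq, hqG⟩ := h.generic D ⟨by rw [cU.sub]; exact hs, fun p hp => by
            obtain ⟨q, hq, hqp⟩ := hd _ (cU.mem.2 hp)
            obtain ⟨q, rfl⟩ := cU.tr hq
            exact ⟨q, cU.mem.1 hq, cU.pm.2 hqp⟩⟩
          exact ⟨col U q, cU.mem.2 hq, by rw [← col_emb e]; exact cV.mem.2 hqG⟩ }
    refine ⟨h.poset, hG, ?_⟩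
    have := hG.ext_zfcm
    apply Set.Subset.antisymm
    · obtain ⟨g⟩ := exists_emb (U := U) (V := mkU (Ext (Cls U) (col V G)))
        (by rw [Cls_mkU]; exact hG.sub_ext)
      have cW := colC (mkU (Ext (Cls U) (col V G)))
      rw [Cls_mkU] at cW
      obtain ⟨H, hH⟩ := cW.lift hG.G_ext
      obtain ⟨k, _⟩ := h.minimal (mkU (Ext (Cls U) (col V G))) g H (by
        intro x
        rw [← cW.mem, hH]
        constructor
        · intro hx
          obtain ⟨y, hy⟩ := cV.tr hx
          obtain ⟨p, hp, rfl⟩ := h.sub y (by rw [← cV.mem, hy]; exact hx)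
          rw [col_emb] at hy
          refine ⟨p, by rw [← cV.mem, col_emb, hy]; exact hx, cW.inj ?_⟩
          rw [col_emb, hy]
        · rintro ⟨p, hp, rfl⟩
          rw [col_emb, ← col_emb e]; exact cV.mem.2 hp) (by
        intro x hx
        rw [cW.ord] at hx
        obtain ⟨y, hy⟩ := cU.lift (hG.ext_ord (cW.inA x) hx)
        exact ⟨y, cW.inj (by rw [col_emb, hy])⟩)
      have := Cls_sub k
      rwa [Cls_mkU] at this
    · exact Ext_sub (cV.inA G) (Cls_sub e)
  · rintro ⟨hpo, hG, hV⟩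
    have hGe : ∀ x, V.mem x G → ∃ p, U.mem p P ∧ x = e.f p := by
      intro x hx
      have := hG.sub _ (cV.mem.2 hx)
      obtain ⟨p, hp, hp'⟩ := (mem_col U).1 this
      exact ⟨p, hp, cV.inj (by rw [col_emb, hp'])⟩
    have hGm : ∀ p, V.mem (e.f p) G ↔ col U p ∈ col V G := by
      intro p; rw [← cV.mem, col_emb]
    refine ⟨hpo, hGe, ?_, ?_, ?_, ?_, ?_⟩
    · intro p q hp hq hpq
      rw [hGm, hGm]; exact hG.up _ _ (cU.pm.1 hpq)
    · intro p q hp hq h1 h2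
      rw [hGm] at h1 h2
      obtain ⟨r, hr, h3, h4⟩ := hG.dir _ h1 _ h2
      obtain ⟨r, hrP, rfl⟩ := (mem_col U).1 (hG.sub r hr)
      exact ⟨r, hrP, (hGm r).2 hr, cU.pm.2 h3, cU.pm.2 h4⟩
    · intro D hD
      obtain ⟨q, hq, hqG⟩ := hG.gen (col U D) (cU.inA D) (cU.sub.1 hD.1) (by
        rw [← cU.ball (P := fun p => ∃ q ∈ col U D, ZFSet.pair q p ∈ col U le)]
        intro p hp
        obtain ⟨q, hq, hqp⟩ := hD.2 p hp
        exact ⟨col U q, cU.mem.2 hq, cU.pm.1 hqp⟩)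
      obtain ⟨q, rfl⟩ := cU.tr hq
      exact ⟨q, cU.mem.1 hq, (hGm q).2 hqG⟩
    · intro x hx
      obtain ⟨y, hy⟩ := cU.lift (hG.ext_ord (hV ▸ cV.inA x) (cV.ord.1 hx))
      exact ⟨y, cV.inj (by rw [col_emb, hy])⟩
    · intro W g H hH hO
      have cW := colC W
      have hHG : col W H = col V G := by
        rw [cW.ext_iff]
        · intro x
          rw [hH]
          constructor
          · rintro ⟨p, hp, rfl⟩
            rw [col_emb, ← hGm]; exact hp
          · intro hx
            obtain ⟨p, hp, hp'⟩ := (mem_col U).1 (hG.sub _ hx)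
            exact ⟨p, (hGm p).2 (hp' ▸ hx), cW.inj (by rw [col_emb, hp'])⟩
        · intro y hy
          obtain ⟨p, hp, rfl⟩ := (mem_col U).1 (hG.sub _ hy)
          exact ⟨g.f p, col_emb g p⟩
      have : Cls V ⊆ Cls W := by
        rw [hV, ← hHG]; exact Ext_sub (cW.inA H) (Cls_sub g)
      obtain ⟨k⟩ := exists_emb this
      exact ⟨k, fun x => cW.inj (by rw [col_emb, col_emb, col_emb])⟩

end TM

/-! ### The conditions of `𝕊` -/

namespace TM

/-- `κ` is inaccessible in the model `A`. -/
structure Inacc (A : Set ZFSet.{u}) (κ : ZFSet.{u}) : Prop where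
  inA : κ ∈ A
  ord : κ.IsOrdinal
  om : ∃ w ∈ κ, Om w
  card : ∀ β ∈ κ, ∀ f ∈ A, (∀ x ∈ κ, ∃ y ∈ β, ZFSet.pair x y ∈ f) →
    (∀ x y y', ZFSet.pair x y ∈ f → ZFSet.pair x y' ∈ f → y = y') →
    (∀ x x' y, ZFSet.pair x y ∈ f → ZFSet.pair x' y ∈ f → x = x') →
    (∀ p ∈ f, ∃ x ∈ κ, ∃ y ∈ β, p = ZFSet.pair x y) → False
  reg : ∀ β ∈ κ, ∀ f ∈ A, (∀ x ∈ β, ∃ y, ZFSet.pair x y ∈ f) →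
    (∀ x y y', ZFSet.pair x y ∈ f → ZFSet.pair x y' ∈ f → y = y') →
    (∀ p ∈ f, ∃ x ∈ β, ∃ y ∈ κ, p = ZFSet.pair x y) →
    ∃ γ ∈ κ, ∀ x y, ZFSet.pair x y ∈ f → y ∈ γ
  str : ∀ β ∈ κ, ∃ γ ∈ κ, ∃ f ∈ A, (∀ x ∈ pw A β, ∃ y ∈ γ, ZFSet.pair x y ∈ f) ∧
    (∀ x y y', ZFSet.pair x y ∈ f → ZFSet.pair x y' ∈ f → y = y') ∧
    (∀ x x' y, ZFSet.pair x y ∈ f → ZFSet.pair x' y ∈ f → x = x')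

/-- The largest element of a condition. -/
noncomputable def mx (s : ZFSet.{u}) : ZFSet.{u} := ZFSet.sUnion s

/-- Symmetric difference. -/
noncomputable def dif (s t : ZFSet.{u}) : ZFSet.{u} := (s \ t) ∪ (t \ s)

@[simp] theorem mem_dif {s t x : ZFSet.{u}} : x ∈ dif s t ↔ ¬ (x ∈ s ↔ x ∈ t) := by
  simp only [dif, ZFSet.mem_union, ZFSet.mem_sdiff]; tauto

/-- The condition with largest element `b` which agrees with `a` below `b`. -/
noncomputable def mk (b a : ZFSet.{u}) : ZFSet.{u} := insert b (a ∩ b)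

/-- `d` is finite in the sense of `A`: each nonempty subset of `d` in `A` has a maximum. -/
def Fi (A : Set ZFSet.{u}) (d : ZFSet.{u}) : Prop :=
  ∀ e, e ∈ A → (e ⊆ d → (∃ x, x ∈ e) → ∃ m, m ∈ e ∧ ∀ x, x ∈ e → x ⊆ m)

/-- `a` and `b` agree below `m` up to finitely many points. -/
def al (A : Set ZFSet.{u}) (m a b : ZFSet.{u}) : Prop := Fi A (dif a b ∩ m)

/-- The condition `t` end-extends `s`. -/
def ee (s t : ZFSet.{u}) : Prop := mx s ⊆ mx t ∧ ∀ x, x ∈ mx s → (x ∈ s ↔ x ∈ t)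

/-- The strict order of `𝕊`: `r` is longer than `s` and almost end-extends it. -/
def sl (A : Set ZFSet.{u}) (r s : ZFSet.{u}) : Prop := mx s ∈ mx r ∧ al A (mx s) r s

section inst
variable {A : Set ZFSet.{u}} [ZFM A] {t s r : (ℕ → ZFSet.{u}) → ZFSet.{u}}
  [ht : DFun A t] [hs : DFun A s] [hr : DFun A r]

instance : DFun A (fun v => mx (t v)) := by unfold mx; infer_instance
instance : DFun A (fun v => dif (t v) (s v)) := by unfold dif; infer_instance
instance : DFun A (fun v => mk (t v) (s v)) := by unfold mk; infer_instance
instance : Dfn A (fun v => Fi A (t v)) := by unfold Fi; infer_instance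
instance : Dfn A (fun v => al A (r v) (t v) (s v)) := by unfold al; infer_instance
instance : Dfn A (fun v => ee (t v) (s v)) := by unfold ee; infer_instance
instance : Dfn A (fun v => sl A (t v) (s v)) := by unfold sl; infer_instance
end inst

section basic
variable {A : Set ZFSet.{u}} [hA : ZFM A] {a b c d m m' : ZFSet.{u}}

theorem interA (ha : a ∈ A) (hb : b ∈ A) : a ∩ b ∈ A :=
  DFun.val₂ (f := fun a b => a ∩ b) inferInstance ha hb
theorem sdiffA (ha : a ∈ A) (hb : b ∈ A) : a \ b ∈ A :=
  DFun.val₂ (f := fun a b => a \ b) inferInstance ha hb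
theorem difA (ha : a ∈ A) (hb : b ∈ A) : dif a b ∈ A :=
  DFun.val₂ (f := dif) inferInstance ha hb
theorem mkA (ha : a ∈ A) (hb : b ∈ A) : mk a b ∈ A :=
  DFun.val₂ (f := mk) inferInstance ha hb
theorem mxA (ha : a ∈ A) : mx a ∈ A := sUnionA ha

omit hA in
theorem Fi.mono (h : Fi A b) (hab : a ⊆ b) : Fi A a := fun e he h1 h2 =>
  h e he (fun x hx => hab (h1 hx)) h2

omit hA in
theorem Fi.of_empty (h : ∀ x, x ∉ a) : Fi A a := fun e he h1 ⟨x, hx⟩ => absurd (h1 hx) (h x)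

theorem Fi.union (ha : a ∈ A) (hb : b ∈ A) (h1 : Fi A a) (h2 : Fi A b)
    (ho : ∀ x ∈ a, x.IsOrdinal) (ho' : ∀ x ∈ b, x.IsOrdinal) : Fi A (a ∪ b) := by
  intro e he hs hne
  by_cases ea : ∃ x, x ∈ e ∩ a
  · obtain ⟨p, hp, hp'⟩ := h1 _ (interA he ha) (fun x hx => (ZFSet.mem_inter.1 hx).2) ea
    by_cases eb : ∃ x, x ∈ e ∩ b
    · obtain ⟨q, hq, hq'⟩ := h2 _ (interA he hb) (fun x hx => (ZFSet.mem_inter.1 hx).2) eb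
      rw [ZFSet.mem_inter] at hp hq
      rcases (ho p hp.2).subset_total (ho' q hq.2) with h | h
      · refine ⟨q, hq.1, fun x hx => ?_⟩
        rcases ZFSet.mem_union.1 (hs hx) with hx' | hx'
        · exact (hp' x (ZFSet.mem_inter.2 ⟨hx, hx'⟩)).trans h
        · exact hq' x (ZFSet.mem_inter.2 ⟨hx, hx'⟩)
      · refine ⟨p, hp.1, fun x hx => ?_⟩
        rcases ZFSet.mem_union.1 (hs hx) with hx' | hx'
        · exact hp' x (ZFSet.mem_inter.2 ⟨hx, hx'⟩)
        · exact (hq' x (ZFSet.mem_inter.2 ⟨hx, hx'⟩)).trans h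
    · refine h1 e he (fun x hx => ?_) hne
      rcases ZFSet.mem_union.1 (hs hx) with hx' | hx'
      · exact hx'
      · exact absurd ⟨x, ZFSet.mem_inter.2 ⟨hx, hx'⟩⟩ eb
  · refine h2 e he (fun x hx => ?_) hne
    rcases ZFSet.mem_union.1 (hs hx) with hx' | hx'
    · exact absurd ⟨x, ZFSet.mem_inter.2 ⟨hx, hx'⟩⟩ ea
    · exact hx'

omit hA in
theorem al.of_eq (h : ∀ x ∈ m, (x ∈ a ↔ x ∈ b)) : al A m a b := by
  apply Fi.of_empty
  intro x hx
  rw [ZFSet.mem_inter, mem_dif] at hx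
  exact hx.1 (h x hx.2)

omit hA in
theorem al.symm (h : al A m a b) : al A m b a := by
  refine Fi.mono h fun x hx => ?_
  rw [ZFSet.mem_inter, mem_dif] at hx ⊢
  tauto

omit hA in
theorem al.mono (h : al A m a b) (hm : m' ⊆ m) : al A m' a b := by
  refine Fi.mono h fun x hx => ?_
  rw [ZFSet.mem_inter] at hx ⊢
  exact ⟨hx.1, hm hx.2⟩

theorem al.trans (hm : m ∈ A) (ho : m.IsOrdinal) (ha : a ∈ A) (hb : b ∈ A) (hc : c ∈ A)
    (h1 : al A m a b) (h2 : al A m b c) : al A m a c := by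
  have o : ∀ d, ∀ x ∈ d ∩ m, x.IsOrdinal := fun d x hx => ho.mem (ZFSet.mem_inter.1 hx).2
  refine Fi.mono (Fi.union (interA (difA ha hb) hm) (interA (difA hb hc) hm) h1 h2
    (o _) (o _)) fun x hx => ?_
  simp only [ZFSet.mem_inter, ZFSet.mem_union, mem_dif] at hx ⊢
  tauto

omit hA in
theorem al.congr (h : al A m a b) (hb : ∀ x ∈ m, (x ∈ b ↔ x ∈ c)) : al A m a c := by
  refine Fi.mono h fun x hx => ?_
  rw [ZFSet.mem_inter, mem_dif] at hx ⊢
  rw [hb x hx.2]; exact hx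

omit hA in
theorem ee.refl (s : ZFSet.{u}) : ee s s := ⟨fun _ h => h, fun _ _ => Iff.rfl⟩

omit hA in
theorem ee.trans {s t r : ZFSet.{u}} (h : ee s t) (h' : ee t r) : ee s r :=
  ⟨h.1.trans h'.1, fun x hx => (h.2 x hx).trans (h'.2 x (h.1 hx))⟩

omit hA in
theorem ee.al {s t : ZFSet.{u}} (h : ee s t) : al A (mx s) t s := al.of_eq fun x hx => (h.2 x hx).symm

omit hA in
/-- Two restrictions of the same condition are comparable. -/
theorem ee.cmp {s t r : ZFSet.{u}} (h : ee s r) (h' : ee t r) (hm : mx s ⊆ mx t) : ee s t :=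
  ⟨hm, fun x hx => (h.2 x hx).trans (h'.2 x (hm hx)).symm⟩

omit hA in
theorem mem_mk {x : ZFSet.{u}} (hx : x ∈ b) : x ∈ mk b a ↔ x ∈ a := by
  rw [mk, ZFSet.mem_insert_iff, ZFSet.mem_inter]
  constructor
  · rintro (rfl | h)
    · exact absurd hx (ZFSet.mem_irrefl _)
    · exact h.1
  · intro h; exact Or.inr ⟨h, hx⟩

omit hA in
theorem mx_mk (hb : b.IsOrdinal) : mx (mk b a) = b := by
  ext x
  rw [mx, ZFSet.mem_sUnion]
  constructor
  · rintro ⟨y, hy, hx⟩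
    rcases ZFSet.mem_insert_iff.1 hy with rfl | hy
    · exact hx
    · exact hb.mem_trans hx (ZFSet.mem_inter.1 hy).2
  · intro hx
    exact ⟨b, ZFSet.mem_insert _ _, hx⟩

omit hA in
theorem ee_mk {s : ZFSet.{u}} (hb : b.IsOrdinal) (h : mx s ⊆ b) (h' : ∀ x ∈ mx s, (x ∈ s ↔ x ∈ a)) :
    ee s (mk b a) :=
  ⟨by rw [mx_mk hb]; exact h, fun x hx => (h' x hx).trans (mem_mk (h hx)).symm⟩

omit hA in
theorem mk_ee {s : ZFSet.{u}} (hb : b.IsOrdinal) (h : b ⊆ mx s) (h' : ∀ x ∈ b, (x ∈ a ↔ x ∈ s)) :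
    ee (mk b a) s :=
  ⟨by rw [mx_mk hb]; exact h, fun x hx => by
    rw [mx_mk hb] at hx; exact (mem_mk hx).trans (h' x hx)⟩

/-- The restriction of a definable relation `R` to the set `X`. -/
noncomputable def rel (R : ZFSet.{u} → ZFSet.{u} → Prop) (X : ZFSet.{u}) : ZFSet.{u} :=
  ZFSet.sep (fun p => ∃ a b, ZFSet.pair a b ∈ ({p} : ZFSet.{u}) ∧ R a b) (ZFSet.prod X X)

omit hA in
theorem mem_rel {R : ZFSet.{u} → ZFSet.{u} → Prop} {X : ZFSet.{u}} :
    ZFSet.pair a b ∈ rel R X ↔ a ∈ X ∧ b ∈ X ∧ R a b := by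
  rw [rel, ZFSet.mem_sep, ZFSet.pair_mem_prod, and_assoc]
  simp only [ZFSet.mem_singleton, ZFSet.pair_inj]
  simp

omit hA in
theorem rel_pair {R : ZFSet.{u} → ZFSet.{u} → Prop} {X p : ZFSet.{u}} (h : p ∈ rel R X) :
    ∃ x ∈ X, ∃ y ∈ X, p = ZFSet.pair x y := by
  obtain ⟨a, ha, b, hb, e⟩ := ZFSet.mem_prod.1 (ZFSet.mem_sep.1 h).1
  exact ⟨a, ha, b, hb, e⟩

theorem relA {R : ZFSet.{u} → ZFSet.{u} → Prop} (hR : Dfn A (fun v => R (v 0) (v 1)))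
    {X : ZFSet.{u}} (hX : X ∈ A) : rel R X ∈ A := by
  have iR : ∀ t s [DFun A t] [DFun A s], Dfn A (fun v => R (t v) (s v)) := fun t s ht hs =>
    Dfn.comp₂ (P := R) hR ht hs
  exact sepA (prodA hX hX)

end basic

/-- The set of conditions of `𝕊`: the bounded subsets of `κ` in `A` having a maximum. -/
noncomputable def SC (A : Set ZFSet.{u}) (κ : ZFSet.{u}) : ZFSet.{u} :=
  ZFSet.sep (fun s => mx s ∈ s) (pw A κ)

/-- The order of `𝕊`: `r ≤ s` if `r = s`, or `r` is longer than `s` and agrees with `s` below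
`mx s` up to finitely many points. -/
noncomputable def leS (A : Set ZFSet.{u}) (κ : ZFSet.{u}) : ZFSet.{u} :=
  rel (fun r s => r = s ∨ sl A r s) (SC A κ)

/-- The order of end-extension on the conditions of `𝕊`. -/
noncomputable def leQ (A : Set ZFSet.{u}) (κ : ZFSet.{u}) : ZFSet.{u} :=
  rel (fun r s => ee s r) (SC A κ)

section conds
variable {A : Set ZFSet.{u}} [hA : ZFCM A] {κ : ZFSet.{u}} (hκ : Inacc A κ)
  {s t r a b x : ZFSet.{u}}

theorem mem_SC : s ∈ SC A κ ↔ s ∈ A ∧ s ⊆ κ ∧ mx s ∈ s := by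
  rw [SC, ZFSet.mem_sep, mem_pw]; tauto

theorem SC.inA (h : s ∈ SC A κ) : s ∈ A := (mem_SC.1 h).1

include hκ

theorem Inacc.o (h : x ∈ κ) : x.IsOrdinal := hκ.ord.mem h
theorem Inacc.el (h : x ∈ κ) : x ∈ A := trA hκ.inA h
theorem Inacc.tr (h : x ∈ a) (ha : a ∈ κ) : x ∈ κ := hκ.ord.mem_trans h ha

theorem Inacc.SA : SC A κ ∈ A := sepA (pwA hκ.inA)
theorem Inacc.leSA : leS A κ ∈ A := relA inferInstance hκ.SA
theorem Inacc.leQA : leQ A κ ∈ A := relA inferInstance hκ.SA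

theorem Inacc.mx (h : s ∈ SC A κ) : mx s ∈ κ := (mem_SC.1 h).2.1 (mem_SC.1 h).2.2
theorem Inacc.mxo (h : s ∈ SC A κ) : (TM.mx s).IsOrdinal := hκ.o (hκ.mx h)

theorem Inacc.sub (h : a ⊆ b) (hb : b ∈ κ) (ha : a.IsOrdinal) : a ∈ κ :=
  ha.mem_of_subset_of_mem hκ.ord h hb

theorem Inacc.mem_cases (h : s ∈ SC A κ) (hx : x ∈ s) : x ∈ TM.mx s ∨ x = TM.mx s := by
  have h1 : x ⊆ TM.mx s := fun y hy => ZFSet.mem_sUnion.2 ⟨x, hx, hy⟩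
  rcases (hκ.o ((mem_SC.1 h).2.1 hx)).subset_iff_eq_or_mem (hκ.mxo h) |>.1 h1 with h | h
  exacts [Or.inr h, Or.inl h]

theorem Inacc.ext (h : s ∈ SC A κ) (h' : t ∈ SC A κ) (hm : TM.mx s = TM.mx t)
    (he : ∀ x ∈ TM.mx s, (x ∈ s ↔ x ∈ t)) : s = t := by
  ext x
  constructor
  · intro hx
    rcases hκ.mem_cases h hx with hx' | rfl
    · exact (he x hx').1 hx
    · rw [hm]; exact (mem_SC.1 h').2.2
  · intro hx
    rcases hκ.mem_cases h' hx with hx' | rfl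
    · exact (he x (hm ▸ hx')).2 hx
    · rw [← hm]; exact (mem_SC.1 h).2.2

theorem Inacc.ee_eq (h : s ∈ SC A κ) (h' : t ∈ SC A κ) (he : ee s t)
    (hm : TM.mx s = TM.mx t) : s = t := hκ.ext h h' hm he.2

theorem Inacc.ee_antisymm (h : s ∈ SC A κ) (h' : t ∈ SC A κ) (he : ee s t) (he' : ee t s) :
    s = t := hκ.ee_eq h h' he (ZFSet.ext fun x => ⟨fun h => he.1 h, fun h => he'.1 h⟩)

theorem Inacc.ee_cases (h : s ∈ SC A κ) (h' : t ∈ SC A κ) (he : ee s t) :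
    s = t ∨ TM.mx s ∈ TM.mx t := by
  rcases ((hκ.mxo h).subset_iff_eq_or_mem (hκ.mxo h')).1 he.1 with e | e
  exacts [Or.inl (hκ.ee_eq h h' he e), Or.inr e]

theorem Inacc.ee_sl (h : s ∈ SC A κ) (h' : t ∈ SC A κ) (he : ee s t) : t = s ∨ sl A t s := by
  rcases hκ.ee_cases h h' he with e | e
  exacts [Or.inl e.symm, Or.inr ⟨e, he.al⟩]

theorem Inacc.mkS (hb : b ∈ κ) (ha : a ∈ A) : TM.mk b a ∈ SC A κ := by
  refine mem_SC.2 ⟨mkA (hκ.el hb) ha, fun x hx => ?_, ?_⟩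
  · rcases ZFSet.mem_insert_iff.1 hx with rfl | hx
    · exact hb
    · exact hκ.tr (ZFSet.mem_inter.1 hx).2 hb
  · rw [mx_mk (hκ.o hb)]; exact ZFSet.mem_insert _ _

theorem Inacc.mk_self (h : s ∈ SC A κ) : TM.mk (TM.mx s) s = s :=
  hκ.ext (hκ.mkS (hκ.mx h) (SC.inA h)) h (mx_mk (hκ.mxo h)) fun x hx => by
    rw [mx_mk (hκ.mxo h)] at hx; exact mem_mk hx

theorem Inacc.sl_trans (hr : r ∈ SC A κ) (hs : s ∈ SC A κ) (ht : t ∈ SC A κ)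
    (h1 : sl A r s) (h2 : sl A s t) : sl A r t :=
  ⟨(hκ.mxo hr).mem_trans h2.1 h1.1,
    al.trans (mxA (SC.inA ht)) (hκ.mxo ht) (SC.inA hr) (SC.inA hs) (SC.inA ht)
      (h1.2.mono ((hκ.mxo hs).subset_of_mem h2.1)) h2.2⟩

theorem Inacc.sl_ee (hr : r ∈ SC A κ) (hs : s ∈ SC A κ) (ht : t ∈ SC A κ)
    (h1 : sl A r s) (h2 : ee t s) : sl A r t := by
  rcases hκ.ee_sl ht hs h2 with rfl | h
  · exact h1
  · exact hκ.sl_trans hr hs ht h1 h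

theorem Inacc.ee_sl' (hr : r ∈ SC A κ) (hs : s ∈ SC A κ) (ht : t ∈ SC A κ)
    (h1 : ee s r) (h2 : sl A s t) : sl A r t := by
  rcases hκ.ee_sl hs hr h1 with rfl | h
  · exact h2
  · exact hκ.sl_trans hr hs ht h h2

theorem Inacc.sl_congr (hr : r ∈ SC A κ) (hs : s ∈ SC A κ) (ht : t ∈ SC A κ)
    (hm : TM.mx s = TM.mx r) (h : al A (TM.mx r) s r) (h' : sl A r t) : sl A s t :=
  ⟨by rw [hm]; exact h'.1, al.trans (mxA (SC.inA ht)) (hκ.mxo ht) (SC.inA hs) (SC.inA hr) (SC.inA ht)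
    (h.mono ((hκ.mxo hr).subset_of_mem h'.1)) h'.2⟩

theorem Inacc.succ (hb : b ∈ κ) : insert b b ∈ κ := by
  obtain ⟨w, hw, ho⟩ := hκ.om
  have hs := ZFSet.isOrdinal_succ (hκ.o hb)
  rcases hs.mem_trichotomous hκ.ord with h | h | h
  · exact h
  · exfalso
    -- an infinite cardinal is not a successor: shift the finite ordinals by one
    have : Fact (w ∈ A) := ⟨hκ.el hw⟩
    have : Fact (b ∈ A) := ⟨hκ.el hb⟩
    have wb : w ⊆ b := by
      rw [← h, ZFSet.mem_insert_iff] at hw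
      rcases hw with rfl | hw
      · exact fun _ h => h
      · exact (hκ.o hb).subset_of_mem hw
    let f : ZFSet.{u} := ZFSet.sep (fun p => ∃ x y, ZFSet.pair x y ∈ ({p} : ZFSet.{u}) ∧
      ((x = b ∧ y = ∅) ∨ (x ≠ b ∧ x ∈ w ∧ y = insert x x) ∨ (x ≠ b ∧ x ∉ w ∧ y = x)))
      (ZFSet.prod κ b)
    have hf : ∀ x y, ZFSet.pair x y ∈ f ↔ (x ∈ κ ∧ y ∈ b) ∧ 
      ((x = b ∧ y = ∅) ∨ (x ≠ b ∧ x ∈ w ∧ y = insert x x) ∨ (x ≠ b ∧ x ∉ w ∧ y = x)) := by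
      intro x y
      simp only [f]
      rw [ZFSet.mem_sep, ZFSet.pair_mem_prod]
      simp only [ZFSet.mem_singleton, ZFSet.pair_inj]
      refine and_congr_right fun _ => ⟨?_, fun h => ⟨x, y, ⟨rfl, rfl⟩, h⟩⟩
      rintro ⟨a, c, ⟨rfl, rfl⟩, h⟩; exact h
    refine hκ.card b hb f (sepA (prodA hκ.inA (hκ.el hb))) ?_ ?_ ?_ ?_
    · intro x hx
      by_cases e : x = b
      · exact ⟨∅, wb ho.2.1, (hf _ _).2 ⟨⟨hx, wb ho.2.1⟩, Or.inl ⟨e, rfl⟩⟩⟩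
      · by_cases hxw : x ∈ w
        · have := wb (ho.2.2.1 x hxw)
          exact ⟨insert x x, this, (hf _ _).2 ⟨⟨hx, this⟩, Or.inr (Or.inl ⟨e, hxw, rfl⟩)⟩⟩
        · have : x ∈ b := by
            rw [← h, ZFSet.mem_insert_iff] at hx
            exact hx.resolve_left e
          exact ⟨x, this, (hf _ _).2 ⟨⟨hx, this⟩, Or.inr (Or.inr ⟨e, hxw, rfl⟩)⟩⟩
    · intro x y y' h1 h2
      have := ((hf _ _).1 h1).2
      have := ((hf _ _).1 h2).2
      grind
    · intro x x' y h1 h2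
      have e1 := ((hf _ _).1 h1).2
      have e2 := ((hf _ _).1 h2).2
      have ne : ∀ z : ZFSet.{u}, insert z z ≠ ∅ := fun z hz => by
        have := ZFSet.mem_insert z z; rw [hz] at this; exact ZFSet.notMem_empty _ this
      have inj : ∀ z z' : ZFSet.{u}, insert z z = insert z' z' → z = z' := by
        intro z z' e
        have h1 := ZFSet.mem_insert z z
        have h2 := ZFSet.mem_insert z' z'
        rw [e, ZFSet.mem_insert_iff] at h1
        rw [← e, ZFSet.mem_insert_iff] at h2
        rcases h1 with h1 | h1
        · exact h1
        · rcases h2 with h2 | h2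
          · exact h2.symm
          · exact absurd h2 (ZFSet.mem_asymm h1)
      have hs := ho.2.2.1
      have h0 := ho.2.1
      rcases e1 with ⟨rfl, rfl⟩ | ⟨e1, e1', rfl⟩ | ⟨e1, e1', rfl⟩ <;>
      rcases e2 with ⟨rfl, e⟩ | ⟨e2, e2', e⟩ | ⟨e2, e2', e⟩
      · rfl
      · exact absurd e.symm (ne _)
      · exact absurd (e ▸ h0) e2'
      · exact absurd e (ne _)
      · exact inj _ _ e
      · exact absurd (e ▸ hs _ e1') e2'
      · exact absurd (e ▸ h0) e1'
      · exact absurd (e ▸ hs _ e2') e1'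
      · exact e
    · intro p hp
      obtain ⟨a, ha, c, hc, e⟩ := ZFSet.mem_prod.1 (ZFSet.mem_sep.1 hp).1
      exact ⟨a, ha, c, hc, e⟩
  · exfalso
    rcases ZFSet.mem_insert_iff.1 h with e | e
    · rw [e] at hb; exact ZFSet.mem_irrefl _ hb
    · exact ZFSet.mem_asymm e hb

/-- Each condition has an end-extension of prescribed larger length. -/
theorem Inacc.ext_to (hs : s ∈ SC A κ) (hb : b ∈ κ) (h : TM.mx s ⊆ b) :
    TM.mk b s ∈ SC A κ ∧ ee s (TM.mk b s) :=
  ⟨hκ.mkS hb (SC.inA hs), ee_mk (hκ.o hb) h fun _ _ => Iff.rfl⟩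

theorem Inacc.cut (hs : s ∈ SC A κ) (hb : b ⊆ TM.mx s) (ho : b.IsOrdinal) :
    TM.mk b s ∈ SC A κ ∧ ee (TM.mk b s) s :=
  ⟨hκ.mkS (hκ.sub hb (hκ.mx hs) ho) (SC.inA hs), mk_ee ho hb fun _ _ => Iff.rfl⟩

/-- If `r` is almost an end-extension of `t`, then some condition of the same length which is
almost equal to `r` is an end-extension of `t`. -/
theorem Inacc.graft (ht : t ∈ SC A κ) (hr : r ∈ SC A κ) (h : r = t ∨ sl A r t) :
    ∃ g ∈ SC A κ, TM.mx g = TM.mx r ∧ ee t g ∧ al A (TM.mx r) g r := by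
  have hm : TM.mx t ⊆ TM.mx r := by
    rcases h with rfl | h
    · exact fun _ h => h
    · exact (hκ.mxo hr).subset_of_mem h.1
  have hal : al A (TM.mx t) r t := by
    rcases h with rfl | h
    · exact al.of_eq fun _ _ => Iff.rfl
    · exact h.2
  have haA : (t ∩ TM.mx t) ∪ (r \ TM.mx t) ∈ A :=
    unionA (interA (SC.inA ht) (mxA (SC.inA ht))) (sdiffA (SC.inA hr) (mxA (SC.inA ht)))
  refine ⟨TM.mk (TM.mx r) ((t ∩ TM.mx t) ∪ (r \ TM.mx t)), hκ.mkS (hκ.mx hr) haA, mx_mk (hκ.mxo hr),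
    ee_mk (hκ.mxo hr) hm fun x hx => ?_, ?_⟩
  · simp only [ZFSet.mem_union, ZFSet.mem_inter, ZFSet.mem_sdiff]; tauto
  · refine Fi.mono hal fun x hx => ?_
    rw [ZFSet.mem_inter, mem_dif] at hx ⊢
    rw [mem_mk hx.2] at hx
    simp only [ZFSet.mem_union, ZFSet.mem_inter, ZFSet.mem_sdiff] at hx
    tauto

/-- As `Inacc.graft`, with an end-extension of `t` that is stronger than `r`. -/
theorem Inacc.graft' (ht : t ∈ SC A κ) (hr : r ∈ SC A κ) (h : r = t ∨ sl A r t) :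
    ∃ g ∈ SC A κ, ee t g ∧ sl A g r := by
  obtain ⟨g, hg, hm, he, ha⟩ := hκ.graft ht hr h
  have hsub : TM.mx g ⊆ insert (TM.mx g) (TM.mx g) := fun x hx => ZFSet.mem_insert_of_mem _ hx
  obtain ⟨h1, h2⟩ := hκ.ext_to hg (hκ.succ (hκ.mx hg)) hsub
  have hmx := mx_mk (a := g) (hκ.o (hκ.succ (hκ.mx hg)))
  refine ⟨_, h1, he.trans h2, ?_, ?_⟩
  · rw [hmx, ← hm]; exact ZFSet.mem_insert _ _
  · refine (al.congr ha.symm fun x hx => ?_).symm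
    rw [mem_mk]
    rw [← hm] at hx; exact hsub hx

theorem Inacc.longer (hs : s ∈ SC A κ) (hb : b ∈ κ) :
    ∃ t ∈ SC A κ, ee s t ∧ b ∈ TM.mx t ∧ TM.mx s ∈ TM.mx t := by
  have key : ∀ c ∈ κ, TM.mx s ⊆ c → b ⊆ c → ∃ t ∈ SC A κ, ee s t ∧ b ∈ TM.mx t ∧ TM.mx s ∈ TM.mx t := by
    intro c hc h1 h2
    have hco := hκ.o (hκ.succ hc)
    obtain ⟨h3, h4⟩ := hκ.ext_to hs (hκ.succ hc) (fun x hx => ZFSet.mem_insert_of_mem _ (h1 hx))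
    refine ⟨_, h3, h4, ?_, ?_⟩ <;> rw [mx_mk hco]
    · exact (hκ.o hb).mem_of_subset_of_mem hco h2 (ZFSet.mem_insert _ _)
    · exact (hκ.mxo hs).mem_of_subset_of_mem hco h1 (ZFSet.mem_insert _ _)
  rcases (hκ.mxo hs).subset_total (hκ.o hb) with h | h
  · exact key b hb h fun _ h => h
  · exact key _ (hκ.mx hs) (fun _ h => h) h

end conds
end TM

/-! ### Long increasing sequences of conditions and sealing -/

namespace TM

/-- The function defined by the recursion `H x = F x {H y : y ∈ x}`. -/
noncomputable def recX (F : ZFSet.{u} → ZFSet.{u} → ZFSet.{u}) (x : ZFSet.{u}) : ZFSet.{u} :=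
  F x (ZFSet.range (fun y : x => recX F y.1))
termination_by x.rank
decreasing_by exact ZFSet.rank_lt_of_mem y.2

theorem recX_eq (F : ZFSet.{u} → ZFSet.{u} → ZFSet.{u}) (x : ZFSet.{u}) :
    recX F x = F x (img (recX F) x) := by
  rw [recX, img]

theorem recX_dfun {A : Set ZFSet.{u}} [ZFM A] {F : ZFSet.{u} → ZFSet.{u} → ZFSet.{u}}
    (hF : DFun A (fun v => F (v 0) (v 1))) : DFun A (fun v => recX F (v 0)) := by
  have iF : ∀ t s [DFun A t] [DFun A s], DFun A (fun v => F (t v) (s v)) :=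
    fun t s ht hs => hF.comp₂ ht hs
  refine DFun.recursion (D := fun x => x) (F := fun x f => F x (ran f))
    (fun x y h => ZFSet.rank_lt_of_mem h) (fun x _ => ?_) inferInstance inferInstance
  rw [ran_gr, recX_eq]

/-- The least upper bound, for end-extension, of a chain `X` of conditions. -/
noncomputable def lub (X : ZFSet.{u}) : ZFSet.{u} :=
  mk (ZFSet.sUnion (img (fun u => mx u) X)) (ZFSet.sUnion (img (fun u => u ∩ mx u) X))

/-- The condition obtained from `s` by switching the values at the elements of `d`. -/
noncomputable def flip (s d : ZFSet.{u}) : ZFSet.{u} := mk (mx s) (dif s d)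

section inst
variable {A : Set ZFSet.{u}} [ZFM A] {t s : (ℕ → ZFSet.{u}) → ZFSet.{u}}
  [ht : DFun A t] [hs : DFun A s]

instance : DFun A (fun v => lub (t v)) := by unfold lub; infer_instance
instance : DFun A (fun v => flip (t v) (s v)) := by unfold flip; infer_instance
end inst

section conds
variable {A : Set ZFSet.{u}} [hA : ZFCM A] {κ : ZFSet.{u}} (hκ : Inacc A κ)
  {s t r a b d x X β γ : ZFSet.{u}}

include hκ

/-- Regularity: definable functions from an ordinal below `κ` to `κ` are bounded. -/
theorem Inacc.bdd {F : ZFSet.{u} → ZFSet.{u}} (dF : DFun A (fun v => F (v 0))) (hb : β ∈ κ)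
    (h : ∀ x ∈ β, F x ∈ κ) : ∃ γ ∈ κ, ∀ x ∈ β, F x ∈ γ := by
  have iF : ∀ t [DFun A t], DFun A (fun v => F (t v)) := fun t ht => dF.comp₁ ht
  have hg : gr F β ∈ A := DFun.val₁ (f := gr F) inferInstance (hκ.el hb)
  obtain ⟨γ, hγ, h'⟩ := hκ.reg β hb (gr F β) hg (fun x hx => ⟨F x, pair_mem_gr.2 ⟨hx, rfl⟩⟩)
    (fun x y y' h1 h2 => by rw [(pair_mem_gr.1 h1).2, (pair_mem_gr.1 h2).2])
    (fun p hp => by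
      obtain ⟨x, hx, rfl⟩ := mem_gr.1 hp
      exact ⟨x, hx, F x, h x hx, rfl⟩)
  exact ⟨γ, hγ, fun x hx => h' x _ (pair_mem_gr.2 ⟨hx, rfl⟩)⟩

theorem Inacc.lub (hX : X ∈ A) (hS : ∀ u ∈ X, u ∈ SC A κ)
    (hc : ∀ u ∈ X, ∀ v ∈ X, ee u v ∨ ee v u) (hb : b ∈ κ) (hb' : ∀ u ∈ X, TM.mx u ⊆ b) :
    TM.lub X ∈ SC A κ ∧ (∀ x, x ∈ TM.mx (TM.lub X) ↔ ∃ u ∈ X, x ∈ TM.mx u) ∧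
      (∀ u ∈ X, ee u (TM.lub X)) ∧ ∀ v, (∀ u ∈ X, ee u v) → ee (TM.lub X) v := by
  have hm : ∀ x, x ∈ ZFSet.sUnion (img (fun u => TM.mx u) X) ↔ ∃ u ∈ X, x ∈ TM.mx u := by
    intro x
    simp only [ZFSet.mem_sUnion, mem_img]
    exact ⟨fun ⟨_, ⟨u, hu, e⟩, h⟩ => ⟨u, hu, e ▸ h⟩, fun ⟨u, hu, h⟩ => ⟨_, ⟨u, hu, rfl⟩, h⟩⟩
  have ha : ∀ x, x ∈ ZFSet.sUnion (img (fun u => u ∩ TM.mx u) X) ↔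
      ∃ u ∈ X, x ∈ u ∧ x ∈ TM.mx u := by
    intro x
    simp only [ZFSet.mem_sUnion, mem_img]
    exact ⟨fun ⟨_, ⟨u, hu, e⟩, h⟩ => ⟨u, hu, ZFSet.mem_inter.1 (e ▸ h)⟩,
      fun ⟨u, hu, h⟩ => ⟨_, ⟨u, hu, rfl⟩, ZFSet.mem_inter.2 h⟩⟩
  have mo : (ZFSet.sUnion (img (fun u => TM.mx u) X)).IsOrdinal :=
    ⟨fun y hy x hx => by
      obtain ⟨u, hu, h⟩ := (hm y).1 hy
      exact (hm x).2 ⟨u, hu, (hκ.mxo (hS u hu)).mem_trans hx h⟩,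
     fun {x y z} hx hy hz => by
      obtain ⟨u, hu, h⟩ := (hm z).1 hz
      exact ((hκ.mxo (hS u hu)).mem h).mem_trans hx hy⟩
  have mκ : ZFSet.sUnion (img (fun u => TM.mx u) X) ∈ κ :=
    hκ.sub (fun x hx => by obtain ⟨u, hu, h⟩ := (hm x).1 hx; exact hb' u hu h) hb mo
  have aA : ZFSet.sUnion (img (fun u => u ∩ TM.mx u) X) ∈ A :=
    DFun.val₁ (f := fun X => ZFSet.sUnion (img (fun u => u ∩ TM.mx u) X)) inferInstance hX
  have agree : ∀ u ∈ X, ∀ x ∈ TM.mx u,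
      (x ∈ u ↔ x ∈ ZFSet.sUnion (img (fun u => u ∩ TM.mx u) X)) := by
    intro u hu x hx
    rw [ha]
    refine ⟨fun h => ⟨u, hu, h, hx⟩, fun ⟨v, hv, h1, h2⟩ => ?_⟩
    rcases hc u hu v hv with h | h
    · exact (h.2 x hx).2 h1
    · exact (h.2 x h2).1 h1
  refine ⟨hκ.mkS mκ aA, fun x => by rw [TM.lub, mx_mk mo]; exact hm x,
    fun u hu => ee_mk mo (fun x hx => (hm x).2 ⟨u, hu, hx⟩) (agree u hu),
    fun v hv => mk_ee mo (fun x hx => ?_) fun x hx => ?_⟩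
  · obtain ⟨u, hu, h⟩ := (hm x).1 hx
    exact (hv u hu).1 h
  · obtain ⟨u, hu, h⟩ := (hm x).1 hx
    exact (agree u hu x h).symm.trans ((hv u hu).2 x h)

/-- A form of dependent choice of length `γ < κ` for end-extension: requirements `Q ξ`, each of
which can be met above any condition, are met along an end-extension-increasing sequence. -/
theorem Inacc.GL {Q : ZFSet.{u} → ZFSet.{u} → ZFSet.{u} → Prop}
    (dQ : Dfn A (fun v => Q (v 0) (v 1) (v 2))) (hγ : γ ∈ κ) (hs : s ∈ SC A κ)
    (h : ∀ ξ ∈ γ, ∀ v ∈ SC A κ, ∃ u ∈ SC A κ, ee v u ∧ Q ξ v u) :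
    ∃ H : ZFSet.{u} → ZFSet.{u}, ∃ t ∈ SC A κ, ee s t ∧
      (∀ x ∈ TM.mx t, x ∈ TM.mx s ∨ ∃ ξ ∈ γ, x ∈ TM.mx (H ξ)) ∧
      ∀ ξ ∈ γ, H ξ ∈ SC A κ ∧ ee s (H ξ) ∧ ee (H ξ) t ∧ (∀ η ∈ ξ, ee (H η) (H ξ)) ∧
        ∃ v ∈ SC A κ, ee s v ∧ (∀ η ∈ ξ, ee (H η) v) ∧ ee v (H ξ) ∧ Q ξ v (H ξ) := by
  have iQ : ∀ t s r [DFun A t] [DFun A s] [DFun A r], Dfn A (fun v => Q (t v) (s v) (r v)) :=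
    fun t s r ht hs hr => Dfn.comp₃ (P := Q) dQ ht hs hr
  have : Fact (s ∈ A) := ⟨SC.inA hs⟩
  have : Fact (SC A κ ∈ A) := ⟨hκ.SA⟩
  obtain ⟨c, hcA, hc⟩ := choiceA hκ.SA
  have : Fact (c ∈ A) := ⟨hcA⟩
  let Y : ZFSet.{u} → ZFSet.{u} → ZFSet.{u} := fun x X => ZFSet.sep (fun u =>
    ee (TM.lub (insert s X)) u ∧ Q x (TM.lub (insert s X)) u) (SC A κ)
  let F : ZFSet.{u} → ZFSet.{u} → ZFSet.{u} := fun x X => ap c (Y x X)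
  have dY : DFun A (fun v => Y (v 0) (v 1)) := by
    show DFun A (fun v => ZFSet.sep (fun u =>
      ee (TM.lub (insert s (v 1))) u ∧ Q (v 0) (TM.lub (insert s (v 1))) u) (SC A κ))
    infer_instance
  have iY : ∀ t s [DFun A t] [DFun A s], DFun A (fun v => Y (t v) (s v)) :=
    fun t s ht hs => dY.comp₂ ht hs
  have dF : DFun A (fun v => F (v 0) (v 1)) := by
    show DFun A (fun v => ap c (Y (v 0) (v 1)))
    infer_instance
  have dH := recX_dfun dF
  set H := recX F with hH
  have iH : ∀ t [DFun A t], DFun A (fun v => H (t v)) := fun t ht => dH.comp₁ ht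
  have dimg : DFun A (fun v => img H (v 0)) := inferInstance
  have imgH : ∀ {x}, x ∈ A → img H x ∈ A := fun hx => DFun.val₁ (f := img H) dimg hx
  -- the supremum of an initial part of the sequence
  have sup : ∀ ξ ∈ κ, (∀ η ∈ ξ, H η ∈ SC A κ ∧ ee s (H η) ∧ ∀ ζ ∈ η, ee (H ζ) (H η)) →
      TM.lub (insert s (img H ξ)) ∈ SC A κ ∧ ee s (TM.lub (insert s (img H ξ))) ∧
      (∀ η ∈ ξ, ee (H η) (TM.lub (insert s (img H ξ)))) ∧
      ∀ x ∈ TM.mx (TM.lub (insert s (img H ξ))), x ∈ TM.mx s ∨ ∃ η ∈ ξ, x ∈ TM.mx (H η) := by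
    intro ξ hξ ih
    have ξo := hκ.o hξ
    obtain ⟨b, hb, hb'⟩ := hκ.bdd (F := fun x => TM.mx (H x)) inferInstance hξ
      fun x hx => hκ.mx (ih x hx).1
    have key : ∀ b ∈ κ, TM.mx s ⊆ b → (∀ x ∈ ξ, TM.mx (H x) ⊆ b) → _ := fun b hb h1 h2 =>
      hκ.lub (X := insert s (img H ξ)) (insertA (SC.inA hs) (imgH (hκ.el hξ)))
        (by
          intro u hu
          rcases ZFSet.mem_insert_iff.1 hu with rfl | hu
          · exact hs
          · obtain ⟨η, hη, rfl⟩ := mem_img.1 hu; exact (ih η hη).1)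
        (by
          intro u hu v hv
          rcases ZFSet.mem_insert_iff.1 hu with rfl | hu <;>
          rcases ZFSet.mem_insert_iff.1 hv with rfl | hv
          · exact Or.inl (ee.refl _)
          · obtain ⟨η, hη, rfl⟩ := mem_img.1 hv; exact Or.inl (ih η hη).2.1
          · obtain ⟨η, hη, rfl⟩ := mem_img.1 hu; exact Or.inr (ih η hη).2.1
          · obtain ⟨η, hη, rfl⟩ := mem_img.1 hu
            obtain ⟨ζ, hζ, rfl⟩ := mem_img.1 hv
            rcases (ξo.mem hη).mem_trichotomous (ξo.mem hζ) with e | e | e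
            · exact Or.inl ((ih ζ hζ).2.2 η e)
            · rw [e]; exact Or.inl (ee.refl _)
            · exact Or.inr ((ih η hη).2.2 ζ e)) hb
        (by
          intro u hu
          rcases ZFSet.mem_insert_iff.1 hu with rfl | hu
          · exact h1
          · obtain ⟨η, hη, rfl⟩ := mem_img.1 hu; exact h2 η hη)
    have fin : ∃ b ∈ κ, TM.mx s ⊆ b ∧ ∀ x ∈ ξ, TM.mx (H x) ⊆ b := by
      rcases (hκ.mxo hs).subset_total (hκ.o hb) with e | e
      · exact ⟨b, hb, e, fun x hx => (hκ.o hb).subset_of_mem (hb' x hx)⟩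
      · exact ⟨_, hκ.mx hs, fun _ h => h, fun x hx =>
          ((hκ.o hb).subset_of_mem (hb' x hx)).trans e⟩
    obtain ⟨b, hb, h1, h2⟩ := fin
    obtain ⟨k1, k2, k3, -⟩ := key b hb h1 h2
    refine ⟨k1, k3 _ (ZFSet.mem_insert _ _), fun η hη =>
      k3 _ (ZFSet.mem_insert_of_mem _ (mem_img.2 ⟨η, hη, rfl⟩)), fun x hx => ?_⟩
    obtain ⟨u, hu, hx'⟩ := (k2 x).1 hx
    rcases ZFSet.mem_insert_iff.1 hu with e | hu
    · exact Or.inl (e ▸ hx')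
    · obtain ⟨η, hη, rfl⟩ := mem_img.1 hu; exact Or.inr ⟨η, hη, hx'⟩
  have main : ∀ ξ ∈ γ, H ξ ∈ SC A κ ∧ ee s (H ξ) ∧ (∀ η ∈ ξ, ee (H η) (H ξ)) ∧
        ∃ v ∈ SC A κ, ee s v ∧ (∀ η ∈ ξ, ee (H η) v) ∧ ee v (H ξ) ∧ Q ξ v (H ξ) := by
    intro ξ
    induction ξ using ZFSet.inductionOn with
    | _ ξ ih =>
      intro hξ
      have γo := hκ.o hγ
      obtain ⟨h1, h2, h3, -⟩ := sup ξ (hκ.tr hξ hγ) fun η hη =>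
        have := ih η hη (γo.mem_trans hη hξ); ⟨this.1, this.2.1, this.2.2.1⟩
      obtain ⟨u, hu, hu'⟩ := h ξ hξ _ h1
      have hne : Y ξ (img H ξ) ≠ ∅ := by
        intro e
        have : u ∈ Y ξ (img H ξ) := ZFSet.mem_sep.2 ⟨hu, hu'⟩
        rw [e] at this; exact ZFSet.notMem_empty _ this
      have hmem := hc (Y ξ (img H ξ)) (DFun.val₂ dY (hκ.el (hκ.tr hξ hγ)) (imgH (hκ.el (hκ.tr hξ hγ))))
        (fun x hx => (ZFSet.mem_sep.1 hx).1) hne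
      have e : H ξ = ap c (Y ξ (img H ξ)) := recX_eq F ξ
      rw [← e] at hmem
      obtain ⟨k1, k2, k3⟩ := ZFSet.mem_sep.1 hmem
      exact ⟨k1, h2.trans k2, fun η hη => (h3 η hη).trans k2, _, h1, h2, h3, k2, k3⟩
  obtain ⟨h1, h2, h3, h4⟩ := sup γ hγ fun η hη =>
    have := main η hη; ⟨this.1, this.2.1, this.2.2.1⟩
  exact ⟨H, _, h1, h2, h4, fun ξ hξ =>
    have := main ξ hξ; ⟨this.1, this.2.1, h3 ξ hξ, this.2.2⟩⟩

theorem Inacc.flip (hs : s ∈ SC A κ) (hd : d ∈ A) : flip s d ∈ SC A κ ∧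
    TM.mx (TM.flip s d) = TM.mx s ∧ ∀ x ∈ TM.mx s, (x ∈ TM.flip s d ↔ ¬ (x ∈ s ↔ x ∈ d)) :=
  ⟨hκ.mkS (hκ.mx hs) (difA (SC.inA hs) hd), mx_mk (hκ.mxo hs), fun x hx => by
    rw [TM.flip, mem_mk hx, mem_dif]⟩

theorem Inacc.flip_flip (hs : s ∈ SC A κ) (hd : d ∈ A) : TM.flip (TM.flip s d) d = s := by
  obtain ⟨h1, h2, h3⟩ := hκ.flip hs hd
  obtain ⟨k1, k2, k3⟩ := hκ.flip h1 hd
  refine hκ.ext k1 hs (k2.trans h2) fun x hx => ?_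
  rw [k2] at hx
  rw [k3 x hx]
  rw [h2] at hx
  rw [h3 x hx]; tauto

theorem Inacc.flip_ee (hs : s ∈ SC A κ) (ht : t ∈ SC A κ) (hd : d ∈ A) (h : ee s t) :
    ee (TM.flip s d) (TM.flip t d) := by
  obtain ⟨h1, h2, h3⟩ := hκ.flip hs hd
  obtain ⟨k1, k2, k3⟩ := hκ.flip ht hd
  refine ⟨by rw [h2, k2]; exact h.1, fun x hx => ?_⟩
  rw [h2] at hx
  rw [h3 x hx, k3 x (h.1 hx), h.2 x hx]

/-- One step towards sealing: above each condition `v` there is one, all of whose modifications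
below `mx v` are good. -/
theorem Inacc.seal_step {P : ZFSet.{u} → Prop} (dP : Dfn A (fun v => P (v 0)))
    (up : ∀ s ∈ SC A κ, ∀ t ∈ SC A κ, ee s t → P s → P t)
    (den : ∀ s ∈ SC A κ, ∃ t ∈ SC A κ, ee s t ∧ P t) (hs : s ∈ SC A κ) :
    ∃ u ∈ SC A κ, ee s u ∧ TM.mx s ∈ TM.mx u ∧ ∀ d ∈ pw A (TM.mx s), P (TM.flip u d) := by
  have iP : ∀ t [DFun A t], Dfn A (fun v => P (t v)) := fun t ht => dP.comp₁ ht
  obtain ⟨γ, hγ, f, hf, f1, f2, f3⟩ := hκ.str _ (hκ.mx hs)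
  have : Fact (f ∈ A) := ⟨hf⟩
  have hpw := pwA (hκ.el (hκ.mx hs))
  have : Fact (pw A (TM.mx s) ∈ A) := ⟨hpw⟩
  obtain ⟨H, t, ht, h1, -, h2⟩ := hκ.GL (γ := γ) (s := s)
    (Q := fun ξ v u => ∀ d ∈ pw A (TM.mx s), ZFSet.pair d ξ ∈ f → P (TM.flip u d))
    inferInstance hγ hs (by
      intro ξ hξ v hv
      by_cases hd : ∃ d ∈ pw A (TM.mx s), ZFSet.pair d ξ ∈ f
      · obtain ⟨d, hd, hdξ⟩ := hd
        have hdA := trA hpw hd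
        obtain ⟨w, hw, h1, h2⟩ := den _ (hκ.flip hv hdA).1
        refine ⟨TM.flip w d, (hκ.flip hw hdA).1, ?_, fun d' _ hd'' => ?_⟩
        · have := hκ.flip_ee (hκ.flip hv hdA).1 hw hdA h1
          rwa [hκ.flip_flip hv hdA] at this
        · rw [f3 _ _ _ hd'' hdξ, hκ.flip_flip hw hdA]; exact h2
      · exact ⟨v, hv, ee.refl v, fun d h h' => absurd ⟨d, h, h'⟩ hd⟩)
  obtain ⟨u, hu, h3, -, h4⟩ := hκ.longer ht (hκ.mx ht)
  refine ⟨u, hu, h1.trans h3, ?_, fun d hd => ?_⟩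
  · exact (hκ.mxo hs).mem_of_subset_of_mem (hκ.mxo hu) h1.1 h4
  · obtain ⟨ξ, hξ, hdξ⟩ := f1 d hd
    obtain ⟨k1, -, k2, -, v, hv, -, -, -, k3⟩ := h2 ξ hξ
    have hdA := trA hpw hd
    exact up _ (hκ.flip k1 hdA).1 _ (hκ.flip hu hdA).1
      (hκ.flip_ee k1 hu hdA (k2.trans h3)) (k3 d hd hdξ)

/-- Sealing: if the good conditions are dense and closed under end-extension, then above each
condition there is one all of whose finite modifications are good. -/
theorem Inacc.seal {P : ZFSet.{u} → Prop} (dP : Dfn A (fun v => P (v 0)))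
    (up : ∀ s ∈ SC A κ, ∀ t ∈ SC A κ, ee s t → P s → P t)
    (den : ∀ s ∈ SC A κ, ∃ t ∈ SC A κ, ee s t ∧ P t) (hs : s ∈ SC A κ) :
    ∃ u ∈ SC A κ, ee s u ∧ TM.mx s ∈ TM.mx u ∧
      ∀ t ∈ SC A κ, TM.mx t = TM.mx u → al A (TM.mx u) t u → P t := by
  have iP : ∀ t [DFun A t], Dfn A (fun v => P (t v)) := fun t ht => dP.comp₁ ht
  obtain ⟨w, hw, ho⟩ := hκ.om
  obtain ⟨H, u, hu, h1, h2, h3⟩ := hκ.GL (γ := w) (s := s)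
    (Q := fun ξ v u => TM.mx v ∈ TM.mx u ∧ ∀ d ∈ pw A (TM.mx v), P (TM.flip u d))
    inferInstance hw hs (by
      intro ξ hξ v hv
      exact hκ.seal_step dP up den hv)
  have h0 := h3 ∅ ho.2.1
  refine ⟨u, hu, h1, ?_, fun t ht hm hal => ?_⟩
  · obtain ⟨k0, -, k3, -, v, hv, k1, -, -, k2⟩ := h0
    exact k3.1 ((hκ.mxo hs).mem_of_subset_of_mem (hκ.mxo k0) k1.1 k2.1)
  · have hdA : dif t u ∩ TM.mx u ∈ A := interA (difA (SC.inA ht) (SC.inA hu)) (mxA (SC.inA hu))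
    have fin : ∃ ξ ∈ w, P (TM.flip (H ξ) (dif t u ∩ TM.mx u)) := by
      by_cases hne : ∃ x, x ∈ dif t u ∩ TM.mx u
      · obtain ⟨m, hm1, hm2⟩ := hal _ hdA (fun _ h => h) hne
        have hmu := (ZFSet.mem_inter.1 hm1).2
        have : ∃ η ∈ w, m ∈ TM.mx (H η) := by
          rcases h2 m hmu with h | h
          · exact ⟨∅, ho.2.1, h0.2.1.1 h⟩
          · exact h
        obtain ⟨η, hη, hmη⟩ := this
        refine ⟨insert η η, ho.2.2.1 η hη, ?_⟩
        obtain ⟨-, -, -, -, v, hv, -, k1, -, k2⟩ := h3 _ (ho.2.2.1 η hη)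
        refine k2.2 _ (mem_pw.2 ⟨fun x hx => ?_, hdA⟩)
        have hmv := (k1 η (ZFSet.mem_insert _ _)).1 hmη
        exact ((hκ.mxo hu).mem (ZFSet.mem_inter.1 hx).2).mem_of_subset_of_mem (hκ.mxo hv)
          (hm2 x hx) hmv
      · obtain ⟨-, -, -, -, v, hv, -, -, -, k2⟩ := h0
        exact ⟨∅, ho.2.1, k2.2 _ (mem_pw.2 ⟨fun x hx => absurd ⟨x, hx⟩ hne, hdA⟩)⟩
    obtain ⟨ξ, hξ, hP⟩ := fin
    obtain ⟨k1, -, k2, -⟩ := h3 ξ hξ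
    have e : TM.flip u (dif t u ∩ TM.mx u) = t := by
      obtain ⟨j1, j2, j3⟩ := hκ.flip hu hdA
      refine hκ.ext j1 ht (j2.trans hm.symm) fun x hx => ?_
      rw [j2] at hx
      rw [j3 x hx, ZFSet.mem_inter, mem_dif]; tauto
    rw [← e]
    exact up _ (hκ.flip k1 hdA).1 _ (hκ.flip hu hdA).1 (hκ.flip_ee k1 hu hdA k2) hP

/-- Each condition has two incompatible extensions. -/
theorem Inacc.split (hs : s ∈ SC A κ) : ∃ t ∈ SC A κ, ∃ r ∈ SC A κ, ee s t ∧ ee s r ∧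
    TM.mx s ∈ TM.mx t ∧ TM.mx r = TM.mx t ∧ ¬ al A (TM.mx t) t r := by
  obtain ⟨w, hw, ho⟩ := hκ.om
  obtain ⟨H, u, hu, h1, h2, h3⟩ := hκ.GL (γ := w) (s := s)
    (Q := fun ξ v u => TM.mx v ∈ TM.mx u) inferInstance hw hs (by
      intro ξ hξ v hv
      obtain ⟨u, hu, h1, -, h2⟩ := hκ.longer hv (hκ.mx hv)
      exact ⟨u, hu, h1, h2⟩)
  have h0 := h3 ∅ ho.2.1
  have hsu : TM.mx s ∈ TM.mx u := by
    obtain ⟨k0, -, k3, -, v, hv, k1, -, -, k2⟩ := h0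
    exact k3.1 ((hκ.mxo hs).mem_of_subset_of_mem (hκ.mxo k0) k1.1 k2)
  have lim : ∀ x ∈ TM.mx u, insert x x ∈ TM.mx u := by
    intro x hx
    have : ∃ η ∈ w, x ∈ TM.mx (H η) := by
      rcases h2 x hx with h | h
      · exact ⟨∅, ho.2.1, h0.2.1.1 h⟩
      · exact h
    obtain ⟨η, hη, hxη⟩ := this
    obtain ⟨j1, -, j2, -, v, hv, -, k1, -, k2⟩ := h3 _ (ho.2.2.1 η hη)
    have hxv := (k1 η (ZFSet.mem_insert _ _)).1 hxη
    have xo := (hκ.mxo hu).mem hx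
    refine j2.1 ((ZFSet.isOrdinal_succ xo).mem_of_subset_of_mem (hκ.mxo j1) ?_ k2)
    intro y hy
    rcases ZFSet.mem_insert_iff.1 hy with rfl | hy
    · exact hxv
    · exact (hκ.mxo hv).mem_trans hy hxv
  have hdA : TM.mx u \ TM.mx s ∈ A := sdiffA (mxA (SC.inA hu)) (mxA (SC.inA hs))
  obtain ⟨j1, j2, j3⟩ := hκ.flip hu hdA
  refine ⟨u, hu, _, j1, h1, ⟨by rw [j2]; exact h1.1, fun x hx => ?_⟩, hsu, j2, fun hal => ?_⟩
  · rw [j3 x (h1.1 hx), h1.2 x hx, ZFSet.mem_sdiff]; tauto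
  · obtain ⟨m, hm, hm'⟩ := hal _ hdA (fun x hx => by
      rw [ZFSet.mem_sdiff] at hx
      rw [ZFSet.mem_inter, mem_dif, j3 x hx.1, ZFSet.mem_sdiff]
      tauto) ⟨_, ZFSet.mem_sdiff.2 ⟨hsu, ZFSet.mem_irrefl _⟩⟩
    rw [ZFSet.mem_sdiff] at hm
    refine ZFSet.mem_irrefl m (hm' (insert m m) (ZFSet.mem_sdiff.2 ⟨lim m hm.1, fun h => hm.2 ?_⟩)
      (ZFSet.mem_insert _ _))
    exact (hκ.mxo hs).mem_trans (ZFSet.mem_insert _ _) h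

end conds
end TM

/-! ### Size and strategic closure of `𝕊` -/

namespace TM

/-- `β` is an even ordinal in the sense of `A`. -/
def Ev (A : Set ZFSet.{u}) (β : ZFSet.{u}) : Prop :=
  β.IsOrdinal ∧ ∃ Q, Q ∈ A ∧
    ((∀ q, q ∈ Q → ∃ γ, γ ∈ β ∧ (insert γ γ ∈ β ∧ q = {γ, insert γ γ})) ∧
    (∀ γ, γ ∈ β → ∃ q, q ∈ Q ∧ γ ∈ q) ∧
    (∀ q, q ∈ Q → ∀ q', q' ∈ Q → (∃ x, x ∈ q ∧ x ∈ q') → q = q'))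

theorem Ev.dfn {A : Set ZFSet.{u}} [ZFM A] : Dfn A (fun v : ℕ → ZFSet.{u} => Ev A (v 0)) := by
  unfold Ev; infer_instance

instance {A : Set ZFSet.{u}} [ZFM A] {t : (ℕ → ZFSet.{u}) → ZFSet.{u}} [ht : DFun A t] :
    Dfn A (fun v => Ev A (t v)) := Dfn.comp₁ (P := Ev A) Ev.dfn ht

section conds
variable {A : Set ZFSet.{u}} [hA : ZFCM A] {κ : ZFSet.{u}} (hκ : Inacc A κ)
  {s t r a b d x X β γ : ZFSet.{u}}

include hκ

/-- The conditions can be enumerated in type `κ`, in order of increasing length. -/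
theorem Inacc.enum : ∃ H : ZFSet.{u} → ZFSet.{u}, DFun A (fun v => H (v 0)) ∧
    (∀ α ∈ κ, H α ∈ SC A κ) ∧ (∀ α ∈ κ, ∀ β ∈ κ, H α = H β → α = β) ∧
    ∀ s ∈ SC A κ, ∃ α ∈ κ, s = H α := by
  have : Fact (SC A κ ∈ A) := ⟨hκ.SA⟩
  obtain ⟨c, hcA, hc⟩ := choiceA hκ.SA
  have : Fact (c ∈ A) := ⟨hcA⟩
  let Y : ZFSet.{u} → ZFSet.{u} := fun X => ZFSet.sep (fun s =>
    ∀ t ∈ SC A κ \ X, TM.mx s ⊆ TM.mx t) (SC A κ \ X)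
  have dY : DFun A (fun v => Y (v 0)) := by
    show DFun A (fun v => ZFSet.sep (fun s => ∀ t ∈ SC A κ \ (v 0), TM.mx s ⊆ TM.mx t)
      (SC A κ \ (v 0)))
    infer_instance
  have iY : ∀ t [DFun A t], DFun A (fun v => Y (t v)) := fun t ht => dY.comp₁ ht
  let C : ZFSet.{u} → ZFSet.{u} := fun X => ap c (Y X)
  have dC : DFun A (fun v => C (v 0)) := by
    show DFun A (fun v => ap c (Y (v 0)))
    infer_instance
  have dH := recH_dfun dC
  set H := recH C with hH
  have iH : ∀ t [DFun A t], DFun A (fun v => H (t v)) := fun t ht => dH.comp₁ ht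
  have dimg : DFun A (fun v => img H (v 0)) := inferInstance
  have hnew : ∀ α ∈ κ, (∃ s ∈ SC A κ, s ∉ img H α) → H α ∈ Y (img H α) := by
    rintro α hα ⟨s, hs, hs'⟩
    have e : H α = ap c (Y (img H α)) := recH_eq C α
    rw [e]
    refine hc _ (DFun.val₁ dY (DFun.val₁ (f := img H) dimg (hκ.el hα)))
      (fun x hx => (ZFSet.mem_sdiff.1 (ZFSet.mem_sep.1 hx).1).1) fun he => ?_
    obtain ⟨m, mo, ⟨u, hu, hu', rfl⟩, hm⟩ := exists_least
      (p := fun m => ∃ u ∈ SC A κ, u ∉ img H α ∧ TM.mx u = m) ⟨_, hκ.mxo hs, s, hs, hs', rfl⟩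
    have : u ∈ Y (img H α) := by
      refine ZFSet.mem_sep.2 ⟨ZFSet.mem_sdiff.2 ⟨hu, hu'⟩, fun t ht => ?_⟩
      rw [ZFSet.mem_sdiff] at ht
      rcases mo.mem_trichotomous (hκ.mxo ht.1) with e | e | e
      · exact (hκ.mxo ht.1).subset_of_mem e
      · rw [e]
      · exact absurd ⟨t, ht.1, ht.2, rfl⟩ (hm _ e)
    rw [he] at this; exact ZFSet.notMem_empty _ this
  have main : ∀ α ∈ κ, H α ∈ Y (img H α) := by
    intro α
    induction α using ZFSet.inductionOn with
    | _ α ih =>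
      intro hα
      apply hnew α hα
      obtain ⟨b, hb, hb'⟩ := hκ.bdd (F := fun x => TM.mx (H x)) inferInstance hα fun x hx =>
        hκ.mx (ZFSet.mem_sdiff.1 (ZFSet.mem_sep.1 (ih x hx (hκ.tr hx hα))).1).1
      refine ⟨TM.mk b ∅, hκ.mkS hb emptyA, fun h => ?_⟩
      obtain ⟨x, hx, e⟩ := mem_img.1 h
      have := hb' x hx
      rw [← e, mx_mk (hκ.o hb)] at this
      exact ZFSet.mem_irrefl _ this
  have inS : ∀ α ∈ κ, H α ∈ SC A κ := fun α hα =>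
    (ZFSet.mem_sdiff.1 (ZFSet.mem_sep.1 (main α hα)).1).1
  have nw : ∀ α ∈ κ, ∀ β ∈ α, H α ≠ H β := fun α hα β hβ e =>
    (ZFSet.mem_sdiff.1 (ZFSet.mem_sep.1 (main α hα)).1).2 (mem_img.2 ⟨β, hβ, e⟩)
  have inj : ∀ α ∈ κ, ∀ β ∈ κ, H α = H β → α = β := by
    intro α hα β hβ e
    rcases (hκ.o hα).mem_trichotomous (hκ.o hβ) with h | h | h
    · exact absurd e.symm (nw β hβ α h)
    · exact h
    · exact absurd e (nw α hα β h)
  refine ⟨H, dH, inS, inj, fun s hs => ?_⟩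
  by_contra hno
  push Not at hno
  obtain ⟨γ, hγ, f, hf, f1, f2, f3⟩ := hκ.str _ (hκ.succ (hκ.mx hs))
  have : Fact (f ∈ A) := ⟨hf⟩
  have hlow : ∀ α ∈ κ, ∃ y ∈ γ, ZFSet.pair (H α) y ∈ f := by
    intro α hα
    apply f1
    refine mem_pw.2 ⟨fun x hx => ?_, SC.inA (inS α hα)⟩
    have h1 : TM.mx (H α) ⊆ TM.mx s := (ZFSet.mem_sep.1 (main α hα)).2 s
      (ZFSet.mem_sdiff.2 ⟨hs, fun h => by
        obtain ⟨β, hβ, e⟩ := mem_img.1 h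
        exact hno β (hκ.tr hβ hα) e⟩)
    rcases hκ.mem_cases (inS α hα) hx with h | rfl
    · exact ZFSet.mem_insert_of_mem _ (h1 h)
    · exact (hκ.mxo (inS α hα)).mem_of_subset_of_mem (hκ.o (hκ.succ (hκ.mx hs))) h1
        (ZFSet.mem_insert _ _)
  let g : ZFSet.{u} := ZFSet.sep (fun p => ∃ x y, ZFSet.pair x y ∈ ({p} : ZFSet.{u}) ∧
    ZFSet.pair (H x) y ∈ f) (ZFSet.prod κ γ)
  have hg : ∀ x y, ZFSet.pair x y ∈ g ↔ (x ∈ κ ∧ y ∈ γ) ∧ ZFSet.pair (H x) y ∈ f := by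
    intro x y
    simp only [g]
    rw [ZFSet.mem_sep, ZFSet.pair_mem_prod]
    simp only [ZFSet.mem_singleton, ZFSet.pair_inj]
    refine and_congr_right fun _ => ⟨?_, fun h => ⟨x, y, ⟨rfl, rfl⟩, h⟩⟩
    rintro ⟨a, c, ⟨rfl, rfl⟩, h⟩; exact h
  refine hκ.card γ hγ g (sepA (prodA hκ.inA (hκ.el hγ))) ?_ ?_ ?_ ?_
  · intro x hx
    obtain ⟨y, hy, h⟩ := hlow x hx
    exact ⟨y, hy, (hg _ _).2 ⟨⟨hx, hy⟩, h⟩⟩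
  · intro x y y' h1 h2
    exact f2 _ _ _ ((hg _ _).1 h1).2 ((hg _ _).1 h2).2
  · intro x x' y h1 h2
    rw [hg] at h1 h2
    exact inj _ h1.1.1 _ h2.1.1 (f3 _ _ _ h1.2 h2.2)
  · intro p hp
    obtain ⟨a, ha, c, hc, e⟩ := ZFSet.mem_prod.1 (ZFSet.mem_sep.1 hp).1
    exact ⟨a, ha, c, hc, e⟩

theorem Inacc.leS_refl (h : s ∈ SC A κ) : ZFSet.pair s s ∈ leS A κ :=
  mem_rel.2 ⟨h, h, Or.inl rfl⟩

theorem Inacc.leS_trans (h : ZFSet.pair s t ∈ leS A κ) (h' : ZFSet.pair t r ∈ leS A κ) :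
    ZFSet.pair s r ∈ leS A κ := by
  obtain ⟨h1, h2, h3⟩ := mem_rel.1 h
  obtain ⟨k1, k2, k3⟩ := mem_rel.1 h'
  refine mem_rel.2 ⟨h1, k2, ?_⟩
  rcases h3 with rfl | h3
  · exact k3
  · rcases k3 with rfl | k3
    · exact Or.inr h3
    · exact Or.inr (hκ.sl_trans h1 h2 k2 h3 k3)

theorem Inacc.leS_antisymm (h : ZFSet.pair s t ∈ leS A κ) (h' : ZFSet.pair t s ∈ leS A κ) :
    s = t := by
  obtain ⟨h1, h2, h3⟩ := mem_rel.1 h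
  obtain ⟨k1, k2, k3⟩ := mem_rel.1 h'
  rcases h3 with rfl | h3
  · rfl
  · rcases k3 with rfl | k3
    · rfl
    · exact absurd h3.1 (ZFSet.mem_asymm k3.1)

theorem Inacc.ee_leS (h : s ∈ SC A κ) (h' : t ∈ SC A κ) (he : ee s t) :
    ZFSet.pair t s ∈ leS A κ := mem_rel.2 ⟨h', h, hκ.ee_sl h h' he⟩

omit hκ in
/-- If `Q` splits `β` into pairs of consecutive ordinals, the first element of each pair is even. -/
theorem Ev.of_pair {β η Q : ZFSet.{u}} (hβ : β.IsOrdinal) (hQ : Q ∈ A)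
    (h1 : ∀ q, q ∈ Q → ∃ γ, γ ∈ β ∧ (insert γ γ ∈ β ∧ q = {γ, insert γ γ}))
    (h2 : ∀ γ, γ ∈ β → ∃ q, q ∈ Q ∧ γ ∈ q)
    (h3 : ∀ q, q ∈ Q → ∀ q', q' ∈ Q → (∃ x, x ∈ q ∧ x ∈ q') → q = q')
    (hη : η ∈ β) (hq : ({η, insert η η} : ZFSet.{u}) ∈ Q) : Ev A η := by
  have hηA : η ∈ A := trA (trA hQ hq) (by simp)
  have ηo := hβ.mem hη
  have : Fact (η ∈ A) := ⟨hηA⟩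
  refine ⟨ηo, ZFSet.sep (fun q => q ⊆ η) Q, sepA hQ, ?_, ?_, ?_⟩
  · intro q hq'
    obtain ⟨k1, k2⟩ := ZFSet.mem_sep.1 hq'
    obtain ⟨γ, g1, g2, rfl⟩ := h1 q k1
    exact ⟨γ, k2 (by simp), k2 (by simp), rfl⟩
  · intro γ hγ
    obtain ⟨q, k1, k2⟩ := h2 γ (hβ.mem_trans hγ hη)
    refine ⟨q, ZFSet.mem_sep.2 ⟨k1, ?_⟩, k2⟩
    obtain ⟨ζ, g1, g2, rfl⟩ := h1 q k1
    have key : ζ ∈ η ∧ insert ζ ζ ∈ η := by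
      rcases ZFSet.mem_pair.1 k2 with rfl | rfl
      · refine ⟨hγ, ?_⟩
        have hs : insert γ γ ⊆ η := by
          intro y hy
          rcases ZFSet.mem_insert_iff.1 hy with rfl | hy
          · exact hγ
          · exact ηo.mem_trans hy hγ
        rcases ((ZFSet.isOrdinal_succ (ηo.mem hγ)).subset_iff_eq_or_mem ηo).1 hs with e | e
        · exfalso
          have := h3 _ k1 _ hq ⟨η, by rw [← e]; simp, by simp⟩
          have hm : γ ∈ ({η, insert η η} : ZFSet.{u}) := by rw [← this]; simp
          rcases ZFSet.mem_pair.1 hm with e' | e'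
          · rw [e'] at hγ; exact ZFSet.mem_irrefl _ hγ
          · rw [e'] at hγ; exact ZFSet.mem_asymm hγ (ZFSet.mem_insert _ _)
        · exact e
      · exact ⟨ηo.mem_trans (ZFSet.mem_insert _ _) hγ, hγ⟩
    intro y hy
    rcases ZFSet.mem_pair.1 hy with rfl | rfl
    exacts [key.1, key.2]
  · intro q hq q' hq' h
    exact h3 q (ZFSet.mem_sep.1 hq).1 q' (ZFSet.mem_sep.1 hq').1 h

/-- The second player's strategy: her moves end-extend her earlier moves. -/
noncomputable def strat (A : Set ZFSet.{u}) (κ : ZFSet.{u}) : ZFSet.{u} :=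
  ZFSet.sep (fun p => ∃ r y, ZFSet.pair r y ∈ ({p} : ZFSet.{u}) ∧
      ∀ δ z, ZFSet.pair δ z ∈ r → (Ev A δ → ee z y) ∧ (y = z ∨ sl A y z))
    (ZFSet.prod (pw A (ZFSet.prod κ (SC A κ))) (SC A κ))

omit hκ in
theorem mem_strat {y : ZFSet.{u}} : ZFSet.pair r y ∈ strat A κ ↔
    (r ∈ A ∧ r ⊆ ZFSet.prod κ (SC A κ)) ∧ y ∈ SC A κ ∧
      ∀ δ z, ZFSet.pair δ z ∈ r → (Ev A δ → ee z y) ∧ (y = z ∨ sl A y z) := by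
  rw [strat, ZFSet.mem_sep, ZFSet.pair_mem_prod, mem_pw]
  simp only [ZFSet.mem_singleton, ZFSet.pair_inj]
  constructor
  · rintro ⟨⟨h1, h2⟩, a, b, ⟨rfl, rfl⟩, h⟩; exact ⟨⟨h1.2, h1.1⟩, h2, h⟩
  · rintro ⟨h1, h2, h⟩; exact ⟨⟨⟨h1.2, h1.1⟩, h2⟩, _, _, ⟨rfl, rfl⟩, h⟩

theorem Inacc.stratA : strat A κ ∈ A :=
  sepA (prodA (pwA (prodA hκ.inA hκ.SA)) hκ.SA)

/-- The strategy `strat` never gets stuck. -/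
theorem Inacc.strategic (hβ : β ∈ κ) {f : ZFSet.{u}} (hf : f ∈ A)
    (f1 : ∀ p ∈ f, ∃ x ∈ β, ∃ y ∈ SC A κ, p = ZFSet.pair x y)
    (f2 : ∀ x ∈ β, ∃ y, ZFSet.pair x y ∈ f)
    (f3 : ∀ x y y', ZFSet.pair x y ∈ f → ZFSet.pair x y' ∈ f → y = y')
    (f4 : ∀ γ δ x y, γ ∈ δ → δ ∈ β → ZFSet.pair γ x ∈ f → ZFSet.pair δ y ∈ f →
      ZFSet.pair y x ∈ leS A κ)
    (f5 : ∀ δ ∈ β, Ev A δ → ∀ y, ZFSet.pair δ y ∈ f → ∀ η ∈ δ, Ev A η → ∀ z,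
      ZFSet.pair η z ∈ f → ee z y)
    (hE : Ev A β) :
    ∃ y, ZFSet.pair f y ∈ strat A κ ∧ y ∈ SC A κ ∧
      ∀ x z, x ∈ β → ZFSet.pair x z ∈ f → ZFSet.pair y z ∈ leS A κ := by
  have βo := hκ.o hβ
  have fS : ∀ x z, ZFSet.pair x z ∈ f → x ∈ β ∧ z ∈ SC A κ := by
    intro x z h
    obtain ⟨a, ha, b, hb, e⟩ := f1 _ h
    obtain ⟨rfl, rfl⟩ := ZFSet.pair_inj.1 e
    exact ⟨ha, hb⟩
  -- it suffices to find `y` below all moves, which end-extends the moves at even stages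
  suffices h : ∃ y ∈ SC A κ, ∀ δ z, ZFSet.pair δ z ∈ f →
      (Ev A δ → ee z y) ∧ (y = z ∨ sl A y z) by
    obtain ⟨y, hy, h⟩ := h
    refine ⟨y, mem_strat.2 ⟨⟨hf, fun p hp => ?_⟩, hy, h⟩, hy, fun x z hx hz =>
      mem_rel.2 ⟨hy, (fS x z hz).2, (h x z hz).2⟩⟩
    obtain ⟨a, ha, b, hb, rfl⟩ := f1 p hp
    exact ZFSet.pair_mem_prod.2 ⟨hκ.tr ha hβ, hb⟩
  have : Fact (f ∈ A) := ⟨hf⟩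
  have below : ∀ η z y, ZFSet.pair η z ∈ f → y ∈ SC A κ → (y = z ∨ sl A y z) →
      ∀ δ x, δ ∈ η → ZFSet.pair δ x ∈ f → y = x ∨ sl A y x := by
    intro η z y hη hy h δ x hδ hx
    have h1 : ZFSet.pair y z ∈ leS A κ := mem_rel.2 ⟨hy, (fS _ _ hη).2, h⟩
    have h2 := f4 δ η x z hδ (fS _ _ hη).1 hx hη
    exact (mem_rel.1 (hκ.leS_trans h1 h2)).2.2
  obtain ⟨_, Q, hQ, q1, q2, q3⟩ := hE
  by_cases hlast : ∃ μ, β = insert μ μ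
  · obtain ⟨μ, rfl⟩ := hlast
    obtain ⟨z, hz⟩ := f2 μ (ZFSet.mem_insert _ _)
    by_cases hev : Ev A μ
    · refine ⟨z, (fS _ _ hz).2, fun δ x hx => ?_⟩
      rcases ZFSet.mem_insert_iff.1 (fS _ _ hx).1 with rfl | hδ
      · rw [f3 _ _ _ hx hz]; exact ⟨fun _ => ee.refl _, Or.inl rfl⟩
      · exact ⟨fun he => f5 μ (ZFSet.mem_insert _ _) hev z hz δ hδ he x hx,
          below μ z z hz (fS _ _ hz).2 (Or.inl rfl) δ x hδ hx⟩
    · obtain ⟨q, hq, hμq⟩ := q2 μ (ZFSet.mem_insert _ _)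
      obtain ⟨η, e1, e2, rfl⟩ := q1 q hq
      have hη := Ev.of_pair βo hQ q1 q2 q3 e1 hq
      rcases ZFSet.mem_pair.1 hμq with rfl | rfl
      · exact absurd hη hev
      obtain ⟨w, hw⟩ := f2 η e1
      have hwz := (mem_rel.1 (f4 η _ w z (ZFSet.mem_insert _ _) (ZFSet.mem_insert _ _) hw hz)).2.2
      obtain ⟨g, hg, g1, g2⟩ := hκ.graft' (fS _ _ hw).2 (fS _ _ hz).2 hwz
      refine ⟨g, hg, fun δ x hx => ?_⟩
      rcases ZFSet.mem_insert_iff.1 (fS _ _ hx).1 with rfl | hδ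
      · rw [f3 _ _ _ hx hz]; exact ⟨fun h => absurd h hev, Or.inr g2⟩
      · refine ⟨fun he => ?_, below _ z g hz hg (Or.inr g2) δ x hδ hx⟩
        rcases ZFSet.mem_insert_iff.1 hδ with rfl | hδ
        · rw [f3 _ _ _ hx hw]; exact g1
        · exact (f5 η e1 hη w hw δ hδ he x hx).trans g1
  · have up : ∀ δ ∈ β, ∃ η ∈ β, Ev A η ∧ (δ = η ∨ δ ∈ η) := by
      intro δ hδ
      have hs : insert δ δ ∈ β := by
        have hs : insert δ δ ⊆ β := by
          intro y hy
          rcases ZFSet.mem_insert_iff.1 hy with rfl | hy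
          · exact hδ
          · exact βo.mem_trans hy hδ
        rcases ((ZFSet.isOrdinal_succ (βo.mem hδ)).subset_iff_eq_or_mem βo).1 hs with e | e
        · exact absurd ⟨δ, e.symm⟩ hlast
        · exact e
      obtain ⟨q, hq, hμq⟩ := q2 _ hs
      obtain ⟨η, e1, e2, rfl⟩ := q1 q hq
      have hη := Ev.of_pair βo hQ q1 q2 q3 e1 hq
      refine ⟨η, e1, hη, ?_⟩
      rcases ZFSet.mem_pair.1 hμq with e | e
      · rw [← e]; exact Or.inr (ZFSet.mem_insert _ _)
      · have : δ ∈ insert η η := by rw [← e]; exact ZFSet.mem_insert _ _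
        exact ZFSet.mem_insert_iff.1 this
    have hap : ∀ δ z, ZFSet.pair δ z ∈ f → ap f δ = z := fun δ z h =>
      ap_eq h fun y' h' => f3 _ _ _ h' h
    obtain ⟨b, hb, hb'⟩ := hκ.bdd (F := fun x => TM.mx (ap f x)) inferInstance hβ fun x hx => by
      obtain ⟨z, hz⟩ := f2 x hx
      show TM.mx (ap f x) ∈ κ
      rw [hap _ _ hz]; exact hκ.mx (fS _ _ hz).2
    let X : ZFSet.{u} := ZFSet.sep (fun z => ∃ δ, ZFSet.pair δ z ∈ f ∧ Ev A δ) (ran f)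
    have hX : ∀ z, z ∈ X ↔ ∃ δ, ZFSet.pair δ z ∈ f ∧ Ev A δ := by
      intro z
      simp only [X]
      rw [ZFSet.mem_sep, mem_ran]
      exact ⟨fun h => h.2, fun ⟨δ, h⟩ => ⟨⟨δ, h.1⟩, δ, h⟩⟩
    have XA : X ∈ A := sepA (ranA hf)
    obtain ⟨k1, -, k3, -⟩ := hκ.lub XA (b := b)
      (fun u hu => by obtain ⟨δ, h, _⟩ := (hX u).1 hu; exact (fS _ _ h).2)
      (fun u hu v hv => by
        obtain ⟨δ, h, he⟩ := (hX u).1 hu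
        obtain ⟨ε, h', he'⟩ := (hX v).1 hv
        have hδ := (fS _ _ h).1
        have hε := (fS _ _ h').1
        rcases (βo.mem hδ).mem_trichotomous (βo.mem hε) with e | e | e
        · exact Or.inl (f5 ε hε he' v h' δ e he u h)
        · rw [e] at h; rw [f3 _ _ _ h h']; exact Or.inl (ee.refl _)
        · exact Or.inr (f5 δ hδ he u h ε e he' v h')) hb
      (fun u hu => by
        obtain ⟨δ, h, _⟩ := (hX u).1 hu
        have := hb' δ (fS _ _ h).1
        rw [hap _ _ h] at this
        exact (hκ.o hb).subset_of_mem this)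
    have ev : ∀ δ z, ZFSet.pair δ z ∈ f → Ev A δ → ee z (TM.lub X) := fun δ z h he =>
      k3 z ((hX z).2 ⟨δ, h, he⟩)
    refine ⟨_, k1, fun δ z hz => ⟨ev δ z hz, ?_⟩⟩
    obtain ⟨η, hη, he, h⟩ := up δ (fS _ _ hz).1
    obtain ⟨w, hw⟩ := f2 η hη
    have := hκ.ee_sl (fS _ _ hw).2 k1 (ev η w hw he)
    rcases h with rfl | h
    · rw [f3 _ _ _ hz hw]; exact this
    · exact below η w _ hw k1 this δ z h hz

end conds
end TM

/-! ### The generic tree -/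

namespace TM

/-- The strict tree order on a set of conditions: proper end-extension. -/
noncomputable def ltT (G : ZFSet.{u}) : ZFSet.{u} := rel (fun x y => ee x y ∧ x ≠ y) G

/-- The forcing order of the tree: `x ≤ y` if `x` end-extends `y`. -/
noncomputable def leT (G : ZFSet.{u}) : ZFSet.{u} := rel (fun x y => ee y x) G

theorem mem_ltT {G x y : ZFSet.{u}} :
    ZFSet.pair x y ∈ ltT G ↔ x ∈ G ∧ y ∈ G ∧ ee x y ∧ x ≠ y := mem_rel

theorem mem_leT {G x y : ZFSet.{u}} :
    ZFSet.pair x y ∈ leT G ↔ x ∈ G ∧ y ∈ G ∧ ee y x := mem_rel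

theorem ltTA {B : Set ZFSet.{u}} [ZFM B] {G : ZFSet.{u}} (h : G ∈ B) : ltT G ∈ B :=
  relA (R := fun x y => ee x y ∧ x ≠ y) inferInstance h

theorem leTA {B : Set ZFSet.{u}} [ZFM B] {G : ZFSet.{u}} (h : G ∈ B) : leT G ∈ B :=
  relA (R := fun x y => ee y x) inferInstance h

section tree
variable {A : Set ZFSet.{u}} [hA : ZFCM A] {κ : ZFSet.{u}} (hκ : Inacc A κ)
  {G : ZFSet.{u}} (hG : Gen A (SC A κ) (leS A κ) G)
  {s t r a b d x y X β γ : ZFSet.{u}}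

include hκ

theorem Inacc.leS_al (h : ZFSet.pair r s ∈ leS A κ) :
    TM.mx s ⊆ TM.mx r ∧ al A (TM.mx s) r s := by
  obtain ⟨h1, h2, rfl | h3⟩ := mem_rel.1 h
  · exact ⟨fun _ h => h, al.of_eq fun _ _ => Iff.rfl⟩
  · exact ⟨(hκ.mxo h1).subset_of_mem h3.1, h3.2⟩

theorem Inacc.le_cases {a b : ZFSet.{u}} (ha : a.IsOrdinal) (hb : b.IsOrdinal) :
    a ⊆ b ∨ b ∈ a := by
  rcases ha.mem_trichotomous hb with h | h | h
  · exact Or.inl (hb.subset_of_mem h)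
  · exact Or.inl (h ▸ fun _ h => h)
  · exact Or.inr h

include hG

/-- Conditions in the generic filter agree up to finitely many points. -/
theorem Inacc.coh (hs : s ∈ G) (ht : t ∈ G) (hm : TM.mx s ⊆ TM.mx t) : al A (TM.mx s) t s := by
  obtain ⟨r, hr, h1, h2⟩ := hG.dir s hs t ht
  have sS := hG.sub _ hs
  exact al.trans (mxA (SC.inA sS)) (hκ.mxo sS) (SC.inA (hG.sub _ ht)) (SC.inA (hG.sub _ hr))
    (SC.inA sS) ((hκ.leS_al h2).2.mono hm).symm (hκ.leS_al h1).2

theorem Inacc.unb (hb : b ∈ κ) : ∃ s ∈ G, b ∈ TM.mx s := by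
  have : Fact (b ∈ A) := ⟨hκ.el hb⟩
  obtain ⟨s, hs, hs'⟩ := hG.gen (ZFSet.sep (fun s => b ∈ TM.mx s) (SC A κ)) (sepA hκ.SA)
    (fun p hp => (ZFSet.mem_sep.1 hp).1) fun p hp => by
      obtain ⟨t, ht, h1, h2, -⟩ := hκ.longer hp hb
      exact ⟨t, ZFSet.mem_sep.2 ⟨ht, h2⟩, hκ.ee_leS hp ht h1⟩
  exact ⟨s, hs', (ZFSet.mem_sep.1 hs).2⟩

theorem Inacc.cutG (hs : s ∈ G) (ht : t ∈ SC A κ) (h : ee t s) : t ∈ G :=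
  hG.up _ _ (hκ.ee_leS ht (hG.sub _ hs) h) hs

/-- The generic filter is closed under finite modifications. -/
theorem Inacc.mod (hs : s ∈ G) (ht : t ∈ SC A κ) (hm : TM.mx t = TM.mx s)
    (h : al A (TM.mx s) t s) : t ∈ G := by
  have sS := hG.sub _ hs
  obtain ⟨q, hq, hq'⟩ := hκ.unb hG (hκ.mx sS)
  have qS := hG.sub _ hq
  have h1 := hκ.coh hG hs hq ((hκ.mxo qS).subset_of_mem hq')
  refine hG.up q t (mem_rel.2 ⟨qS, ht, Or.inr ⟨by rwa [hm], ?_⟩⟩) hq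
  rw [hm]
  exact al.trans (mxA (SC.inA sS)) (hκ.mxo sS) (SC.inA qS) (SC.inA sS) (SC.inA ht) h1 h.symm

/-- Each node of the generic tree has extensions on each higher level. -/
theorem Inacc.fill (ht : t ∈ G) (hb : b ∈ κ) (hm : TM.mx t ⊆ b) :
    ∃ u ∈ G, TM.mx u = b ∧ ee t u := by
  have tS := hG.sub _ ht
  obtain ⟨s, hs, hbs⟩ := hκ.unb hG hb
  have sS := hG.sub _ hs
  have htb : TM.mx t ∈ TM.mx s := (hκ.mxo tS).mem_of_subset_of_mem (hκ.mxo sS) hm hbs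
  obtain ⟨g, gS, g1, g2, g3⟩ := hκ.graft tS sS
    (Or.inr ⟨htb, hκ.coh hG ht hs ((hκ.mxo sS).subset_of_mem htb)⟩)
  have hg := hκ.mod hG hs gS g1 g3
  have hbg : b ⊆ TM.mx g := by rw [g1]; exact (hκ.mxo sS).subset_of_mem hbs
  obtain ⟨k1, k2⟩ := hκ.cut gS hbg (hκ.o hb)
  refine ⟨_, hκ.cutG hG hg k1 k2, mx_mk (hκ.o hb), ?_⟩
  exact ee_mk (hκ.o hb) hm g2.2

/-- A predense set of nodes in the extension is met below some fixed level. -/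
theorem Inacc.sealG (hX : X ∈ Ext A G) (hXG : ∀ x ∈ X, x ∈ G)
    (den : ∀ t ∈ G, ∃ u ∈ G, ee t u ∧ ∃ a ∈ X, ee a u) :
    ∃ β ∈ κ, ∀ t ∈ G, TM.mx t = β → ∃ a ∈ X, ee a t := by
  obtain ⟨F, hF, F1⟩ := hG.nice hX hκ.SA
  have : Fact (F ∈ A) := ⟨hF⟩
  have : Fact (SC A κ ∈ A) := ⟨hκ.SA⟩
  -- `Hit t`: below `t` it is decided that `t` lies above a member of `X`
  let Hit : ZFSet.{u} → Prop := fun t => ∃ p a, ZFSet.pair p a ∈ F ∧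
    (p ∈ SC A κ ∧ a ∈ SC A κ ∧ ee a t ∧ sl A t p)
  have dHit : Dfn A (fun v => Hit (v 0)) := by
    show Dfn A (fun v => ∃ p a, ZFSet.pair p a ∈ F ∧
      (p ∈ SC A κ ∧ a ∈ SC A κ ∧ ee a (v 0) ∧ sl A (v 0) p))
    infer_instance
  have iHit : ∀ t [DFun A t], Dfn A (fun v => Hit (t v)) := fun t ht => dHit.comp₁ ht
  have upH : ∀ s ∈ SC A κ, ∀ t ∈ SC A κ, ee s t → Hit s → Hit t := by
    rintro s hs t ht h ⟨p, a, h1, h2, h3, h4, h5⟩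
    exact ⟨p, a, h1, h2, h3, h4.trans h, hκ.ee_sl' ht hs h2 h h5⟩
  have hit1 : ∀ t ∈ G, Hit t → ∃ a ∈ X, ee a t := by
    rintro t ht ⟨p, a, h1, h2, h3, h4, h5⟩
    exact ⟨a, (F1 a h3).2 ⟨p, hG.up t p (mem_rel.2 ⟨hG.sub _ ht, h2, Or.inr h5⟩) ht, h1⟩, h4⟩
  have hit2 : ∀ t ∈ G, ∀ a ∈ X, ee a t → ∃ u ∈ G, ee t u ∧ Hit u := by
    intro t ht a ha h
    have aS := hG.sub _ (hXG a ha)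
    have tS := hG.sub _ ht
    obtain ⟨p, hp, hpa⟩ := (F1 a aS).1 ha
    have pS := hG.sub _ hp
    obtain ⟨q, qS, q1, q2, q3⟩ := hκ.longer tS (hκ.mx pS)
    obtain ⟨u, hu, u1, u2⟩ := hκ.fill hG ht (hκ.mx qS) q1.1
    have hpu : TM.mx p ∈ TM.mx u := by rw [u1]; exact q2
    exact ⟨u, hu, u2, p, a, hpa, pS, aS, h.trans u2, hpu,
      hκ.coh hG hp hu ((hκ.mxo (hG.sub _ hu)).subset_of_mem hpu)⟩
  let Good : ZFSet.{u} → Prop := fun t => Hit t ∨ ∀ u, u ∈ SC A κ → ee t u → ¬ Hit u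
  have dGood : Dfn A (fun v => Good (v 0)) := by
    show Dfn A (fun v => Hit (v 0) ∨ ∀ u, u ∈ SC A κ → ee (v 0) u → ¬ Hit u)
    infer_instance
  have iGood : ∀ t [DFun A t], Dfn A (fun v => Good (t v)) := fun t ht => dGood.comp₁ ht
  obtain ⟨u, hu, huG⟩ := hG.gen (ZFSet.sep (fun u => ∀ t, t ∈ SC A κ → TM.mx t = TM.mx u →
      al A (TM.mx u) t u → Good t) (SC A κ)) (sepA hκ.SA)
    (fun p hp => (ZFSet.mem_sep.1 hp).1) fun p hp => by
      obtain ⟨u, hu, h1, -, h2⟩ := hκ.seal dGood (by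
        rintro s hs t ht h (h1 | h1)
        · exact Or.inl (upH s hs t ht h h1)
        · exact Or.inr fun u hu h2 => h1 u hu (h.trans h2)) (by
        intro s hs
        by_cases h : ∃ u ∈ SC A κ, ee s u ∧ Hit u
        · obtain ⟨u, hu, h1, h2⟩ := h
          exact ⟨u, hu, h1, Or.inl h2⟩
        · exact ⟨s, hs, ee.refl _, Or.inr fun u hu h1 h2 => h ⟨u, hu, h1, h2⟩⟩) hp
      exact ⟨u, ZFSet.mem_sep.2 ⟨hu, h2⟩, hκ.ee_leS hp hu h1⟩
  obtain ⟨uS, hu⟩ := ZFSet.mem_sep.1 hu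
  refine ⟨_, hκ.mx uS, fun t ht hm => ?_⟩
  have tS := hG.sub _ ht
  rcases hu t tS hm (hκ.coh hG huG ht (by rw [hm])) with h | h
  · exact hit1 t ht h
  · exfalso
    obtain ⟨v, hv, h1, a, ha, h2⟩ := den t ht
    obtain ⟨w, hw, h3, h4⟩ := hit2 v hv a ha h2
    exact h w (hG.sub _ hw) (h1.trans h3) h4

/-- A set of nodes of bounded height is small. -/
theorem Inacc.small (hX : X ∈ Ext A G) (hXG : ∀ x ∈ X, x ∈ G) (hb : b ∈ κ)
    (h : ∀ x ∈ X, TM.mx x ⊆ b) : ∃ γ ∈ κ, ∃ f ∈ Ext A G,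
      (∀ p ∈ f, ∃ x ∈ X, ∃ y ∈ γ, p = ZFSet.pair x y) ∧
      (∀ x ∈ X, ∃ y, ZFSet.pair x y ∈ f) ∧
      (∀ x y y', ZFSet.pair x y ∈ f → ZFSet.pair x y' ∈ f → y = y') ∧
      (∀ x x' y, ZFSet.pair x y ∈ f → ZFSet.pair x' y ∈ f → x = x') := by
  have hB : ZFCM (Ext A G) := hG.ext_zfcm
  obtain ⟨γ, hγ, f, hf, f1, f2, f3⟩ := hκ.str _ (hκ.succ hb)
  have key : ∀ x y, ZFSet.pair x y ∈ f ∩ ZFSet.prod X γ ↔ ZFSet.pair x y ∈ f ∧ x ∈ X ∧ y ∈ γ := by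
    intro x y; rw [ZFSet.mem_inter, ZFSet.pair_mem_prod]
  refine ⟨γ, hγ, f ∩ ZFSet.prod X γ,
    interA (hG.sub_ext hf) (prodA hX (hG.sub_ext (hκ.el hγ))), ?_, ?_, ?_, ?_⟩
  · intro p hp
    obtain ⟨x, hx, y, hy, e⟩ := ZFSet.mem_prod.1 (ZFSet.mem_inter.1 hp).2
    exact ⟨x, hx, y, hy, e⟩
  · intro x hx
    have xS := hG.sub _ (hXG x hx)
    obtain ⟨y, hy, h1⟩ := f1 x (mem_pw.2 ⟨fun z hz => by
      have hm : z ⊆ b := by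
        rcases hκ.mem_cases xS hz with h1 | rfl
        · exact (hκ.o hb).subset_of_mem (h x hx h1)
        · exact h x hx
      have zo : z.IsOrdinal := hκ.o ((mem_SC.1 xS).2.1 hz)
      rcases (zo.subset_iff_eq_or_mem (hκ.o hb)).1 hm with rfl | h2
      · exact ZFSet.mem_insert _ _
      · exact ZFSet.mem_insert_of_mem _ h2, SC.inA xS⟩)
    exact ⟨y, (key _ _).2 ⟨h1, hx, hy⟩⟩
  · intro x y y' h1 h2
    exact f2 _ _ _ ((key _ _).1 h1).1 ((key _ _).1 h2).1
  · intro x x' y h1 h2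
    exact f3 _ _ _ ((key _ _).1 h1).1 ((key _ _).1 h2).1

theorem Inacc.mk_mem (hx : x ∈ G) (hb : b ∈ TM.mx x) : TM.mk b x ∈ G ∧ ee (TM.mk b x) x ∧
    TM.mx (TM.mk b x) = b := by
  have xo := hκ.mxo (hG.sub _ hx)
  obtain ⟨h1, h2⟩ := hκ.cut (hG.sub _ hx) (xo.subset_of_mem hb) (xo.mem hb)
  exact ⟨hκ.cutG hG hx h1 h2, h2, mx_mk (xo.mem hb)⟩

/-- Antichains of the generic tree are bounded. -/
theorem Inacc.antichain (hX : X ∈ Ext A G) (hXG : ∀ x ∈ X, x ∈ G)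
    (h : ∀ x ∈ X, ∀ y ∈ X, x ≠ y → ¬ ee x y) : ∃ β ∈ κ, ∀ x ∈ X, TM.mx x ⊆ β := by
  have hB : ZFCM (Ext A G) := hG.ext_zfcm
  have : Fact (X ∈ Ext A G) := ⟨hX⟩
  obtain ⟨β, hβ, h1⟩ := hκ.sealG hG
    (X := ZFSet.sep (fun t => (∃ a, a ∈ X ∧ ee a t) ∨ ∀ a, a ∈ X → ¬ ee t a) G)
    (sepA hG.G_ext) (fun x hx => (ZFSet.mem_sep.1 hx).1) fun t ht => by
      by_cases h1 : ∃ a, a ∈ X ∧ ee t a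
      · obtain ⟨a, ha, h1⟩ := h1
        exact ⟨a, hXG a ha, h1, a, ZFSet.mem_sep.2 ⟨hXG a ha, Or.inl ⟨a, ha, ee.refl _⟩⟩, ee.refl _⟩
      · exact ⟨t, ht, ee.refl _, t, ZFSet.mem_sep.2 ⟨ht, Or.inr fun a ha h2 => h1 ⟨a, ha, h2⟩⟩,
          ee.refl _⟩
  refine ⟨β, hβ, fun x hx => ?_⟩
  rcases hκ.le_cases (hκ.mxo (hG.sub _ (hXG x hx))) (hκ.o hβ) with h2 | h2
  · exact h2
  exfalso
  obtain ⟨k1, k2, k3⟩ := hκ.mk_mem hG (hXG x hx) h2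
  obtain ⟨d, hd, hd'⟩ := h1 _ k1 k3
  rcases (ZFSet.mem_sep.1 hd).2 with ⟨a, ha, h3⟩ | h3
  · refine h a ha x hx (fun e => ?_) ((h3.trans hd').trans k2)
    have := (h3.trans hd').1
    rw [e, k3] at this
    exact ZFSet.mem_irrefl _ (this h2)
  · exact h3 x hx (hd'.trans k2)

/-- Each node of the generic tree splits. -/
theorem Inacc.splitG (ht : t ∈ G) : ∃ u ∈ G, ∃ v ∈ G, ee t u ∧ ee t v ∧ TM.mx u = TM.mx v ∧
    u ≠ v := by
  have tS := hG.sub _ ht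
  have hm := hκ.mx tS
  obtain ⟨u, hu, u1, u2⟩ := hκ.fill hG ht (hκ.succ hm) fun x hx => ZFSet.mem_insert_of_mem _ hx
  have uS := hG.sub _ hu
  obtain ⟨k1, k2, k3⟩ := hκ.flip uS (singA (mxA (SC.inA tS)))
  have hmu : TM.mx t ∈ TM.mx u := by rw [u1]; exact ZFSet.mem_insert _ _
  refine ⟨u, hu, _, hκ.mod hG hu k1 k2 ?_, u2, ⟨?_, fun x hx => ?_⟩, k2.symm, fun e => ?_⟩
  · intro e he hs ⟨x, hx⟩
    have key : ∀ y ∈ e, y = TM.mx t := by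
      intro y hy
      obtain ⟨h1, h2⟩ := ZFSet.mem_inter.1 (hs hy)
      rw [mem_dif, k3 y h2, ZFSet.mem_singleton] at h1
      tauto
    exact ⟨x, hx, fun y hy => by rw [key y hy, key x hx]⟩
  · rw [k2]; exact u2.1
  · have hne : x ≠ TM.mx t := fun e => ZFSet.mem_irrefl _ (e ▸ hx)
    rw [k3 x (u2.1 hx), u2.2 x hx, ZFSet.mem_singleton]
    tauto
  · have := k3 _ hmu
    rw [← e, ZFSet.mem_singleton] at this
    tauto

/-- Chains of the generic tree are bounded. -/
theorem Inacc.chain (hX : X ∈ Ext A G) (hXG : ∀ x ∈ X, x ∈ G)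
    (h : ∀ x ∈ X, ∀ y ∈ X, ee x y ∨ ee y x) : ∃ β ∈ κ, ∀ x ∈ X, TM.mx x ⊆ β := by
  have hB : ZFCM (Ext A G) := hG.ext_zfcm
  have : Fact (X ∈ Ext A G) := ⟨hX⟩
  obtain ⟨β, hβ, h1⟩ := hκ.sealG hG
    (X := ZFSet.sep (fun t => ∀ a, a ∈ X → ¬ ee t a) G)
    (sepA hG.G_ext) (fun x hx => (ZFSet.mem_sep.1 hx).1) fun t ht => by
      obtain ⟨u, hu, v, hv, h1, h2, h3, h4⟩ := hκ.splitG hG ht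
      by_cases hu' : ∃ a ∈ X, ee u a
      · by_cases hv' : ∃ a ∈ X, ee v a
        · exfalso
          obtain ⟨a, ha, ha'⟩ := hu'
          obtain ⟨b, hb, hb'⟩ := hv'
          apply h4
          have hm : TM.mx u ⊆ TM.mx v := by rw [h3]
          rcases h a ha b hb with h5 | h5
          · exact hκ.ee_eq (hG.sub _ hu) (hG.sub _ hv) ((ha'.trans h5).cmp hb' hm) h3
          · exact hκ.ee_eq (hG.sub _ hu) (hG.sub _ hv) (ha'.cmp (hb'.trans h5) hm) h3
        · exact ⟨v, hv, h2, v, ZFSet.mem_sep.2 ⟨hv, fun a ha h5 => hv' ⟨a, ha, h5⟩⟩, ee.refl _⟩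
      · exact ⟨u, hu, h1, u, ZFSet.mem_sep.2 ⟨hu, fun a ha h5 => hu' ⟨a, ha, h5⟩⟩, ee.refl _⟩
  refine ⟨β, hβ, fun x hx => ?_⟩
  rcases hκ.le_cases (hκ.mxo (hG.sub _ (hXG x hx))) (hκ.o hβ) with h2 | h2
  · exact h2
  exfalso
  obtain ⟨k1, k2, k3⟩ := hκ.mk_mem hG (hXG x hx) h2
  obtain ⟨d, hd, hd'⟩ := h1 _ k1 k3
  exact (ZFSet.mem_sep.1 hd).2 x hx (hd'.trans k2)

theorem Inacc.ltT_mx (h : ZFSet.pair x y ∈ ltT G) : TM.mx x ∈ TM.mx y := by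
  obtain ⟨h1, h2, h3, h4⟩ := mem_ltT.1 h
  exact (hκ.ee_cases (hG.sub _ h1) (hG.sub _ h2) h3).resolve_left h4

theorem Inacc.ltT_mk (hx : x ∈ G) (hb : b ∈ TM.mx x) : ZFSet.pair (TM.mk b x) x ∈ ltT G := by
  obtain ⟨k1, k2, k3⟩ := hκ.mk_mem hG hx hb
  refine mem_ltT.2 ⟨k1, hx, k2, fun e => ?_⟩
  rw [e] at k3; rw [k3] at hb
  exact ZFSet.mem_irrefl _ hb

theorem Inacc.ltT_eq (h : ZFSet.pair y x ∈ ltT G) : y = TM.mk (TM.mx y) x := by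
  obtain ⟨h1, h2, h3, h4⟩ := mem_ltT.1 h
  obtain ⟨k1, k2, k3⟩ := hκ.mk_mem hG h2 (hκ.ltT_mx hG h)
  refine hκ.ee_eq (hG.sub _ h1) (hG.sub _ k1) (h3.cmp k2 ?_) k3.symm
  rw [k3]

/-- The map `γ ↦ x ↾ γ` witnesses that the height of a node `x` is `mx x`. -/
theorem Inacc.height (hx : x ∈ G) : ∃ f ∈ Ext A G,
    (∀ p ∈ f, ∃ γ ∈ TM.mx x, ∃ y, ZFSet.pair y x ∈ ltT G ∧ p = ZFSet.pair γ y) ∧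
    (∀ γ ∈ TM.mx x, ∃ y, ZFSet.pair γ y ∈ f) ∧
    (∀ γ y y', ZFSet.pair γ y ∈ f → ZFSet.pair γ y' ∈ f → y = y') ∧
    (∀ y, ZFSet.pair y x ∈ ltT G → ∃ γ ∈ TM.mx x, ZFSet.pair γ y ∈ f) ∧
    (∀ γ δ y z, γ ∈ δ → ZFSet.pair γ y ∈ f → ZFSet.pair δ z ∈ f → ZFSet.pair y z ∈ ltT G) := by
  have hB : ZFCM (Ext A G) := hG.ext_zfcm
  have xS := hG.sub _ hx
  have hxB : x ∈ Ext A G := hG.sub_ext (SC.inA xS)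
  have : Fact (x ∈ Ext A G) := ⟨hxB⟩
  have hg : DFun (Ext A G) (fun v => gr (fun γ => TM.mk γ x) (v 0)) := inferInstance
  refine ⟨gr (fun γ => TM.mk γ x) (TM.mx x),
    DFun.val₁ (f := fun a => gr (fun γ => TM.mk γ x) a) hg (mxA hxB), ?_, ?_, ?_, ?_, ?_⟩
  · intro p hp
    obtain ⟨γ, h1, e⟩ := mem_gr.1 hp
    exact ⟨γ, h1, _, hκ.ltT_mk hG hx h1, e⟩
  · exact fun γ h1 => ⟨_, pair_mem_gr.2 ⟨h1, rfl⟩⟩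
  · intro γ y y' h1 h2
    rw [(pair_mem_gr.1 h1).2, (pair_mem_gr.1 h2).2]
  · exact fun y h1 => ⟨_, hκ.ltT_mx hG h1, pair_mem_gr.2 ⟨hκ.ltT_mx hG h1, hκ.ltT_eq hG h1⟩⟩
  · intro γ δ y z h1 h2 h3
    rw [pair_mem_gr] at h2 h3
    obtain ⟨h2, rfl⟩ := h2
    obtain ⟨h3, rfl⟩ := h3
    obtain ⟨a1, a2, a3⟩ := hκ.mk_mem hG hx h2
    obtain ⟨b1, b2, b3⟩ := hκ.mk_mem hG hx h3
    refine mem_ltT.2 ⟨a1, b1, a2.cmp b2 ?_, fun e => ?_⟩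
    · rw [a3, b3]; exact ((hκ.mxo xS).mem h3).subset_of_mem h1
    · rw [e, b3] at a3; rw [a3] at h1; exact ZFSet.mem_irrefl _ h1

/-- The height of a node `x` is unique, hence equal to `mx x`. -/
theorem Inacc.height_eq (hx : x ∈ G) (hβ : β.IsOrdinal) {f : ZFSet.{u}}
    (h1 : ∀ p ∈ f, ∃ γ ∈ β, ∃ y, ZFSet.pair y x ∈ ltT G ∧ p = ZFSet.pair γ y)
    (h2 : ∀ γ ∈ β, ∃ y, ZFSet.pair γ y ∈ f)
    (h3 : ∀ γ y y', ZFSet.pair γ y ∈ f → ZFSet.pair γ y' ∈ f → y = y')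
    (h4 : ∀ y, ZFSet.pair y x ∈ ltT G → ∃ γ ∈ β, ZFSet.pair γ y ∈ f)
    (h5 : ∀ γ δ y z, γ ∈ δ → ZFSet.pair γ y ∈ f → ZFSet.pair δ z ∈ f → ZFSet.pair y z ∈ ltT G) :
    β = TM.mx x := by
  have pr : ∀ γ y, ZFSet.pair γ y ∈ f → γ ∈ β ∧ ZFSet.pair y x ∈ ltT G := by
    intro γ y h
    obtain ⟨a, ha, b, hb, e⟩ := h1 _ h
    obtain ⟨rfl, rfl⟩ := ZFSet.pair_inj.1 e
    exact ⟨ha, hb⟩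
  have key : ∀ γ y, ZFSet.pair γ y ∈ f → TM.mx y = γ := by
    intro γ
    induction γ using ZFSet.inductionOn with
    | _ γ ih =>
      intro y hy
      obtain ⟨hγ, hyx⟩ := pr _ _ hy
      ext η
      constructor
      · intro hη
        have hηx : η ∈ TM.mx x := (hκ.mxo (hG.sub _ hx)).mem_trans hη (hκ.ltT_mx hG hyx)
        obtain ⟨δ, hδ, h⟩ := h4 _ (hκ.ltT_mk hG hx hηx)
        have e := (hκ.mk_mem hG hx hηx).2.2
        rcases (hβ.mem hδ).mem_trichotomous (hβ.mem hγ) with h6 | rfl | h6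
        · rw [← e, ih δ h6 _ h]; exact h6
        · rw [← h3 _ _ _ hy h] at e
          rw [e] at hη; exact absurd hη (ZFSet.mem_irrefl _)
        · have := hκ.ltT_mx hG (h5 _ _ _ _ h6 hy h)
          rw [e] at this
          exact absurd hη (ZFSet.mem_asymm this)
      · intro hη
        obtain ⟨z, hz⟩ := h2 η (hβ.mem_trans hη hγ)
        rw [← ih η hη z hz]
        exact hκ.ltT_mx hG (h5 _ _ _ _ hη hz hy)
  ext η
  constructor
  · intro hη
    obtain ⟨y, hy⟩ := h2 η hη
    rw [← key η y hy]
    exact hκ.ltT_mx hG (pr _ _ hy).2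
  · intro hη
    obtain ⟨δ, hδ, h⟩ := h4 _ (hκ.ltT_mk hG hx hη)
    rw [← (hκ.mk_mem hG hx hη).2.2, key _ _ h]; exact hδ

/-- Flipping a finite set of coordinates is an automorphism of the generic tree. -/
theorem Inacc.homog (hx : x ∈ G) (hy : y ∈ G) (hm : TM.mx x = TM.mx y) : ∃ f ∈ Ext A G,
    (∀ p ∈ f, ∃ x ∈ G, ∃ y ∈ G, p = ZFSet.pair x y) ∧
    (∀ x ∈ G, ∃ y, ZFSet.pair x y ∈ f) ∧
    (∀ x y y', ZFSet.pair x y ∈ f → ZFSet.pair x y' ∈ f → y = y') ∧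
    (∀ x x' y, ZFSet.pair x y ∈ f → ZFSet.pair x' y ∈ f → x = x') ∧
    (∀ y ∈ G, ∃ x ∈ G, ZFSet.pair x y ∈ f) ∧
    (∀ u v u' v', ZFSet.pair u u' ∈ f → ZFSet.pair v v' ∈ f →
      (ZFSet.pair u v ∈ ltT G ↔ ZFSet.pair u' v' ∈ ltT G)) ∧ ZFSet.pair x y ∈ f := by
  have hB : ZFCM (Ext A G) := hG.ext_zfcm
  have xS := hG.sub _ hx
  have yS := hG.sub _ hy
  obtain ⟨d, hd⟩ : ∃ d, d = dif x y ∩ TM.mx x := ⟨_, rfl⟩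
  have dA : d ∈ A := by
    rw [hd]; exact interA (difA (SC.inA xS) (SC.inA yS)) (mxA (SC.inA xS))
  have dF : Fi A d := by
    rw [hd]; exact (hκ.coh hG hx hy (by rw [hm])).symm
  have : Fact (d ∈ Ext A G) := ⟨hG.sub_ext dA⟩
  have fl : ∀ z ∈ G, TM.flip z d ∈ G := by
    intro z hz
    obtain ⟨k1, k2, k3⟩ := hκ.flip (hG.sub _ hz) dA
    refine hκ.mod hG hz k1 k2 (dF.mono fun w hw => ?_)
    obtain ⟨h1, h2⟩ := ZFSet.mem_inter.1 hw
    rw [mem_dif, k3 w h2] at h1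
    tauto
  have ff : ∀ z ∈ G, TM.flip (TM.flip z d) d = z := fun z hz => hκ.flip_flip (hG.sub _ hz) dA
  have fe : ∀ u ∈ G, ∀ v ∈ G, ZFSet.pair u v ∈ ltT G →
      ZFSet.pair (TM.flip u d) (TM.flip v d) ∈ ltT G := by
    intro u hu v hv h
    obtain ⟨-, -, h1, h2⟩ := mem_ltT.1 h
    refine mem_ltT.2 ⟨fl u hu, fl v hv, hκ.flip_ee (hG.sub _ hu) (hG.sub _ hv) dA h1, fun e => h2 ?_⟩
    rw [← ff u hu, e, ff v hv]
  have hg : DFun (Ext A G) (fun v => gr (fun z => TM.flip z d) (v 0)) := inferInstance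
  refine ⟨gr (fun z => TM.flip z d) G,
    DFun.val₁ (f := fun a => gr (fun z => TM.flip z d) a) hg hG.G_ext, ?_, ?_, ?_, ?_, ?_, ?_, ?_⟩
  · intro p hp
    obtain ⟨z, h1, e⟩ := mem_gr.1 hp
    exact ⟨z, h1, _, fl z h1, e⟩
  · exact fun z h1 => ⟨_, pair_mem_gr.2 ⟨h1, rfl⟩⟩
  · intro z y y' h1 h2
    rw [(pair_mem_gr.1 h1).2, (pair_mem_gr.1 h2).2]
  · intro z z' y h1 h2
    rw [pair_mem_gr] at h1 h2
    rw [← ff z h1.1, ← h1.2, h2.2, ff z' h2.1]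
  · exact fun z hz => ⟨_, fl z hz, pair_mem_gr.2 ⟨fl z hz, (ff z hz).symm⟩⟩
  · intro u v u' v' h1 h2
    rw [pair_mem_gr] at h1 h2
    obtain ⟨h1, rfl⟩ := h1
    obtain ⟨h2, rfl⟩ := h2
    refine ⟨fe u h1 v h2, fun h => ?_⟩
    have := fe _ (fl u h1) _ (fl v h2) h
    rwa [ff u h1, ff v h2] at this
  · refine pair_mem_gr.2 ⟨hx, ?_⟩
    obtain ⟨k1, k2, k3⟩ := hκ.flip xS dA
    refine hκ.ext yS k1 (by rw [k2, hm]) fun z hz => ?_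
    rw [← hm] at hz
    rw [k3 z hz, hd, ZFSet.mem_inter, mem_dif]
    tauto

/-- The generic tree does not belong to the ground model. -/
theorem Inacc.new : G ∉ A := by
  intro h
  obtain ⟨q, hq, hq'⟩ := hG.gen (SC A κ \ G) (sdiffA hκ.SA h)
    (fun p hp => (ZFSet.mem_sdiff.1 hp).1) fun p hp => by
      obtain ⟨t, ht, r, hr, h1, h2, h3, h4, h5⟩ := hκ.split hp
      by_cases htG : t ∈ G
      · refine ⟨r, ZFSet.mem_sdiff.2 ⟨hr, fun hrG => h5 ?_⟩, hκ.ee_leS hp hr h2⟩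
        have := hκ.coh hG hrG htG (by rw [h4])
        rwa [h4] at this
      · exact ⟨t, ZFSet.mem_sdiff.2 ⟨ht, htG⟩, hκ.ee_leS hp ht h1⟩
  exact (ZFSet.mem_sdiff.1 hq).2 hq'

end tree
end TM

/-! ### The two-step iteration and end-extension -/

namespace TM

section iter
variable {A : Set ZFSet.{u}} [hA : ZFCM A] {κ : ZFSet.{u}} (hκ : Inacc A κ)
  {G G₁ G₂ : ZFSet.{u}} {s t r a b d x y X β γ : ZFSet.{u}}

/-- The filter of `𝕊` generated by a filter `G` for end-extension. -/
noncomputable def upS (A : Set ZFSet.{u}) (κ G : ZFSet.{u}) : ZFSet.{u} :=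
  ZFSet.sep (fun s => ∃ u, u ∈ G ∧ ZFSet.pair u s ∈ leS A κ) (SC A κ)

theorem mem_upS : s ∈ upS A κ G ↔ s ∈ SC A κ ∧ ∃ u, u ∈ G ∧ ZFSet.pair u s ∈ leS A κ :=
  ZFSet.mem_sep

include hκ

theorem Inacc.upS_ext {B : Set ZFSet.{u}} [ZFM B] (hAB : A ⊆ B) (hG : G ∈ B) : upS A κ G ∈ B := by
  have : Fact (G ∈ B) := ⟨hG⟩
  have : Fact (leS A κ ∈ B) := ⟨hAB hκ.leSA⟩
  exact sepA (hAB hκ.SA)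

/-- A filter that is generic for end-extension generates a filter generic for `𝕊`. -/
theorem Inacc.genS (h : Gen A (SC A κ) (leQ A κ) G) : Gen A (SC A κ) (leS A κ) (upS A κ G) where
  hP := hκ.SA
  hle := hκ.leSA
  le_sub p q h := ⟨(mem_rel.1 h).1, (mem_rel.1 h).2.1⟩
  refl p hp := hκ.leS_refl hp
  trans p q r := hκ.leS_trans
  sub p hp := (mem_upS.1 hp).1
  up p q hpq hp := by
    obtain ⟨h1, u, h2, h3⟩ := mem_upS.1 hp
    exact mem_upS.2 ⟨(mem_rel.1 hpq).2.1, u, h2, hκ.leS_trans h3 hpq⟩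
  dir p hp q hq := by
    obtain ⟨h1, u, h2, h3⟩ := mem_upS.1 hp
    obtain ⟨k1, v, k2, k3⟩ := mem_upS.1 hq
    obtain ⟨w, hw, w1, w2⟩ := h.dir u h2 v k2
    obtain ⟨wS, uS, w1⟩ := mem_rel.1 w1
    obtain ⟨-, vS, w2⟩ := mem_rel.1 w2
    exact ⟨w, mem_upS.2 ⟨wS, w, hw, hκ.leS_refl wS⟩, hκ.leS_trans (hκ.ee_leS uS wS w1) h3,
      hκ.leS_trans (hκ.ee_leS vS wS w2) k3⟩
  gen D hD D1 D2 := by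
    have : Fact (D ∈ A) := ⟨hD⟩
    have : Fact (leS A κ ∈ A) := ⟨hκ.leSA⟩
    obtain ⟨u, hu, hu'⟩ := h.gen (ZFSet.sep (fun u => ∃ d, d ∈ D ∧ ZFSet.pair u d ∈ leS A κ) (SC A κ))
      (sepA hκ.SA) (fun p hp => (ZFSet.mem_sep.1 hp).1) fun s hs => by
        obtain ⟨d, hd, h1⟩ := D2 s hs
        obtain ⟨g, gS, g1, g2⟩ := hκ.graft' hs (D1 d hd) (mem_rel.1 h1).2.2
        exact ⟨g, ZFSet.mem_sep.2 ⟨gS, d, hd, mem_rel.2 ⟨gS, D1 d hd, Or.inr g2⟩⟩,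
          mem_rel.2 ⟨gS, hs, g1⟩⟩
    obtain ⟨uS, d, hd, h1⟩ := ZFSet.mem_sep.1 hu
    exact ⟨d, hd, mem_upS.2 ⟨D1 d hd, u, hu', h1⟩⟩

theorem Inacc.unbQ (h : Gen A (SC A κ) (leQ A κ) G) (hb : b ∈ κ) : ∃ s ∈ G, b ∈ TM.mx s := by
  have : Fact (b ∈ A) := ⟨hκ.el hb⟩
  obtain ⟨s, hs, hs'⟩ := h.gen (ZFSet.sep (fun s => b ∈ TM.mx s) (SC A κ)) (sepA hκ.SA)
    (fun p hp => (ZFSet.mem_sep.1 hp).1) fun p hp => by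
      obtain ⟨t, ht, h1, h2, -⟩ := hκ.longer hp hb
      exact ⟨t, ZFSet.mem_sep.2 ⟨ht, h2⟩, mem_rel.2 ⟨ht, hp, h1⟩⟩
  exact ⟨s, hs', (ZFSet.mem_sep.1 hs).2⟩

/-- A filter that is generic for end-extension over `A` is generic, over the extension by the
filter of `𝕊` it generates, for the generic tree. -/
theorem Inacc.genT (h : Gen A (SC A κ) (leQ A κ) G) :
    Gen (Ext A (upS A κ G)) (upS A κ G) (leT (upS A κ G)) G := by
  have hG := hκ.genS h
  have hB : ZFCM (Ext A (upS A κ G)) := hG.ext_zfcm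
  have hsub : ∀ p ∈ G, p ∈ upS A κ G := fun p hp =>
    mem_upS.2 ⟨h.sub p hp, p, hp, hκ.leS_refl (h.sub p hp)⟩
  refine ⟨hG.G_ext, leTA hG.G_ext, ?_, ?_, ?_, hsub, ?_, ?_, ?_⟩
  · exact fun p q h => ⟨(mem_leT.1 h).1, (mem_leT.1 h).2.1⟩
  · exact fun p hp => mem_leT.2 ⟨hp, hp, ee.refl _⟩
  · intro p q r h1 h2
    rw [mem_leT] at *
    exact ⟨h1.1, h2.2.1, h2.2.2.trans h1.2.2⟩
  · intro p q h1 hp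
    rw [mem_leT] at h1
    exact h.up p q (mem_rel.2 ⟨h.sub p hp, hG.sub _ h1.2.1, h1.2.2⟩) hp
  · intro p hp q hq
    obtain ⟨r, hr, h1, h2⟩ := h.dir p hp q hq
    exact ⟨r, hr, mem_leT.2 ⟨hsub _ hr, hsub _ hp, (mem_rel.1 h1).2.2⟩,
      mem_leT.2 ⟨hsub _ hr, hsub _ hq, (mem_rel.1 h2).2.2⟩⟩
  · intro D hD D1 D2
    obtain ⟨β, hβ, h1⟩ := hκ.sealG hG hD D1 fun t ht => by
      obtain ⟨d, hd, h1⟩ := D2 t ht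
      exact ⟨d, D1 d hd, (mem_leT.1 h1).2.2, d, hd, ee.refl _⟩
    obtain ⟨s, hs, hs'⟩ := hκ.unbQ h hβ
    obtain ⟨k1, k2, k3⟩ := hκ.mk_mem hG (hsub s hs) hs'
    obtain ⟨d, hd, h2⟩ := h1 _ k1 k3
    exact ⟨d, hd, h.up s d (mem_rel.2 ⟨h.sub s hs, hG.sub _ (D1 d hd), h2.trans k2⟩) hs⟩

/-- Adding the `𝕊`-generic filter generated by `G`, and then `G`, gives no more than adding `G`. -/
theorem Inacc.ext_iter (h : Gen A (SC A κ) (leQ A κ) G) :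
    Ext (Ext A (upS A κ G)) G = Ext A G := by
  have hG := hκ.genS h
  have hT := hκ.genT h
  have hB : ZFCM (Ext A (upS A κ G)) := hG.ext_zfcm
  have hC : ZFCM (Ext A G) := h.ext_zfcm
  have hC' : ZFCM (Ext (Ext A (upS A κ G)) G) := hT.ext_zfcm
  apply Set.Subset.antisymm
  · exact Ext_sub h.G_ext (Ext_sub (hκ.upS_ext h.sub_ext h.G_ext) h.sub_ext)
  · exact Ext_sub hT.G_ext (hG.sub_ext.trans hT.sub_ext)

/-- A branch through the generic tree that is generic over the extension by the tree is generic
for end-extension over the ground model. -/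
theorem Inacc.genQ (hG : Gen A (SC A κ) (leS A κ) G₁) (hT : Gen (Ext A G₁) G₁ (leT G₁) G₂) :
    Gen A (SC A κ) (leQ A κ) G₂ := by
  have hB : ZFCM (Ext A G₁) := hG.ext_zfcm
  refine ⟨hκ.SA, hκ.leQA, ?_, ?_, ?_, fun p hp => hG.sub _ (hT.sub _ hp), ?_, ?_, ?_⟩
  · exact fun p q h => ⟨(mem_rel.1 h).1, (mem_rel.1 h).2.1⟩
  · exact fun p hp => mem_rel.2 ⟨hp, hp, ee.refl _⟩
  · intro p q r e1 e2
    obtain ⟨h1, h2, h3⟩ := mem_rel.1 e1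
    obtain ⟨k1, k2, k3⟩ := mem_rel.1 e2
    exact mem_rel.2 ⟨h1, k2, k3.trans h3⟩
  · intro p q h hp
    obtain ⟨h1, h2, h3⟩ := mem_rel.1 h
    exact hT.up p q (mem_leT.2 ⟨hT.sub _ hp, hκ.cutG hG (hT.sub _ hp) h2 h3, h3⟩) hp
  · intro p hp q hq
    obtain ⟨r, hr, h1, h2⟩ := hT.dir p hp q hq
    have rS := hG.sub _ (hT.sub _ hr)
    exact ⟨r, hr, mem_rel.2 ⟨rS, hG.sub _ (hT.sub _ hp), (mem_leT.1 h1).2.2⟩,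
      mem_rel.2 ⟨rS, hG.sub _ (hT.sub _ hq), (mem_leT.1 h2).2.2⟩⟩
  · intro D hD D1 D2
    have : Fact (D ∈ A) := ⟨hD⟩
    obtain ⟨q, hq, hq'⟩ := hT.gen (D ∩ G₁) (interA (hG.sub_ext hD) hG.G_ext)
      (fun p hp => (ZFSet.mem_inter.1 hp).2) fun t ht => by
        have tS := hG.sub _ ht
        have : Fact (t ∈ A) := ⟨SC.inA tS⟩
        -- densely many conditions are almost equal to an element of `D` above `t`, or leave `t`
        obtain ⟨s, hs, hsG⟩ := hG.gen (ZFSet.sep (fun s =>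
            (∃ d, d ∈ D ∧ (ee t d ∧ TM.mx d = TM.mx s ∧ al A (TM.mx s) d s)) ∨
            (TM.mx t ∈ TM.mx s ∧ ¬ al A (TM.mx t) s t)) (SC A κ)) (sepA hκ.SA)
          (fun p hp => (ZFSet.mem_sep.1 hp).1) fun p hp => by
            obtain ⟨p', pS', p1, p2, p3⟩ := hκ.longer hp (hκ.mx tS)
            by_cases hal : al A (TM.mx t) p' t
            · obtain ⟨g, gS, g1, g2, g3⟩ := hκ.graft tS pS' (Or.inr ⟨p2, hal⟩)
              obtain ⟨d, hd, h1⟩ := D2 g gS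
              have h1 := (mem_rel.1 h1).2.2
              have dS := D1 d hd
              refine ⟨d, ZFSet.mem_sep.2 ⟨dS, Or.inl ⟨d, hd, g2.trans h1, rfl,
                al.of_eq fun _ _ => Iff.rfl⟩⟩, mem_rel.2 ⟨dS, hp, Or.inr ?_⟩⟩
              exact hκ.ee_sl' dS gS hp h1 (hκ.sl_congr pS' gS hp g1 g3 ⟨p3, p1.al⟩)
            · exact ⟨p', ZFSet.mem_sep.2 ⟨pS', Or.inr ⟨p2, hal⟩⟩, hκ.ee_leS hp pS' p1⟩
        obtain ⟨sS, ⟨d, hd, h1, h2, h3⟩ | ⟨h1, h2⟩⟩ := ZFSet.mem_sep.1 hs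
        · have hdG := hκ.mod hG hsG (D1 d hd) h2 h3
          exact ⟨d, ZFSet.mem_inter.2 ⟨hd, hdG⟩, mem_leT.2 ⟨hdG, ht, h1⟩⟩
        · exact absurd (hκ.coh hG ht hsG ((hκ.mxo sS).subset_of_mem h1)) h2
    exact ⟨q, (ZFSet.mem_inter.1 hq).1, hq'⟩

/-- The branch `G₂` through the generic tree `G₁` determines the tree. -/
theorem Inacc.upS_eq (hG : Gen A (SC A κ) (leS A κ) G₁) (hT : Gen (Ext A G₁) G₁ (leT G₁) G₂) :
    upS A κ G₂ = G₁ := by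
  ext s
  rw [mem_upS]
  constructor
  · rintro ⟨h1, u, h2, h3⟩
    exact hG.up u s h3 (hT.sub u h2)
  · intro hs
    have sS := hG.sub _ hs
    obtain ⟨u, hu, h1⟩ := hκ.unbQ (hκ.genQ hG hT) (hκ.mx sS)
    have uS := hG.sub _ (hT.sub u hu)
    exact ⟨sS, u, hu, mem_rel.2 ⟨uS, sS, Or.inr ⟨h1, hκ.coh hG hs (hT.sub u hu)
      ((hκ.mxo uS).subset_of_mem h1)⟩⟩⟩

end iter

/-! ### Dense embeddings -/

/-- A dense embedding of the poset `Q` into the poset `P`, definable in `A`. -/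
structure DE (A : Set ZFSet.{u}) (P leP Q leQ : ZFSet.{u}) (e : ZFSet.{u} → ZFSet.{u}) :
    Prop where
  P_mem : P ∈ A
  leP_mem : leP ∈ A
  P_sub : ∀ p q, ZFSet.pair p q ∈ leP → p ∈ P ∧ q ∈ P
  P_refl : ∀ p ∈ P, ZFSet.pair p p ∈ leP
  P_trans : ∀ p q r, ZFSet.pair p q ∈ leP → ZFSet.pair q r ∈ leP → ZFSet.pair p r ∈ leP
  Q_mem : Q ∈ A
  leQ_mem : leQ ∈ A
  Q_sub : ∀ p q, ZFSet.pair p q ∈ leQ → p ∈ Q ∧ q ∈ Q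
  Q_refl : ∀ p ∈ Q, ZFSet.pair p p ∈ leQ
  Q_trans : ∀ p q r, ZFSet.pair p q ∈ leQ → ZFSet.pair q r ∈ leQ → ZFSet.pair p r ∈ leQ
  dfun : ∀ (B : Set ZFSet.{u}) [ZFM B], DFun B (fun v => e (v 0))
  map : ∀ q ∈ Q, e q ∈ P
  le_iff : ∀ q ∈ Q, ∀ q' ∈ Q, (ZFSet.pair (e q) (e q') ∈ leP ↔ ZFSet.pair q q' ∈ leQ)
  dense : ∀ p ∈ P, ∃ q ∈ Q, ZFSet.pair (e q) p ∈ leP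

section de
variable {A : Set ZFSet.{u}} [hA : ZFCM A] {P leP Q leQ G H : ZFSet.{u}}
  {e : ZFSet.{u} → ZFSet.{u}} (h : DE A P leP Q leQ e)
include h

/-- A dense embedding transfers generic filters upwards, without changing the extension. -/
theorem DE.push (hH : Gen A Q leQ H) : ∃ G, Gen A P leP G ∧ Ext A G = Ext A H := by
  have ie : ∀ (B : Set ZFSet.{u}) [ZFM B] t [DFun B t], DFun B (fun v => e (t v)) :=
    fun B _ t ht => (h.dfun B).comp₁ ht
  let G := ZFSet.sep (fun p => ∃ q, q ∈ H ∧ ZFSet.pair (e q) p ∈ leP) P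
  have mG : ∀ p, p ∈ G ↔ p ∈ P ∧ ∃ q, q ∈ H ∧ ZFSet.pair (e q) p ∈ leP := fun p => ZFSet.mem_sep
  have hG : Gen A P leP G := by
    refine ⟨h.P_mem, h.leP_mem, h.P_sub, h.P_refl, h.P_trans, fun p hp => ((mG p).1 hp).1,
      ?_, ?_, ?_⟩
    · intro p q hpq hp
      obtain ⟨h1, r, h2, h3⟩ := (mG p).1 hp
      exact (mG q).2 ⟨(h.P_sub _ _ hpq).2, r, h2, h.P_trans _ _ _ h3 hpq⟩
    · intro p hp q hq
      obtain ⟨h1, r, h2, h3⟩ := (mG p).1 hp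
      obtain ⟨k1, s, k2, k3⟩ := (mG q).1 hq
      obtain ⟨w, hw, w1, w2⟩ := hH.dir r h2 s k2
      have wQ := hH.sub w hw
      exact ⟨e w, (mG _).2 ⟨h.map w wQ, w, hw, h.P_refl _ (h.map w wQ)⟩,
        h.P_trans _ _ _ ((h.le_iff w wQ r (hH.sub r h2)).2 w1) h3,
        h.P_trans _ _ _ ((h.le_iff w wQ s (hH.sub s k2)).2 w2) k3⟩
    · intro D hD D1 D2
      have : Fact (D ∈ A) := ⟨hD⟩
      have : Fact (leP ∈ A) := ⟨h.leP_mem⟩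
      obtain ⟨q, hq, hq'⟩ := hH.gen
        (ZFSet.sep (fun q => ∃ d, d ∈ D ∧ ZFSet.pair (e q) d ∈ leP) Q) (sepA h.Q_mem)
        (fun p hp => (ZFSet.mem_sep.1 hp).1) fun q hq => by
          obtain ⟨d, hd, h1⟩ := D2 (e q) (h.map q hq)
          obtain ⟨r, hr, h2⟩ := h.dense d (D1 d hd)
          exact ⟨r, ZFSet.mem_sep.2 ⟨hr, d, hd, h2⟩,
            (h.le_iff r hr q hq).1 (h.P_trans _ _ _ h2 h1)⟩
      obtain ⟨h1, d, hd, h2⟩ := ZFSet.mem_sep.1 hq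
      exact ⟨d, hd, (mG d).2 ⟨D1 d hd, q, hq', h2⟩⟩
  refine ⟨G, hG, Set.Subset.antisymm ?_ ?_⟩
  · have hB : ZFCM (Ext A H) := hH.ext_zfcm
    have : Fact (H ∈ Ext A H) := ⟨hH.G_ext⟩
    have : Fact (leP ∈ Ext A H) := ⟨hH.sub_ext h.leP_mem⟩
    exact Ext_sub (sepA (hH.sub_ext h.P_mem)) hH.sub_ext
  · have hB : ZFCM (Ext A G) := hG.ext_zfcm
    have : Fact (G ∈ Ext A G) := ⟨hG.G_ext⟩
    have eH : H = ZFSet.sep (fun q => e q ∈ G) Q := by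
      ext q
      rw [ZFSet.mem_sep]
      constructor
      · intro hq
        have hqQ := hH.sub q hq
        exact ⟨hqQ, (mG _).2 ⟨h.map q hqQ, q, hq, h.P_refl _ (h.map q hqQ)⟩⟩
      · rintro ⟨hq, h1⟩
        obtain ⟨-, r, h2, h3⟩ := (mG _).1 h1
        exact hH.up r q ((h.le_iff r (hH.sub r h2) q hq).1 h3) h2
    have : H ∈ Ext A G := by
      rw [eH]; exact sepA (hG.sub_ext h.Q_mem)
    exact Ext_sub this hG.sub_ext

/-- A dense embedding transfers generic filters downwards, without changing the extension. -/
theorem DE.pull (hG : Gen A P leP G) : ∃ H, Gen A Q leQ H ∧ Ext A H = Ext A G := by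
  have ie : ∀ (B : Set ZFSet.{u}) [ZFM B] t [DFun B t], DFun B (fun v => e (t v)) :=
    fun B _ t ht => (h.dfun B).comp₁ ht
  let H := ZFSet.sep (fun q => e q ∈ G) Q
  have mH : ∀ q, q ∈ H ↔ q ∈ Q ∧ e q ∈ G := fun q => ZFSet.mem_sep
  have iP : Fact (P ∈ A) := ⟨h.P_mem⟩
  have iQ : Fact (Q ∈ A) := ⟨h.Q_mem⟩
  have ile : Fact (leP ∈ A) := ⟨h.leP_mem⟩
  have low : ∀ p ∈ G, ∃ q ∈ H, ZFSet.pair (e q) p ∈ leP := by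
    intro p hp
    have hpP := hG.sub p hp
    have : Fact (p ∈ A) := ⟨trA h.P_mem hpP⟩
    obtain ⟨x, hx, hx'⟩ := hG.gen (ZFSet.sep (fun x => ∃ q, q ∈ Q ∧ (x = e q ∧
        (ZFSet.pair x p ∈ leP ∨ ¬ ∃ r, r ∈ P ∧ (ZFSet.pair r x ∈ leP ∧ ZFSet.pair r p ∈ leP)))) P)
      (sepA h.P_mem) (fun p hp => (ZFSet.mem_sep.1 hp).1) fun z hz => by
        by_cases hc : ∃ r, r ∈ P ∧ (ZFSet.pair r z ∈ leP ∧ ZFSet.pair r p ∈ leP)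
        · obtain ⟨r, hr, h1, h2⟩ := hc
          obtain ⟨q, hq, h3⟩ := h.dense r hr
          exact ⟨e q, ZFSet.mem_sep.2 ⟨h.map q hq, q, hq, rfl, Or.inl (h.P_trans _ _ _ h3 h2)⟩,
            h.P_trans _ _ _ h3 h1⟩
        · obtain ⟨q, hq, h3⟩ := h.dense z hz
          exact ⟨e q, ZFSet.mem_sep.2 ⟨h.map q hq, q, hq, rfl, Or.inr fun ⟨r, hr, h1, h2⟩ =>
            hc ⟨r, hr, h.P_trans _ _ _ h1 h3, h2⟩⟩, h3⟩
    obtain ⟨hxP, q, hq, rfl, h1⟩ := ZFSet.mem_sep.1 hx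
    refine ⟨q, (mH q).2 ⟨hq, hx'⟩, h1.resolve_right fun h2 => h2 ?_⟩
    obtain ⟨r, hr, h3, h4⟩ := hG.dir _ hx' p hp
    exact ⟨r, hG.sub r hr, h3, h4⟩
  have hH : Gen A Q leQ H := by
    refine ⟨h.Q_mem, h.leQ_mem, h.Q_sub, h.Q_refl, h.Q_trans, fun p hp => ((mH p).1 hp).1,
      ?_, ?_, ?_⟩
    · intro p q hpq hp
      obtain ⟨h1, h2⟩ := h.Q_sub _ _ hpq
      exact (mH q).2 ⟨h2, hG.up _ _ ((h.le_iff p h1 q h2).2 hpq) ((mH p).1 hp).2⟩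
    · intro p hp q hq
      rw [mH] at hp hq
      obtain ⟨r, hr, h1, h2⟩ := hG.dir _ hp.2 _ hq.2
      obtain ⟨w, hw, h3⟩ := low r hr
      have wQ := ((mH w).1 hw).1
      exact ⟨w, hw, (h.le_iff w wQ p hp.1).1 (h.P_trans _ _ _ h3 h1),
        (h.le_iff w wQ q hq.1).1 (h.P_trans _ _ _ h3 h2)⟩
    · intro D hD D1 D2
      have : Fact (D ∈ A) := ⟨hD⟩
      obtain ⟨x, hx, hx'⟩ := hG.gen (ZFSet.sep (fun x => ∃ d, d ∈ D ∧ x = e d) P)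
        (sepA h.P_mem) (fun p hp => (ZFSet.mem_sep.1 hp).1) fun z hz => by
          obtain ⟨q, hq, h1⟩ := h.dense z hz
          obtain ⟨d, hd, h2⟩ := D2 q hq
          exact ⟨e d, ZFSet.mem_sep.2 ⟨h.map d (D1 d hd), d, hd, rfl⟩,
            h.P_trans _ _ _ ((h.le_iff d (D1 d hd) q hq).2 h2) h1⟩
      obtain ⟨-, d, hd, rfl⟩ := ZFSet.mem_sep.1 hx
      exact ⟨d, hd, (mH d).2 ⟨D1 d hd, hx'⟩⟩
  refine ⟨H, hH, Set.Subset.antisymm ?_ ?_⟩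
  · have hB : ZFCM (Ext A G) := hG.ext_zfcm
    have : Fact (G ∈ Ext A G) := ⟨hG.G_ext⟩
    exact Ext_sub (sepA (hG.sub_ext h.Q_mem)) hG.sub_ext
  · have hB : ZFCM (Ext A H) := hH.ext_zfcm
    have : Fact (H ∈ Ext A H) := ⟨hH.G_ext⟩
    have : Fact (leP ∈ Ext A H) := ⟨hH.sub_ext h.leP_mem⟩
    have eG : G = ZFSet.sep (fun p => ∃ q, q ∈ H ∧ ZFSet.pair (e q) p ∈ leP) P := by
      ext p
      rw [ZFSet.mem_sep]
      constructor
      · exact fun hp => ⟨hG.sub p hp, low p hp⟩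
      · rintro ⟨hp, q, h1, h2⟩
        exact hG.up _ _ h2 ((mH q).1 h1).2
    have : G ∈ Ext A H := by
      rw [eG]; exact sepA (hH.sub_ext h.P_mem)
    exact Ext_sub this hH.sub_ext

end de
end TM

/-! ### Cohen forcing -/

namespace TM

/-- The set `x` has size less than `κ` in `A`. -/
def Sm (A : Set ZFSet.{u}) (κ x : ZFSet.{u}) : Prop :=
  ∃ γ ∈ κ, ∃ f ∈ A, (∀ p ∈ f, ∃ a ∈ x, ∃ b ∈ γ, p = ZFSet.pair a b) ∧
    (∀ a ∈ x, ∃ b, ZFSet.pair a b ∈ f) ∧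
    (∀ a b b', ZFSet.pair a b ∈ f → ZFSet.pair a b' ∈ f → b = b') ∧
    (∀ a a' b, ZFSet.pair a b ∈ f → ZFSet.pair a' b ∈ f → a = a')

/-- The conditions of `Add(κ, 1)`, with all quantifiers bounded. -/
noncomputable def CP (A : Set ZFSet.{u}) (κ : ZFSet.{u}) : ZFSet.{u} :=
  ZFSet.sep (fun c => (∀ x, x ∈ κ → ¬ (ZFSet.pair x ∅ ∈ c ∧ ZFSet.pair x {∅} ∈ c)) ∧
    ∃ γ, γ ∈ κ ∧ ∃ f, f ∈ pw A (ZFSet.prod c γ) ∧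
      ((∀ a, a ∈ c → ∃ b, b ∈ γ ∧ ZFSet.pair a b ∈ f) ∧
      (∀ a, a ∈ c → ∀ b, b ∈ γ → ∀ b', b' ∈ γ → ZFSet.pair a b ∈ f → ZFSet.pair a b' ∈ f →
        b = b') ∧
      (∀ a, a ∈ c → ∀ a', a' ∈ c → ∀ b, b ∈ γ → ZFSet.pair a b ∈ f → ZFSet.pair a' b ∈ f →
        a = a'))) (pw A (ZFSet.prod κ {∅, {∅}}))

/-- The order of `Add(κ, 1)`. -/
noncomputable def leCP (A : Set ZFSet.{u}) (κ : ZFSet.{u}) : ZFSet.{u} :=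
  rel (fun c d => d ⊆ c) (CP A κ)

/-- The truth value of `x ∈ u`, as an element of `2`. -/
noncomputable def bit (u x : ZFSet.{u}) : ZFSet.{u} := ZFSet.sep (fun _ => x ∈ u) {∅}

/-- The binary sequence of length `mx u` coded by `u`. -/
noncomputable def ch (u : ZFSet.{u}) : ZFSet.{u} := gr (fun x => bit u x) (mx u)

section cohen
variable {A : Set ZFSet.{u}} {κ c u x y : ZFSet.{u}}

theorem mem_bit : y ∈ bit u x ↔ y = ∅ ∧ x ∈ u := by
  rw [bit, ZFSet.mem_sep, ZFSet.mem_singleton]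

theorem bit_pos (h : x ∈ u) : bit u x = {∅} := by
  ext y; rw [mem_bit, ZFSet.mem_singleton]; tauto

theorem bit_neg (h : x ∉ u) : bit u x = ∅ := by
  ext y; rw [mem_bit]; simp [h]

theorem sing_ne : ({∅} : ZFSet.{u}) ≠ ∅ := fun h =>
  ZFSet.notMem_empty ∅ ((ZFSet.ext_iff.1 h ∅).1 (ZFSet.mem_singleton.2 rfl))

theorem bit_inj {u' : ZFSet.{u}} (h : bit u x = bit u' x) : x ∈ u ↔ x ∈ u' := by
  have := congrArg (fun z => ∅ ∈ z) h
  simpa [mem_bit] using this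

variable [hA : ZFCM A]

theorem mem_CP : c ∈ CP A κ ↔ c ∈ A ∧
    (∀ p ∈ c, ∃ x ∈ κ, ∃ y ∈ ({∅, {∅}} : ZFSet.{u}), p = ZFSet.pair x y) ∧
    (∀ x y y', ZFSet.pair x y ∈ c → ZFSet.pair x y' ∈ c → y = y') ∧ Sm A κ c := by
  rw [CP, ZFSet.mem_sep, mem_pw]
  constructor
  · rintro ⟨⟨h1, h2⟩, h3, γ, hγ, f, hf, h4, h5, h6⟩
    rw [mem_pw] at hf
    refine ⟨h2, fun p hp => ?_, ?_, γ, hγ, f, hf.2, fun p hp => ?_, fun a ha => ?_, ?_, ?_⟩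
    · obtain ⟨a, ha, b, hb, e⟩ := ZFSet.mem_prod.1 (h1 hp)
      exact ⟨a, ha, b, hb, e⟩
    · intro x y y' h h'
      obtain ⟨hx, hy⟩ := ZFSet.pair_mem_prod.1 (h1 h)
      obtain ⟨-, hy'⟩ := ZFSet.pair_mem_prod.1 (h1 h')
      rw [ZFSet.mem_pair] at hy hy'
      rcases hy with rfl | rfl <;> rcases hy' with rfl | rfl
      · rfl
      · exact absurd ⟨h, h'⟩ (h3 x hx)
      · exact absurd ⟨h', h⟩ (h3 x hx)
      · rfl
    · obtain ⟨a, ha, b, hb, e⟩ := ZFSet.mem_prod.1 (hf.1 hp)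
      exact ⟨a, ha, b, hb, e⟩
    · obtain ⟨b, -, h⟩ := h4 a ha
      exact ⟨b, h⟩
    · intro a b b' h h'
      obtain ⟨k1, k2⟩ := ZFSet.pair_mem_prod.1 (hf.1 h)
      obtain ⟨-, k3⟩ := ZFSet.pair_mem_prod.1 (hf.1 h')
      exact h5 a k1 b k2 b' k3 h h'
    · intro a a' b h h'
      obtain ⟨k1, k2⟩ := ZFSet.pair_mem_prod.1 (hf.1 h)
      obtain ⟨k3, -⟩ := ZFSet.pair_mem_prod.1 (hf.1 h')
      exact h6 a k1 a' k3 b k2 h h'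
  · rintro ⟨h1, h2, h3, γ, hγ, f, hf, h4, h5, h6, h7⟩
    have key : f ⊆ ZFSet.prod c γ := fun p hp => by
      obtain ⟨a, ha, b, hb, rfl⟩ := h4 p hp
      exact ZFSet.pair_mem_prod.2 ⟨ha, hb⟩
    refine ⟨⟨fun p hp => ?_, h1⟩, fun x hx h => sing_ne (h3 x _ _ h.2 h.1), γ, hγ, f,
      mem_pw.2 ⟨key, hf⟩, fun a ha => ?_, fun a ha b hb b' hb' => h6 a b b',
      fun a ha a' ha' b hb => h7 a a' b⟩
    · obtain ⟨a, ha, b, hb, rfl⟩ := h2 p hp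
      exact ZFSet.pair_mem_prod.2 ⟨ha, hb⟩
    · obtain ⟨b, hb⟩ := h5 a ha
      exact ⟨b, (ZFSet.pair_mem_prod.1 (key hb)).2, hb⟩

instance {B : Set ZFSet.{u}} [ZFM B] {t s : (ℕ → ZFSet.{u}) → ZFSet.{u}}
    [ht : DFun B t] [hs : DFun B s] : DFun B (fun v => bit (t v) (s v)) := by
  unfold bit; infer_instance

variable (hκ : Inacc A κ)
include hκ

theorem Inacc.CA : CP A κ ∈ A := by
  have : Fact (κ ∈ A) := ⟨hκ.inA⟩
  exact sepA (pwA (prodA hκ.inA (pairA emptyA (singA emptyA))))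

theorem Inacc.leCA : leCP A κ ∈ A := relA inferInstance hκ.CA

omit hκ in
theorem ch_sub {s : ZFSet.{u}} : ch s ⊆ ch u ↔ ee s u := by
  constructor
  · intro h
    have h' : ∀ x ∈ mx s, x ∈ mx u ∧ bit s x = bit u x := fun x hx =>
      pair_mem_gr.1 (h (pair_mem_gr.2 ⟨hx, rfl⟩))
    exact ⟨fun x hx => (h' x hx).1, fun x hx => bit_inj (h' x hx).2⟩
  · intro h p hp
    obtain ⟨x, hx, rfl⟩ := mem_gr.1 hp
    refine pair_mem_gr.2 ⟨h.1 hx, ?_⟩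
    ext y
    rw [mem_bit, mem_bit, h.2 x hx]

theorem Inacc.chC (hu : u ∈ SC A κ) : ch u ∈ CP A κ := by
  have hm := hκ.mx hu
  have : Fact (u ∈ A) := ⟨SC.inA hu⟩
  refine mem_CP.2 ⟨DFun.val₁ (f := ch) (by unfold ch; infer_instance) (SC.inA hu),
    fun p hp => ?_, fun x y y' h h' => ?_, TM.mx u, hm,
    img (fun x => ZFSet.pair (ZFSet.pair x (bit u x)) x) (TM.mx u),
    DFun.val₁ (f := img (fun x => ZFSet.pair (ZFSet.pair x (bit u x)) x)) inferInstance (hκ.el hm),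
    fun p hp => ?_, fun a ha => ?_, fun a b b' h h' => ?_, fun a a' b h h' => ?_⟩
  · obtain ⟨x, hx, rfl⟩ := mem_gr.1 hp
    refine ⟨x, hκ.tr hx hm, _, ?_, rfl⟩
    by_cases h : x ∈ u
    · rw [bit_pos h]; simp
    · rw [bit_neg h]; simp
  · rw [(pair_mem_gr.1 h).2, (pair_mem_gr.1 h').2]
  · obtain ⟨x, hx, rfl⟩ := mem_img.1 hp
    exact ⟨_, pair_mem_gr.2 ⟨hx, rfl⟩, x, hx, rfl⟩
  · obtain ⟨x, hx, rfl⟩ := mem_gr.1 ha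
    exact ⟨x, mem_img.2 ⟨x, hx, rfl⟩⟩
  · obtain ⟨x, hx, e⟩ := mem_img.1 h
    obtain ⟨x', hx', e'⟩ := mem_img.1 h'
    rw [ZFSet.pair_inj] at e e'
    have := e.1.symm.trans e'.1
    rw [ZFSet.pair_inj] at this
    rw [e.2, e'.2, this.1]
  · obtain ⟨x, hx, e⟩ := mem_img.1 h
    obtain ⟨x', hx', e'⟩ := mem_img.1 h'
    rw [ZFSet.pair_inj] at e e'
    rw [e.1, e'.1, ← e.2, ← e'.2]

/-- Every Cohen condition has bounded domain, so it extends to the sequence coded by a condition. -/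
theorem Inacc.ch_dense (hc : c ∈ CP A κ) : ∃ u ∈ SC A κ, c ⊆ ch u := by
  obtain ⟨h1, h2, h3, γ, hγ, f, hf, h4, h5, h6, h7⟩ := mem_CP.1 hc
  have : Fact (c ∈ A) := ⟨h1⟩
  have : Fact (f ∈ A) := ⟨hf⟩
  have : Fact (κ ∈ A) := ⟨hκ.inA⟩
  let F : ZFSet.{u} → ZFSet.{u} := fun ξ => ZFSet.sUnion (ZFSet.sep (fun x => ∃ p, p ∈ c ∧
    (ZFSet.pair p ξ ∈ f ∧ (p = ZFSet.pair x ∅ ∨ p = ZFSet.pair x {∅}))) κ)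
  have dF : DFun A (fun v => F (v 0)) := by
    show DFun A (fun v => ZFSet.sUnion (ZFSet.sep (fun x => ∃ p, p ∈ c ∧
      (ZFSet.pair p (v 0) ∈ f ∧ (p = ZFSet.pair x ∅ ∨ p = ZFSet.pair x {∅}))) κ))
    infer_instance
  have eF : ∀ x y ξ, ZFSet.pair x y ∈ c → ZFSet.pair (ZFSet.pair x y) ξ ∈ f → F ξ = x := by
    intro x y ξ hp hξ
    have : ZFSet.sep (fun x => ∃ p, p ∈ c ∧
        (ZFSet.pair p ξ ∈ f ∧ (p = ZFSet.pair x ∅ ∨ p = ZFSet.pair x {∅}))) κ = {x} := by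
      ext z
      rw [ZFSet.mem_sep, ZFSet.mem_singleton]
      constructor
      · rintro ⟨hz, p, hp', k1, k2⟩
        have e := h7 _ _ _ k1 hξ
        rcases k2 with rfl | rfl <;> exact (ZFSet.pair_inj.1 e).1
      · rintro rfl
        obtain ⟨a, ha, b, hb, e⟩ := h2 _ hp
        rw [ZFSet.pair_inj] at e
        obtain ⟨rfl, rfl⟩ := e
        refine ⟨ha, _, hp, hξ, ?_⟩
        rw [ZFSet.mem_pair] at hb
        rcases hb with rfl | rfl <;> simp
    show ZFSet.sUnion _ = x
    rw [this, ZFSet.sUnion_singleton]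
  obtain ⟨w, hw, hO⟩ := hκ.om
  have h0 : ∅ ∈ κ := hκ.tr hO.2.1 hw
  obtain ⟨b, hb, hb'⟩ := hκ.bdd dF hγ (fun ξ hξ => by
    by_cases h : ∃ p ∈ c, ZFSet.pair p ξ ∈ f
    · obtain ⟨p, hp, k⟩ := h
      obtain ⟨x, hx, y, hy, rfl⟩ := h2 p hp
      rw [eF x y ξ hp k]; exact hx
    · have : F ξ = ∅ := by
        rw [ZFSet.eq_empty]
        intro z hz
        obtain ⟨x, hx, -⟩ := ZFSet.mem_sUnion.1 hz
        obtain ⟨-, p, hp, k, -⟩ := ZFSet.mem_sep.1 hx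
        exact h ⟨p, hp, k⟩
      rw [this]; exact h0)
  have hu : ZFSet.sep (fun x => ZFSet.pair x {∅} ∈ c) κ ∈ A := sepA hκ.inA
  refine ⟨_, hκ.mkS hb hu, fun p hp => ?_⟩
  obtain ⟨x, hx, y, hy, rfl⟩ := h2 p hp
  obtain ⟨ξ, hξ⟩ := h5 _ hp
  obtain ⟨a, ha, ξ', hξ', e⟩ := h4 _ hξ
  rw [ZFSet.pair_inj] at e
  have hxb : x ∈ b := by
    have := hb' ξ' hξ'
    rwa [← e.2, eF x y ξ hp hξ] at this
  refine pair_mem_gr.2 ⟨by rwa [mx_mk (hκ.o hb)], ?_⟩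
  rw [ZFSet.mem_pair] at hy
  rcases hy with rfl | rfl
  · rw [bit_neg]
    rw [mem_mk hxb, ZFSet.mem_sep]
    exact fun h => sing_ne (h3 x _ _ h.2 hp)
  · rw [bit_pos]
    rw [mem_mk hxb, ZFSet.mem_sep]
    exact ⟨hx, hp⟩

/-- End-extension on the conditions of `𝕊` embeds densely into `Add(κ, 1)`. -/
theorem Inacc.cohen : DE A (CP A κ) (leCP A κ) (SC A κ) (leQ A κ) ch where
  P_mem := hκ.CA
  leP_mem := hκ.leCA
  P_sub p q h := ⟨(mem_rel.1 h).1, (mem_rel.1 h).2.1⟩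
  P_refl p hp := mem_rel.2 ⟨hp, hp, fun _ h => h⟩
  P_trans p q r h h' := mem_rel.2 ⟨(mem_rel.1 h).1, (mem_rel.1 h').2.1,
    (mem_rel.1 h').2.2.trans (mem_rel.1 h).2.2⟩
  Q_mem := hκ.SA
  leQ_mem := hκ.leQA
  Q_sub p q h := ⟨(mem_rel.1 h).1, (mem_rel.1 h).2.1⟩
  Q_refl p hp := mem_rel.2 ⟨hp, hp, ee.refl _⟩
  Q_trans p q r h h' := mem_rel.2 ⟨(mem_rel.1 h).1, (mem_rel.1 h').2.1,
    (mem_rel.1 h').2.2.trans (mem_rel.1 h).2.2⟩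
  dfun B _ := by unfold ch; infer_instance
  map q hq := hκ.chC hq
  le_iff q hq q' hq' := by
    rw [leCP, leQ, mem_rel, mem_rel, ch_sub]
    exact ⟨fun h => ⟨hq, hq', h.2.2⟩, fun h => ⟨hκ.chC hq, hκ.chC hq', h.2.2⟩⟩
  dense p hp := by
    obtain ⟨u, hu, h⟩ := hκ.ch_dense hp
    exact ⟨u, hu, mem_rel.2 ⟨hκ.chC hu, hp, h⟩⟩

end cohen
end TM

/-! ### Internal notions, read off from the collapse -/

namespace TM

/-- `f` is a function from `a` to `b`. -/
def Fn (f a b : ZFSet.{u}) : Prop :=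
  (∀ p ∈ f, ∃ x ∈ a, ∃ y ∈ b, p = ZFSet.pair x y) ∧ (∀ x ∈ a, ∃ y, ZFSet.pair x y ∈ f) ∧
  (∀ x y y', ZFSet.pair x y ∈ f → ZFSet.pair x y' ∈ f → y = y')

section coll
variable {M : Type*} {E : M → M → Prop} {c : M → ZFSet.{u}} {A : Set ZFSet.{u}} (h : Col E c A)
include h

theorem Col.pr {r : M} {x y : ZFSet.{u}} (hp : ZFSet.pair x y ∈ c r) :
    ∃ a b, x = c a ∧ y = c b := by
  obtain ⟨p, e⟩ := h.tr hp
  have h2 : ({x, y} : ZFSet.{u}) ∈ c p := by rw [e]; simp [ZFSet.pair]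
  obtain ⟨q, e'⟩ := h.tr h2
  have hx : x ∈ c q := by rw [e']; simp
  have hy : y ∈ c q := by rw [e']; simp
  obtain ⟨a, ea⟩ := h.tr hx
  obtain ⟨b, eb⟩ := h.tr hy
  exact ⟨a, b, ea.symm, eb.symm⟩

theorem Col.pairs {f a b : M} : (∀ p, E p f → ∃ x y, E x a ∧ E y b ∧ ZF.IsOPairOf E p x y) ↔
    ∀ p ∈ c f, ∃ x ∈ c a, ∃ y ∈ c b, p = ZFSet.pair x y := by
  rw [← h.ball (P := fun p => ∃ x ∈ c a, ∃ y ∈ c b, p = ZFSet.pair x y)]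
  refine forall₂_congr fun p _ => ?_
  constructor
  · rintro ⟨x, y, hx, hy, e⟩
    exact ⟨c x, h.mem.2 hx, c y, h.mem.2 hy, h.opair.1 e⟩
  · rintro ⟨x, hx, y, hy, e⟩
    obtain ⟨x, rfl⟩ := h.tr hx
    obtain ⟨y, rfl⟩ := h.tr hy
    exact ⟨x, y, h.mem.1 hx, h.mem.1 hy, h.opair.2 e⟩

theorem Col.fnl {f : M} : (∀ x y y', ZF.PairMem E f x y → ZF.PairMem E f x y' → y = y') ↔
    ∀ x y y', ZFSet.pair x y ∈ c f → ZFSet.pair x y' ∈ c f → y = y' := by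
  simp only [h.pm]
  constructor
  · intro H x y y' h1 h2
    obtain ⟨a, b, rfl, rfl⟩ := h.pr h1
    obtain ⟨a', b', -, rfl⟩ := h.pr h2
    rw [H _ _ _ h1 h2]
  · exact fun H x y y' h1 h2 => h.inj (H _ _ _ h1 h2)

theorem Col.inv {f : M} : (∀ x x' y, ZF.PairMem E f x y → ZF.PairMem E f x' y → x = x') ↔
    ∀ x x' y, ZFSet.pair x y ∈ c f → ZFSet.pair x' y ∈ c f → x = x' := by
  simp only [h.pm]
  constructor
  · intro H x x' y h1 h2
    obtain ⟨a, b, rfl, rfl⟩ := h.pr h1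
    obtain ⟨a', b', rfl, -⟩ := h.pr h2
    rw [H _ _ _ h1 h2]
  · exact fun H x y y' h1 h2 => h.inj (H _ _ _ h1 h2)

theorem Col.tot {f a : M} : (∀ x, E x a → ∃ y, ZF.PairMem E f x y) ↔
    ∀ x ∈ c a, ∃ y, ZFSet.pair x y ∈ c f := by
  rw [← h.ball (P := fun x => ∃ y, ZFSet.pair x y ∈ c f)]
  simp only [h.pm]
  refine forall₂_congr fun x _ => ?_
  constructor
  · rintro ⟨y, hy⟩; exact ⟨_, hy⟩
  · rintro ⟨y, hy⟩
    obtain ⟨-, y, -, rfl⟩ := h.pr hy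
    exact ⟨y, hy⟩

theorem Col.func {f a b : M} : ZF.IsFuncFromTo E f a b ↔ Fn (c f) (c a) (c b) := by
  rw [ZF.IsFuncFromTo, h.pairs, h.tot, h.fnl]; rfl

theorem Col.injF {f a b : M} : ZF.IsInjFromTo E f a b ↔ Fn (c f) (c a) (c b) ∧
    ∀ x x' y, ZFSet.pair x y ∈ c f → ZFSet.pair x' y ∈ c f → x = x' := by
  rw [ZF.IsInjFromTo, h.func, h.inv]

theorem Col.surF {f a b : M} : ZF.IsSurjFromTo E f a b ↔ Fn (c f) (c a) (c b) ∧
    ∀ y ∈ c b, ∃ x ∈ c a, ZFSet.pair x y ∈ c f := by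
  rw [ZF.IsSurjFromTo, h.func, ← h.ball (P := fun y => ∃ x ∈ c a, ZFSet.pair x y ∈ c f)]
  refine and_congr_right fun _ => forall₂_congr fun y _ => ?_
  rw [← h.bex (P := fun x => ZFSet.pair x (c y) ∈ c f)]
  simp only [h.pm]

theorem Col.cardLT {x κ : M} : ZF.CardLT E x κ ↔ Sm A (c κ) (c x) := by
  simp only [ZF.CardLT, ZF.CardLE, h.injF]
  rw [h.bex (P := fun γ => ∃ f, Fn (c f) (c x) γ ∧
    ∀ x x' y, ZFSet.pair x y ∈ c f → ZFSet.pair x' y ∈ c f → x = x')]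
  constructor
  · rintro ⟨γ, hγ, f, ⟨h1, h2, h3⟩, h4⟩
    exact ⟨γ, hγ, c f, h.inA f, h1, h2, h3, h4⟩
  · rintro ⟨γ, hγ, f, hf, h1, h2, h3, h4⟩
    obtain ⟨f, rfl⟩ := h.lift hf
    exact ⟨γ, hγ, f, ⟨h1, h2, h3⟩, h4⟩

theorem Col.ev {β : M} : ZF.IsEvenOrdinal E β ↔ Ev A (c β) := by
  rw [ZF.IsEvenOrdinal, Ev, h.ord]
  refine and_congr_right fun _ => ?_
  have key : ∀ Q : M, ((∀ q, E q Q → ∃ γ s, E γ β ∧ E s β ∧ ZF.IsSuccOf E s γ ∧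
      ZF.IsPairOf E q γ s) ∧ (∀ γ, E γ β → ∃ q, E q Q ∧ E γ q) ∧
      (∀ q q', E q Q → E q' Q → (∃ x, E x q ∧ E x q') → q = q')) ↔
      ((∀ q, q ∈ c Q → ∃ γ, γ ∈ c β ∧ (insert γ γ ∈ c β ∧ q = {γ, insert γ γ})) ∧
      (∀ γ, γ ∈ c β → ∃ q, q ∈ c Q ∧ γ ∈ q) ∧
      (∀ q, q ∈ c Q → ∀ q', q' ∈ c Q → (∃ x, x ∈ q ∧ x ∈ q') → q = q')) := by
    intro Q
    refine and_congr ?_ (and_congr ?_ ?_)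
    · rw [← h.ball (P := fun q => ∃ γ, γ ∈ c β ∧ (insert γ γ ∈ c β ∧ q = {γ, insert γ γ}))]
      refine forall₂_congr fun q _ => ?_
      simp only [h.succ, h.pairOf]
      constructor
      · rintro ⟨γ, s, h1, h2, h3, h4⟩
        rw [h3] at h4
        exact ⟨c γ, h.mem.2 h1, h3 ▸ h.mem.2 h2, h4⟩
      · rintro ⟨γ, h1, h2, h3⟩
        obtain ⟨γ, rfl⟩ := h.tr h1
        obtain ⟨s, hs⟩ := h.tr h2
        refine ⟨γ, s, h.mem.1 h1, h.mem.1 (hs ▸ h2), hs, ?_⟩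
        rw [h3, hs]
    · rw [← h.ball (P := fun γ => ∃ q, q ∈ c Q ∧ γ ∈ q)]
      refine forall₂_congr fun γ _ => ?_
      rw [← h.bex (P := fun q => c γ ∈ q)]
      simp only [h.mem]
    · rw [← h.ball (P := fun q => ∀ q', q' ∈ c Q → (∃ x, x ∈ q ∧ x ∈ q') → q = q')]
      constructor
      · intro H q hq
        rw [← h.ball (P := fun q' => (∃ x, x ∈ c q ∧ x ∈ q') → c q = q')]
        rintro q' hq' ⟨x, h1, h2⟩
        obtain ⟨x, rfl⟩ := h.tr h1
        rw [H q q' hq hq' ⟨x, h.mem.1 h1, h.mem.1 h2⟩]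
      · rintro H q q' hq hq' ⟨x, h1, h2⟩
        exact h.inj (H q hq (c q') (h.mem.2 hq') ⟨c x, h.mem.2 h1, h.mem.2 h2⟩)
  constructor
  · rintro ⟨Q, H⟩
    exact ⟨c Q, h.inA Q, (key Q).1 H⟩
  · rintro ⟨Q, hQ, H⟩
    obtain ⟨Q, rfl⟩ := h.lift hQ
    exact ⟨Q, (key Q).2 H⟩

theorem Col.two {t : M} : ZF.IsTwo E t ↔ c t = {∅, {∅}} := by
  have e1 : insert ∅ ∅ = ({∅} : ZFSet.{u}) := by ext; simp
  have e2 : insert {∅} {∅} = ({∅, {∅}} : ZFSet.{u}) := by ext; simp [or_comm]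
  simp only [ZF.IsTwo, h.empty, h.succ]
  constructor
  · rintro ⟨z, o, hz, ho, ht⟩
    rw [ht, ho, hz, e1, e2]
  · intro ht
    obtain ⟨z, hz⟩ := h.tr (x := t) (z := ∅) (by rw [ht]; simp)
    obtain ⟨o, ho⟩ := h.tr (x := t) (z := {∅}) (by rw [ht]; simp)
    exact ⟨z, o, hz, by rw [ho, hz, e1], by rw [ht, ho, e2]⟩

theorem Col.po_rel {le P : M} {R : ZFSet.{u} → ZFSet.{u} → Prop} (e : c le = rel R (c P))
    (r1 : ∀ x ∈ c P, R x x)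
    (r2 : ∀ x ∈ c P, ∀ y ∈ c P, ∀ z ∈ c P, R x y → R y z → R x z)
    (r3 : ∀ x ∈ c P, ∀ y ∈ c P, R x y → R y x → x = y) : ZF.IsPartialOrderOn E le P := by
  have key : ∀ x y, ZF.PairMem E le x y ↔ c x ∈ c P ∧ c y ∈ c P ∧ R (c x) (c y) := fun x y => by
    rw [h.pm, e, mem_rel]
  refine ⟨h.pairs.2 fun p hp => rel_pair (e ▸ hp), fun x hx => ?_, fun x y z h1 h2 => ?_,
    fun x y h1 h2 => ?_⟩
  · have := h.mem.2 hx
    exact (key x x).2 ⟨this, this, r1 _ this⟩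
  · obtain ⟨a1, a2, a3⟩ := (key x y).1 h1
    obtain ⟨b1, b2, b3⟩ := (key y z).1 h2
    exact (key x z).2 ⟨a1, b2, r2 _ a1 _ a2 _ b2 a3 b3⟩
  · obtain ⟨a1, a2, a3⟩ := (key x y).1 h1
    obtain ⟨b1, b2, b3⟩ := (key y x).1 h2
    exact h.inj (r3 _ a1 _ a2 a3 b3)

variable [hA : ZFCM A]

theorem Col.inacc {κ : M} (H : ZF.IsInaccessible E κ) : Inacc A (c κ) := by
  obtain ⟨⟨⟨ko, h1⟩, h2⟩, ⟨-, h3⟩, w, hw, hwκ⟩ := H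
  have ko := h.ord.1 ko
  refine ⟨h.inA κ, ko, ⟨c w, h.mem.2 hwκ, h.omega.1 hw⟩, ?_, ?_, ?_⟩
  · intro β hβ f hf f1 f2 f3 f4
    obtain ⟨β, rfl⟩ := h.tr hβ
    obtain ⟨f, rfl⟩ := h.lift hf
    refine h1 β (h.mem.1 hβ) ⟨f, h.injF.2 ⟨⟨f4, fun x hx => ?_, f2⟩, f3⟩⟩
    obtain ⟨y, -, hy⟩ := f1 x hx
    exact ⟨y, hy⟩
  · intro β hβ f hf f1 f2 f3
    obtain ⟨β, rfl⟩ := h.tr hβ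
    obtain ⟨f, rfl⟩ := h.lift hf
    have := h2 β f (h.mem.1 hβ) (h.func.2 ⟨f3, f1, f2⟩)
    simp only [ZF.IsCofinalIn, not_forall] at this
    obtain ⟨γ, hγ, hn⟩ := this
    refine ⟨c γ, h.mem.2 hγ, fun x y hxy => ?_⟩
    obtain ⟨a, ha, b, hb, e⟩ := f3 _ hxy
    obtain ⟨rfl, rfl⟩ := ZFSet.pair_inj.1 e
    obtain ⟨x, rfl⟩ := h.tr ha
    obtain ⟨y, rfl⟩ := h.tr hb
    rcases (ko.mem hb).mem_trichotomous (ko.mem (h.mem.2 hγ)) with k | k | k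
    · exact k
    · exact absurd ⟨x, y, h.mem.1 ha, h.pm.2 hxy, Or.inl (h.inj k.symm)⟩ hn
    · exact absurd ⟨x, y, h.mem.1 ha, h.pm.2 hxy, Or.inr (h.mem.1 k)⟩ hn
  · intro β hβ
    obtain ⟨β, rfl⟩ := h.tr hβ
    obtain ⟨p, hp⟩ := h.lift (pwA (h.inA β))
    obtain ⟨γ, hγ, f, hf, f1, f2, f3, f4⟩ := h.cardLT.1 (h3 β p (h.mem.1 hβ)
      (h.power.2 fun x hx => by rw [hp, mem_pw]; exact and_iff_left hx))
    rw [hp] at f1 f2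
    refine ⟨γ, hγ, f, hf, fun x hx => ?_, f3, f4⟩
    obtain ⟨y, hy⟩ := f2 x hx
    obtain ⟨a, ha, b, hb, e⟩ := f1 _ hy
    obtain ⟨rfl, rfl⟩ := ZFSet.pair_inj.1 e
    exact ⟨y, hb, hy⟩

theorem Col.cohen {C leC κ : M} : ZF.IsCohenPoset E C leC κ ↔
    c C = CP A (c κ) ∧ c leC = leCP A (c κ) := by
  obtain ⟨t, ht⟩ := h.lift (pairA emptyA (singA emptyA) : ({∅, {∅}} : ZFSet.{u}) ∈ A)
  have hc : ∀ d, ZF.IsCohenCondition E d κ ↔ c d ∈ CP A (c κ) := by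
    intro d
    rw [ZF.IsCohenCondition, h.fnl, h.cardLT, mem_CP, ← ht, ← h.pairs]
    constructor
    · rintro ⟨⟨t', ht', H⟩, H'⟩
      rw [h.two, ← ht] at ht'
      cases h.inj ht'
      exact ⟨h.inA d, H, H'⟩
    · rintro ⟨-, H, H'⟩
      exact ⟨⟨t, h.two.2 ht, H⟩, H'⟩
  rw [ZF.IsCohenPoset]
  have e1 : (∀ d, E d C ↔ ZF.IsCohenCondition E d κ) ↔ c C = CP A (c κ) := by
    rw [h.ext_iff fun y hy => h.lift (mem_CP.1 hy).1]
    simp only [hc]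
  rw [e1]
  refine and_congr_right fun eC => ?_
  have hmem : ∀ z ∈ leCP A (c κ), z ∈ A := by
    intro z hz
    obtain ⟨x, hx, y, hy, rfl⟩ := rel_pair hz
    exact opairA (mem_CP.1 hx).1 (mem_CP.1 hy).1
  rw [h.ext_iff fun y hy => h.lift (hmem y hy)]
  refine forall_congr' fun p => iff_congr Iff.rfl ?_
  constructor
  · rintro ⟨a, b, ha, hb, hs, e⟩
    rw [h.opair.1 e, leCP, mem_rel, ← eC]
    exact ⟨h.mem.2 ha, h.mem.2 hb, h.sub.1 hs⟩
  · intro hp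
    obtain ⟨x, hx, y, hy, e⟩ := rel_pair hp
    rw [e, leCP, mem_rel] at hp
    obtain ⟨x, rfl⟩ := h.lift (mem_CP.1 hx).1
    obtain ⟨y, rfl⟩ := h.lift (mem_CP.1 hy).1
    rw [← eC] at hx hy
    exact ⟨x, y, h.mem.1 hx, h.mem.1 hy, h.sub.2 hp.2.2, h.opair.2 e⟩

section conds
variable {κ S le : M} (hκ : Inacc A (c κ)) (hS : c S = SC A (c κ)) (hle : c le = leS A (c κ))
include hκ hS

theorem Col.sameCard : ZF.SameCard E S κ := by
  obtain ⟨H, dH, h1, h2, h3⟩ := hκ.enum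
  have iH : ∀ t [DFun A t], DFun A (fun v => H (t v)) := fun t ht => dH.comp₁ ht
  obtain ⟨f, hf⟩ := h.lift (DFun.val₁ (f := img (fun α => ZFSet.pair (H α) α)) inferInstance hκ.inA)
  have key : ∀ s α, ZFSet.pair s α ∈ c f ↔ α ∈ c κ ∧ s = H α := by
    intro s α
    rw [hf, mem_img]
    simp only [ZFSet.pair_inj]
    constructor
    · rintro ⟨x, hx, rfl, rfl⟩; exact ⟨hx, rfl⟩
    · rintro ⟨hx, rfl⟩; exact ⟨α, hx, rfl, rfl⟩
  have hF : Fn (c f) (c S) (c κ) := by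
    refine ⟨fun p hp => ?_, fun x hx => ?_, fun x y y' k k' => ?_⟩
    · rw [hf, mem_img] at hp
      obtain ⟨α, hα, rfl⟩ := hp
      exact ⟨_, hS ▸ h1 α hα, α, hα, rfl⟩
    · obtain ⟨α, hα, e⟩ := h3 x (hS ▸ hx)
      exact ⟨α, (key _ _).2 ⟨hα, e⟩⟩
    · rw [key] at k k'
      exact h2 y k.1 y' k'.1 (k.2.symm.trans k'.2)
  refine ⟨f, h.injF.2 ⟨hF, fun x x' y k k' => ?_⟩, h.surF.2 ⟨hF, fun α hα => ?_⟩⟩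
  · rw [key] at k k'
    rw [k.2, k'.2]
  · exact ⟨H α, hS ▸ h1 α hα, (key _ _).2 ⟨hα, rfl⟩⟩

include hle

theorem Col.poS : ZF.IsPartialOrderOn E le S := by
  have key : ∀ x ∈ c S, ∀ y ∈ c S, (x = y ∨ sl A x y) → ZFSet.pair x y ∈ leS A (c κ) :=
    fun x hx y hy k => mem_rel.2 ⟨hS ▸ hx, hS ▸ hy, k⟩
  refine h.po_rel (R := fun r s => r = s ∨ sl A r s) (by rw [hle, hS]; rfl) (fun _ _ => Or.inl rfl)
    (fun x hx y hy z hz k1 k2 => ?_) fun x hx y hy k1 k2 => ?_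
  · exact (mem_rel.1 (hκ.leS_trans (key x hx y hy k1) (key y hy z hz k2))).2.2
  · exact hκ.leS_antisymm (key x hx y hy k1) (key y hy x hx k2)

theorem Col.strategic : ZF.IsStrategicallyLtClosed E S le κ := by
  intro γ hγ
  obtain ⟨σ, hσ⟩ := h.lift hκ.stratA
  refine ⟨σ, fun β s hβ ⟨hs, hdec⟩ hst hev => ?_⟩
  have hβκ : c β ∈ c κ := hκ.tr (h.mem.2 hβ) (h.mem.2 hγ)
  obtain ⟨s1, s2, s3⟩ := h.func.1 hs
  rw [hS] at s1
  have inP : ∀ x y, ZFSet.pair x y ∈ c s → x ∈ c β ∧ y ∈ SC A (c κ) := by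
    intro x y hxy
    obtain ⟨a, ha, b, hb, e⟩ := s1 _ hxy
    obtain ⟨rfl, rfl⟩ := ZFSet.pair_inj.1 e
    exact ⟨ha, hb⟩
  obtain ⟨y, hy1, hy2, hy3⟩ := hκ.strategic hβκ (h.inA s) s1 s2 s3 (by
    intro γ δ x y hγδ hδ hx hy
    obtain ⟨γ, x, rfl, rfl⟩ := h.pr hx
    obtain ⟨δ, y, rfl, rfl⟩ := h.pr hy
    rw [← hle]
    exact h.pm.1 (hdec γ δ x y (h.mem.1 hγδ) (h.mem.1 hδ) (h.pm.2 hx) (h.pm.2 hy))) (by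
    intro δ hδ hE y hy η hη hE' z hz
    obtain ⟨δ, y, rfl, rfl⟩ := h.pr hy
    obtain ⟨r, hr⟩ := h.lift (interA (h.inA s) (prodA (h.inA δ) hκ.SA))
    have hres : ZF.SeqRestriction E r s δ := by
      intro p
      rw [← h.mem, hr, ZFSet.mem_inter, h.mem]
      refine and_congr_right fun hp => ?_
      constructor
      · intro hp'
        obtain ⟨a, ha, b, hb, e⟩ := ZFSet.mem_prod.1 hp'
        obtain ⟨a, rfl⟩ := h.tr ha
        obtain ⟨b, rfl⟩ := h.lift (SC.inA hb)
        exact ⟨a, b, h.mem.1 ha, h.opair.2 e⟩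
      · rintro ⟨a, b, ha, e⟩
        rw [h.opair] at e
        have hp := h.mem.2 hp
        rw [e] at hp ⊢
        exact ZFSet.pair_mem_prod.2 ⟨h.mem.2 ha, (inP _ _ hp).2⟩
    have := h.pm.1 (hst δ (h.mem.1 hδ) (h.ev.2 hE) r y hres (h.pm.2 hy))
    rw [hσ] at this
    refine ((mem_strat.1 this).2.2 η z ?_).1 hE'
    rw [hr]
    exact ZFSet.mem_inter.2 ⟨hz, ZFSet.pair_mem_prod.2 ⟨hη, (inP _ _ hz).2⟩⟩) (h.ev.1 hev)
  obtain ⟨y, rfl⟩ := h.lift (SC.inA hy2)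
  refine ⟨y, h.pm.2 (hσ ▸ hy1), h.mem.1 (hS ▸ hy2), fun δ x hδ hx => ?_⟩
  rw [h.pm, hle]
  exact hy3 _ _ (h.mem.2 hδ) (h.pm.1 hx)

end conds
end coll

section tree
variable {M : Type*} {E : M → M → Prop} {c : M → ZFSet.{u}} {A : Set ZFSet.{u}} [hA : ZFCM A]
  {κ T lt : M} (hκ : Inacc A (c κ)) (hT : Gen A (SC A (c κ)) (leS A (c κ)) (c T))
  (h : Col E c (Ext A (c T))) (hlt : c lt = ltT (c T))
include hκ hT h hlt

/-- The height of a node of the generic tree is its length as a sequence. -/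
theorem Col.hgt {x β : M} (hx : E x T) : ZF.IsHeightOf E lt x β ↔ c β = mx (c x) := by
  have hx := h.mem.2 hx
  rw [ZF.IsHeightOf, h.ord]
  simp only [h.tot, h.fnl]
  constructor
  · rintro ⟨βo, f, h1, h2, h3, h4, h5⟩
    refine hκ.height_eq hT hx βo (f := c f) ?_ h2 h3 ?_ ?_
    · refine h.ball.1 fun p hp => ?_
      obtain ⟨γ, y, k1, k2, k3⟩ := h1 p hp
      exact ⟨_, h.mem.2 k1, c y, hlt ▸ h.pm.1 k2, h.opair.1 k3⟩
    · intro y hy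
      rw [← hlt] at hy
      obtain ⟨y, x', rfl, e⟩ := h.pr hy
      obtain ⟨γ, k1, k2⟩ := h4 y (h.pm.2 hy)
      exact ⟨_, h.mem.2 k1, h.pm.1 k2⟩
    · intro γ δ y z k hy hz
      obtain ⟨γ, y, rfl, rfl⟩ := h.pr hy
      obtain ⟨δ, z, rfl, rfl⟩ := h.pr hz
      rw [← hlt]
      exact h.pm.1 (h5 γ δ y z (h.mem.1 k) (h.pm.2 hy) (h.pm.2 hz))
  · intro e
    obtain ⟨f, hf, h1, h2, h3, h4, h5⟩ := hκ.height hT hx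
    obtain ⟨f, rfl⟩ := h.lift hf
    rw [← e] at h1 h2 h4
    rw [← hlt] at h1 h4 h5
    refine ⟨e ▸ hκ.mxo (hT.sub _ hx), f, fun p hp => ?_, h2, h3, fun y hy => ?_,
      fun γ δ y z k hy hz => ?_⟩
    · obtain ⟨γ, k1, y, k2, k3⟩ := h1 _ (h.mem.2 hp)
      obtain ⟨γ, rfl⟩ := h.tr k1
      obtain ⟨y, _, rfl, -⟩ := h.pr k2
      exact ⟨γ, y, h.mem.1 k1, h.pm.2 k2, h.opair.2 k3⟩
    · obtain ⟨γ, k1, k2⟩ := h4 _ (h.pm.1 hy)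
      obtain ⟨γ, rfl⟩ := h.tr k1
      exact ⟨γ, h.mem.1 k1, h.pm.2 k2⟩
    · exact h.pm.2 (h5 _ _ _ _ (h.mem.2 k) (h.pm.1 hy) (h.pm.1 hz))

theorem Col.souslin : ZF.IsSouslinTree E T lt κ := by
  have pm : ∀ x y, ZF.PairMem E lt x y ↔ c x ∈ c T ∧ c y ∈ c T ∧ ee (c x) (c y) ∧ c x ≠ c y :=
    fun x y => by rw [h.pm, hlt, mem_ltT]
  have sS : ∀ x, c x ∈ c T → c x ∈ SC A (c κ) := fun x hx => hT.sub _ hx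
  refine ⟨⟨h.pairs.2 fun p hp => rel_pair (hlt ▸ hp), fun x hx => ((pm x x).1 hx).2.2.2 rfl,
    fun x y z h1 h2 => ?_, fun x y z hz h1 h2 => ?_⟩, fun x hx => ?_, fun β hβ => ?_,
    fun β L hβ hL => ?_, fun C hC => ?_, fun X hX => ?_⟩
  · rw [pm] at h1 h2 ⊢
    refine ⟨h1.1, h2.2.1, h1.2.2.1.trans h2.2.2.1, fun e => h1.2.2.2 ?_⟩
    have := h2.2.2.1
    rw [← e] at this
    exact hκ.ee_antisymm (sS _ h1.1) (sS _ h1.2.1) h1.2.2.1 this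
  · rw [pm] at h1 h2
    have key : ee (c x) (c y) ∨ ee (c y) (c x) := by
      rcases (hκ.mxo (sS _ h1.1)).subset_total (hκ.mxo (sS _ h2.1)) with k | k
      · exact Or.inl (h1.2.2.1.cmp h2.2.2.1 k)
      · exact Or.inr (h2.2.2.1.cmp h1.2.2.1 k)
    by_cases e : x = y
    · exact Or.inr (Or.inl e)
    · rcases key with k | k
      · exact Or.inl ((pm x y).2 ⟨h1.1, h2.1, k, fun e' => e (h.inj e')⟩)
      · exact Or.inr (Or.inr ((pm y x).2 ⟨h2.1, h1.1, k, fun e' => e (h.inj e'.symm)⟩))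
  · have hm := hκ.mx (sS _ (h.mem.2 hx))
    obtain ⟨β, hβ⟩ := h.tr hm
    exact ⟨β, h.mem.1 (hβ ▸ hm), (Col.hgt hκ hT h hlt hx).2 hβ⟩
  · obtain ⟨s, hs, hb⟩ := hκ.unb hT (h.mem.2 hβ)
    obtain ⟨k1, k2, k3⟩ := hκ.mk_mem hT hs hb
    obtain ⟨x, ex⟩ := h.tr k1
    have hx : E x T := h.mem.1 (ex ▸ k1)
    exact ⟨x, hx, (Col.hgt hκ hT h hlt hx).2 (by rw [ex, k3])⟩
  · refine h.cardLT.2 (hκ.small hT (h.inA L) (b := c β) ?_ (h.mem.2 hβ) ?_)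
    · exact (h.ball (P := fun z => z ∈ c T)).1 fun x hx => h.mem.2 ((hL x).1 hx).1
    · refine (h.ball (P := fun z => mx z ⊆ c β)).1 fun x hx => ?_
      obtain ⟨h1, h2⟩ := (hL x).1 hx
      rw [(Col.hgt hκ hT h hlt h1).1 h2]
  · obtain ⟨h1, h2⟩ := hC
    obtain ⟨β, hβ, hb⟩ := hκ.chain hT (h.inA C) (h.sub.1 h1)
      ((h.ball (P := fun x => ∀ y ∈ c C, ee x y ∨ ee y x)).1 fun x hx =>
        (h.ball (P := fun y => ee (c x) y ∨ ee y (c x))).1 fun y hy => by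
          rcases h2 x y hx hy with rfl | k | k
          · exact Or.inl (ee.refl _)
          · exact Or.inl ((pm _ _).1 k).2.2.1
          · exact Or.inr ((pm _ _).1 k).2.2.1)
    exact h.cardLT.2 (hκ.small hT (h.inA C) (h.sub.1 h1) hβ hb)
  · obtain ⟨h1, h2⟩ := hX
    obtain ⟨β, hβ, hb⟩ := hκ.antichain hT (h.inA X) (h.sub.1 h1)
      ((h.ball (P := fun x => ∀ y ∈ c X, x ≠ y → ¬ ee x y)).1 fun x hx =>
        (h.ball (P := fun y => c x ≠ y → ¬ ee (c x) y)).1 fun y hy hne k =>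
          (h2 x y hx hy fun e => hne (e ▸ rfl)).1
            ((pm x y).2 ⟨h.mem.2 (h1 x hx), h.mem.2 (h1 y hy), k, hne⟩))
    exact h.cardLT.2 (hκ.small hT (h.inA X) (h.sub.1 h1) hβ hb)

theorem Col.homog : ZF.IsHomogeneousTree E T lt := by
  intro x y β hx hy h1 h2
  rw [Col.hgt hκ hT h hlt hx] at h1
  rw [Col.hgt hκ hT h hlt hy] at h2
  obtain ⟨f, hf, k1, k2, k3, k4, k5, k6, k7⟩ :=
    hκ.homog hT (h.mem.2 hx) (h.mem.2 hy) (h1.symm.trans h2)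
  obtain ⟨f, rfl⟩ := h.lift hf
  refine ⟨f, ⟨h.injF.2 ⟨⟨k1, k2, k3⟩, k4⟩, h.surF.2 ⟨⟨k1, k2, k3⟩, k5⟩⟩, ?_, h.pm.2 k7⟩
  intro u v u' v' hu hv
  rw [h.pm, h.pm, hlt]
  exact k6 _ _ _ _ (h.pm.1 hu) (h.pm.1 hv)

theorem Col.leT_iff {le q : M} (hle : c le = leT (c T)) : E q le ↔ ∃ x y, E x T ∧ E y T ∧
    (x = y ∨ ZF.PairMem E lt y x) ∧ ZF.IsOPairOf E q x y := by
  rw [← h.mem, hle]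
  constructor
  · intro hq
    obtain ⟨x, hx, y, hy, e⟩ := rel_pair hq
    obtain ⟨x, rfl⟩ := h.tr hx
    obtain ⟨y, rfl⟩ := h.tr hy
    rw [e, mem_leT] at hq
    refine ⟨x, y, h.mem.1 hx, h.mem.1 hy, ?_, h.opair.2 e⟩
    rw [h.pm, hlt, mem_ltT]
    by_cases e : x = y
    · exact Or.inl e
    · exact Or.inr ⟨hy, hx, hq.2.2, fun e' => e (h.inj e'.symm)⟩
  · rintro ⟨x, y, hx, hy, k, e⟩
    rw [h.opair.1 e, mem_leT]
    refine ⟨h.mem.2 hx, h.mem.2 hy, ?_⟩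
    rcases k with rfl | k
    · exact ee.refl _
    · rw [h.pm, hlt, mem_ltT] at k
      exact k.2.2.1

omit hlt in
theorem Col.poT {le : M} (hle : c le = leT (c T)) : ZF.IsPartialOrderOn E le T :=
  h.po_rel (R := fun x y => ee y x) (by rw [hle]; rfl) (fun _ _ => ee.refl _)
    (fun x _ y _ z _ k1 k2 => k2.trans k1)
    fun x hx y hy k1 k2 => hκ.ee_antisymm (hT.sub _ hx) (hT.sub _ hy) k2 k1

end tree
end TM

/-! ### Transfer to universes -/

namespace TM

theorem small_ext (A : Set ZFSet.{u}) [Small.{u} A] (G : ZFSet.{u}) : Small.{u} (Ext A G) := by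
  have : Ext A G = (val G) '' A := by ext; simp [Ext]
  rw [this]; infer_instance

theorem exists_trees (V : ZFCUniverse.{u}) (G : V.M) :
    ∃ p : V.M × V.M, col V p.1 = ltT (col V G) ∧ col V p.2 = leT (col V G) := by
  obtain ⟨a, ha⟩ := (colC V).lift (ltTA ((colC V).inA G))
  obtain ⟨b, hb⟩ := (colC V).lift (leTA ((colC V).inA G))
  exact ⟨(a, b), ha, hb⟩

/-- The generic tree of an extension: its nodes are the elements of the generic filter `G`, with
the strict end-extension order and its reverse as forcing order. -/
noncomputable def TO (V : ZFCUniverse.{u}) (G : V.M) : V.M × V.M × V.M :=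
  (G, (exists_trees V G).choose)

theorem TO_lt (V : ZFCUniverse.{u}) (G : V.M) : col V (TO V G).2.1 = ltT (col V G) :=
  (exists_trees V G).choose_spec.1

theorem TO_le (V : ZFCUniverse.{u}) (G : V.M) : col V (TO V G).2.2 = leT (col V G) :=
  (exists_trees V G).choose_spec.2

end TM

open TM

/-- If `κ` is an inaccessible cardinal, then there is a notion of
forcing `𝕊` of size `κ` which is strategically `<κ`-closed, such that (1) forcing
with `𝕊` adds a homogeneous `κ`-Souslin tree `T`, and (2) the two-step iteration
`𝕊 * Ṫ`, which adds the tree and then forces with it, is forcing equivalent to the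
Cohen forcing `Add(κ,1)`.  (Forcing equivalence is rendered semantically: the two
iterations give rise to the same forcing extensions.) -/
theorem stmt0 (U : ZFCUniverse.{u}) (κ : U.M) (hκ : ZF.IsInaccessible U.mem κ) :
    ∃ S leS : U.M,
      ZF.IsPartialOrderOn U.mem leS S ∧
      ZF.SameCard U.mem S κ ∧
      ZF.IsStrategicallyLtClosed U.mem S leS κ ∧
      ∃ TO : ∀ V : ZFCUniverse.{u}, MemEmbed U V → V.M → V.M × V.M × V.M,
        -- (1) forcing with 𝕊 adds a homogeneous κ-Souslin tree (new in the extension),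
        --     with strict tree order `(TO V e G).2.1` and associated forcing order
        --     `(TO V e G).2.2` (stronger = higher node):
        (∀ (V : ZFCUniverse.{u}) (e : MemEmbed U V) (G : V.M),
          IsSetGenericExt U V e S leS G →
            ZF.IsSouslinTree V.mem (TO V e G).1 (TO V e G).2.1 (e.f κ) ∧
            ZF.IsHomogeneousTree V.mem (TO V e G).1 (TO V e G).2.1 ∧
            (∀ q, V.mem q (TO V e G).2.2 ↔ ∃ x y, V.mem x (TO V e G).1 ∧
              V.mem y (TO V e G).1 ∧ (x = y ∨ ZF.PairMem V.mem (TO V e G).2.1 y x) ∧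
              ZF.IsOPairOf V.mem q x y) ∧
            ¬ ∃ t₀, (TO V e G).1 = e.f t₀) ∧
        -- (2) the two-step iteration 𝕊 * Ṫ is forcing equivalent to Add(κ,1):
        ∀ (V'' : ZFCUniverse.{u}) (e'' : MemEmbed U V''),
          (∃ (V' : ZFCUniverse.{u}) (e₁ : MemEmbed U V') (G₁ : V'.M),
            IsSetGenericExt U V' e₁ S leS G₁ ∧
            ∃ (e₂ : MemEmbed V' V'') (G₂ : V''.M),
              IsSetGenericExt V' V'' e₂ (TO V' e₁ G₁).1 (TO V' e₁ G₁).2.2 G₂ ∧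
              ∀ x, e''.f x = e₂.f (e₁.f x)) ↔
          (∃ C leC : U.M, ZF.IsCohenPoset U.mem C leC κ ∧
            ∃ Gc, IsSetGenericExt U V'' e'' C leC Gc) := by
  have cU := colC U
  have hκ := cU.inacc hκ
  obtain ⟨S, hS⟩ := cU.lift hκ.SA
  obtain ⟨le, hle⟩ := cU.lift hκ.leSA
  refine ⟨S, le, cU.poS hκ hS hle, cU.sameCard hκ hS, cU.strategic hκ hS hle,
    fun V _ G => TO V G, fun V e G hG => ?_, fun V e => ⟨?_, ?_⟩⟩
  · obtain ⟨-, h1, h2⟩ := (genExt_iff e S le G).1 hG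
    rw [hS, hle] at h1
    have hnew := hκ.new h1
    rw [← col_emb e κ] at hκ h1
    have cV := colC V
    rw [h2] at cV
    refine ⟨Col.souslin hκ h1 cV (TO_lt V G), Col.homog hκ h1 cV (TO_lt V G),
      fun q => Col.leT_iff hκ h1 cV (TO_lt V G) (TO_le V G), ?_⟩
    rintro ⟨t, ht : G = e.f t⟩
    apply hnew
    rw [ht, col_emb]
    exact cU.inA t
  · rintro ⟨V', e₁, G₁, h1, e₂, G₂, h2, -⟩
    obtain ⟨-, h1, k1⟩ := (genExt_iff e₁ S le G₁).1 h1
    obtain ⟨-, h2, k2⟩ := (genExt_iff e₂ _ _ G₂).1 h2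
    rw [hS, hle] at h1
    rw [TO_le, k1] at h2
    have hQ := hκ.genQ h1 h2
    have hE := hκ.ext_iter hQ
    rw [hκ.upS_eq h1 h2, ← k1, ← k2] at hE
    obtain ⟨Gc, h3, h4⟩ := hκ.cohen.push hQ
    obtain ⟨C, hC⟩ := cU.lift hκ.CA
    obtain ⟨leC, hlC⟩ := cU.lift hκ.leCA
    have hm : Gc ∈ Cls V := by rw [hE, ← h4]; exact h3.G_ext
    obtain ⟨Gc, rfl⟩ := (colC V).lift hm
    refine ⟨C, leC, cU.cohen.2 ⟨hC, hlC⟩, Gc, (genExt_iff e C leC Gc).2 ⟨?_, ?_, ?_⟩⟩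
    · exact cU.po_rel (R := fun c d => d ⊆ c) (by rw [hlC, hC]; rfl) (fun _ _ => fun _ h => h)
        (fun x _ y _ z _ a b => fun _ h => a (b h)) fun x _ y _ a b => ZFSet.ext fun z => ⟨fun h => b h, fun h => a h⟩
    · rw [hC, hlC]; exact h3
    · rw [hE, h4]
  · rintro ⟨C, leC, hC, Gc, h⟩
    obtain ⟨hC, hlC⟩ := cU.cohen.1 hC
    obtain ⟨-, h1, h2⟩ := (genExt_iff e C leC Gc).1 h
    rw [hC, hlC] at h1
    obtain ⟨H, hH, hE⟩ := hκ.cohen.pull h1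
    rw [← h2] at hE
    have hG := hκ.genS hH
    have hT := hκ.genT hH
    have hI := hκ.ext_iter hH
    have i1 : ZFCM (Ext (Cls U) (upS (Cls U) (col U κ) H)) := hG.ext_zfcm
    have i2 := small_ext (Cls U) (upS (Cls U) (col U κ) H)
    obtain ⟨V', hV'⟩ : ∃ V' : ZFCUniverse.{u}, Cls V' = Ext (Cls U) (upS (Cls U) (col U κ) H) :=
      ⟨mkU _, Cls_mkU _⟩
    obtain ⟨G₁, hG₁⟩ := (colC V').lift (z := upS (Cls U) (col U κ) H) (by rw [hV']; exact hG.G_ext)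
    obtain ⟨G₂, rfl⟩ := (colC V).lift (z := H) (by rw [← hE]; exact hH.G_ext)
    obtain ⟨e₁⟩ := exists_emb (U := U) (V := V') (by rw [hV']; exact hG.sub_ext)
    rw [← hV', hE] at hI
    rw [← hV'] at hT
    obtain ⟨e₂⟩ := exists_emb (U := V') (V := V) (by rw [← hI]; exact hT.sub_ext)
    refine ⟨V', e₁, G₁, (genExt_iff e₁ S le G₁).2 ⟨cU.poS hκ hS hle, ?_, ?_⟩, e₂, G₂,
      (genExt_iff e₂ _ _ G₂).2 ⟨?_, ?_, ?_⟩, fun x => (colC V).inj ?_⟩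
    · rw [hS, hle, hG₁]; exact hG
    · rw [hV', hG₁]
    · have cV := colC V'
      rw [hV', ← hG₁] at cV
      rw [← hG₁, ← col_emb e₁ κ] at hG
      rw [← col_emb e₁ κ] at hκ
      exact Col.poT hκ hG cV (TO_le V' G₁)
    · rw [TO_le, hG₁]
      change Gen _ (col V' G₁) _ _
      rw [hG₁]; exact hT
    · exact hI.symm
    · rw [col_emb, col_emb, col_emb]
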